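/- Let f: [0,1] → [0,1] be a multimodal map of class C^3 with non-flat critical points, with all periodic points hyperbolic repelling, and topologically exact. If f has no recurrent critical points, then f is quasi-symmetrically conjugate to a piecewise affine map of [0,1] with slope equal to ±exp(h_top(f)) everywhere; that is, there exists a quasi-symmetric homeomorphism h: [0,1] → [0,1] and a piecewise affine map F: [0,1] → [0,1] with slope ±exp(h_top(f)) everywhere such that h ∘ f = F ∘ h. -/

import Mathlib

/-!
The argument has a metric part and a combinatorial part, joined at the end.

*Set-up.* Non-flatness makes the critical set `K` finite, and gives power-law bounds for `Df` near
`K` together with `|log |Df u| - log |Df v|| ≤ C |u - v| / min (d u) (d v)`, where `d` is the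
distance to `K` and `[u, v]` is thin, i.e. short compared with that distance (`Reg.log_dist`). These
facts, the repelling periodic points, exactness and the uniform bound `|f^m c - c| ≥ τ0` coming
from non-recurrence are collected in the structure `Sys` (`Reg.exists_sys`); nothing else about `f`
is used afterwards.

*Metric part.* The relative length of `[u, v]` is `w u v = |u - v| / min (d u) (d v)`. The key fact
(`Sys.sum_bound`) is that `∑ w (f^j x) (f^j y)` is uniformly bounded over all chains of thin
segments ending in a short segment, so that such chains have bounded distortion. It is proved for
neighbourhoods of every closed invariant set `X` (`Sys.good`), by induction on the number of
critical points in `X`. By non-recurrence, the relation that `b` lies in the closure of the forward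
orbit of `c` is a strict order on `K`, so the closure `Y` of the orbits of the critical points of `X` contains
fewer critical points and is already good. A passage near `c` is followed by a shadowing of the
orbit of `c`, which lies in `Y`; this bounds relative lengths by plain lengths (`Sys.fsum`).
It remains to bound the total length of the pullbacks of small intervals off `Y`. The set of bad
points is closed and almost invariant. If its union `Z` with `Y` is not the whole interval, a bad
point bordering a gap of `Z` is one endpoint of a nice interval inside the gap; the first-return
branches of a nice interval have disjoint pullbacks, hence bounded distortion, and returns close to
the bad point contract, so the lengths are summable (`Sys.core`, `Sys.gap_locGood`). If `Z` is
everything, nice intervals between consecutive points of a backward orbit converging to a repelling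
periodic point have only very short return branches (`Sys.seed_locGood`). Either way the point is
not bad.

*Constant slope.* Lap numbers are submultiplicative with growth rate `s > 1`. Normalised generating
functions of the counting functions of preimages of `K`, with parameter tending to `1 / s`, converge
along an ultrafilter to an increasing function `h` which stretches each lap by the factor `s`;
exactness makes `h` a homeomorphism (`Sys.exists_CS`). Counting dynamical covers in the coordinate
`h` gives entropy `log s` (`Sys.entropy_eq`).

*Quasi-symmetry.* Given an interval and a subinterval of definite proportion, iterate until the
image is large or ceases to be thin. In the second case the image is close to a critical point `c`;
replace it by the hull with `c` and apply `f` once more. By non-recurrence each critical point can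
occur in this way only once, so after boundedly many such steps both intervals have definite size
(`Sys.qs_claim`). The `h`-length scales exactly by `s` on laps, so comparing `h`-lengths
gives the quasi-symmetry inequality (`Sys.qs`).
-/

open Set MeasureTheory Metric Filter

noncomputable section

/-- The unit interval as a subset of `ℝ`. -/
def unitI : Set ℝ := Set.Icc 0 1

/-- The ball of `I` centered at `x` of radius `r`. -/
def ballI (x r : ℝ) : Set ℝ := {y ∈ unitI | |x - y| < r}

/-- `f` is a multimodal map of the unit interval: continuous, non-injective,
and there is a finite partition of `I` into intervals on each of which `f` is injective. -/
def Multimodal (f : ℝ → ℝ) : Prop :=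
  ContinuousOn f unitI ∧ Set.MapsTo f unitI unitI ∧ ¬ Set.InjOn f unitI ∧
    ∃ (n : ℕ) (J : Fin n → Set ℝ), (∀ i, (J i).OrdConnected) ∧ (⋃ i, J i) = unitI ∧
      Pairwise (Function.onFun Disjoint J) ∧ ∀ i, Set.InjOn f (J i)

/-- `f` is topologically exact on the unit interval. -/
def TopExact (f : ℝ → ℝ) : Prop :=
  ∀ U : Set ℝ, U.Nonempty → U ⊆ unitI → (∃ V : Set ℝ, IsOpen V ∧ U = V ∩ unitI) →
    ∃ n : ℕ, 1 ≤ n ∧ f^[n] '' U = unitI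

/-- The set of critical points of `f` in the unit interval. -/
def Crit (f : ℝ → ℝ) : Set ℝ := {x ∈ unitI | deriv f x = 0}

/-- The set of turning points of `f`: points of `I` at which `f` is not locally injective. -/
def TurnPts (f : ℝ → ℝ) : Set ℝ :=
  {x ∈ unitI | ∀ ε > 0, ¬ Set.InjOn f (ballI x ε)}

/-- A `C^3` diffeomorphism of `ℝ`. -/
def IsC3Diffeo (φ : ℝ → ℝ) : Prop :=
  ContDiff ℝ 3 φ ∧ Function.Bijective φ ∧ ∀ x : ℝ, deriv φ x ≠ 0

/-- `f` is non-flat at `c` with exponent `ℓc`. -/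
def NonflatAt (f : ℝ → ℝ) (ℓc : ℝ) (c : ℝ) : Prop :=
  1 < ℓc ∧ ∃ φ ψ : ℝ → ℝ, IsC3Diffeo φ ∧ IsC3Diffeo ψ ∧ φ c = 0 ∧ ψ (f c) = 0 ∧
    ∃ U ∈ nhdsWithin c unitI, ∀ x ∈ U, |ψ (f x)| = |φ x| ^ ℓc

/-- `f` is of class `C^3` with non-flat critical points, with exponents given by `ℓ`. -/
def C3NonflatWith (f : ℝ → ℝ) (ℓ : ℝ → ℝ) : Prop :=
  ContDiffOn ℝ 1 f unitI ∧ ContDiffOn ℝ 3 f (unitI \ Crit f) ∧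
    ∀ c ∈ Crit f, NonflatAt f (ℓ c) c

/-- `f` is of class `C^3` with non-flat critical points. -/
def C3Nonflat (f : ℝ → ℝ) : Prop := ∃ ℓ : ℝ → ℝ, C3NonflatWith f ℓ

/-- All periodic points of `f` are hyperbolic repelling. -/
def AllPeriodicRepelling (f : ℝ → ℝ) : Prop :=
  ∀ p ∈ unitI, ∀ n : ℕ, 1 ≤ n → f^[n] p = p → 1 < |deriv (f^[n]) p|

/-- The criticality of `f^m` at `x` with respect to `r`: the number of `j < m` such that
the connected component of `f^{-(m-j)}(B(f^m(x),r) ∩ I)` containing `f^j(x)` meets the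
set of turning points. -/
def criticality (f : ℝ → ℝ) (m : ℕ) (x r : ℝ) : ℕ :=
  Nat.card {j : ℕ // j < m ∧
    (connectedComponentIn (unitI ∩ f^[m - j] ⁻¹' ballI (f^[m] x) r) (f^[j] x) ∩ TurnPts f).Nonempty}

/-- `f` is semi-hyperbolic. -/
def SemiHyperbolic (f : ℝ → ℝ) : Prop :=
  ∃ r : ℝ, 0 < r ∧ ∃ D : ℕ, 1 ≤ D ∧ ∀ x ∈ unitI, ∀ n : ℕ, 1 ≤ n → criticality f n x r ≤ D

/-- `c` is a recurrent point of `f`: `c` belongs to the set of accumulation points of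
its forward orbit. -/
def RecurrentPt (f : ℝ → ℝ) (c : ℝ) : Prop :=
  ∀ ε > 0, ∀ N : ℕ, ∃ n : ℕ, N ≤ n ∧ |f^[n] c - c| < ε

/-- A Borel measure on the unit interval is doubling. -/
def DoublingOn (μ : Measure ℝ) : Prop :=
  ∃ C : ℝ, 0 < C ∧ ∃ r₀ : ℝ, 0 < r₀ ∧ ∀ x ∈ unitI, ∀ r : ℝ, 0 < r → r < r₀ →
    μ (ballI x (2 * r)) ≤ ENNReal.ofReal C * μ (ballI x r)

/-- A homeomorphism of the unit interval is quasi-symmetric. -/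
def QuasiSymmetricOn (h : ℝ → ℝ) : Prop :=
  ∃ K : ℝ, 1 ≤ K ∧ ∀ x ∈ unitI, ∀ ε : ℝ, 0 < ε → x + ε ∈ unitI → x - ε ∈ unitI →
    |h (x + ε) - h x| ≤ K * |h x - h (x - ε)| ∧
    |h x - h (x - ε)| ≤ K * |h (x + ε) - h x|

/-- `F` is piecewise affine on the unit interval with slope `±s` everywhere. -/
def PiecewiseAffineSlope (F : ℝ → ℝ) (s : ℝ) : Prop :=
  ∃ (n : ℕ) (a : Fin (n + 1) → ℝ), a 0 = 0 ∧ a (Fin.last n) = 1 ∧ StrictMono a ∧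
    ∀ i : Fin n, ∃ b σ : ℝ, (σ = 1 ∨ σ = -1) ∧
      ∀ x ∈ Set.Icc (a i.castSucc) (a i.succ), F x = σ * s * x + b

/-- `f` is quasi-symmetrically conjugate to a piecewise affine map of the unit interval
with slope `±s` everywhere. -/
def QSConjPiecewiseAffine (f : ℝ → ℝ) (s : ℝ) : Prop :=
  ∃ h F : ℝ → ℝ, ContinuousOn h unitI ∧ Set.BijOn h unitI unitI ∧ QuasiSymmetricOn h ∧
    Set.MapsTo F unitI unitI ∧ PiecewiseAffineSlope F s ∧ ∀ x ∈ unitI, h (f x) = F (h x)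

/-- The topological entropy of `f` on the unit interval (Bowen's definition). -/
def htop (f : ℝ → ℝ) : ℝ := (Dynamics.coverEntropy f unitI).toReal

/-- `μ` is an `f`-invariant Borel probability measure on the unit interval which is
non-atomic, has topological support equal to the unit interval, and has constant
Jacobian `s`; for a topologically exact multimodal map this characterizes the unique
measure of maximal entropy when `s = exp (htop f)`. -/
def IsMaxEntropyLike (f : ℝ → ℝ) (μ : Measure ℝ) (s : ℝ) : Prop :=
  IsProbabilityMeasure μ ∧ μ unitIᶜ = 0 ∧
    (∀ A : Set ℝ, MeasurableSet A → μ (f ⁻¹' A) = μ A) ∧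
    (∀ x : ℝ, μ {x} = 0) ∧
    (∀ x ∈ unitI, ∀ r : ℝ, 0 < r → 0 < μ (ballI x r)) ∧
    (∀ A : Set ℝ, MeasurableSet A → A ⊆ unitI → Set.InjOn f A →
      μ (f '' A) = ENNReal.ofReal s * μ A)

/-- `W` is a pull-back of `J` by `f^n`, i.e. a connected component of `f^{-n}(J)`. -/
def IsPullback (f : ℝ → ℝ) (n : ℕ) (J W : Set ℝ) : Prop :=
  ∃ x ∈ unitI ∩ f^[n] ⁻¹' J, W = connectedComponentIn (unitI ∩ f^[n] ⁻¹' J) x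

/-- `J` is `τ`-well inside `T` (for intervals): both components of `T ∖ J`
have length at least `τ|J|`. -/
def WellInside (τ : ℝ) (J T : Set ℝ) : Prop :=
  J ⊆ T ∧ τ * Metric.diam J ≤ sInf J - sInf T ∧ τ * Metric.diam J ≤ sSup T - sSup J

/-! ### Axiomatic setting, thin chains and bounded distortion -/

/-- The properties of `f` on which the argument rests: a finite set `K` (the critical points), a
continuous self-map `f` of `I` (extended to `ℝ`), and quantitative estimates.
* `inj`, `exact`, `endpt`: monotonicity between critical points, exactness, and the fact that the
  endpoint values are taken only at critical points and endpoints.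
* `R`: on a thin segment `[u, v]` the map is affine up to a factor controlled by its relative length.
* `P`: a segment in the outer half of `[c, u]` keeps its proportion in the image.
* `Q`: near a critical point a subinterval of proportion `κ` has an image of proportion `q κ`.
* `hyp`: periodic points are uniformly expanding nearby.
* `N`: critical points are not recurrent, with a uniform return distance. -/
structure Sys (f : ℝ → ℝ) where
  K : Finset ℝ
  K_ne : K.Nonempty
  K_sub : ∀ c ∈ K, c ∈ Icc (0:ℝ) 1
  maps : ∀ x, f x ∈ Icc (0:ℝ) 1
  cont : Continuous f
  inj : ∀ a b, 0 ≤ a → b ≤ 1 → (∀ c ∈ K, c ∉ Ioo a b) → InjOn f (Icc a b)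
  exact : ∀ a b, 0 ≤ a → a < b → b ≤ 1 → ∃ n, f^[n] '' Icc a b = Icc 0 1
  endpt : ∀ p ∈ Icc (0:ℝ) 1, (f p = 0 ∨ f p = 1) → p ∈ K ∨ p = 0 ∨ p = 1
  C0 : ℝ
  C0_pos : 0 < C0
  R : ∀ u v, u ∈ Icc (0:ℝ) 1 → v ∈ Icc (0:ℝ) 1 →
    0 < infDist u K → 0 < infDist v K → 2 * |u - v| ≤ infDist u K → 2 * |u - v| ≤ infDist v K →
    ∀ a ∈ uIcc u v, ∀ b ∈ uIcc u v,
      |f a - f b| * |u - v| ≤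
        Real.exp (C0 * (|u - v| / min (infDist u K) (infDist v K))) * (|a - b| * |f u - f v|) ∧
      |a - b| * |f u - f v| ≤
        Real.exp (C0 * (|u - v| / min (infDist u K) (infDist v K))) * (|f a - f b| * |u - v|)
  CP : ℝ
  CP_pos : 0 < CP
  ρ0 : ℝ
  ρ0_pos : 0 < ρ0
  P : ∀ c ∈ K, ∀ u ∈ Icc (0:ℝ) 1, |u - c| ≤ ρ0 → ∀ v ∈ uIcc c u, |u - c| ≤ 2 * |v - c| →
    |u - v| * |f c - f u| ≤ CP * (|u - c| * |f u - f v|)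
  q : ℝ → ℝ
  q_pos : ∀ κ, 0 < κ → 0 < q κ
  Q : ∀ κ, 0 < κ → ∀ c ∈ K, ∀ a b, 0 ≤ a → b ≤ 1 → c ∈ Icc a b → b - a ≤ ρ0 →
    ∀ l₁ l₂, a ≤ l₁ → l₁ ≤ l₂ → l₂ ≤ b → κ * (b - a) ≤ l₂ - l₁ →
    ∃ u ∈ Icc l₁ l₂, ∃ v ∈ Icc l₁ l₂, ∀ s ∈ Icc a b, ∀ t ∈ Icc a b,
      q κ * |f s - f t| ≤ |f u - f v|
  hyp : ∀ z ∈ Icc (0:ℝ) 1, ∀ m, 1 ≤ m → f^[m] z = z → ∃ lam > 1, ∃ r > 0,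
    ∀ u ∈ Icc (0:ℝ) 1, ∀ v ∈ Icc (0:ℝ) 1, |u - z| < r → |v - z| < r →
      lam * |u - v| ≤ |f^[m] u - f^[m] v|
  τ0 : ℝ
  τ0_pos : 0 < τ0
  N : ∀ c ∈ K, ∀ m, 1 ≤ m → τ0 ≤ |f^[m] c - c|

namespace Sys
variable {f : ℝ → ℝ} (S : Sys f)

/-- Distance to the critical set. -/
def d (x : ℝ) : ℝ := infDist x (S.K : Set ℝ)

/-- Length of `[u, v]` relative to its distance to the critical set. -/
def w (u v : ℝ) : ℝ := |u - v| / min (S.d u) (S.d v)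

/-- The segment `[u, v]` is short compared with its distance to the critical set. -/
structure Thin (u v : ℝ) : Prop where
  pu : 0 < S.d u
  pv : 0 < S.d v
  hu : 2 * |u - v| ≤ S.d u
  hv : 2 * |u - v| ≤ S.d v

/-- No critical point of `f` is met by the first `n` images of `[x, y]`. -/
def NH (x y : ℝ) (n : ℕ) : Prop := ∀ j < n, ∀ u ∈ uIcc x y, f^[j] u ∉ S.K

/-- All pairs `(x_j, y_j)`, `j < n`, are thin. -/
def TC (x y : ℝ) (n : ℕ) : Prop := ∀ j < n, S.Thin (f^[j] x) (f^[j] y)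

variable {S}

lemma d_nonneg (x : ℝ) : 0 ≤ S.d x := infDist_nonneg

lemma d_le {x c : ℝ} (hc : c ∈ S.K) : S.d x ≤ |x - c| := by
  have := infDist_le_dist_of_mem (x := x) (s := (S.K : Set ℝ)) (y := c) (by exact_mod_cast hc)
  rwa [Real.dist_eq] at this

lemma exists_d (x : ℝ) : ∃ c ∈ S.K, S.d x = |x - c| := by
  obtain ⟨c, hc, h⟩ := (S.K.finite_toSet.isCompact).exists_infDist_eq_dist
    (by exact_mod_cast S.K_ne) x
  exact ⟨c, by exact_mod_cast hc, by rw [d, h, Real.dist_eq]⟩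

lemma d_le_add (x y : ℝ) : S.d x ≤ S.d y + |x - y| := by
  have := infDist_le_infDist_add_dist (s := (S.K : Set ℝ)) (x := x) (y := y)
  rwa [Real.dist_eq] at this

lemma d_pos_iff {x : ℝ} : 0 < S.d x ↔ x ∉ S.K := by
  constructor
  · intro h hx
    have := S.d_le (x := x) hx
    simp at this; linarith
  · intro h
    obtain ⟨c, hc, e⟩ := S.exists_d x
    rw [e, abs_pos, sub_ne_zero]
    rintro rfl; exact h hc

lemma w_nonneg (u v : ℝ) : 0 ≤ S.w u v :=
  div_nonneg (abs_nonneg _) (le_min (d_nonneg _) (d_nonneg _))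

lemma w_comm (u v : ℝ) : S.w u v = S.w v u := by
  unfold w; rw [abs_sub_comm, min_comm]

lemma Thin.symm {u v : ℝ} (h : S.Thin u v) : S.Thin v u :=
  ⟨h.pv, h.pu, by rw [abs_sub_comm]; exact h.hv, by rw [abs_sub_comm]; exact h.hu⟩

lemma Thin.w_le {u v : ℝ} (h : S.Thin u v) : S.w u v ≤ 1 / 2 := by
  unfold w
  rw [div_le_iff₀ (lt_min h.pu h.pv)]
  have := le_min h.hu h.hv
  linarith

lemma abs_sub_le_of_mem_uIcc {u v a b : ℝ} (ha : a ∈ uIcc u v) (hb : b ∈ uIcc u v) :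
    |a - b| ≤ |u - v| := by
  have := abs_sub_le_of_uIcc_subset_uIcc (uIcc_subset_uIcc hb ha)
  rwa [abs_sub_comm v u] at this

/-- In a segment free of critical points the distance to them is minimal at an endpoint. -/
lemma min_d_le {u v a : ℝ} (h : ∀ t ∈ uIcc u v, t ∉ S.K) (ha : a ∈ uIcc u v) :
    min (S.d u) (S.d v) ≤ S.d a := by
  obtain ⟨c, hc, e⟩ := S.exists_d a
  rw [e]
  have hcn : c ∉ uIcc u v := fun h' => h c h' hc
  have h1 := S.d_le (x := u) hc
  have h2 := S.d_le (x := v) hc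
  rcases le_total u v with huv | huv
  · rw [uIcc_of_le huv] at ha hcn
    rcases lt_or_ge c u with hcu | hcu
    · refine (min_le_left _ _).trans (h1.trans ?_)
      rw [abs_of_pos (by linarith), abs_of_pos (by linarith [ha.1])]; linarith [ha.1]
    · have hcv : v < c := by by_contra hh; exact hcn ⟨hcu, by linarith⟩
      refine (min_le_right _ _).trans (h2.trans ?_)
      rw [abs_of_neg (by linarith), abs_of_neg (by linarith [ha.2])]; linarith [ha.2]
  · rw [uIcc_of_ge huv] at ha hcn
    rcases lt_or_ge c v with hcu | hcu
    · refine (min_le_right _ _).trans (h2.trans ?_)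
      rw [abs_of_pos (by linarith), abs_of_pos (by linarith [ha.1])]; linarith [ha.1]
    · have hcv : u < c := by by_contra hh; exact hcn ⟨hcu, by linarith⟩
      refine (min_le_left _ _).trans (h1.trans ?_)
      rw [abs_of_neg (by linarith), abs_of_neg (by linarith [ha.2])]; linarith [ha.2]

lemma Thin.notMem {u v : ℝ} (h : S.Thin u v) : ∀ t ∈ uIcc u v, t ∉ S.K := by
  intro t ht hK
  have h1 := S.d_le (x := u) hK
  have h2 := abs_sub_le_of_mem_uIcc (left_mem_uIcc (a := u) (b := v)) ht
  have := h.pu; have := h.hu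
  linarith [abs_nonneg (u - v)]

lemma Thin.sub {u v a b : ℝ} (h : S.Thin u v) (ha : a ∈ uIcc u v) (hb : b ∈ uIcc u v) :
    S.Thin a b := by
  have h1 := min_d_le h.notMem ha
  have h2 := min_d_le h.notMem hb
  have h3 := abs_sub_le_of_mem_uIcc ha hb
  have h4 := le_min h.hu h.hv
  have h5 := lt_min h.pu h.pv
  exact ⟨by linarith, by linarith, by linarith, by linarith⟩

lemma w_sub {u v a b : ℝ} (h : ∀ t ∈ uIcc u v, t ∉ S.K) (ha : a ∈ uIcc u v) (hb : b ∈ uIcc u v) :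
    S.w a b ≤ S.w u v := by
  have h1 := min_d_le h ha
  have h2 := min_d_le h hb
  have h3 := abs_sub_le_of_mem_uIcc ha hb
  unfold w
  have h5 : 0 < min (S.d u) (S.d v) :=
    lt_min (d_pos_iff.2 (h _ left_mem_uIcc)) (d_pos_iff.2 (h _ right_mem_uIcc))
  exact div_le_div₀ (abs_nonneg _) h3 h5 (le_min h1 h2)

lemma contIter (S : Sys f) (n : ℕ) : Continuous f^[n] := S.cont.iterate n

lemma mapsI (S : Sys f) (n : ℕ) {x : ℝ} (hx : x ∈ Icc (0:ℝ) 1) : f^[n] x ∈ Icc (0:ℝ) 1 := by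
  cases n with
  | zero => exact hx
  | succ n => rw [Function.iterate_succ_apply']; exact S.maps _

lemma uIcc_subI {a b : ℝ} (ha : a ∈ Icc (0:ℝ) 1) (hb : b ∈ Icc (0:ℝ) 1) :
    uIcc a b ⊆ Icc (0:ℝ) 1 := by
  intro t ht
  rcases le_total a b with h | h
  · rw [uIcc_of_le h] at ht; exact ⟨ha.1.trans ht.1, ht.2.trans hb.2⟩
  · rw [uIcc_of_ge h] at ht; exact ⟨hb.1.trans ht.1, ht.2.trans ha.2⟩

/-- A continuous map injective on a segment sends it onto the segment between the image endpoints. -/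
lemma image_uIcc_of_inj {g : ℝ → ℝ} (hg : Continuous g) {a b : ℝ} (hi : InjOn g (uIcc a b)) :
    g '' uIcc a b = uIcc (g a) (g b) := by
  have key : ∀ a b, a ≤ b → InjOn g (Icc a b) → g '' Icc a b = uIcc (g a) (g b) := by
    intro a b hab hi
    rcases hg.continuousOn.strictMonoOn_of_injOn_Icc' hab hi with h | h
    · apply Subset.antisymm
      · rintro _ ⟨t, ht, rfl⟩
        have h1 := h.monotoneOn (left_mem_Icc.2 hab) ht ht.1
        have h2 := h.monotoneOn ht (right_mem_Icc.2 hab) ht.2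
        rw [uIcc_of_le (h1.trans h2)]; exact ⟨h1, h2⟩
      · have := intermediate_value_uIcc (a := a) (b := b) (f := g) hg.continuousOn
        rwa [uIcc_of_le hab] at this
    · apply Subset.antisymm
      · rintro _ ⟨t, ht, rfl⟩
        have h1 := h.antitoneOn (left_mem_Icc.2 hab) ht ht.1
        have h2 := h.antitoneOn ht (right_mem_Icc.2 hab) ht.2
        rw [uIcc_of_ge (h2.trans h1)]; exact ⟨h2, h1⟩
      · have := intermediate_value_uIcc (a := a) (b := b) (f := g) hg.continuousOn
        rwa [uIcc_of_le hab] at this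
  rcases le_total a b with h | h
  · rw [uIcc_of_le h] at hi ⊢; exact key a b h hi
  · rw [uIcc_of_ge h] at hi ⊢; rw [key b a h hi, uIcc_comm]

lemma inj_uIcc (S : Sys f) {a b : ℝ} (ha : a ∈ Icc (0:ℝ) 1) (hb : b ∈ Icc (0:ℝ) 1)
    (h : ∀ t ∈ uIcc a b, t ∉ S.K) : InjOn f (uIcc a b) := by
  rcases le_total a b with hab | hab
  · rw [uIcc_of_le hab] at h ⊢
    exact S.inj a b ha.1 hb.2 fun c hc hc' => h c (Ioo_subset_Icc_self hc') hc
  · rw [uIcc_of_ge hab] at h ⊢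
    exact S.inj b a hb.1 ha.2 fun c hc hc' => h c (Ioo_subset_Icc_self hc') hc

/-- Iterates are injective on order-connected sets whose images avoid the critical points. -/
lemma injOn_iter (S : Sys f) {H : Set ℝ} (hH : H.OrdConnected) (hI : H ⊆ Icc 0 1) {n : ℕ}
    (h : ∀ j < n, ∀ u ∈ H, f^[j] u ∉ S.K) : InjOn f^[n] H := by
  induction n with
  | zero => exact fun a _ b _ h => h
  | succ n ih =>
    have ih := ih fun j hj => h j (by omega)
    intro a ha b hb hab
    rw [Function.iterate_succ_apply', Function.iterate_succ_apply'] at hab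
    have hsub : uIcc a b ⊆ H := hH.uIcc_subset ha hb
    have him := image_uIcc_of_inj (S.contIter n) (ih.mono hsub)
    refine ih ha hb (S.inj_uIcc (S.mapsI n (hI ha)) (S.mapsI n (hI hb)) ?_
      left_mem_uIcc right_mem_uIcc hab)
    rw [← him]
    rintro _ ⟨t, ht, rfl⟩
    exact h n (by omega) t (hsub ht)

lemma NH.inj {x y : ℝ} {n : ℕ} (h : S.NH x y n) (hx : x ∈ Icc (0:ℝ) 1) (hy : y ∈ Icc (0:ℝ) 1) :
    InjOn f^[n] (uIcc x y) := S.injOn_iter ordConnected_uIcc (uIcc_subI hx hy) h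

lemma NH.image {x y : ℝ} {n : ℕ} (h : S.NH x y n) (hx : x ∈ Icc (0:ℝ) 1) (hy : y ∈ Icc (0:ℝ) 1) :
    f^[n] '' uIcc x y = uIcc (f^[n] x) (f^[n] y) := image_uIcc_of_inj (S.contIter n) (h.inj hx hy)

lemma NH.mono {x y : ℝ} {n m : ℕ} (h : S.NH x y n) (hm : m ≤ n) : S.NH x y m :=
  fun j hj => h j (by omega)

lemma NH.sub {x y a b : ℝ} {n : ℕ} (h : S.NH x y n) (ha : a ∈ uIcc x y) (hb : b ∈ uIcc x y) :
    S.NH a b n := fun j hj u hu => h j hj u (uIcc_subset_uIcc ha hb hu)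

lemma NH.mem {x y a : ℝ} {n : ℕ} (h : S.NH x y n) (hx : x ∈ Icc (0:ℝ) 1) (hy : y ∈ Icc (0:ℝ) 1)
    (ha : a ∈ uIcc x y) : f^[n] a ∈ uIcc (f^[n] x) (f^[n] y) := by
  rw [← h.image hx hy]; exact mem_image_of_mem _ ha

lemma NH.shift {x y : ℝ} {n m : ℕ} (h : S.NH x y (m + n)) (hx : x ∈ Icc (0:ℝ) 1)
    (hy : y ∈ Icc (0:ℝ) 1) : S.NH (f^[m] x) (f^[m] y) n := by
  intro j hj u hu
  rw [← (h.mono (m := m) (by omega)).image hx hy] at hu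
  obtain ⟨t, ht, rfl⟩ := hu
  rw [← Function.iterate_add_apply, add_comm]
  exact h (m + j) (by omega) t ht

lemma NH.append {x y : ℝ} {n m : ℕ} (h : S.NH x y m) (hx : x ∈ Icc (0:ℝ) 1)
    (hy : y ∈ Icc (0:ℝ) 1) (h' : S.NH (f^[m] x) (f^[m] y) n) : S.NH x y (m + n) := by
  intro j hj u hu
  rcases lt_or_ge j m with hjm | hjm
  · exact h j hjm u hu
  · obtain ⟨k, rfl⟩ := Nat.exists_eq_add_of_le hjm
    rw [add_comm, Function.iterate_add_apply]
    exact h' k (by omega) _ (h.mem hx hy hu)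

lemma NH.symm {x y : ℝ} {n : ℕ} (h : S.NH x y n) : S.NH y x n := by
  unfold NH; rw [uIcc_comm]; exact h

lemma TC.NH {x y : ℝ} {n : ℕ} (h : S.TC x y n) (hx : x ∈ Icc (0:ℝ) 1) (hy : y ∈ Icc (0:ℝ) 1) :
    S.NH x y n := by
  induction n with
  | zero => intro j hj; omega
  | succ n ih =>
    have ih := ih fun j hj => h j (by omega)
    refine ih.append hx hy (n := 1) fun j hj u hu => ?_
    obtain rfl : j = 0 := by omega
    exact (h n (by omega)).notMem u hu

lemma TC.mono {x y : ℝ} {n m : ℕ} (h : S.TC x y n) (hm : m ≤ n) : S.TC x y m :=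
  fun j hj => h j (by omega)

lemma TC.sub {x y a b : ℝ} {n : ℕ} (h : S.TC x y n) (hx : x ∈ Icc (0:ℝ) 1)
    (hy : y ∈ Icc (0:ℝ) 1) (ha : a ∈ uIcc x y) (hb : b ∈ uIcc x y) : S.TC a b n :=
  fun j hj => (h j hj).sub (((h.NH hx hy).mono hj.le).mem hx hy ha)
    (((h.NH hx hy).mono hj.le).mem hx hy hb)

lemma TC.shift {x y : ℝ} {n m : ℕ} (h : S.TC x y (m + n)) : S.TC (f^[m] x) (f^[m] y) n := by
  intro j hj
  rw [← Function.iterate_add_apply, ← Function.iterate_add_apply, add_comm]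
  exact h _ (by omega)

lemma TC.symm {x y : ℝ} {n : ℕ} (h : S.TC x y n) : S.TC y x n := fun j hj => (h j hj).symm

/-- Bounded distortion along a thin chain. -/
lemma TC.dist {x y : ℝ} {n : ℕ} (h : S.TC x y n) (hx : x ∈ Icc (0:ℝ) 1) (hy : y ∈ Icc (0:ℝ) 1)
    {a b : ℝ} (ha : a ∈ uIcc x y) (hb : b ∈ uIcc x y) {W : ℝ}
    (hW : ∑ j ∈ Finset.range n, S.w (f^[j] x) (f^[j] y) ≤ W) :
    |f^[n] a - f^[n] b| * |x - y| ≤ Real.exp (S.C0 * W) * (|a - b| * |f^[n] x - f^[n] y|) ∧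
    |a - b| * |f^[n] x - f^[n] y| ≤ Real.exp (S.C0 * W) * (|f^[n] a - f^[n] b| * |x - y|) := by
  induction n generalizing W with
  | zero =>
    have hW0 : 0 ≤ W := by simpa using hW
    have : 1 ≤ Real.exp (S.C0 * W) := Real.one_le_exp (mul_nonneg S.C0_pos.le hW0)
    have h0 : 0 ≤ |a - b| * |x - y| := by positivity
    simp only [Function.iterate_zero, id]
    constructor <;> nlinarith
  | succ n ih =>
    rw [Finset.sum_range_succ] at hW
    set w' := S.w (f^[n] x) (f^[n] y) with hw'
    obtain ⟨i1, i2⟩ := ih (h.mono (by omega)) (W := W - w') (by linarith)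
    have hn := h.NH hx hy
    have hth := h n (by omega)
    have ma := (hn.mono (Nat.le_succ n)).mem hx hy ha
    have mb := (hn.mono (Nat.le_succ n)).mem hx hy hb
    have hR := S.R (f^[n] x) (f^[n] y) (S.mapsI n hx) (S.mapsI n hy) hth.pu hth.pv hth.hu hth.hv
      (f^[n] a) ma (f^[n] b) mb
    obtain ⟨r1, r2⟩ := hR
    simp only [← Function.iterate_succ_apply' f] at r1 r2
    change _ ≤ Real.exp (S.C0 * w') * _ at r1
    change _ ≤ Real.exp (S.C0 * w') * _ at r2
    have hexp : Real.exp (S.C0 * W) = Real.exp (S.C0 * w') * Real.exp (S.C0 * (W - w')) := by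
      rw [← Real.exp_add]; ring_nf
    rw [hexp]
    set E1 := Real.exp (S.C0 * w')
    set E2 := Real.exp (S.C0 * (W - w'))
    have hE1 : 0 < E1 := Real.exp_pos _
    have hE2 : 0 < E2 := Real.exp_pos _
    by_cases hxy : f^[n] x = f^[n] y
    · have hxy' : x = y := by
        by_contra hne
        exact hne ((hn.mono (Nat.le_succ n)).inj hx hy left_mem_uIcc right_mem_uIcc hxy)
      subst hxy'
      have : a = b := by simp only [uIcc_self, mem_singleton_iff] at ha hb; rw [ha, hb]
      subst this; simp
    · have hpos : 0 < |f^[n] x - f^[n] y| := abs_pos.2 (sub_ne_zero.2 hxy)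
      have p1 := abs_nonneg (f^[n+1] x - f^[n+1] y)
      have p2 := abs_nonneg (f^[n+1] a - f^[n+1] b)
      have h1 := abs_nonneg (x - y)
      have h2 := abs_nonneg (a - b)
      generalize |f^[n] x - f^[n] y| = B at *
      generalize |f^[n] a - f^[n] b| = A at *
      generalize |f^[n+1] x - f^[n+1] y| = B' at *
      generalize |f^[n+1] a - f^[n+1] b| = A' at *
      generalize |x - y| = X at *
      generalize |a - b| = Y at *
      constructor
      · refine le_of_mul_le_mul_right ?_ hpos
        calc A' * X * B = (A' * B) * X := by ring
          _ ≤ (E1 * (A * B')) * X := by gcongr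
          _ = E1 * B' * (A * X) := by ring
          _ ≤ E1 * B' * (E2 * (Y * B)) := by gcongr
          _ = E1 * E2 * (Y * B') * B := by ring
      · refine le_of_mul_le_mul_right ?_ hpos
        calc Y * B' * B = (Y * B) * B' := by ring
          _ ≤ (E2 * (A * X)) * B' := by gcongr
          _ = E2 * X * (A * B') := by ring
          _ ≤ E2 * X * (E1 * (A' * B)) := by gcongr
          _ = E1 * E2 * (A' * X) * B := by ring

lemma surj1 (S : Sys f) : ∀ y ∈ Icc (0:ℝ) 1, ∃ x ∈ Icc (0:ℝ) 1, f x = y := by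
  obtain ⟨n, hn⟩ := S.exact 0 (1/2) le_rfl (by norm_num) (by norm_num)
  intro y hy
  rw [← hn] at hy
  obtain ⟨x, hx, rfl⟩ := hy
  have hx1 : x ∈ Icc (0:ℝ) 1 := ⟨hx.1, by linarith [hx.2]⟩
  cases n with
  | zero =>
    have : (1:ℝ) ∈ f^[0] '' Icc (0:ℝ) (1/2) := by rw [hn]; simp
    simp at this
    norm_num at this
  | succ n => exact ⟨f^[n] x, S.mapsI n hx1, (Function.iterate_succ_apply' f n x).symm⟩

lemma surj (S : Sys f) (n : ℕ) : ∀ y ∈ Icc (0:ℝ) 1, ∃ x ∈ Icc (0:ℝ) 1, f^[n] x = y := by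
  induction n with
  | zero => exact fun y hy => ⟨y, hy, rfl⟩
  | succ n ih =>
    intro y hy
    obtain ⟨z, hz, rfl⟩ := S.surj1 y hy
    obtain ⟨x, hx, rfl⟩ := ih z hz
    exact ⟨x, hx, Function.iterate_succ_apply' f n x⟩

lemma exact_ge (S : Sys f) {a b : ℝ} {n m : ℕ} (h : f^[n] '' Icc a b = Icc 0 1) (hm : n ≤ m) :
    ∀ y ∈ Icc (0:ℝ) 1, ∃ x ∈ Icc a b, f^[m] x = y := by
  obtain ⟨k, rfl⟩ := Nat.exists_eq_add_of_le hm
  intro y hy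
  obtain ⟨z, hz, rfl⟩ := S.surj k y hy
  rw [← h] at hz
  obtain ⟨x, hx, rfl⟩ := hz
  exact ⟨x, hx, by rw [add_comm, Function.iterate_add_apply]⟩

/-- Exactness is uniform over all segments of a given length. -/
lemma T2 (S : Sys f) {ε : ℝ} (hε : 0 < ε) : ∃ N, ∀ a ∈ Icc (0:ℝ) 1, ∀ b ∈ Icc (0:ℝ) 1,
    ε ≤ |a - b| → ∀ n ≥ N, ∀ y ∈ Icc (0:ℝ) 1, ∃ x ∈ uIcc a b, f^[n] x = y := by
  obtain ⟨M, hM⟩ := exists_nat_gt (2 / ε)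
  have hM0 : (0:ℝ) < M := lt_trans (by positivity) hM
  have hMn : 0 < M := by exact_mod_cast hM0
  have hsm : 2 / (M:ℝ) < ε := by rw [div_lt_iff₀ hM0]; rwa [div_lt_iff₀ hε, mul_comm] at hM
  have hch : ∀ i : ℕ, ∃ n, i < M → f^[n] '' Icc ((i:ℝ)/M) ((i+1:ℝ)/M) = Icc 0 1 := by
    intro i
    by_cases hi : i < M
    · obtain ⟨n, hn⟩ := S.exact ((i:ℝ)/M) ((i+1:ℝ)/M) (by positivity) (by gcongr; linarith)
        (by rw [div_le_one hM0]; exact_mod_cast hi)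
      exact ⟨n, fun _ => hn⟩
    · exact ⟨0, fun h => absurd h hi⟩
  choose nn hnn using hch
  refine ⟨∑ i ∈ Finset.range M, nn i, ?_⟩
  have key : ∀ a ∈ Icc (0:ℝ) 1, ∀ b ∈ Icc (0:ℝ) 1, a ≤ b → ε ≤ |a - b| →
      ∀ n ≥ ∑ i ∈ Finset.range M, nn i, ∀ y ∈ Icc (0:ℝ) 1, ∃ x ∈ uIcc a b, f^[n] x = y := by
    intro a ha b hb hab hl n hn y hy
    rw [abs_sub_comm, abs_of_nonneg (by linarith)] at hl
    set i := ⌈a * M⌉₊ with hi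
    have h1 : a * M ≤ i := Nat.le_ceil _
    have h2 : (i:ℝ) < a * M + 1 := Nat.ceil_lt_add_one (mul_nonneg ha.1 hM0.le)
    have h3 : (2:ℝ) < ε * M := by rwa [div_lt_iff₀ hM0] at hsm
    have h4 : ε * M ≤ (b - a) * M := by gcongr
    have h6 : b * M ≤ M := by nlinarith [hb.2]
    have h5 : i < M := by
      have : (i:ℝ) < M := by nlinarith
      exact_mod_cast this
    have hle : nn i ≤ n := le_trans
      (Finset.single_le_sum (f := nn) (fun _ _ => Nat.zero_le _) (Finset.mem_range.2 h5)) hn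
    obtain ⟨x, hx, hxy⟩ := S.exact_ge (hnn i h5) hle y hy
    refine ⟨x, ?_, hxy⟩
    rw [uIcc_of_le hab]
    constructor
    · refine le_trans ?_ hx.1
      rw [le_div_iff₀ hM0]; exact h1
    · refine hx.2.trans ?_
      rw [div_le_iff₀ hM0]; nlinarith
  intro a ha b hb hl n hn y hy
  rcases le_total a b with hab | hab
  · exact key a ha b hb hab hl n hn y hy
  · obtain ⟨x, hx, h⟩ := key b hb a ha hab (by rwa [abs_sub_comm]) n hn y hy
    exact ⟨x, by rwa [uIcc_comm], h⟩

lemma unifCont (S : Sys f) (N : ℕ) {ε : ℝ} (hε : 0 < ε) : ∃ δ > 0, ∀ k ≤ N,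
    ∀ u ∈ Icc (0:ℝ) 1, ∀ v ∈ Icc (0:ℝ) 1, |u - v| < δ → |f^[k] u - f^[k] v| < ε := by
  induction N with
  | zero =>
    refine ⟨ε, hε, fun k hk u _ v _ h => ?_⟩
    obtain rfl : k = 0 := by omega
    exact h
  | succ N ih =>
    obtain ⟨δ, hδ, h⟩ := ih
    have huc := isCompact_Icc.uniformContinuousOn_of_continuous
      ((S.contIter (N+1)).continuousOn (s := Icc (0:ℝ) 1))
    rw [Metric.uniformContinuousOn_iff] at huc
    obtain ⟨δ', hδ', h'⟩ := huc ε hε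
    refine ⟨min δ δ', lt_min hδ hδ', fun k hk u hu v hv huv => ?_⟩
    rcases Nat.lt_or_ge k (N+1) with hkN | hkN
    · exact h k (by omega) u hu v hv (huv.trans_le (min_le_left _ _))
    · obtain rfl : k = N + 1 := by omega
      have := h' u hu v hv (by rw [Real.dist_eq]; exact huv.trans_le (min_le_right _ _))
      rwa [Real.dist_eq] at this

/-- Segments with a short image under some iterate are short. -/
lemma T1 (S : Sys f) {ε : ℝ} (hε : 0 < ε) : ∃ δ > 0, ∀ a ∈ Icc (0:ℝ) 1, ∀ b ∈ Icc (0:ℝ) 1,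
    ∀ n, (∀ u ∈ uIcc a b, ∀ v ∈ uIcc a b, |f^[n] u - f^[n] v| < δ) → |a - b| < ε := by
  obtain ⟨N, hN⟩ := S.T2 hε
  obtain ⟨δ, hδ, hd⟩ := S.unifCont N (ε := 1/2) (by norm_num)
  refine ⟨min δ 1, lt_min hδ one_pos, fun a ha b hb n h => ?_⟩
  by_contra hab
  rw [not_lt] at hab
  have e0 : (0:ℝ) ∈ Icc (0:ℝ) 1 := by simp
  have e1 : (1:ℝ) ∈ Icc (0:ℝ) 1 := by simp
  rcases le_total N n with hn | hn
  · obtain ⟨u, hu, hu'⟩ := hN a ha b hb hab n hn 0 e0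
    obtain ⟨v, hv, hv'⟩ := hN a ha b hb hab n hn 1 e1
    have := (h u hu v hv).trans_le (min_le_right _ _)
    rw [hu', hv'] at this
    norm_num at this
  · obtain ⟨u, hu, hu'⟩ := hN a ha b hb hab N le_rfl 0 e0
    obtain ⟨v, hv, hv'⟩ := hN a ha b hb hab N le_rfl 1 e1
    have h1 := (h u hu v hv).trans_le (min_le_left _ _)
    have hI := uIcc_subI ha hb
    have := hd (N - n) (by omega) _ (S.mapsI n (hI hu)) _ (S.mapsI n (hI hv)) h1
    rw [← Function.iterate_add_apply, ← Function.iterate_add_apply, Nat.sub_add_cancel hn,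
      hu', hv'] at this
    norm_num at this

/-- Distinct critical points are a definite distance apart. -/
lemma gap (S : Sys f) : ∃ g > 0, ∀ c ∈ S.K, ∀ c' ∈ S.K, |c - c'| < g → c = c' := by
  classical
  have : ∃ g > 0, ∀ p ∈ (S.K ×ˢ S.K), |p.1 - p.2| < g → p.1 = p.2 := by
    generalize S.K ×ˢ S.K = s
    induction s using Finset.induction_on with
    | empty => exact ⟨1, one_pos, by simp⟩
    | insert p s _ ih =>
      obtain ⟨g, hg, h⟩ := ih
      by_cases hp : p.1 = p.2
      · refine ⟨g, hg, fun q hq hq' => ?_⟩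
        rcases Finset.mem_insert.1 hq with rfl | hq
        · exact hp
        · exact h q hq hq'
      · refine ⟨min g |p.1 - p.2|, lt_min hg (abs_pos.2 (sub_ne_zero.2 hp)), fun q hq hq' => ?_⟩
        rcases Finset.mem_insert.1 hq with rfl | hq
        · exact absurd (hq'.trans_le (min_le_right _ _)) (lt_irrefl _)
        · exact h q hq (hq'.trans_le (min_le_left _ _))
  obtain ⟨g, hg, h⟩ := this
  exact ⟨g, hg, fun c hc c' hc' => h (c, c') (Finset.mem_product.2 ⟨hc, hc'⟩)⟩

end Sys

/-! ### Passages near critical points -/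

namespace Sys
variable {f : ℝ → ℝ} {S : Sys f}

/-- Thin chains staying near `Y` and ending in a short segment have bounded total relative
length. -/
def GoodSet (S : Sys f) (Y : Set ℝ) : Prop :=
  ∃ U, IsOpen U ∧ Y ⊆ U ∧ ∃ τ > 0, ∃ B, ∀ x ∈ Icc (0:ℝ) 1, ∀ y ∈ Icc (0:ℝ) 1, ∀ n,
    (∀ j ≤ n, f^[j] x ∈ U ∧ f^[j] y ∈ U ∧ S.Thin (f^[j] x) (f^[j] y)) →
    |f^[n] x - f^[n] y| ≤ τ → ∑ j ∈ Finset.range (n + 1), S.w (f^[j] x) (f^[j] y) ≤ B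

/-- `b` lies in the closure of the strict forward orbit of `a`. -/
def Rel (f : ℝ → ℝ) (a b : ℝ) : Prop := b ∈ closure {y | ∃ m ≥ 1, y = f^[m] a}

lemma Rel.trans (S : Sys f) {a b c : ℝ} (h : Rel f a b) (h' : Rel f b c) : Rel f a c := by
  have h1 : ∀ m ≥ 1, f^[m] b ∈ closure {y | ∃ m ≥ 1, y = f^[m] a} := by
    intro m hm
    refine map_mem_closure (S.contIter m) h ?_
    rintro _ ⟨k, hk, rfl⟩
    exact ⟨m + k, by omega, by rw [Function.iterate_add_apply]⟩
  refine closure_minimal ?_ isClosed_closure h'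
  rintro _ ⟨m, hm, rfl⟩
  exact h1 m hm

lemma not_rel_self (S : Sys f) {c : ℝ} (hc : c ∈ S.K) : ¬ Rel f c c := by
  intro h
  rw [Rel, Metric.mem_closure_iff] at h
  obtain ⟨_, ⟨m, hm, rfl⟩, hd⟩ := h S.τ0 S.τ0_pos
  rw [Real.dist_eq, abs_sub_comm] at hd
  linarith [S.N c hc m hm]

lemma exists_rel_gap (S : Sys f) : ∃ κ > 0, ∀ c ∈ S.K, ∀ c' ∈ S.K, ∀ m ≥ 1,
    |f^[m] c - c'| < κ → Rel f c c' := by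
  classical
  have : ∃ κ > 0, ∀ p ∈ S.K ×ˢ S.K, ∀ m ≥ 1, |f^[m] p.1 - p.2| < κ → Rel f p.1 p.2 := by
    generalize S.K ×ˢ S.K = s
    induction s using Finset.induction_on with
    | empty => exact ⟨1, one_pos, by simp⟩
    | insert p s _ ih =>
      obtain ⟨g, hg, h⟩ := ih
      by_cases hp : Rel f p.1 p.2
      · refine ⟨g, hg, fun q hq m hm hq' => ?_⟩
        rcases Finset.mem_insert.1 hq with rfl | hq
        · exact hp
        · exact h q hq m hm hq'
      · have hp' := hp
        rw [Rel, Metric.mem_closure_iff] at hp'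
        push Not at hp'
        obtain ⟨ε, hε, he⟩ := hp'
        refine ⟨min g ε, lt_min hg hε, fun q hq m hm hq' => ?_⟩
        rcases Finset.mem_insert.1 hq with rfl | hq
        · have := he _ ⟨m, hm, rfl⟩
          rw [Real.dist_eq, abs_sub_comm] at this
          exact absurd (hq'.trans_le (min_le_right _ _)) (not_lt.2 this)
        · exact h q hq m hm (hq'.trans_le (min_le_left _ _))
  obtain ⟨g, hg, h⟩ := this
  exact ⟨g, hg, fun c hc c' hc' => h (c, c') (Finset.mem_product.2 ⟨hc, hc'⟩)⟩

/-- `X` is a compact invariant set and `Y` a good invariant set that contains all orbits of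
critical values of critical points in `X`. -/
structure FD (S : Sys f) (X Y : Set ℝ) : Prop where
  hX : IsClosed X
  subX : X ⊆ Icc 0 1
  invX : ∀ x ∈ X, f x ∈ X
  hY : IsClosed Y
  YX : Y ⊆ X
  invY : ∀ x ∈ Y, f x ∈ Y
  crit : ∀ c ∈ S.K, c ∈ X → ∀ m ≥ 1, f^[m] c ∈ Y
  good : S.GoodSet Y

/-- A closed set contained in an open set, uniformly inside `[0, 1]`. -/
lemma exists_thick {Y U : Set ℝ} (hY : IsClosed Y) (hYI : Y ⊆ Icc 0 1) (hU : IsOpen U)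
    (h : Y ⊆ U) : ∃ δ > 0, ∀ y ∈ Y, ∀ u, |u - y| ≤ δ → u ∈ U := by
  have hc : IsCompact Y := isCompact_Icc.of_isClosed_subset hY hYI
  obtain ⟨δ, hδ, hd⟩ := hc.exists_cthickening_subset_open hU h
  refine ⟨δ, hδ, fun y hy u hu => hd ?_⟩
  exact mem_cthickening_of_dist_le u y δ Y hy (by rwa [Real.dist_eq])

/-- Shadowing of a critical orbit: `[c, u]` is followed from time `1` until time `t`, when it first
becomes longer than `δ3` or ceases to be thin, or until time `n`. Up to then its distortion is bounded,
because `Y` is good, so the proportion `W` of `[v, u]` in `[c, u]` survives up to a constant. -/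
lemma fpoint_aux {X Y : Set ℝ} (D : S.FD X Y) : ∃ δ > 0, ∃ C > 0, ∀ δ3 > 0, δ3 ≤ δ →
    ∀ c ∈ S.K, c ∈ X → ∀ u ∈ Icc (0:ℝ) 1, ∀ v ∈ Icc (0:ℝ) 1, |u - c| ≤ δ → v ∈ uIcc c u →
    u ≠ c → |u - c| ≤ 2 * |v - c| → ∀ W, 0 ≤ W → W * |u - c| ≤ 3 * |u - v| → ∀ n, 1 ≤ n →
    ∃ t, 1 ≤ t ∧ t ≤ n ∧ (∀ i, 1 ≤ i → i < t → f^[i] v ∈ uIcc (f^[i] c) (f^[i] u) ∧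
      |f^[i] c - f^[i] u| ≤ δ3) ∧ f^[t] v ∈ uIcc (f^[t] c) (f^[t] u) ∧
      0 < |f^[t] c - f^[t] u| ∧ W * |f^[t] c - f^[t] u| ≤ C * |f^[t] u - f^[t] v| ∧
      (t = n ∨ (t < n ∧ δ3 < |f^[t] c - f^[t] u|) ∨
        (t < n ∧ ¬ S.Thin (f^[t] c) (f^[t] u) ∧ |f^[t] c - f^[t] u| ≤ δ3)) := by
  obtain ⟨U, hU, hYU, τ, hτ, B, hB⟩ := D.good
  obtain ⟨δU, hδU, hthick⟩ := exists_thick D.hY (D.YX.trans D.subX) hU hYU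
  obtain ⟨g, hg, hgap⟩ := S.gap
  set B' := max B 0
  refine ⟨min (min S.ρ0 (g/2)) (min δU τ), by have := S.ρ0_pos; positivity,
    Real.exp (S.C0 * B') * (3 * S.CP), by have := S.CP_pos; positivity, ?_⟩
  intro δ3 hδ3 hδ3' c hc hcX u hu v hv huc hvu hne hvc W hW0 hW n hn
  have e1 : |u - c| ≤ S.ρ0 := huc.trans ((min_le_left _ _).trans (min_le_left _ _))
  have e2 : |u - c| ≤ g/2 := huc.trans ((min_le_left _ _).trans (min_le_right _ _))
  have e3 : δ3 ≤ δU := hδ3'.trans ((min_le_right _ _).trans (min_le_left _ _))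
  have e4 : δ3 ≤ τ := hδ3'.trans ((min_le_right _ _).trans (min_le_right _ _))
  have hcI := S.K_sub c hc
  have hinj : InjOn f (uIcc c u) := by
    have : ∀ c' ∈ S.K, c' ∉ Ioo (min c u) (max c u) := by
      intro c' hc' hm
      have h1 : |c - c'| ≤ |c - u| :=
        abs_sub_le_of_mem_uIcc left_mem_uIcc (show c' ∈ uIcc c u from ⟨hm.1.le, hm.2.le⟩)
      rw [abs_sub_comm c u] at h1
      have := hgap c hc c' hc' (by linarith)
      subst this
      rcases le_total c u with h | h
      · rw [min_eq_left h] at hm; exact lt_irrefl _ hm.1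
      · rw [max_eq_left h] at hm; exact lt_irrefl _ hm.2
    exact S.inj _ _ (le_min hcI.1 hu.1) (max_le hcI.2 hu.2) this
  have him := image_uIcc_of_inj S.cont hinj
  have hfv : f v ∈ uIcc (f c) (f u) := by rw [← him]; exact mem_image_of_mem _ hvu
  have hfne : f c ≠ f u := fun h => hne (hinj right_mem_uIcc left_mem_uIcc h.symm)
  have hP := S.P c hc u hu e1 v hvu hvc
  have hex : ∃ t, 1 ≤ t ∧ ¬ (t < n ∧ S.Thin (f^[t] c) (f^[t] u) ∧ |f^[t] c - f^[t] u| ≤ δ3) :=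
    ⟨n, hn, fun h => lt_irrefl _ h.1⟩
  classical
  obtain ⟨t, ⟨ht1, ht⟩, hmin⟩ : ∃ t, (1 ≤ t ∧ ¬ (t < n ∧ S.Thin (f^[t] c) (f^[t] u) ∧
      |f^[t] c - f^[t] u| ≤ δ3)) ∧ ∀ i, 1 ≤ i → i < t → (i < n ∧ S.Thin (f^[i] c) (f^[i] u) ∧
      |f^[i] c - f^[i] u| ≤ δ3) := by
    refine ⟨Nat.find hex, Nat.find_spec hex, fun i hi hit => ?_⟩
    have := Nat.find_min hex hit
    by_contra hh
    exact this ⟨hi, hh⟩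
  have htn : t ≤ n := by
    by_contra hh
    have := (hmin n hn (by omega)).1
    omega
  obtain ⟨t, rfl⟩ : ∃ s, t = s + 1 := ⟨t - 1, by omega⟩
  have hTC : S.TC (f c) (f u) t := fun j hj => (hmin (j + 1) (by omega) (by omega)).2.1
  have hfc := S.maps c
  have hfu := S.maps u
  have hNH := hTC.NH hfc hfu
  have hsum : ∑ j ∈ Finset.range t, S.w (f^[j] (f c)) (f^[j] (f u)) ≤ B' := by
    rcases Nat.eq_zero_or_pos t with h0 | h0
    · subst h0; simp [B']
    · obtain ⟨s, rfl⟩ : ∃ s, t = s + 1 := ⟨t - 1, by omega⟩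
      refine le_trans (hB (f c) hfc (f u) hfu s ?_ ?_) (le_max_left _ _)
      · intro j hj
        have hy : f^[j+1] c ∈ Y := D.crit c hc hcX (j + 1) (by omega)
        refine ⟨hYU hy, hthick _ hy _ ?_, hTC j (by omega)⟩
        have := (hmin (j + 1) (by omega) (by omega)).2.2
        rw [abs_sub_comm] at this
        exact this.trans e3
      · exact ((hmin (s + 1) (by omega) (by omega)).2.2).trans e4
  have hdist := (hTC.dist hfc hfu right_mem_uIcc hfv hsum).2
  have hH1 : 0 < |f c - f u| := abs_pos.2 (sub_ne_zero.2 hfne)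
  have hHt : 0 < |f^[t] (f c) - f^[t] (f u)| := abs_pos.2 (sub_ne_zero.2 fun h =>
    hfne (hNH.inj hfc hfu left_mem_uIcc right_mem_uIcc h))
  refine ⟨t + 1, by omega, htn, ?_, hNH.mem hfc hfu hfv, hHt, ?_, ?_⟩
  · intro i hi hit
    obtain ⟨i, rfl⟩ : ∃ s, i = s + 1 := ⟨i - 1, by omega⟩
    exact ⟨(hNH.mono (m := i) (by omega)).mem hfc hfu hfv, (hmin (i+1) hi hit).2.2⟩
  · change W * |f^[t] (f c) - f^[t] (f u)| ≤ _ * |f^[t] (f u) - f^[t] (f v)|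
    have hucp : 0 < |u - c| := abs_pos.2 (sub_ne_zero.2 hne)
    have p1 : W * |f c - f u| ≤ 3 * S.CP * |f u - f v| := by
      refine le_of_mul_le_mul_right ?_ hucp
      calc W * |f c - f u| * |u - c| = (W * |u - c|) * |f c - f u| := by ring
        _ ≤ (3 * |u - v|) * |f c - f u| := by gcongr
        _ = 3 * (|u - v| * |f c - f u|) := by ring
        _ ≤ 3 * (S.CP * (|u - c| * |f u - f v|)) := by gcongr
        _ = _ := by ring
    refine le_of_mul_le_mul_right ?_ hH1
    have hCP := S.CP_pos
    calc W * |f^[t] (f c) - f^[t] (f u)| * |f c - f u|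
        = (W * |f c - f u|) * |f^[t] (f c) - f^[t] (f u)| := by ring
      _ ≤ (3 * S.CP * |f u - f v|) * |f^[t] (f c) - f^[t] (f u)| := by gcongr
      _ = 3 * S.CP * (|f u - f v| * |f^[t] (f c) - f^[t] (f u)|) := by ring
      _ ≤ 3 * S.CP * (Real.exp (S.C0 * B') * (|f^[t] (f u) - f^[t] (f v)| * |f c - f u|)) := by
        gcongr
      _ = _ := by ring
  · rcases htn.eq_or_lt with h | h
    · exact Or.inl h
    · by_cases h3 : |f^[t+1] c - f^[t+1] u| ≤ δ3
      · exact Or.inr (Or.inr ⟨h, fun hth => ht ⟨h, hth, h3⟩, h3⟩)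
      · exact Or.inr (Or.inl ⟨h, not_le.1 h3⟩)

/-- The behaviour of a thin chain after passing near a critical point `c`: its relative length
there is controlled by its length at the later moment where it separates from the orbit of `c`,
or by its relative length near a critical point lower in the order `Rel`, or by its final
length. -/
def FPoint (S : Sys f) (X Y : Set ℝ) (δ2 C : ℝ) : Prop :=
  ∀ x ∈ Icc (0:ℝ) 1, ∀ y ∈ Icc (0:ℝ) 1, ∀ n, S.TC x y n → ∀ j < n, ∀ c ∈ S.K, c ∈ X →
    |f^[j] x - c| < δ2 → ∃ t, 1 ≤ t ∧ j + t ≤ n ∧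
      (∀ i, 1 ≤ i → i < t → |f^[j+i] x - c| ≥ δ2) ∧
      ((j + t < n ∧ S.w (f^[j] x) (f^[j] y) ≤ C * |f^[j+t] x - f^[j+t] y|) ∨
       (j + t < n ∧ ∃ c' ∈ S.K, Rel f c c' ∧ |f^[j+t] x - c'| < δ2 ∧
          S.w (f^[j] x) (f^[j] y) ≤ C * S.w (f^[j+t] x) (f^[j+t] y)) ∨
       (j + t = n ∧ ∃ u ∈ uIcc (f^[n] x) (f^[n] y), ∃ y0 ∈ Y,
          S.w (f^[j] x) (f^[j] y) * |y0 - u| ≤ C * |f^[n] x - f^[n] y|))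

lemma fpoint {X Y : Set ℝ} (D : S.FD X Y) : ∃ δ > 0, ∀ δ2 > 0, δ2 ≤ δ →
    ∃ C > 0, S.FPoint X Y δ2 C := by
  obtain ⟨δ, hδ, C, hC, haux⟩ := fpoint_aux D
  obtain ⟨κ, hκ, hrel⟩ := S.exists_rel_gap
  have hτ := S.τ0_pos
  obtain ⟨g, hg, hgap⟩ := S.gap
  refine ⟨min (min (δ / 2) (S.τ0 / 4)) (g / 2), by positivity, fun δ2 hδ2 hle => ?_⟩
  have q1 : δ2 ≤ δ / 2 := hle.trans ((min_le_left _ _).trans (min_le_left _ _))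
  have q2 : δ2 ≤ S.τ0 / 4 := hle.trans ((min_le_left _ _).trans (min_le_right _ _))
  have q5 : δ2 ≤ g / 2 := hle.trans (min_le_right _ _)
  set δ3 := min (δ2 / 4) (κ / 4) with hδ3d
  have hδ3 : 0 < δ3 := by positivity
  have q3 : δ3 ≤ δ2 / 4 := min_le_left _ _
  have q4 : δ3 ≤ κ / 4 := min_le_right _ _
  refine ⟨max (3 * C) (C / δ3), lt_max_of_lt_left (by positivity), ?_⟩
  have c1 : 3 * C ≤ max (3 * C) (C / δ3) := le_max_left _ _
  have c2 : C / δ3 ≤ max (3 * C) (C / δ3) := le_max_right _ _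
  set C' := max (3 * C) (C / δ3)
  intro x hx y hy n hTC j hj c hc hcX hxc
  have hth := hTC j hj
  set X0 := f^[j] x with hX0
  set Y0 := f^[j] y with hY0
  have hX0I := S.mapsI j hx
  have hY0I := S.mapsI j hy
  have hdx := S.d_le (x := X0) hc
  have hdy := S.d_le (x := Y0) hc
  have hcn : c ∉ uIcc X0 Y0 := fun h => hth.notMem c h hc
  have hwle : S.w X0 Y0 * min (S.d X0) (S.d Y0) = |X0 - Y0| := by
    unfold w; rw [div_mul_cancel₀]; exact (lt_min hth.pu hth.pv).ne'
  -- the endpoint farther from `c` is `u`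
  obtain ⟨u, v, huv, hu, hv, hvu, hvc⟩ : ∃ u v, ((u = X0 ∧ v = Y0) ∨ (u = Y0 ∧ v = X0)) ∧
      u ∈ Icc (0:ℝ) 1 ∧ v ∈ Icc (0:ℝ) 1 ∧ v ∈ uIcc c u ∧ |v - c| ≤ |u - c| := by
    have hor : (c < X0 ∧ c < Y0) ∨ (X0 < c ∧ Y0 < c) := by
      rcases lt_trichotomy c X0 with h | h | h
      · left; refine ⟨h, ?_⟩; by_contra h'
        exact hcn (by rw [uIcc_of_ge (by linarith)]; exact ⟨by linarith, h.le⟩)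
      · exact absurd (h ▸ left_mem_uIcc) hcn
      · right; refine ⟨h, ?_⟩; by_contra h'
        exact hcn (by rw [uIcc_of_le (by linarith)]; exact ⟨h.le, by linarith⟩)
    have key : ∀ u v : ℝ, ((c < u ∧ c < v ∧ v ≤ u) ∨ (u < c ∧ v < c ∧ u ≤ v)) →
        v ∈ uIcc c u ∧ |v - c| ≤ |u - c| := by
      rintro u v (⟨h1, h2, h3⟩ | ⟨h1, h2, h3⟩)
      · rw [uIcc_of_le h1.le, abs_of_pos (by linarith), abs_of_pos (by linarith)]
        exact ⟨⟨h2.le, h3⟩, by linarith⟩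
      · rw [uIcc_of_ge h1.le, abs_of_neg (by linarith), abs_of_neg (by linarith)]
        exact ⟨⟨h3, h2.le⟩, by linarith⟩
    rcases hor with ⟨h1, h2⟩ | ⟨h1, h2⟩ <;> rcases le_total X0 Y0 with h | h
    · exact ⟨Y0, X0, Or.inr ⟨rfl, rfl⟩, hY0I, hX0I, key _ _ (Or.inl ⟨h2, h1, h⟩)⟩
    · exact ⟨X0, Y0, Or.inl ⟨rfl, rfl⟩, hX0I, hY0I, key _ _ (Or.inl ⟨h1, h2, h⟩)⟩
    · exact ⟨X0, Y0, Or.inl ⟨rfl, rfl⟩, hX0I, hY0I, key _ _ (Or.inr ⟨h1, h2, h⟩)⟩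
    · exact ⟨Y0, X0, Or.inr ⟨rfl, rfl⟩, hY0I, hX0I, key _ _ (Or.inr ⟨h2, h1, h⟩)⟩
  have huvabs : |u - v| = |X0 - Y0| := by
    rcases huv with ⟨rfl, rfl⟩ | ⟨rfl, rfl⟩
    · rfl
    · exact abs_sub_comm _ _
  have hmin1 : 2 * |u - v| ≤ |v - c| := by
    have h1 := hth.hu; have h2 := hth.hv
    rcases huv with ⟨rfl, rfl⟩ | ⟨rfl, rfl⟩ <;> rw [huvabs] <;> linarith
  have htri : |u - c| ≤ |u - v| + |v - c| := abs_sub_le _ _ _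
  have hvx : |v - c| ≤ |X0 - c| := by
    rcases huv with ⟨rfl, rfl⟩ | ⟨rfl, rfl⟩
    · exact hvc
    · exact le_rfl
  have hune : u ≠ c := by
    rintro rfl
    rcases huv with ⟨h, _⟩ | ⟨h, _⟩
    · exact hcn (h ▸ left_mem_uIcc)
    · exact hcn (h ▸ right_mem_uIcc)
  have hnear : S.d X0 = |X0 - c| := by
    obtain ⟨c', hc', e⟩ := S.exists_d X0
    have h1 := abs_sub_le c X0 c'
    rw [abs_sub_comm c X0] at h1
    rw [e, ← hgap c hc c' hc' (by linarith)]
  have hW : S.w X0 Y0 * |u - c| ≤ 3 * |u - v| := by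
    have : |u - c| ≤ 3 * min (S.d X0) (S.d Y0) := by
      have h1 := hth.hu; have h2 := hth.hv
      have h3 := S.d_le_add X0 Y0
      have : S.d X0 ≤ 2 * min (S.d X0) (S.d Y0) := by
        rcases min_choice (S.d X0) (S.d Y0) with h | h <;> rw [h] <;> linarith
      linarith
    calc S.w X0 Y0 * |u - c| ≤ S.w X0 Y0 * (3 * min (S.d X0) (S.d Y0)) := by
          gcongr; exact S.w_nonneg _ _
      _ = 3 * |u - v| := by rw [huvabs, ← hwle]; ring
  obtain ⟨t, ht1, htn, hwin, hvt, hHpos, hWt, hcase⟩ := haux δ3 hδ3 (by linarith) c hc hcX u hu v hv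
    (by linarith [abs_nonneg (v - c)]) hvu hune (by linarith) (S.w X0 Y0) (S.w_nonneg _ _) hW (n - j) (by omega)
  have hxt : ∀ i, f^[i] v ∈ uIcc (f^[i] c) (f^[i] u) → f^[j+i] x ∈ uIcc (f^[i] c) (f^[i] u) := by
    intro i h
    rw [add_comm, Function.iterate_add_apply]
    rcases huv with ⟨h1, _⟩ | ⟨_, h2⟩
    · change f^[i] X0 ∈ _; rw [← h1]; exact right_mem_uIcc
    · change f^[i] X0 ∈ _; rw [← h2]; exact h
  have hlen : |f^[t] u - f^[t] v| = |f^[j+t] x - f^[j+t] y| := by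
    rw [add_comm j t, Function.iterate_add_apply, Function.iterate_add_apply]
    rcases huv with ⟨h1, h2⟩ | ⟨h1, h2⟩
    · rw [h1, h2]
    · rw [h1, h2, abs_sub_comm]
  rw [hlen] at hWt
  refine ⟨t, ht1, by omega, ?_, ?_⟩
  · intro i hi hit
    obtain ⟨m1, m2⟩ := hwin i hi hit
    have h1 := abs_sub_le_of_mem_uIcc (left_mem_uIcc) (hxt i m1)
    have h2 := S.N c hc i hi
    have h3 := abs_sub_le (f^[i] c) (f^[j+i] x) c
    show δ2 ≤ _
    linarith
  · have hx1 := abs_sub_le_of_mem_uIcc (left_mem_uIcc) (hxt t hvt)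
    rcases hcase with h | ⟨h, h3⟩ | ⟨h, h3, h4⟩
    · right; right
      refine ⟨by omega, f^[t] u, ?_, f^[t] c, D.crit c hc hcX t ht1, ?_⟩
      · obtain rfl : n = j + t := by omega
        rw [add_comm j t, Function.iterate_add_apply, Function.iterate_add_apply]
        rcases huv with ⟨h1, h2⟩ | ⟨h1, h2⟩
        · rw [h1]; exact left_mem_uIcc
        · rw [h1]; exact right_mem_uIcc
      · obtain rfl : n = j + t := by omega
        exact hWt.trans (by gcongr; linarith)
    · left
      refine ⟨by omega, ?_⟩
      have : S.w X0 Y0 * δ3 ≤ C * |f^[j+t] x - f^[j+t] y| :=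
        le_trans (mul_le_mul_of_nonneg_left h3.le (S.w_nonneg _ _)) hWt
      calc S.w X0 Y0 ≤ C * |f^[j+t] x - f^[j+t] y| / δ3 := by rwa [le_div_iff₀ hδ3]
        _ = C / δ3 * |f^[j+t] x - f^[j+t] y| := by ring
        _ ≤ _ := by gcongr
    · right; left
      set H := |f^[t] c - f^[t] u| with hH
      obtain ⟨c', hc', hcc⟩ : ∃ c' ∈ S.K, |f^[t] c - c'| ≤ 3 * H ∧ |f^[j+t] x - c'| ≤ 3 * H := by
        have : S.d (f^[t] c) ≤ 2 * H ∨ S.d (f^[t] u) ≤ 2 * H := by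
          by_contra hh
          push Not at hh
          exact h3 ⟨by linarith, by linarith, by linarith, by linarith⟩
        have hx2 := abs_sub_le_of_mem_uIcc (right_mem_uIcc) (hxt t hvt)
        rcases this with h' | h'
        · obtain ⟨c', hc', e⟩ := S.exists_d (f^[t] c)
          have := abs_sub_le (f^[j+t] x) (f^[t] c) c'
          rw [abs_sub_comm (f^[j+t] x) (f^[t] c)] at this
          exact ⟨c', hc', by linarith, by linarith⟩
        · obtain ⟨c', hc', e⟩ := S.exists_d (f^[t] u)
          have := abs_sub_le (f^[j+t] x) (f^[t] u) c'
          rw [abs_sub_comm (f^[j+t] x) (f^[t] u)] at this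
          have := abs_sub_le (f^[t] c) (f^[t] u) c'
          exact ⟨c', hc', by linarith, by linarith⟩
      have hth' := hTC (j + t) (by omega)
      refine ⟨by omega, c', hc', hrel c hc c' hc' t ht1 (by linarith), by linarith, ?_⟩
      have hd := S.d_le (x := f^[j+t] x) hc'
      have hmp := lt_min hth'.pu hth'.pv
      have hm3 : min (S.d (f^[j+t] x)) (S.d (f^[j+t] y)) ≤ 3 * H :=
        (min_le_left _ _).trans (by linarith)
      refine le_of_mul_le_mul_right ?_ hHpos
      refine hWt.trans ?_
      have hww : |f^[j+t] x - f^[j+t] y| =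
          S.w (f^[j+t] x) (f^[j+t] y) * min (S.d (f^[j+t] x)) (S.d (f^[j+t] y)) := by
        unfold w; rw [div_mul_cancel₀ _ hmp.ne']
      calc C * |f^[j+t] x - f^[j+t] y|
          ≤ C * (S.w (f^[j+t] x) (f^[j+t] y) * (3 * H)) := by
            rw [hww]; gcongr; exact S.w_nonneg _ _
        _ = 3 * C * S.w (f^[j+t] x) (f^[j+t] y) * H := by ring
        _ ≤ _ := by gcongr; exact S.w_nonneg _ _

end Sys

/-! ### From lengths to relative lengths -/

namespace Sys
variable {f : ℝ → ℝ} {S : Sys f}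

/-- `u` is `δ`-close only to those critical points that belong to `X`. -/
def NU (S : Sys f) (X : Set ℝ) (δ u : ℝ) : Prop := ∀ c ∈ S.K, |u - c| < δ → c ∈ X

open Classical in
/-- The number of critical points below `c` for the order `Rel`. -/
def rank (S : Sys f) (c : ℝ) : ℕ := (S.K.filter fun c' => Rel f c c').card

lemma rank_lt {c c' : ℝ} (hc' : c' ∈ S.K) (h : Rel f c c') : S.rank c' < S.rank c := by
  classical
  apply Finset.card_lt_card
  rw [Finset.ssubset_iff_of_subset]
  · exact ⟨c', Finset.mem_filter.2 ⟨hc', h⟩, fun hh => S.not_rel_self hc' (Finset.mem_filter.1 hh).2⟩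
  · intro b hb
    rw [Finset.mem_filter] at hb ⊢
    exact ⟨hb.1, h.trans S hb.2⟩

lemma FD.iter {X Y : Set ℝ} (D : S.FD X Y) {x : ℝ} (hx : x ∈ X) (m : ℕ) : f^[m] x ∈ X := by
  induction m with
  | zero => exact hx
  | succ m ih => rw [Function.iterate_succ_apply']; exact D.invX _ ih

lemma FD.rel_mem {X Y : Set ℝ} (D : S.FD X Y) {c c' : ℝ} (hc : c ∈ X) (h : Rel f c c') :
    c' ∈ X := by
  refine closure_minimal ?_ D.hX h
  rintro _ ⟨m, _, rfl⟩
  exact D.iter hc m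

lemma w_le_far {u v δ : ℝ} (h : S.Thin u v) (hδ : 0 < δ) (hd : δ ≤ S.d u) :
    S.w u v ≤ 2 / δ * |u - v| := by
  unfold w
  rw [div_le_iff₀ (lt_min h.pu h.pv)]
  have h1 := h.hu; have h2 := h.hv
  have h3 := S.d_le_add u v
  have : δ ≤ 2 * min (S.d u) (S.d v) := by
    rcases min_choice (S.d u) (S.d v) with h | h <;> rw [h] <;> linarith [abs_nonneg (u - v)]
  calc |u - v| = 2 / δ * |u - v| * (δ / 2) := by field_simp
    _ ≤ _ := by gcongr; linarith

/-- Relative lengths are summed over the visits to each critical point separately, by induction on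
`rank`: distinct visits to `c` are charged to distinct later times. -/
lemma fsum {X Y : Set ℝ} {δ2 C : ℝ} (hδ2 : 0 < δ2) (hC : 0 < C)
    (hF : S.FPoint X Y δ2 C) : ∃ C2 > 0, ∀ x ∈ Icc (0:ℝ) 1, ∀ y ∈ Icc (0:ℝ) 1, ∀ n, S.TC x y n →
      (∀ j < n, S.NU X δ2 (f^[j] x)) →
      ∑ j ∈ Finset.range n, S.w (f^[j] x) (f^[j] y) ≤
        C2 * (1 + ∑ j ∈ Finset.range (n + 1), |f^[j] x - f^[j] y|) := by
  classical
  have claim : ∀ k, ∃ B ≥ 0, ∀ c ∈ S.K, S.rank c < k → ∀ x ∈ Icc (0:ℝ) 1, ∀ y ∈ Icc (0:ℝ) 1,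
      ∀ n, S.TC x y n → (∀ j < n, S.NU X δ2 (f^[j] x)) →
      ∑ j ∈ (Finset.range n).filter (fun j => |f^[j] x - c| < δ2), S.w (f^[j] x) (f^[j] y) ≤
        B * (1 + ∑ j ∈ Finset.range (n + 1), |f^[j] x - f^[j] y|) := by
    intro k
    induction k with
    | zero => exact ⟨0, le_rfl, fun c _ h => absurd h (Nat.not_lt_zero _)⟩
    | succ k ih =>
      obtain ⟨B, hB, ih⟩ := ih
      refine ⟨C + C * (S.K.card * B) + 1, by positivity, ?_⟩
      intro c hc hrk x hx y hy n hTC hNU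
      set L := ∑ j ∈ Finset.range (n + 1), |f^[j] x - f^[j] y| with hL
      have hL0 : 0 ≤ L := Finset.sum_nonneg fun _ _ => abs_nonneg _
      by_cases hcX : c ∈ X
      swap
      · rw [Finset.sum_eq_zero]
        · positivity
        · intro j hj
          rw [Finset.mem_filter, Finset.mem_range] at hj
          exact absurd (hNU j hj.1 c hc hj.2) hcX
      set J := (Finset.range n).filter (fun j => |f^[j] x - c| < δ2) with hJ
      have hmemJ : ∀ j ∈ J, j < n ∧ |f^[j] x - c| < δ2 := by
        intro j hj
        rwa [hJ, Finset.mem_filter, Finset.mem_range] at hj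
      have hch : ∀ j, ∃ t, j ∈ J → 1 ≤ t ∧ j + t ≤ n ∧
          (∀ i, 1 ≤ i → i < t → |f^[j+i] x - c| ≥ δ2) ∧
          ((j + t < n ∧ S.w (f^[j] x) (f^[j] y) ≤ C * |f^[j+t] x - f^[j+t] y|) ∨
           (j + t < n ∧ ∃ c' ∈ S.K, Rel f c c' ∧ |f^[j+t] x - c'| < δ2 ∧
              S.w (f^[j] x) (f^[j] y) ≤ C * S.w (f^[j+t] x) (f^[j+t] y)) ∨
           (j + t = n ∧ ∃ u ∈ uIcc (f^[n] x) (f^[n] y), ∃ y0 ∈ Y,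
              S.w (f^[j] x) (f^[j] y) * |y0 - u| ≤ C * |f^[n] x - f^[n] y|)) := by
        intro j
        by_cases hj : j ∈ J
        · obtain ⟨t, ht⟩ := hF x hx y hy n hTC j (hmemJ j hj).1 c hc hcX (hmemJ j hj).2
          exact ⟨t, fun _ => ht⟩
        · exact ⟨0, fun h => absurd h hj⟩
      choose t ht using hch
      have hinj : Set.InjOn (fun j => j + t j) J := by
        have key : ∀ j ∈ J, ∀ j' ∈ J, j + t j = j' + t j' → ¬ j < j' := by
          intro j hj j' hj' he hlt
          have h1 := (ht j hj).2.2.1 (j' - j) (by omega) (by have := (ht j' hj').1; omega)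
          rw [Nat.add_sub_cancel' hlt.le] at h1
          exact absurd (hmemJ j' hj').2 (not_lt.2 h1)
        intro j hj j' hj' he
        have h1 := key j hj j' hj' he
        have h2 := key j' hj' j hj he.symm
        omega
      set R := S.K.filter fun c' => Rel f c c' with hR
      set G : ℕ → ℝ := fun i => C * |f^[i] x - f^[i] y| +
        C * (∑ c' ∈ R, if i < n ∧ |f^[i] x - c'| < δ2 then S.w (f^[i] x) (f^[i] y) else 0) +
        (if i = n then 1 else 0) with hG
      have hG0 : ∀ i c', (0:ℝ) ≤ if i < n ∧ |f^[i] x - c'| < δ2 then S.w (f^[i] x) (f^[i] y) else 0 := by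
        intro i c'; split_ifs; exacts [S.w_nonneg _ _, le_rfl]
      have hG1 : ∀ i, (0:ℝ) ≤ if i = n then 1 else 0 := by intro i; split_ifs <;> norm_num
      have hGs : ∀ i, 0 ≤ ∑ c' ∈ R, if i < n ∧ |f^[i] x - c'| < δ2 then S.w (f^[i] x) (f^[i] y) else 0 :=
        fun i => Finset.sum_nonneg fun c' _ => hG0 i c'
      have hGn : ∀ i, 0 ≤ G i := fun i => by
        have := hGs i; have := hG1 i; simp only [hG]; positivity
      have hle : ∀ j ∈ J, S.w (f^[j] x) (f^[j] y) ≤ G (j + t j) := by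
        intro j hj
        obtain ⟨_, _, _, hcase⟩ := ht j hj
        have e1 := hGs (j + t j); have e2 := hG1 (j + t j)
        have e3 : 0 ≤ C * |f^[j + t j] x - f^[j + t j] y| := by positivity
        have e4 := mul_nonneg hC.le e1
        simp only [hG]
        rcases hcase with ⟨_, h⟩ | ⟨h1, c', hc', hr, hd, hw⟩ | ⟨h1, _⟩
        · linarith
        · have : S.w (f^[j + t j] x) (f^[j + t j] y) ≤
              ∑ c' ∈ R, if j + t j < n ∧ |f^[j + t j] x - c'| < δ2 then
                S.w (f^[j + t j] x) (f^[j + t j] y) else 0 := by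
            have := Finset.single_le_sum (f := fun c' => if j + t j < n ∧ |f^[j + t j] x - c'| < δ2
              then S.w (f^[j + t j] x) (f^[j + t j] y) else 0) (fun c' _ => hG0 (j + t j) c')
              (show c' ∈ R from Finset.mem_filter.2 ⟨hc', hr⟩)
            simpa [h1, hd] using this
          have := mul_le_mul_of_nonneg_left this hC.le
          linarith
        · have := (hTC j (hmemJ j hj).1).w_le
          rw [if_pos h1]
          linarith
      have hS : ∑ j ∈ J, S.w (f^[j] x) (f^[j] y) ≤ ∑ i ∈ Finset.range (n + 1), G i := by
        refine (Finset.sum_le_sum hle).trans ?_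
        rw [← Finset.sum_image (f := G) (g := fun j => j + t j) hinj]
        refine Finset.sum_le_sum_of_subset_of_nonneg ?_ fun i _ _ => hGn i
        intro i hi
        obtain ⟨j, hj, rfl⟩ := Finset.mem_image.1 hi
        have := (ht j hj).2.1
        exact Finset.mem_range.2 (by omega)
      refine hS.trans ?_
      simp only [hG, Finset.sum_add_distrib, ← Finset.mul_sum]
      rw [← hL, Finset.sum_comm]
      have hone : ∑ i ∈ Finset.range (n + 1), (if i = n then (1:ℝ) else 0) = 1 := by
        rw [Finset.sum_ite_eq' (Finset.range (n+1)) n]; simp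
      rw [hone]
      have hR' : ∀ c' ∈ R, ∑ i ∈ Finset.range (n + 1),
          (if i < n ∧ |f^[i] x - c'| < δ2 then S.w (f^[i] x) (f^[i] y) else 0) ≤ B * (1 + L) := by
        intro c' hc'
        rw [hR, Finset.mem_filter] at hc'
        refine le_trans (le_of_eq ?_) (ih c' hc'.1 (by have := rank_lt hc'.1 hc'.2; omega)
          x hx y hy n hTC hNU)
        rw [Finset.sum_filter, Finset.sum_range_succ]
        simp only [lt_irrefl, false_and, if_false, add_zero]
        refine Finset.sum_congr rfl fun i hi => ?_
        simp [Finset.mem_range.1 hi]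
      have hsumR := Finset.sum_le_card_nsmul R _ _ hR'
      rw [nsmul_eq_mul] at hsumR
      have hcard : (R.card : ℝ) ≤ S.K.card := by exact_mod_cast Finset.card_filter_le _ _
      have h1 : (R.card : ℝ) * (B * (1 + L)) ≤ S.K.card * (B * (1 + L)) := by gcongr
      have h2 := mul_le_mul_of_nonneg_left (hsumR.trans h1) hC.le
      have h3 : 0 ≤ C * (S.K.card * (B * (1 + L))) := by positivity
      nlinarith
  obtain ⟨B, hB, hcl⟩ := claim (S.K.card + 1)
  refine ⟨2 / δ2 + S.K.card * B, by positivity, fun x hx y hy n hTC hNU => ?_⟩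
  set L := ∑ j ∈ Finset.range (n + 1), |f^[j] x - f^[j] y| with hL
  have hstep : ∀ j ∈ Finset.range n, S.w (f^[j] x) (f^[j] y) ≤ 2 / δ2 * |f^[j] x - f^[j] y| +
      ∑ c ∈ S.K, if |f^[j] x - c| < δ2 then S.w (f^[j] x) (f^[j] y) else 0 := by
    intro j hj
    have hth := hTC j (Finset.mem_range.1 hj)
    have h0 : ∀ c, (0:ℝ) ≤ if |f^[j] x - c| < δ2 then S.w (f^[j] x) (f^[j] y) else 0 := by
      intro c; split_ifs; exacts [S.w_nonneg _ _, le_rfl]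
    obtain ⟨c, hc, e⟩ := S.exists_d (f^[j] x)
    by_cases hd : δ2 ≤ S.d (f^[j] x)
    · have := w_le_far hth hδ2 hd
      have := Finset.sum_nonneg (s := S.K) fun c _ => h0 c
      linarith
    · have := Finset.single_le_sum (f := fun c => if |f^[j] x - c| < δ2
              then S.w (f^[j] x) (f^[j] y) else 0) (fun c _ => h0 c) hc
      have hlt : |f^[j] x - c| < δ2 := by rw [← e]; exact not_le.1 hd
      simp only [hlt, if_true] at this
      have : 0 ≤ 2 / δ2 * |f^[j] x - f^[j] y| := by positivity
      linarith
  refine (Finset.sum_le_sum hstep).trans ?_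
  rw [Finset.sum_add_distrib, ← Finset.mul_sum, Finset.sum_comm]
  have h1 : ∑ j ∈ Finset.range n, |f^[j] x - f^[j] y| ≤ L := by
    rw [hL, Finset.sum_range_succ]; linarith [abs_nonneg (f^[n] x - f^[n] y)]
  have h2 : ∀ c ∈ S.K, ∑ j ∈ Finset.range n,
      (if |f^[j] x - c| < δ2 then S.w (f^[j] x) (f^[j] y) else 0) ≤ B * (1 + L) := by
    intro c hc
    rw [← Finset.sum_filter]
    refine hcl c hc ?_ x hx y hy n hTC hNU
    exact Nat.lt_succ_of_le (Finset.card_filter_le _ _)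
  have h3 := Finset.sum_le_card_nsmul S.K _ _ h2
  rw [nsmul_eq_mul] at h3
  have hL0 : 0 ≤ L := Finset.sum_nonneg fun _ _ => abs_nonneg _
  have h4 : 2 / δ2 * ∑ j ∈ Finset.range n, |f^[j] x - f^[j] y| ≤ 2 / δ2 * (1 + L) := by
    gcongr; linarith
  nlinarith

/-- Along a chain of short segments ending away from `Y`, relative lengths are small. -/
lemma fthin_aux {X Y : Set ℝ} (D : S.FD X Y) {δ2 C : ℝ} (hδ2 : 0 < δ2) (hC : 0 < C)
    (hF : S.FPoint X Y δ2 C) : ∃ C3 > 0, ∀ x ∈ Icc (0:ℝ) 1, ∀ y ∈ Icc (0:ℝ) 1, ∀ n, S.TC x y n →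
      (∀ j < n, S.NU X δ2 (f^[j] x)) → ∀ M ρ, 0 ≤ M → 0 < ρ →
      (∀ i ≤ n, |f^[i] x - f^[i] y| ≤ M) → |f^[n] x - f^[n] y| ≤ M * ρ →
      (∀ u ∈ uIcc (f^[n] x) (f^[n] y), ∀ y0 ∈ Y, ρ ≤ |y0 - u|) →
      ∀ j < n, S.w (f^[j] x) (f^[j] y) ≤ C3 * M := by
  classical
  have claim : ∀ k, ∃ B ≥ 0, ∀ c ∈ S.K, c ∈ X → S.rank c < k → ∀ x ∈ Icc (0:ℝ) 1, ∀ y ∈ Icc (0:ℝ) 1,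
      ∀ n, S.TC x y n → ∀ M ρ, 0 ≤ M → 0 < ρ →
      (∀ i ≤ n, |f^[i] x - f^[i] y| ≤ M) → |f^[n] x - f^[n] y| ≤ M * ρ →
      (∀ u ∈ uIcc (f^[n] x) (f^[n] y), ∀ y0 ∈ Y, ρ ≤ |y0 - u|) →
      ∀ j < n, |f^[j] x - c| < δ2 → S.w (f^[j] x) (f^[j] y) ≤ B * M := by
    intro k
    induction k with
    | zero => exact ⟨0, le_rfl, fun c _ _ h => absurd h (Nat.not_lt_zero _)⟩
    | succ k ih =>
      obtain ⟨B, hB, ih⟩ := ih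
      refine ⟨C + C * B, by positivity, ?_⟩
      intro c hc hcX hrk x hx y hy n hTC M ρ hM hρ hTM hTn hY j hj hjc
      obtain ⟨t, ht1, htn, _, hcase⟩ := hF x hx y hy n hTC j hj c hc hcX hjc
      have e0 : 0 ≤ C * B * M := by positivity
      have e1 : 0 ≤ C * M := by positivity
      rcases hcase with ⟨h1, h⟩ | ⟨h1, c', hc', hr, hd, hw⟩ | ⟨h1, u, hu, y0, hy0, hw⟩
      · have := mul_le_mul_of_nonneg_left (hTM (j + t) h1.le) hC.le
        linarith
      · have := ih c' hc' (D.rel_mem hcX hr) (by have := rank_lt hc' hr; omega) x hx y hy n hTC M ρ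
          hM hρ hTM hTn hY (j + t) h1 hd
        have := mul_le_mul_of_nonneg_left this hC.le
        linarith
      · have h2 := hY u hu y0 hy0
        have h3 : S.w (f^[j] x) (f^[j] y) * ρ ≤ C * M * ρ := by
          calc _ ≤ S.w (f^[j] x) (f^[j] y) * |y0 - u| := by gcongr; exact S.w_nonneg _ _
            _ ≤ _ := hw
            _ ≤ C * (M * ρ) := by gcongr
            _ = _ := by ring
        have := le_of_mul_le_mul_right h3 hρ
        linarith
  obtain ⟨B, hB, hcl⟩ := claim (S.K.card + 1)
  refine ⟨2 / δ2 + B, by positivity, fun x hx y hy n hTC hNU M ρ hM hρ hTM hTn hY j hj => ?_⟩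
  obtain ⟨c, hc, e⟩ := S.exists_d (f^[j] x)
  have hth := hTC j hj
  have e1 : 0 ≤ 2 / δ2 * M := by positivity
  have e2 : 0 ≤ B * M := by positivity
  by_cases hd : δ2 ≤ S.d (f^[j] x)
  · have := w_le_far hth hδ2 hd
    have h2 : 2 / δ2 * |f^[j] x - f^[j] y| ≤ 2 / δ2 * M := by gcongr; exact hTM j hj.le
    linarith
  · have hlt : |f^[j] x - c| < δ2 := by rw [← e]; exact not_le.1 hd
    have := hcl c hc (hNU j hj c hc hlt) (Nat.lt_succ_of_le (Finset.card_filter_le _ _))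
      x hx y hy n hTC M ρ hM hρ hTM hTn hY j hj hlt
    linarith

/-- A segment free of critical points either is thin of relative length at most `η`, or contains a
thin subsegment of relative length larger than `η`. -/
lemma exists_thin_sub {a b η : ℝ} (hη : 0 < η) (hη' : η < 1/4) (hfree : ∀ t ∈ uIcc a b, t ∉ S.K)
    (h : ¬ (S.Thin a b ∧ S.w a b ≤ η)) :
    ∃ u ∈ uIcc a b, ∃ v ∈ uIcc a b, S.Thin u v ∧ η < S.w u v := by
  by_cases hth : S.Thin a b
  · exact ⟨a, left_mem_uIcc, b, right_mem_uIcc, hth, not_le.1 fun hh => h ⟨hth, hh⟩⟩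
  have key : ∀ a b, (∀ t ∈ uIcc a b, t ∉ S.K) → S.d a ≤ S.d b → ¬ S.Thin a b →
      ∃ u ∈ uIcc a b, ∃ v ∈ uIcc a b, S.Thin u v ∧ η < S.w u v := by
    intro a b hfree hab hth
    have hpa : 0 < S.d a := d_pos_iff.2 (hfree a left_mem_uIcc)
    have hm : S.d a < 2 * |a - b| := by
      by_contra hh
      push Not at hh
      exact hth ⟨hpa, hpa.trans_le hab, hh, hh.trans hab⟩
    have hab0 : 0 < |a - b| := by linarith
    set s := S.d a / (4 * |a - b|) with hs
    have hs0 : 0 < s := by positivity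
    have hs1 : s ≤ 1 := by rw [hs, div_le_one (by positivity)]; linarith
    set v := a + s * (b - a) with hv
    have hvmem : v ∈ uIcc a b := by
      rcases le_total a b with hle | hle
      · rw [uIcc_of_le hle]; constructor <;> nlinarith
      · rw [uIcc_of_ge hle]; constructor <;> nlinarith
    have hav : |a - v| = S.d a / 4 := by
      have : a - v = s * (a - b) := by rw [hv]; ring
      rw [this, abs_mul, abs_of_pos hs0, hs]; field_simp
    have hdv : S.d a ≤ S.d v := by
      have := min_d_le hfree hvmem
      rwa [min_eq_left hab] at this
    refine ⟨a, left_mem_uIcc, v, hvmem, ⟨hpa, by linarith, by linarith, by linarith⟩, ?_⟩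
    unfold w
    rw [min_eq_left hdv, hav, lt_div_iff₀ hpa]; nlinarith
  rcases le_total (S.d a) (S.d b) with hab | hab
  · exact key a b hfree hab hth
  · obtain ⟨u, hu, v, hv, h⟩ := key b a (by rwa [uIcc_comm]) hab fun hh => hth hh.symm
    exact ⟨u, by rwa [uIcc_comm], v, by rwa [uIcc_comm], h⟩

/-- A chain avoiding `K`, consisting of short segments and ending away from `Y`, is automatically
thin: otherwise the subsegment given by `exists_thin_sub` would contradict `fthin_aux`. -/
lemma fthin {X Y : Set ℝ} (D : S.FD X Y) {δ2 C : ℝ} (hδ2 : 0 < δ2) (hC : 0 < C)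
    (hF : S.FPoint X Y δ2 C) : ∃ C3 > 0, ∀ a ∈ Icc (0:ℝ) 1, ∀ b ∈ Icc (0:ℝ) 1, ∀ n, S.NH a b n →
      (∀ j < n, ∀ u ∈ uIcc a b, S.NU X δ2 (f^[j] u)) → ∀ M ρ, 0 < M → 0 < ρ → C3 * M < 1/4 →
      (∀ i ≤ n, |f^[i] a - f^[i] b| ≤ M) → |f^[n] a - f^[n] b| ≤ M * ρ →
      (∀ u ∈ uIcc (f^[n] a) (f^[n] b), ∀ y0 ∈ Y, ρ ≤ |y0 - u|) →
      ∀ j < n, S.Thin (f^[j] a) (f^[j] b) ∧ S.w (f^[j] a) (f^[j] b) ≤ C3 * M := by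
  obtain ⟨C3, hC3, haux⟩ := fthin_aux D hδ2 hC hF
  refine ⟨C3, hC3, fun a ha b hb n hNH hNU M ρ hM hρ hC3M hTM hTn hY => ?_⟩
  have key : ∀ k ≤ n, ∀ j < n, n ≤ j + k →
      S.Thin (f^[j] a) (f^[j] b) ∧ S.w (f^[j] a) (f^[j] b) ≤ C3 * M := by
    intro k hk
    induction k with
    | zero => intro j hj hj'; omega
    | succ k ih =>
      have ih := ih (by omega)
      intro j hj hjk
      by_contra hcon
      have hfree : ∀ t ∈ uIcc (f^[j] a) (f^[j] b), t ∉ S.K := by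
        rw [← (hNH.mono hj.le).image ha hb]
        rintro _ ⟨t, ht, rfl⟩
        exact hNH j hj t ht
      obtain ⟨u, hu, v, hv, hth, hw⟩ := exists_thin_sub (by positivity) hC3M hfree hcon
      have hu' := hu; have hv' := hv
      rw [← (hNH.mono hj.le).image ha hb] at hu' hv'
      obtain ⟨u0, hu0, rfl⟩ := hu'
      obtain ⟨v0, hv0, rfl⟩ := hv'
      have hmem : ∀ i ≤ n, ∀ z ∈ uIcc a b, f^[i] z ∈ uIcc (f^[i] a) (f^[i] b) :=
        fun i hi z hz => (hNH.mono hi).mem ha hb hz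
      have hI := uIcc_subI ha hb
      have hit : ∀ i z, f^[i] (f^[j] z) = f^[i + j] z :=
        fun i z => (Function.iterate_add_apply f i j z).symm
      have hTC : S.TC (f^[j] u0) (f^[j] v0) (n - j) := by
        intro i hi
        rcases Nat.eq_zero_or_pos i with rfl | hi0
        · exact hth
        · rw [hit, hit]
          exact (ih (i + j) (by omega) (by omega)).1.sub (hmem _ (by omega) _ hu0)
            (hmem _ (by omega) _ hv0)
      have := haux _ (S.mapsI j (hI hu0)) _ (S.mapsI j (hI hv0)) (n - j) hTC ?_ M ρ hM.le hρ ?_ ?_ ?_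
        0 (by omega)
      · exact absurd this (not_le.2 hw)
      · intro i hi
        rw [hit]
        exact hNU _ (by omega) _ hu0
      · intro i hi
        rw [hit, hit]
        exact (abs_sub_le_of_mem_uIcc (hmem _ (by omega) _ hu0) (hmem _ (by omega) _ hv0)).trans
          (hTM _ (by omega))
      · rw [hit, hit, Nat.sub_add_cancel hj.le]
        exact (abs_sub_le_of_mem_uIcc (hmem _ le_rfl _ hu0) (hmem _ le_rfl _ hv0)).trans hTn
      · rw [hit, hit, Nat.sub_add_cancel hj.le]
        intro z hz
        exact hY z (uIcc_subset_uIcc (hmem _ le_rfl _ hu0) (hmem _ le_rfl _ hv0) hz)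
  exact fun j hj => key n le_rfl j hj (by omega)

end Sys

/-! ### Diffeomorphic pullbacks -/

namespace Sys
variable {f : ℝ → ℝ} {S : Sys f}

/-- Every point of `I` lies in a nondegenerate lap whose endpoints are critical or in `{0, 1}`. -/
lemma lap (S : Sys f) {x : ℝ} (hx : x ∈ Icc (0:ℝ) 1) : ∃ k₁ k₂, k₁ ≤ x ∧ x ≤ k₂ ∧ k₁ < k₂ ∧
    k₁ ∈ Icc (0:ℝ) 1 ∧ k₂ ∈ Icc (0:ℝ) 1 ∧ (k₁ ∈ S.K ∨ k₁ = 0 ∨ k₁ = 1) ∧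
    (k₂ ∈ S.K ∨ k₂ = 0 ∨ k₂ = 1) ∧ ∀ c ∈ S.K, c ∉ Ioo k₁ k₂ := by
  classical
  set F : Finset ℝ := S.K ∪ {0, 1} with hF
  have hmem : ∀ k, k ∈ F ↔ (k ∈ S.K ∨ k = 0 ∨ k = 1) := by intro k; simp [hF]; tauto
  have hI : ∀ k ∈ F, k ∈ Icc (0:ℝ) 1 := by
    intro k hk
    rcases (hmem k).1 hk with h | rfl | rfl
    · exact S.K_sub k h
    · simp
    · simp
  rcases hx.2.lt_or_eq with h1 | h1
  · have n1 : (F.filter (· ≤ x)).Nonempty := ⟨0, by simp [hF, hx.1]⟩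
    have n2 : (F.filter (x < ·)).Nonempty := ⟨1, by simp [hF, h1]⟩
    have m1 := Finset.mem_filter.1 (Finset.max'_mem _ n1)
    have m2 := Finset.mem_filter.1 (Finset.min'_mem _ n2)
    refine ⟨_, _, m1.2, m2.2.le, m1.2.trans_lt m2.2, hI _ m1.1, hI _ m2.1, (hmem _).1 m1.1,
      (hmem _).1 m2.1, fun c hc hcm => ?_⟩
    have hcF : c ∈ F := (hmem c).2 (Or.inl hc)
    rcases le_or_gt c x with h | h
    · exact absurd hcm.1 (not_lt.2 (Finset.le_max' _ c (Finset.mem_filter.2 ⟨hcF, h⟩)))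
    · exact absurd hcm.2 (not_lt.2 (Finset.min'_le _ c (Finset.mem_filter.2 ⟨hcF, h⟩)))
  · have n1 : (F.filter (· < x)).Nonempty := ⟨0, by simp [hF, h1]⟩
    have m1 := Finset.mem_filter.1 (Finset.max'_mem _ n1)
    refine ⟨_, 1, m1.2.le, h1.le, by rw [← h1]; exact m1.2, hI _ m1.1, by simp, (hmem _).1 m1.1,
      by simp, fun c hc hcm => ?_⟩
    have hcF : c ∈ F := (hmem c).2 (Or.inl hc)
    refine absurd hcm.1 (not_lt.2 (Finset.le_max' _ c (Finset.mem_filter.2 ⟨hcF, ?_⟩)))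
    rw [h1]; exact hcm.2

lemma near_preimage (S : Sys f) (e : ℝ) {ε : ℝ} (hε : 0 < ε) : ∃ δ > 0, ∀ x ∈ Icc (0:ℝ) 1,
    |f x - e| < δ → ∃ p ∈ Icc (0:ℝ) 1, f p = e ∧ |x - p| < ε := by
  set s := {x ∈ Icc (0:ℝ) 1 | ∀ p ∈ Icc (0:ℝ) 1, f p = e → ε ≤ |x - p|} with hs
  have hcl : IsClosed s := by
    have : s = Icc (0:ℝ) 1 ∩ ⋂ p ∈ {p ∈ Icc (0:ℝ) 1 | f p = e}, {x | ε ≤ |x - p|} := by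
      ext x; simp [hs]
    rw [this]
    refine isClosed_Icc.inter (isClosed_biInter fun p _ => ?_)
    exact isClosed_le continuous_const (by fun_prop)
  have hco : IsCompact s := isCompact_Icc.of_isClosed_subset hcl fun x hx => hx.1
  rcases s.eq_empty_or_nonempty with h0 | h0
  · refine ⟨1, one_pos, fun x hx _ => ?_⟩
    have : x ∉ s := by rw [h0]; simp
    by_contra hh
    push Not at hh
    exact this ⟨hx, hh⟩
  · obtain ⟨x0, hx0, hmin⟩ := hco.exists_isMinOn h0
      (f := fun x => |f x - e|) (S.cont.sub continuous_const).abs.continuousOn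
    refine ⟨|f x0 - e|, abs_pos.2 (sub_ne_zero.2 fun h => ?_), fun x hx hlt => ?_⟩
    · have := hx0.2 x0 hx0.1 h
      simp at this; linarith
    · by_contra hh
      push Not at hh
      exact absurd hlt (not_lt.2 (hmin (show x ∈ s from ⟨hx, hh⟩)))

/-- Three consecutive orbit points in a two-point set force the next one to lie in it. -/
lemma endpt_orbit {e e1 e2 : ℝ} (he : e = 0 ∨ e = 1) (he1 : e1 = 0 ∨ e1 = 1)
    (he2 : e2 = 0 ∨ e2 = 1) (h2 : f e2 = e1) (h1 : f e1 = e) : f e = 0 ∨ f e = 1 := by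
  rcases he with rfl | rfl <;> rcases he1 with rfl | rfl <;> rcases he2 with rfl | rfl <;> simp_all

set_option maxHeartbeats 800000 in
/-- Short intervals off `Y` pull back diffeomorphically along orbits near `X`, except possibly
for the first two steps. -/
lemma pull {X Y : Set ℝ} (D : S.FD X Y) {δ : ℝ} (hδ : 0 < δ) : ∃ η > 0,
    ∀ α ∈ Icc (0:ℝ) 1, ∀ β ∈ Icc (0:ℝ) 1, |α - β| < η → (∀ z ∈ uIcc α β, z ∉ Y) →
    ∀ x ∈ Icc (0:ℝ) 1, ∀ n, (∀ i < n, S.NU X δ (f^[i] x)) → f^[n] x ∈ uIcc α β →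
    ∀ j, 2 ≤ j → j ≤ n → ∃ a ∈ Icc (0:ℝ) 1, ∃ b ∈ Icc (0:ℝ) 1, S.NH a b (n - j) ∧
      f^[n-j] a = α ∧ f^[n-j] b = β ∧ f^[j] x ∈ uIcc a b := by
  obtain ⟨e00, he00, p00⟩ := S.near_preimage 0 hδ
  obtain ⟨e01, he01, p01⟩ := S.near_preimage 1 hδ
  set ε1 := min (min e00 e01) δ
  have hε1 : 0 < ε1 := lt_min (lt_min he00 he01) hδ
  obtain ⟨e10, he10, p10⟩ := S.near_preimage 0 hε1
  obtain ⟨e11, he11, p11⟩ := S.near_preimage 1 hε1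
  set ε := min (min e10 e11) δ
  have hε : 0 < ε := lt_min (lt_min he10 he11) hδ
  have P1 : ∀ x ∈ Icc (0:ℝ) 1, ∀ e, (e = 0 ∨ e = 1) → |f x - e| < ε1 →
      ∃ p ∈ Icc (0:ℝ) 1, f p = e ∧ |x - p| < δ := by
    rintro x hx e (rfl | rfl) h
    · exact p00 x hx (h.trans_le ((min_le_left _ _).trans (min_le_left _ _)))
    · exact p01 x hx (h.trans_le ((min_le_left _ _).trans (min_le_right _ _)))
  have P2 : ∀ x ∈ Icc (0:ℝ) 1, ∀ e, (e = 0 ∨ e = 1) → |f x - e| < ε →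
      ∃ p ∈ Icc (0:ℝ) 1, f p = e ∧ |x - p| < ε1 := by
    rintro x hx e (rfl | rfl) h
    · exact p10 x hx (h.trans_le ((min_le_left _ _).trans (min_le_left _ _)))
    · exact p11 x hx (h.trans_le ((min_le_left _ _).trans (min_le_right _ _)))
  obtain ⟨η, hη, hT1⟩ := S.T1 hε
  refine ⟨η, hη, fun α hα β hβ hαβ hY x hx n hNU hxn => ?_⟩
  have hεδ : ε ≤ δ := min_le_right _ _
  have hε1δ : ε1 ≤ δ := min_le_right _ _
  have key : ∀ k, k + 2 ≤ n → ∃ a ∈ Icc (0:ℝ) 1, ∃ b ∈ Icc (0:ℝ) 1, S.NH a b k ∧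
      f^[k] a = α ∧ f^[k] b = β ∧ f^[n-k] x ∈ uIcc a b := by
    intro k
    induction k with
    | zero => exact fun _ => ⟨α, hα, β, hβ, fun j hj => by omega, rfl, rfl, hxn⟩
    | succ k ih =>
      intro hk
      obtain ⟨a, ha, b, hb, hNH, hka, hkb, hxT⟩ := ih (by omega)
      obtain ⟨j, rfl⟩ : ∃ j, n = j + 2 + (k + 1) := ⟨n - (k + 3), by omega⟩
      have s1 : j + 2 + (k + 1) - k = (j + 2) + 1 := by omega
      have s2 : j + 2 + (k + 1) - (k + 1) = j + 2 := by omega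
      rw [s1] at hxT
      rw [s2]
      set z := f^[j+2] x with hz
      have hzI : z ∈ Icc (0:ℝ) 1 := S.mapsI _ hx
      have hfz : f^[j+2+1] x = f z := Function.iterate_succ_apply' f _ x
      rw [hfz] at hxT
      have hzNU : S.NU X δ z := hNU (j + 2) (by omega)
      -- a segment from `z` mapped into the current pullback is short and ends off `K`
      have hshort : ∀ t ∈ Icc (0:ℝ) 1, (∀ u ∈ uIcc t z, f u ∈ uIcc a b) →
          |z - t| < ε ∧ f^[k+1] t ∈ uIcc α β := by
        intro t ht hu
        have hm : ∀ u ∈ uIcc t z, f^[k+1] u ∈ uIcc α β := by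
          intro u hut
          have := hNH.mem ha hb (hu u hut)
          rwa [hka, hkb] at this
        refine ⟨?_, hm t left_mem_uIcc⟩
        rw [abs_sub_comm]
        exact hT1 t ht z hzI (k + 1) fun u hu v hv =>
          (abs_sub_le_of_mem_uIcc (hm u hu) (hm v hv)).trans_lt hαβ
      have hnoK : ∀ t ∈ Icc (0:ℝ) 1, (∀ u ∈ uIcc t z, f u ∈ uIcc a b) → t ∉ S.K := by
        intro t ht hu htK
        obtain ⟨h1, h2⟩ := hshort t ht hu
        exact hY _ h2 (D.crit t htK (hzNU t htK (h1.trans_le hεδ)) (k + 1) (by omega))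
      have hend : ∀ e ∈ Icc (0:ℝ) 1, (e = 0 ∨ e = 1) → (∀ u ∈ uIcc e z, f u ∈ uIcc a b) →
          f e = 0 ∨ f e = 1 := by
        intro e heI he hu
        obtain ⟨h1, h2⟩ := hshort e heI hu
        have z1 : f (f^[j+1] x) = z := (Function.iterate_succ_apply' f _ x).symm
        have z2 : f (f^[j] x) = f^[j+1] x := (Function.iterate_succ_apply' f _ x).symm
        obtain ⟨e1, he1I, hfe1, hd1⟩ := P2 (f^[j+1] x) (S.mapsI _ hx) e he (by rw [z1]; exact h1)
        have hcr1 : e1 ∉ S.K := by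
          intro hK
          have := D.crit e1 hK (hNU (j + 1) (by omega) e1 hK (hd1.trans_le hε1δ)) (k + 2) (by omega)
          rw [Function.iterate_succ_apply, hfe1] at this
          exact hY _ h2 this
        have he1 : e1 = 0 ∨ e1 = 1 :=
          (S.endpt e1 he1I (by rw [hfe1]; exact he)).resolve_left hcr1
        obtain ⟨e2, he2I, hfe2, hd2⟩ := P1 (f^[j] x) (S.mapsI _ hx) e1 he1 (by rw [z2]; exact hd1)
        have hcr2 : e2 ∉ S.K := by
          intro hK
          have := D.crit e2 hK (hNU j (by omega) e2 hK hd2) (k + 3) (by omega)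
          rw [Function.iterate_succ_apply, hfe2, Function.iterate_succ_apply, hfe1] at this
          exact hY _ h2 this
        have he2 : e2 = 0 ∨ e2 = 1 :=
          (S.endpt e2 he2I (by rw [hfe2]; exact he1)).resolve_left hcr2
        exact endpt_orbit he he1 he2 hfe2 hfe1
      obtain ⟨k₁, k₂, hk1, hk2, hk12, hk1I, hk2I, hk1K, hk2K, hfree⟩ := S.lap hzI
      have hinj := S.inj k₁ k₂ hk1I.1 hk2I.2 hfree
      have hinj' : InjOn f (uIcc k₁ k₂) := by rwa [uIcc_of_le hk12.le]
      have him := image_uIcc_of_inj S.cont hinj'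
      have hzl : z ∈ uIcc k₁ k₂ := by rw [uIcc_of_le hk12.le]; exact ⟨hk1, hk2⟩
      -- a lap endpoint cannot obstruct the pullback
      have hobs : ∀ t ∈ uIcc a b, ∀ p q, ({p, q} : Set ℝ) = {k₁, k₂} → p ∈ uIcc k₁ k₂ →
          p ∈ Icc (0:ℝ) 1 →
          (p ∈ S.K ∨ p = 0 ∨ p = 1) → f p ∈ uIcc (f z) t → f p ≠ 0 → f p ≠ 1 → False := by
        intro t ht p q _ hp hpI hpK hft h0 h1
        have hseg : ∀ u ∈ uIcc p z, f u ∈ uIcc a b := by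
          intro u hu
          have hsub : uIcc p z ⊆ uIcc k₁ k₂ := uIcc_subset_uIcc hp hzl
          have : f u ∈ uIcc (f p) (f z) := by
            rw [← image_uIcc_of_inj S.cont (hinj'.mono hsub)]; exact mem_image_of_mem _ hu
          exact uIcc_subset_uIcc (uIcc_subset_uIcc hxT ht hft) hxT this
        rcases hpK with h | h
        · exact hnoK p hpI hseg h
        · rcases hend p hpI h hseg with h' | h'
          · exact h0 h'
          · exact h1 h'
      have hcover : uIcc a b ⊆ uIcc (f k₁) (f k₂) := by
        intro t ht
        by_contra hcon
        have hfzm : f z ∈ uIcc (f k₁) (f k₂) := by rw [← him]; exact mem_image_of_mem _ hzl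
        have htI := uIcc_subI ha hb ht
        have hne : f k₁ ≠ f k₂ := fun h => hk12.ne
          (hinj (left_mem_Icc.2 hk12.le) (right_mem_Icc.2 hk12.le) h)
        have b1 := S.maps k₁; have b2 := S.maps k₂
        have o1 : f k₁ ∈ uIcc (f z) t → f k₁ ≠ 0 → f k₁ ≠ 1 → False :=
          hobs t ht k₁ k₂ rfl left_mem_uIcc hk1I hk1K
        have o2 : f k₂ ∈ uIcc (f z) t → f k₂ ≠ 0 → f k₂ ≠ 1 → False :=
          hobs t ht k₂ k₁ (pair_comm _ _) right_mem_uIcc hk2I hk2K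
        rw [mem_uIcc] at hfzm o1 o2
        have hcon' : ¬ ((f k₁ ≤ t ∧ t ≤ f k₂) ∨ (f k₂ ≤ t ∧ t ≤ f k₁)) := by
          rwa [mem_uIcc] at hcon
        rcases lt_or_gt_of_ne hne with hlt | hlt
        · rcases lt_or_ge t (f k₁) with h | h
          · refine o1 (Or.inr ⟨h.le, ?_⟩) (by linarith [htI.1]) (by linarith [b2.2])
            rcases hfzm with h | h <;> linarith [h.1, h.2]
          · have h' : f k₂ < t := by by_contra hh; exact hcon' (Or.inl ⟨h, not_lt.1 hh⟩)
            refine o2 (Or.inl ⟨?_, h'.le⟩) (by linarith [b1.1]) (by linarith [htI.2])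
            rcases hfzm with h | h <;> linarith [h.1, h.2]
        · rcases lt_or_ge t (f k₂) with h | h
          · refine o2 (Or.inr ⟨h.le, ?_⟩) (by linarith [htI.1]) (by linarith [b1.2])
            rcases hfzm with h | h <;> linarith [h.1, h.2]
          · have h' : f k₁ < t := by by_contra hh; exact hcon' (Or.inr ⟨h, not_lt.1 hh⟩)
            refine o1 (Or.inl ⟨?_, h'.le⟩) (by linarith [b2.1]) (by linarith [htI.2])
            rcases hfzm with h | h <;> linarith [h.1, h.2]
      rw [← him] at hcover
      obtain ⟨a', ha', hfa⟩ := hcover left_mem_uIcc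
      obtain ⟨b', hb', hfb⟩ := hcover right_mem_uIcc
      have hsub : uIcc a' b' ⊆ uIcc k₁ k₂ := uIcc_subset_uIcc ha' hb'
      have hkI : uIcc k₁ k₂ ⊆ Icc 0 1 := uIcc_subI hk1I hk2I
      have him' := image_uIcc_of_inj S.cont (hinj'.mono hsub)
      rw [hfa, hfb] at him'
      have hzm : z ∈ uIcc a' b' := by
        rw [← him'] at hxT
        obtain ⟨z', hz', hzz⟩ := hxT
        rwa [← hinj' (hsub hz') hzl hzz]
      refine ⟨a', hkI ha', b', hkI hb', ?_, by rw [Function.iterate_succ_apply, hfa, hka],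
        by rw [Function.iterate_succ_apply, hfb, hkb], hzm⟩
      rw [add_comm]
      refine NH.append (m := 1) ?_ (hkI ha') (hkI hb') (by simpa [hfa, hfb] using hNH)
      intro i hi u hu
      obtain rfl : i = 0 := by omega
      refine hnoK u (hkI (hsub hu)) fun v hv => ?_
      rw [← him']
      exact mem_image_of_mem _ (uIcc_subset_uIcc hu hzm hv)
  intro j hj hjn
  have := key (n - j) (by omega)
  rwa [Nat.sub_sub_self hjn] at this

end Sys

/-! ### Admissible and nice intervals -/

namespace Sys
variable {f : ℝ → ℝ} {S : Sys f}

/-- Intervals inside `[α, β]` pull back diffeomorphically (two steps short of the start) along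
orbits near `X`, and such pullbacks form thin chains with controlled relative lengths. -/
structure Adm (S : Sys f) (X : Set ℝ) (δ C2 α β : ℝ) : Prop where
  hα : α ∈ Icc (0:ℝ) 1
  hβ : β ∈ Icc (0:ℝ) 1
  pull : ∀ α' ∈ uIcc α β, ∀ β' ∈ uIcc α β,
    ∀ x ∈ Icc (0:ℝ) 1, ∀ n, (∀ i < n, S.NU X δ (f^[i] x)) → f^[n] x ∈ uIcc α' β' →
    ∀ j, 2 ≤ j → j ≤ n → ∃ a ∈ Icc (0:ℝ) 1, ∃ b ∈ Icc (0:ℝ) 1, S.NH a b (n - j) ∧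
      f^[n-j] a = α' ∧ f^[n-j] b = β' ∧ f^[j] x ∈ uIcc a b
  thin : ∀ a ∈ Icc (0:ℝ) 1, ∀ b ∈ Icc (0:ℝ) 1, ∀ m, S.NH a b m → f^[m] a ∈ uIcc α β →
    f^[m] b ∈ uIcc α β → ∀ x ∈ uIcc a b, (∀ i < m, S.NU X δ (f^[i] x)) → S.TC a b m
  sum : ∀ a ∈ Icc (0:ℝ) 1, ∀ b ∈ Icc (0:ℝ) 1, ∀ m, S.NH a b m → f^[m] a ∈ uIcc α β →
    f^[m] b ∈ uIcc α β → ∀ x ∈ uIcc a b, (∀ i < m, S.NU X δ (f^[i] x)) →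
    ∑ j ∈ Finset.range m, S.w (f^[j] a) (f^[j] b) ≤
        C2 * (1 + ∑ j ∈ Finset.range (m + 1), |f^[j] a - f^[j] b|)

/-- `u` lies within `δ` of `X`. -/
def Nr (X : Set ℝ) (δ u : ℝ) : Prop := ∃ z ∈ X, |u - z| < δ

lemma Nr.mono {X : Set ℝ} {δ δ' u : ℝ} (h : Nr X δ u) (hδ : δ ≤ δ') : Nr X δ' u := by
  obtain ⟨z, hz, h⟩ := h
  exact ⟨z, hz, h.trans_le hδ⟩

lemma exists_nr_nu (S : Sys f) {X : Set ℝ} (hX : IsClosed X) : ∃ g > 0,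
    ∀ u, Nr X g u → S.NU X g u := by
  have h1 : ∀ c ∈ S.K, ∀ᶠ g in nhdsWithin (0:ℝ) (Ioi 0), c ∉ X → ∀ z ∈ X, 2 * g ≤ |c - z| := by
    intro c _
    by_cases hc : c ∈ X
    · exact Eventually.of_forall fun g h => absurd hc h
    · obtain ⟨e, he, hb⟩ := Metric.isOpen_iff.1 hX.isOpen_compl c hc
      have : Ioo (0:ℝ) (e / 2) ∈ nhdsWithin (0:ℝ) (Ioi 0) := Ioo_mem_nhdsGT (by linarith)
      filter_upwards [this] with g hg _ z hz
      by_contra hcon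
      refine hb (a := z) ?_ hz
      rw [mem_ball, Real.dist_eq, abs_sub_comm]
      linarith [hg.2]
  have h2 := (Finset.eventually_all S.K).2 h1
  obtain ⟨g, hg, hgp⟩ := (h2.and self_mem_nhdsWithin).exists
  refine ⟨g, hgp, fun u ⟨z, hz, huz⟩ c hc huc => ?_⟩
  by_contra hcX
  have h3 := hg c hc hcX z hz
  have h4 := abs_sub_le c u z
  rw [abs_sub_comm c u] at h4
  linarith

lemma NU.mono {X : Set ℝ} {δ δ' u : ℝ} (h : S.NU X δ' u) (hδ : δ ≤ δ') : S.NU X δ u :=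
  fun c hc hu => h c hc (hu.trans_le hδ)

lemma exists_fsum {X Y : Set ℝ} (D : S.FD X Y) : ∃ δ > 0, ∃ C2 > 0, ∀ x ∈ Icc (0:ℝ) 1,
    ∀ y ∈ Icc (0:ℝ) 1, ∀ n, S.TC x y n → (∀ j < n, Nr X δ (f^[j] x)) →
      ∑ j ∈ Finset.range n, S.w (f^[j] x) (f^[j] y) ≤
        C2 * (1 + ∑ j ∈ Finset.range (n + 1), |f^[j] x - f^[j] y|) := by
  obtain ⟨δ0, hδ0, hF⟩ := fpoint D
  obtain ⟨g, hg, hgN⟩ := S.exists_nr_nu D.hX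
  have hm : 0 < min δ0 g := lt_min hδ0 hg
  obtain ⟨C, hC, hF⟩ := hF _ hm (min_le_left _ _)
  obtain ⟨C2, hC2, hsum⟩ := fsum hm hC hF
  exact ⟨g, hg, C2, hC2, fun x hx y hy n hT hN => hsum x hx y hy n hT fun j hj =>
    (hgN _ (hN j hj)).mono (min_le_right _ _)⟩

/-- All short intervals at a definite distance from `Y` are admissible. -/
lemma exists_adm {X Y : Set ℝ} (D : S.FD X Y) : ∃ δ > 0, (∃ g > 0, ∀ u, Nr X g u → S.NU X δ u) ∧
    ∃ C2 > 0, ∀ ρ > 0, ∃ η > 0,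
    ∀ α ∈ Icc (0:ℝ) 1, ∀ β ∈ Icc (0:ℝ) 1, |α - β| < η →
    (∀ u ∈ uIcc α β, ∀ y ∈ Y, ρ ≤ |y - u|) → S.Adm X δ C2 α β := by
  obtain ⟨δ0', hδ0', hF⟩ := fpoint D
  obtain ⟨g, hg, hgN⟩ := S.exists_nr_nu D.hX
  set δ0 := min δ0' (g / 2) with hδ0def
  have hδ0 : 0 < δ0 := lt_min hδ0' (by linarith)
  obtain ⟨C, hC, hF⟩ := hF δ0 hδ0 (min_le_left _ _)
  obtain ⟨C2, hC2, hsum⟩ := fsum hδ0 hC hF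
  obtain ⟨C3, hC3, hthin⟩ := fthin D hδ0 hC hF
  have h2δ : 0 < 2 * δ0 := by linarith
  have h2g : 2 * δ0 ≤ g := by have : δ0 ≤ g / 2 := min_le_right _ _; linarith
  refine ⟨2 * δ0, h2δ, ⟨g, hg, fun u hu => (hgN u hu).mono h2g⟩, C2, hC2, fun ρ hρ => ?_⟩
  clear_value δ0
  set M := min (1 / (8 * C3)) δ0 with hM
  have hMp : 0 < M := lt_min (by positivity) hδ0
  have hCM : C3 * M < 1 / 4 := by
    have : C3 * M ≤ C3 * (1 / (8 * C3)) := by gcongr; exact min_le_left _ _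
    have e : C3 * (1 / (8 * C3)) = 1 / 8 := by field_simp
    linarith
  obtain ⟨η1, hη1, hT⟩ := S.T1 hMp
  obtain ⟨η2, hη2, hP⟩ := pull D h2δ
  refine ⟨min (min η1 η2) (M * ρ), by positivity, fun α hα β hβ hαβ hY => ?_⟩
  have l1 : |α - β| < η1 := hαβ.trans_le ((min_le_left _ _).trans (min_le_left _ _))
  have l2 : |α - β| < η2 := hαβ.trans_le ((min_le_left _ _).trans (min_le_right _ _))
  have l3 : |α - β| < M * ρ := hαβ.trans_le (min_le_right _ _)
  have len : ∀ a ∈ Icc (0:ℝ) 1, ∀ b ∈ Icc (0:ℝ) 1, ∀ m, S.NH a b m → f^[m] a ∈ uIcc α β →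
      f^[m] b ∈ uIcc α β → ∀ i ≤ m, |f^[i] a - f^[i] b| < M := by
    intro a ha b hb m hN hma hmb i hi
    obtain ⟨k, rfl⟩ := Nat.exists_eq_add_of_le hi
    have hs := hN.shift ha hb
    refine hT _ (S.mapsI i ha) _ (S.mapsI i hb) k fun u hu v hv => ?_
    have hu' := hs.mem (S.mapsI i ha) (S.mapsI i hb) hu
    have hv' := hs.mem (S.mapsI i ha) (S.mapsI i hb) hv
    rw [← Function.iterate_add_apply, ← Function.iterate_add_apply, add_comm k i] at hu' hv'
    exact (abs_sub_le_of_mem_uIcc (uIcc_subset_uIcc hma hmb hu')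
      (uIcc_subset_uIcc hma hmb hv')).trans_lt l1
  have near : ∀ a ∈ Icc (0:ℝ) 1, ∀ b ∈ Icc (0:ℝ) 1, ∀ m, S.NH a b m → f^[m] a ∈ uIcc α β →
      f^[m] b ∈ uIcc α β → ∀ x ∈ uIcc a b, (∀ i < m, S.NU X (2 * δ0) (f^[i] x)) →
      ∀ i < m, ∀ u ∈ uIcc a b, S.NU X δ0 (f^[i] u) := by
    intro a ha b hb m hN hma hmb x hx hxN i hi u hu c hc hlt
    refine hxN i hi c hc ?_
    have h1 := len a ha b hb m hN hma hmb i hi.le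
    have h2 := abs_sub_le_of_mem_uIcc ((hN.mono hi.le).mem ha hb hx) ((hN.mono hi.le).mem ha hb hu)
    have h3 : M ≤ δ0 := min_le_right _ _
    have h4 := abs_sub_le (f^[i] x) (f^[i] u) c
    linarith
  have thin : ∀ a ∈ Icc (0:ℝ) 1, ∀ b ∈ Icc (0:ℝ) 1, ∀ m, S.NH a b m → f^[m] a ∈ uIcc α β →
      f^[m] b ∈ uIcc α β → ∀ x ∈ uIcc a b, (∀ i < m, S.NU X (2 * δ0) (f^[i] x)) → S.TC a b m := by
    intro a ha b hb m hN hma hmb x hx hxN j hj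
    refine (hthin a ha b hb m hN (near a ha b hb m hN hma hmb x hx hxN) M ρ hMp hρ hCM
      (fun i hi => (len a ha b hb m hN hma hmb i hi).le)
      ((abs_sub_le_of_mem_uIcc hma hmb).trans l3.le) (fun u hu y0 hy0 => ?_) j hj).1
    exact hY u (uIcc_subset_uIcc hma hmb hu) y0 hy0
  refine ⟨hα, hβ, fun α' hα' β' hβ' x hx n hN hxn j hj hjn => ?_, thin, ?_⟩
  · refine hP α' (uIcc_subI hα hβ hα') β' (uIcc_subI hα hβ hβ')
      ((abs_sub_le_of_mem_uIcc hα' hβ').trans_lt l2) (fun z hz hzY => ?_) x hx n hN hxn j hj hjn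
    have := hY z (uIcc_subset_uIcc hα' hβ' hz) z hzY
    simp at this; linarith
  · intro a ha b hb m hN hma hmb x hx hxN
    exact hsum a ha b hb m (thin a ha b hb m hN hma hmb x hx hxN)
      fun j hj => near a ha b hb m hN hma hmb x hx hxN j hj a left_mem_uIcc

/-- A diffeomorphic pullback contains every diffeomorphic chain through a common point whose final
image is smaller. -/
lemma NH.subset_of_image {a b p q x : ℝ} {m : ℕ} (h : S.NH a b m) (h' : S.NH p q m)
    (ha : a ∈ Icc (0:ℝ) 1) (hb : b ∈ Icc (0:ℝ) 1) (hp : p ∈ Icc (0:ℝ) 1) (hq : q ∈ Icc (0:ℝ) 1)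
    (hx : x ∈ uIcc a b) (hx' : x ∈ uIcc p q) (hma : f^[m] a ∈ uIcc (f^[m] p) (f^[m] q))
    (hmb : f^[m] b ∈ uIcc (f^[m] p) (f^[m] q)) : uIcc a b ⊆ uIcc p q := by
  have hoc : (uIcc a b ∪ uIcc p q).OrdConnected := by
    rw [← isPreconnected_iff_ordConnected]
    exact IsPreconnected.union x hx hx' isPreconnected_uIcc isPreconnected_uIcc
  have hinj := S.injOn_iter hoc (union_subset (uIcc_subI ha hb) (uIcc_subI hp hq)) (n := m)
    (fun j hj u hu => hu.elim (h j hj u) (h' j hj u))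
  intro u hu
  have h1 : f^[m] u ∈ uIcc (f^[m] p) (f^[m] q) := uIcc_subset_uIcc hma hmb (h.mem ha hb hu)
  rw [← h'.image hp hq] at h1
  obtain ⟨v, hv, hvu⟩ := h1
  rwa [← hinj (Or.inr hv) (Or.inl hu) hvu]

lemma sum_len_le_one {p q : ℕ → ℝ} {m : ℕ} (hp : ∀ i < m, p i ∈ Icc (0:ℝ) 1)
    (hq : ∀ i < m, q i ∈ Icc (0:ℝ) 1)
    (hd : ∀ i k, i < k → k < m → ∀ u, u ∈ uIcc (p i) (q i) → u ∈ uIcc (p k) (q k) →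
      u = p i ∨ u = q i ∨ u = p k ∨ u = q k) :
    ∑ i ∈ Finset.range m, |p i - q i| ≤ 1 := by
  have hv : ∀ a b : ℝ, volume (uIcc a b) = ENNReal.ofReal |a - b| := by
    intro a b
    rw [uIcc, Real.volume_Icc, max_sub_min_eq_abs']
  have hdis : ((Finset.range m : Finset ℕ) : Set ℕ).Pairwise
      (Function.onFun (AEDisjoint volume) fun i => uIcc (p i) (q i)) := by
    have key : ∀ i k, i < k → k < m → AEDisjoint volume (uIcc (p i) (q i)) (uIcc (p k) (q k)) := by
      intro i k hik hk
      refine measure_mono_null (t := {p i, q i, p k, q k}) (fun u hu => ?_)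
        ((Set.toFinite _).measure_zero _)
      rcases hd i k hik hk u hu.1 hu.2 with h | h | h | h <;> simp [h]
    intro i hi k hk hne
    rw [Finset.coe_range] at hi hk
    rcases lt_or_gt_of_ne hne with h | h
    · exact key i k h hk
    · exact (key k i h hi).symm
  have h1 := measure_biUnion_finset₀ (μ := volume) hdis
    fun i _ => measurableSet_uIcc.nullMeasurableSet
  have h2 : volume (⋃ i ∈ Finset.range m, uIcc (p i) (q i)) ≤ volume (Icc (0:ℝ) 1) := by
    refine measure_mono (iUnion₂_subset fun i hi => ?_)
    rw [Finset.mem_range] at hi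
    exact uIcc_subI (hp i hi) (hq i hi)
  rw [h1, Real.volume_Icc] at h2
  simp only [hv] at h2
  rw [← ENNReal.ofReal_sum_of_nonneg fun i _ => abs_nonneg _] at h2
  simpa using (ENNReal.ofReal_le_ofReal_iff (by norm_num)).1 h2

lemma interior_of_between {p q u v t : ℝ} (hu : u ∈ uIcc p q) (hv : v ∈ uIcc p q)
    (ht : t ∈ uIcc u v) (h1 : t ≠ u) (h2 : t ≠ v) : t ∈ uIcc p q ∧ t ≠ p ∧ t ≠ q := by
  refine ⟨uIcc_subset_uIcc hu hv ht, ?_⟩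
  rw [mem_uIcc] at *
  grind

/-- The forward orbits of the endpoints never enter the interior of `[α, β]`. -/
def Nice (f : ℝ → ℝ) (α β : ℝ) : Prop := ∀ m ≥ 1, ∀ e, (e = α ∨ e = β) →
  f^[m] e ∈ uIcc α β → f^[m] e = α ∨ f^[m] e = β

/-- A pullback of a nice interval meeting its interior is contained in it. -/
lemma Nice.contained {α β p q u : ℝ} {m : ℕ} (hn : Nice f α β) (hm : 1 ≤ m) (h : S.NH p q m)
    (hp : p ∈ Icc (0:ℝ) 1) (hq : q ∈ Icc (0:ℝ) 1) (hpα : f^[m] p = α) (hqβ : f^[m] q = β)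
    (hu : u ∈ uIcc p q) (hu' : u ∈ uIcc α β) (h1 : u ≠ α) (h2 : u ≠ β) :
    uIcc p q ⊆ uIcc α β := by
  intro v hv
  by_contra hcon
  obtain ⟨e, he, heuv⟩ : ∃ e, (e = α ∨ e = β) ∧ e ∈ uIcc u v := by
    rw [mem_uIcc] at hu' hcon
    rcases le_total α β with hab | hab <;> rcases le_total u v with huv | huv
    · exact ⟨β, Or.inr rfl, by rw [mem_uIcc]; grind⟩
    · exact ⟨α, Or.inl rfl, by rw [mem_uIcc]; grind⟩
    · exact ⟨α, Or.inl rfl, by rw [mem_uIcc]; grind⟩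
    · exact ⟨β, Or.inr rfl, by rw [mem_uIcc]; grind⟩
  have hev : e ≠ v := by
    rintro rfl
    rcases he with rfl | rfl
    · exact hcon left_mem_uIcc
    · exact hcon right_mem_uIcc
  have heu : e ≠ u := by
    rintro rfl
    rcases he with h | h
    · exact h1 h
    · exact h2 h
  obtain ⟨he1, he2, he3⟩ := interior_of_between hu hv heuv heu hev
  have hmem := h.mem hp hq he1
  rw [hpα, hqβ] at hmem
  have hinj := h.inj hp hq
  rcases hn m hm e he hmem with h' | h'
  · exact he2 (hinj he1 left_mem_uIcc (h'.trans hpα.symm))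
  · exact he3 (hinj he1 right_mem_uIcc (h'.trans hqβ.symm))

end Sys

/-! ### First returns to nice intervals -/

namespace Sys
variable {f : ℝ → ℝ} {S : Sys f}

/-- Distortion constant of first-return branches. -/
def Kc (S : Sys f) (C2 : ℝ) : ℝ := Real.exp (S.C0 * (3 * C2))

lemma Kc_pos (C2 : ℝ) : 0 < S.Kc C2 := Real.exp_pos _

/-- Between consecutive visits to a nice interval the pullbacks of that interval are pairwise
disjoint, hence of total length at most one, which bounds the distortion. -/
lemma gapsum {X : Set ℝ} {δ C2 α β : ℝ} (hA : S.Adm X δ C2 α β) (hC2 : 0 < C2)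
    (hn : Nice f α β) {a b p q x : ℝ} {m : ℕ}
    (ha : a ∈ Icc (0:ℝ) 1) (hb : b ∈ Icc (0:ℝ) 1) (hp : p ∈ Icc (0:ℝ) 1) (hq : q ∈ Icc (0:ℝ) 1)
    (hab : S.NH a b m) (hpq : S.NH p q m) (hma : f^[m] a ∈ uIcc α β) (hmb : f^[m] b ∈ uIcc α β)
    (hmp : f^[m] p = α) (hmq : f^[m] q = β) (hx : x ∈ uIcc a b) (hx' : x ∈ uIcc p q)
    (hN : ∀ i < m, S.NU X δ (f^[i] x))
    (hnv : ∀ l, 0 < l → l < m → ¬ (f^[l] a ∈ uIcc α β ∧ f^[l] b ∈ uIcc α β)) :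
    uIcc a b ⊆ uIcc p q ∧
    (∑ i ∈ Finset.range m, |f^[i] a - f^[i] b|) * |α - β| ≤ S.Kc C2 * |f^[m] a - f^[m] b| ∧
    (1 ≤ m → |a - b| * |α - β| ≤ S.Kc C2 * |f^[m] a - f^[m] b| * |p - q|) := by
  have hsub : uIcc a b ⊆ uIcc p q := hab.subset_of_image hpq ha hb hp hq hx hx'
    (by rwa [hmp, hmq]) (by rwa [hmp, hmq])
  have hai : ∀ i ≤ m, f^[i] a ∈ uIcc (f^[i] p) (f^[i] q) := fun i hi =>
    (hpq.mono hi).mem hp hq (hsub left_mem_uIcc)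
  have hbi : ∀ i ≤ m, f^[i] b ∈ uIcc (f^[i] p) (f^[i] q) := fun i hi =>
    (hpq.mono hi).mem hp hq (hsub right_mem_uIcc)
  have sh : ∀ i ≤ m, S.NH (f^[i] p) (f^[i] q) (m - i) ∧ f^[m-i] (f^[i] p) = α ∧
      f^[m-i] (f^[i] q) = β := by
    intro i hi
    refine ⟨?_, ?_, ?_⟩
    · have := hpq
      rw [← Nat.add_sub_cancel' hi] at this
      exact this.shift hp hq
    · rw [← Function.iterate_add_apply, Nat.sub_add_cancel hi, hmp]
    · rw [← Function.iterate_add_apply, Nat.sub_add_cancel hi, hmq]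
  have hE : ∑ i ∈ Finset.range m, |f^[i] p - f^[i] q| ≤ 1 := by
    refine sum_len_le_one (p := fun i => f^[i] p) (q := fun i => f^[i] q)
      (fun i _ => S.mapsI i hp) (fun i _ => S.mapsI i hq) ?_
    intro i k hik hkm u hui huk
    by_contra hcon
    push Not at hcon
    obtain ⟨-, -, hc3, hc4⟩ := hcon
    obtain ⟨sk1, sk2, sk3⟩ := sh k hkm.le
    have hl : i + (m - k) < m := by omega
    obtain ⟨sl1, sl2, sl3⟩ := sh (i + (m - k)) hl.le
    have inj := sk1.inj (S.mapsI k hp) (S.mapsI k hq)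
    have u1 := sk1.mem (S.mapsI k hp) (S.mapsI k hq) huk
    rw [sk2, sk3] at u1
    have u2 : f^[m-k] u ≠ α := fun h => hc3 (inj huk left_mem_uIcc (h.trans sk2.symm))
    have u3 : f^[m-k] u ≠ β := fun h => hc4 (inj huk right_mem_uIcc (h.trans sk3.symm))
    have hNi : S.NH (f^[i] p) (f^[i] q) (m - k) := (sh i (by omega)).1.mono (by omega)
    have u4 := hNi.mem (S.mapsI i hp) (S.mapsI i hq) hui
    rw [← Function.iterate_add_apply, ← Function.iterate_add_apply, add_comm (m - k) i] at u4
    have hcont := hn.contained (by omega) sl1 (S.mapsI _ hp) (S.mapsI _ hq) sl2 sl3 u4 u1 u2 u3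
    exact hnv (i + (m - k)) (by omega) hl ⟨hcont (hai _ hl.le), hcont (hbi _ hl.le)⟩
  have hαm : f^[m] p ∈ uIcc α β := by rw [hmp]; exact left_mem_uIcc
  have hβm : f^[m] q ∈ uIcc α β := by rw [hmq]; exact right_mem_uIcc
  have hTC := hA.thin p hp q hq m hpq hαm hβm x hx' hN
  have hS := hA.sum p hp q hq m hpq hαm hβm x hx' hN
  have hlast : |f^[m] p - f^[m] q| ≤ 1 := by
    have h1 := S.mapsI m hp; have h2 := S.mapsI m hq
    rw [abs_le]; constructor <;> linarith [h1.1, h1.2, h2.1, h2.2]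
  have hW : ∑ j ∈ Finset.range m, S.w (f^[j] p) (f^[j] q) ≤ 3 * C2 := by
    rw [Finset.sum_range_succ] at hS
    nlinarith
  have hdist : ∀ i < m, |f^[i] a - f^[i] b| * |α - β| ≤
      S.Kc C2 * |f^[m] a - f^[m] b| * |f^[i] p - f^[i] q| := by
    intro i hi
    have hTi : S.TC (f^[i] p) (f^[i] q) (m - i) := by
      have := hTC
      rw [← Nat.add_sub_cancel' hi.le] at this
      exact this.shift
    have hWi : ∑ j ∈ Finset.range (m - i), S.w (f^[j] (f^[i] p)) (f^[j] (f^[i] q)) ≤ 3 * C2 := by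
      refine le_trans ?_ hW
      have e : ∀ j, S.w (f^[j] (f^[i] p)) (f^[j] (f^[i] q)) =
          S.w (f^[i + j] p) (f^[i + j] q) := by
        intro j; rw [← Function.iterate_add_apply, ← Function.iterate_add_apply, add_comm j i]
      simp only [e]
      have := Finset.sum_range_add_sum_Ico (fun j => S.w (f^[j] p) (f^[j] q)) hi.le
      rw [Finset.sum_Ico_eq_sum_range] at this
      have h0 : 0 ≤ ∑ j ∈ Finset.range i, S.w (f^[j] p) (f^[j] q) :=
        Finset.sum_nonneg fun _ _ => w_nonneg _ _
      linarith
    have := (hTi.dist (S.mapsI i hp) (S.mapsI i hq) (hai i hi.le) (hbi i hi.le) hWi).2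
    rw [(sh i hi.le).2.1, (sh i hi.le).2.2, ← Function.iterate_add_apply,
      ← Function.iterate_add_apply, Nat.sub_add_cancel hi.le] at this
    unfold Kc
    linarith
  refine ⟨hsub, ?_, fun hm => hdist 0 hm⟩
  rw [Finset.sum_mul]
  calc ∑ i ∈ Finset.range m, |f^[i] a - f^[i] b| * |α - β|
      ≤ ∑ i ∈ Finset.range m, S.Kc C2 * |f^[m] a - f^[m] b| * |f^[i] p - f^[i] q| :=
        Finset.sum_le_sum fun i hi => hdist i (Finset.mem_range.1 hi)
    _ = S.Kc C2 * |f^[m] a - f^[m] b| * ∑ i ∈ Finset.range m, |f^[i] p - f^[i] q| := by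
        rw [Finset.mul_sum]
    _ ≤ S.Kc C2 * |f^[m] a - f^[m] b| * 1 := by
        gcongr
        exact mul_nonneg (Kc_pos _).le (abs_nonneg _)
    _ = _ := mul_one _

/-- Summability of the lengths of the pullbacks of a subinterval of a nice interval, provided each
return is contracting unless the sum up to it is already controlled. -/
lemma core {X : Set ℝ} {δ C2 α β : ℝ} (hA : S.Adm X δ C2 α β) (hC2 : 0 < C2)
    (hαβ : α ≠ β) (hn : Nice f α β) {S1 θ : ℝ} (hS1 : 0 ≤ S1) (hθ : 1 / 2 ≤ θ) (hθ1 : θ < 1)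
    {a b x : ℝ} {n : ℕ} (ha : a ∈ Icc (0:ℝ) 1) (hb : b ∈ Icc (0:ℝ) 1) (hx : x ∈ Icc (0:ℝ) 1)
    (hab : S.NH a b n) (hne : a ≠ b)
    (hna : f^[n] a ∈ uIcc α β) (hnb : f^[n] b ∈ uIcc α β) (hxa : f^[2] x ∈ uIcc a b)
    (hN : ∀ i < n + 2, S.NU X δ (f^[i] x))
    (H : ∀ s m, 1 ≤ m → s + m ≤ n → uIcc (f^[s] a) (f^[s] b) ⊆ uIcc α β →
      uIcc (f^[s+m] a) (f^[s+m] b) ⊆ uIcc α β →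
      ∀ p ∈ Icc (0:ℝ) 1, ∀ q ∈ Icc (0:ℝ) 1, S.NH p q m → f^[m] p = α → f^[m] q = β →
      uIcc (f^[s] a) (f^[s] b) ⊆ uIcc p q → uIcc p q ⊆ uIcc α β →
      ∑ i ∈ Finset.range s, |f^[i] a - f^[i] b| ≤ S1 ∨ |p - q| ≤ |α - β| / (2 * S.Kc C2) ∨
      |f^[s] a - f^[s] b| ≤ θ * |f^[s+m] a - f^[s+m] b|) :
    ∑ i ∈ Finset.range n, |f^[i] a - f^[i] b| ≤
      S1 + S.Kc C2 / |α - β| / (1 - θ) * |f^[n] a - f^[n] b| := by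
  classical
  have hK := S.Kc_pos C2
  have hD : 0 < |α - β| := abs_pos.2 (sub_ne_zero.2 hαβ)
  set G := S.Kc C2 / |α - β| with hG
  have hGp : 0 < G := by positivity
  have h1θ : 0 < 1 - θ := by linarith
  set M := G / (1 - θ) with hM
  have hMp : 0 < M := by positivity
  have hMG : M * θ + G = M := by rw [hM]; field_simp; ring
  have hxi : ∀ i ≤ n, f^[i + 2] x ∈ uIcc (f^[i] a) (f^[i] b) := by
    intro i hi
    rw [Function.iterate_add_apply]
    exact (hab.mono hi).mem ha hb hxa
  let V : ℕ → Prop := fun s => f^[s] a ∈ uIcc α β ∧ f^[s] b ∈ uIcc α β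
  -- one step from `s` to the next visit `s + m`
  have step : ∀ s m, s + m ≤ n → V (s + m) → (∀ l, 0 < l → l < m → ¬ V (s + l)) →
      ∃ p ∈ Icc (0:ℝ) 1, ∃ q ∈ Icc (0:ℝ) 1, S.NH p q m ∧ f^[m] p = α ∧ f^[m] q = β ∧
        uIcc (f^[s] a) (f^[s] b) ⊆ uIcc p q ∧
        ∑ i ∈ Finset.range m, |f^[s + i] a - f^[s + i] b| ≤ G * |f^[s+m] a - f^[s+m] b| ∧
        (1 ≤ m → |f^[s] a - f^[s] b| * |α - β| ≤
          S.Kc C2 * |f^[s+m] a - f^[s+m] b| * |p - q|) := by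
    intro s m hsm hV hnv
    have hmemαβ : f^[s + m + 2] x ∈ uIcc α β := uIcc_subset_uIcc hV.1 hV.2 (hxi _ hsm)
    obtain ⟨p, hp, q, hq, hpq, hpα, hqβ, hxpq⟩ := hA.pull α left_mem_uIcc β right_mem_uIcc x hx
      (s + m + 2) (fun i hi => hN i (by omega)) hmemαβ (s + 2) (by omega) (by omega)
    rw [show s + m + 2 - (s + 2) = m by omega] at hpq hpα hqβ
    have hsab : S.NH (f^[s] a) (f^[s] b) m := (hab.mono hsm).shift ha hb
    have e : ∀ i y, f^[i] (f^[s] y) = f^[s + i] y := by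
      intro i y; rw [← Function.iterate_add_apply, add_comm]
    obtain ⟨g1, g2, g3⟩ := gapsum hA hC2 hn (S.mapsI s ha) (S.mapsI s hb) hp hq hsab hpq
      (by rw [e]; exact hV.1) (by rw [e]; exact hV.2) hpα hqβ (hxi s (by omega)) hxpq
      (fun i hi => by
        rw [← Function.iterate_add_apply]
        exact hN _ (by omega))
      (fun l hl hlm hh => hnv l hl hlm (by rw [e, e] at hh; exact hh))
    simp only [e] at g2 g3
    refine ⟨p, hp, q, hq, hpq, hpα, hqβ, g1, ?_, g3⟩
    rw [hG, div_mul_eq_mul_div, le_div_iff₀ hD]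
    exact g2
  have key : ∀ t, t ≤ n → V t → ∑ i ∈ Finset.range t, |f^[i] a - f^[i] b| ≤
      S1 + M * |f^[t] a - f^[t] b| := by
    intro t
    induction t using Nat.strong_induction_on with
    | _ t ih =>
    intro htn hVt
    by_cases hex : ∃ s < t, V s
    · -- the last visit before `t`
      obtain ⟨s, hs1, hVs, hmax⟩ : ∃ s < t, V s ∧ ∀ l, s < l → l < t → ¬ V l := by
        let P : Finset ℕ := (Finset.range t).filter V
        have hPne : P.Nonempty := by
          obtain ⟨s, hs, hVs⟩ := hex
          exact ⟨s, Finset.mem_filter.2 ⟨Finset.mem_range.2 hs, hVs⟩⟩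
        obtain ⟨hs1, hVs⟩ := Finset.mem_filter.1 (P.max'_mem hPne)
        refine ⟨P.max' hPne, Finset.mem_range.1 hs1, hVs, fun l hl hlt hV => ?_⟩
        have := P.le_max' l (Finset.mem_filter.2 ⟨Finset.mem_range.2 hlt, hV⟩)
        omega
      obtain ⟨m, rfl⟩ : ∃ m, t = s + (m + 1) := ⟨t - s - 1, by omega⟩
      have hnv : ∀ l, 0 < l → l < m + 1 → ¬ V (s + l) := fun l hl hlm =>
        hmax _ (by omega) (by omega)
      obtain ⟨p, hp, q, hq, hpq, hpα, hqβ, hsub, hsum, hlen⟩ := step s (m + 1) htn hVt hnv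
      have hlen := hlen (by omega)
      have hsplit : ∑ i ∈ Finset.range (s + (m + 1)), |f^[i] a - f^[i] b| =
          ∑ i ∈ Finset.range s, |f^[i] a - f^[i] b| +
          ∑ i ∈ Finset.range (m + 1), |f^[s + i] a - f^[s + i] b| :=
        Finset.sum_range_add _ _ _
      have hsabs : uIcc (f^[s] a) (f^[s] b) ⊆ uIcc α β := uIcc_subset_uIcc hVs.1 hVs.2
      have hnes : f^[s] a ≠ f^[s] b := fun h =>
        hne ((hab.mono (by omega)).inj ha hb left_mem_uIcc right_mem_uIcc h)
      have hpqc : uIcc p q ⊆ uIcc α β := by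
        set u := (f^[s] a + f^[s] b) / 2 with hu
        have h1 : u ∈ uIcc (f^[s] a) (f^[s] b) := by
          rw [mem_uIcc]; rcases le_total (f^[s] a) (f^[s] b) with h | h
          · left; constructor <;> linarith
          · right; constructor <;> linarith
        have hu1 : u ≠ f^[s] a := fun h => hnes (by linarith)
        have hu2 : u ≠ f^[s] b := fun h => hnes (by linarith)
        obtain ⟨k1, k2, k3⟩ := interior_of_between hVs.1 hVs.2 h1 hu1 hu2
        exact hn.contained (by omega) hpq hp hq hpα hqβ (hsub h1) k1 k2 k3
      have ihs := ih s hs1 (by omega) hVs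
      have hT0 : 0 ≤ |f^[s + (m+1)] a - f^[s + (m+1)] b| := abs_nonneg _
      have hcase : ∑ i ∈ Finset.range s, |f^[i] a - f^[i] b| ≤ S1 ∨
          |f^[s] a - f^[s] b| ≤ θ * |f^[s+(m+1)] a - f^[s+(m+1)] b| := by
        rcases H s (m + 1) (by omega) htn hsabs (uIcc_subset_uIcc hVt.1 hVt.2) p hp q hq hpq hpα hqβ
          hsub hpqc with h | h | h
        · exact Or.inl h
        · right
          have h1 : |f^[s] a - f^[s] b| * |α - β| ≤
              1 / 2 * |f^[s+(m+1)] a - f^[s+(m+1)] b| * |α - β| := by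
            refine hlen.trans ?_
            calc S.Kc C2 * |f^[s+(m+1)] a - f^[s+(m+1)] b| * |p - q|
                ≤ S.Kc C2 * |f^[s+(m+1)] a - f^[s+(m+1)] b| * (|α - β| / (2 * S.Kc C2)) := by
                  gcongr
              _ = _ := by field_simp
          have h2 := le_of_mul_le_mul_right h1 hD
          nlinarith
        · exact Or.inr h
      rw [hsplit]
      rcases hcase with h | h
      · have : G ≤ M := by nlinarith
        nlinarith
      · have : M * |f^[s] a - f^[s] b| ≤ M * (θ * |f^[s+(m+1)] a - f^[s+(m+1)] b|) := by gcongr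
        have e : M * (θ * |f^[s+(m+1)] a - f^[s+(m+1)] b|) + G * |f^[s+(m+1)] a - f^[s+(m+1)] b| =
          M * |f^[s+(m+1)] a - f^[s+(m+1)] b| := by rw [← mul_assoc, ← add_mul, hMG]
        linarith
    · push Not at hex
      obtain ⟨p, hp, q, hq, -, -, -, -, hsum, -⟩ := step 0 t (by omega) (by rwa [zero_add])
        (fun l _ hl => by rw [zero_add]; exact hex l hl)
      simp only [zero_add] at hsum
      have : G ≤ M := by nlinarith
      have hT0 : 0 ≤ |f^[t] a - f^[t] b| := abs_nonneg _
      nlinarith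
  exact key n le_rfl ⟨hna, hnb⟩

end Sys

/-! ### Locally good points -/

namespace Sys
variable {f : ℝ → ℝ} {S : Sys f}

/-- Thin chains staying `δ`-close to `X` and ending within `r` of `z` have total length at
most `B`. -/
def LG (S : Sys f) (X : Set ℝ) (δ r B z : ℝ) : Prop :=
  ∀ x ∈ Icc (0:ℝ) 1, ∀ y ∈ Icc (0:ℝ) 1, ∀ n, S.TC x y n →
    (∀ j ≤ n, Nr X δ (f^[j] x) ∧ Nr X δ (f^[j] y)) → |f^[n] x - z| < r → |f^[n] y - z| < r →
    ∑ j ∈ Finset.range n, |f^[j] x - f^[j] y| ≤ B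

/-- `LG` holds at `z` for some choice of constants. -/
def LocGood (S : Sys f) (X : Set ℝ) (z : ℝ) : Prop := ∃ δ > 0, ∃ r > 0, ∃ B, S.LG X δ r B z

lemma LG.mono {X : Set ℝ} {δ δ' r r' B B' z : ℝ} (h : S.LG X δ r B z) (hδ : δ' ≤ δ) (hr : r' ≤ r)
    (hB : B ≤ B') : S.LG X δ' r' B' z := fun x hx y hy n hT hN h1 h2 =>
  (h x hx y hy n hT (fun j hj => ⟨(hN j hj).1.mono hδ, (hN j hj).2.mono hδ⟩)
    (h1.trans_le hr) (h2.trans_le hr)).trans hB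

lemma LG.near {X : Set ℝ} {δ r B z w : ℝ} (h : S.LG X δ r B z) (hw : |w - z| < r / 2) :
    S.LG X δ (r / 2) B w := fun x hx y hy n hT hN h1 h2 =>
  h x hx y hy n hT hN (by have := abs_sub_le (f^[n] x) w z; linarith)
    (by have := abs_sub_le (f^[n] y) w z; linarith)

lemma locGood_unif {X A : Set ℝ} (hA : IsCompact A) (h : ∀ z ∈ A, S.LocGood X z) :
    ∃ δ > 0, ∃ r > 0, ∃ B, ∀ z ∈ A, S.LG X δ r B z := by
  refine hA.induction_on (p := fun A => ∃ δ > 0, ∃ r > 0, ∃ B, ∀ z ∈ A, S.LG X δ r B z) ?_ ?_ ?_ ?_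
  · exact ⟨1, one_pos, 1, one_pos, 0, by simp⟩
  · rintro s t hst ⟨δ, hδ, r, hr, B, h⟩
    exact ⟨δ, hδ, r, hr, B, fun z hz => h z (hst hz)⟩
  · rintro s t ⟨δ, hδ, r, hr, B, h⟩ ⟨δ', hδ', r', hr', B', h'⟩
    refine ⟨min δ δ', lt_min hδ hδ', min r r', lt_min hr hr', max B B', fun z hz => ?_⟩
    rcases hz with hz | hz
    · exact (h z hz).mono (min_le_left _ _) (min_le_left _ _) (le_max_left _ _)
    · exact (h' z hz).mono (min_le_right _ _) (min_le_right _ _) (le_max_right _ _)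
  · intro z hz
    obtain ⟨δ, hδ, r, hr, B, hB⟩ := h z hz
    refine ⟨ball z (r / 2), mem_nhdsWithin_of_mem_nhds (ball_mem_nhds z (by linarith)), δ, hδ,
      r / 2, by linarith, B, fun w hw => hB.near (by rwa [mem_ball, Real.dist_eq] at hw)⟩

lemma isClosed_bad (S : Sys f) (X : Set ℝ) : IsClosed {z | z ∈ Icc (0:ℝ) 1 ∧ ¬ S.LocGood X z} := by
  have : IsOpen {z | S.LocGood X z} := by
    rw [Metric.isOpen_iff]
    rintro z ⟨δ, hδ, r, hr, B, hB⟩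
    exact ⟨r / 2, by linarith, fun w hw => ⟨δ, hδ, r / 2, by linarith, B,
      hB.near (by rwa [mem_ball, Real.dist_eq] at hw)⟩⟩
  exact isClosed_Icc.inter this.isClosed_compl

lemma locGood_of_notMem {X : Set ℝ} (hX : IsClosed X) {z : ℝ} (hz : z ∉ X) : S.LocGood X z := by
  obtain ⟨e, he, hb⟩ := Metric.isOpen_iff.1 hX.isOpen_compl z hz
  refine ⟨e / 2, by linarith, e / 2, by linarith, 0, fun x _ y _ n _ hN h1 _ => ?_⟩
  obtain ⟨w, hw, hxw⟩ := (hN n le_rfl).1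
  exfalso
  refine hb (a := w) ?_ hw
  rw [mem_ball, Real.dist_eq]
  have := abs_sub_le w (f^[n] x) z
  rw [abs_sub_comm w (f^[n] x)] at this
  linarith

/-- Badness propagates forward off the critical set. -/
lemma locGood_of_map {X : Set ℝ} (hXI : X ⊆ Icc 0 1) (hinv : ∀ x ∈ X, f x ∈ X) {z : ℝ}
    (hz : z ∈ Icc (0:ℝ) 1) (hzK : z ∉ S.K) (h : S.LocGood X (f z)) : S.LocGood X z := by
  obtain ⟨δ, hδ, r, hr, B, hB⟩ := h
  obtain ⟨e1, he1, hu1⟩ := S.unifCont 1 hδ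
  obtain ⟨e2, he2, hu2⟩ := S.unifCont 1 hr
  have hd := d_pos_iff.2 hzK
  refine ⟨min δ e1, lt_min hδ he1, min e2 (S.d z / 5), lt_min he2 (by linarith), B,
    fun x hx y hy n hT hN h1 h2 => ?_⟩
  have h1' := h1.trans_le (min_le_left _ _)
  have h2' := h2.trans_le (min_le_left _ _)
  have h1 := h1.trans_le (min_le_right _ _)
  have h2 := h2.trans_le (min_le_right _ _)
  have e : ∀ y, f^[n+1] y = f (f^[n] y) := fun y => Function.iterate_succ_apply' f n y
  have nx : ∀ u, u ∈ Icc (0:ℝ) 1 → Nr X (min δ e1) u → Nr X δ (f u) := by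
    rintro u hu ⟨w, hw, huw⟩
    exact ⟨f w, hinv w hw, hu1 1 le_rfl u hu w (hXI hw) (huw.trans_le (min_le_right _ _))⟩
  have := hB x hx y hy (n + 1) ?_ ?_ ?_ ?_
  · rw [Finset.sum_range_succ] at this
    have h0 := abs_nonneg (f^[n] x - f^[n] y)
    linarith
  · intro j hj
    rcases Nat.lt_succ_iff_lt_or_eq.1 hj with h | rfl
    · exact hT j h
    · have a1 := d_le_add (S := S) z (f^[j] x)
      have a2 := d_le_add (S := S) z (f^[j] y)
      rw [abs_sub_comm] at a1 a2
      have a3 := abs_sub_le (f^[j] x) z (f^[j] y)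
      rw [abs_sub_comm z] at a3
      constructor <;> linarith
  · intro j hj
    rcases Nat.le_succ_iff.1 hj with h | rfl
    · exact ⟨(hN j h).1.mono (min_le_left _ _), (hN j h).2.mono (min_le_left _ _)⟩
    · rw [Nat.succ_eq_add_one, e, e]
      exact ⟨nx _ (S.mapsI n hx) (hN n le_rfl).1, nx _ (S.mapsI n hy) (hN n le_rfl).2⟩
  · rw [e]; exact hu2 1 le_rfl _ (S.mapsI n hx) _ hz h1'
  · rw [e]; exact hu2 1 le_rfl _ (S.mapsI n hy) _ hz h2'

/-- If every point off `Y` is locally good then `X` is good: cut a chain at its last exit from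
the good neighbourhood of `Y`. -/
lemma good_of_locGood {X Y : Set ℝ} (D : S.FD X Y)
    (h : ∀ z ∈ Icc (0:ℝ) 1, z ∉ Y → S.LocGood X z) : S.GoodSet X := by
  classical
  obtain ⟨UY, hUo, hYU, τY, hτY, BY, hgY⟩ := D.good
  have hAc : IsCompact (Icc (0:ℝ) 1 \ UY) := isCompact_Icc.diff hUo
  obtain ⟨δ1, hδ1, r1, hr1, B1, hLG⟩ := locGood_unif hAc
    fun z hz => h z hz.1 fun hzY => hz.2 (hYU hzY)
  obtain ⟨δ2, hδ2, C2, hC2, hsum⟩ := exists_fsum D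
  obtain ⟨η, hη, hT1⟩ := S.T1 hr1
  set δ := min δ1 δ2 with hδdef
  have hδ : 0 < δ := lt_min hδ1 hδ2
  refine ⟨{u | Nr X δ u}, ?_, fun u hu => ⟨u, hu, by simpa using hδ⟩, min (η / 2) τY, by positivity,
    C2 * (2 + |B1|) + 1 / 2 + |BY|, fun x hx y hy n hj hn => ?_⟩
  · have : {u | Nr X δ u} = ⋃ z ∈ X, ball z δ := by
      ext u; simp [Nr, Real.dist_eq]
    rw [this]
    exact isOpen_biUnion fun z _ => isOpen_ball
  have hTC : S.TC x y (n + 1) := fun j hj' => (hj j (Nat.lt_succ_iff.1 hj')).2.2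
  have hNH := hTC.NH hx hy
  have hlen : ∀ j ≤ n, |f^[j] x - f^[j] y| < r1 := by
    intro j hjn
    obtain ⟨k, rfl⟩ := Nat.exists_eq_add_of_le hjn
    refine hT1 _ (S.mapsI j hx) _ (S.mapsI j hy) k fun u hu v hv => ?_
    have hs := (hNH.mono (Nat.le_succ _)).shift hx hy
    have hu' := hs.mem (S.mapsI j hx) (S.mapsI j hy) hu
    have hv' := hs.mem (S.mapsI j hx) (S.mapsI j hy) hv
    have := abs_sub_le_of_mem_uIcc hu' hv'
    rw [← Function.iterate_add_apply, ← Function.iterate_add_apply, add_comm k j] at this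
    have h2 := hn.trans (min_le_left _ _)
    linarith
  have hB1 := le_abs_self B1
  have hBY := le_abs_self BY
  have hB1' := abs_nonneg B1
  have hBY' := abs_nonneg BY
  by_cases hall : ∀ j ≤ n, f^[j] x ∈ UY ∧ f^[j] y ∈ UY
  · have := hgY x hx y hy n (fun j hjn => ⟨(hall j hjn).1, (hall j hjn).2, (hj j hjn).2.2⟩)
      (hn.trans (min_le_right _ _))
    nlinarith
  · obtain ⟨m, hmn, hm, hmax⟩ : ∃ m ≤ n, ¬ (f^[m] x ∈ UY ∧ f^[m] y ∈ UY) ∧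
        ∀ j, m < j → j ≤ n → f^[j] x ∈ UY ∧ f^[j] y ∈ UY := by
      push Not at hall
      obtain ⟨j0, hj0, hj0'⟩ := hall
      let P := (Finset.range (n + 1)).filter fun j => ¬ (f^[j] x ∈ UY ∧ f^[j] y ∈ UY)
      have hP : P.Nonempty := ⟨j0, Finset.mem_filter.2 ⟨Finset.mem_range.2 (by omega),
        fun hh => hj0' hh.1 hh.2⟩⟩
      obtain ⟨h1, h2⟩ := Finset.mem_filter.1 (P.max'_mem hP)
      refine ⟨P.max' hP, by have := Finset.mem_range.1 h1; omega, h2, fun j hj1 hj2 => ?_⟩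
      by_contra hcon
      have := P.le_max' j (Finset.mem_filter.2 ⟨Finset.mem_range.2 (by omega), hcon⟩)
      omega
    have hsumlen : ∑ j ∈ Finset.range m, |f^[j] x - f^[j] y| ≤ B1 := by
      have hlm := hlen m hmn
      have hN : ∀ j ≤ m, Nr X δ1 (f^[j] x) ∧ Nr X δ1 (f^[j] y) := fun j hjm =>
        ⟨(hj j (hjm.trans hmn)).1.mono (min_le_left _ _),
          (hj j (hjm.trans hmn)).2.1.mono (min_le_left _ _)⟩
      by_cases hxm : f^[m] x ∈ UY
      · have hym : f^[m] y ∉ UY := fun h => hm ⟨hxm, h⟩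
        exact hLG _ ⟨S.mapsI m hy, hym⟩ x hx y hy m (hTC.mono (by omega)) hN hlm (by simpa using hr1)
      · exact hLG _ ⟨S.mapsI m hx, hxm⟩ x hx y hy m (hTC.mono (by omega)) hN (by simpa using hr1)
          (by rwa [abs_sub_comm])
    have hw1 := hsum x hx y hy m (hTC.mono (by omega)) fun j hjm =>
      (hj j (by omega)).1.mono (min_le_right _ _)
    rw [Finset.sum_range_succ] at hw1
    have hT : |f^[m] x - f^[m] y| ≤ 1 := by
      have h1 := S.mapsI m hx; have h2 := S.mapsI m hy
      rw [abs_le]; constructor <;> linarith [h1.1, h1.2, h2.1, h2.2]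
    have hw2 : S.w (f^[m] x) (f^[m] y) ≤ 1 / 2 := (hj m hmn).2.2.w_le
    have hw1' : ∑ j ∈ Finset.range m, S.w (f^[j] x) (f^[j] y) ≤ C2 * (2 + |B1|) := by
      refine hw1.trans (mul_le_mul_of_nonneg_left ?_ hC2.le)
      linarith
    obtain ⟨k, hk⟩ := Nat.exists_eq_add_of_le hmn
    have hsplit : ∑ j ∈ Finset.range (n + 1), S.w (f^[j] x) (f^[j] y) =
        ∑ j ∈ Finset.range m, S.w (f^[j] x) (f^[j] y) + S.w (f^[m] x) (f^[m] y) +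
        ∑ j ∈ Finset.range k, S.w (f^[m + 1 + j] x) (f^[m + 1 + j] y) := by
      rw [hk, show m + k + 1 = m + 1 + k by ring, Finset.sum_range_add, Finset.sum_range_succ]
    have hw3 : ∑ j ∈ Finset.range k, S.w (f^[m + 1 + j] x) (f^[m + 1 + j] y) ≤ |BY| := by
      rcases Nat.eq_zero_or_pos k with rfl | hk0
      · simp
      · obtain ⟨k, rfl⟩ : ∃ k', k = k' + 1 := ⟨k - 1, by omega⟩
        have e : ∀ j y, f^[j] (f^[m+1] y) = f^[m + 1 + j] y := by
          intro j y; rw [← Function.iterate_add_apply, add_comm]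
        have := hgY (f^[m+1] x) (S.mapsI _ hx) (f^[m+1] y) (S.mapsI _ hy) k
          (fun j hjk => by
            rw [e, e]
            have := hmax (m + 1 + j) (by omega) (by omega)
            exact ⟨this.1, this.2, (hj _ (by omega)).2.2⟩)
          (by rw [e, e, show m + 1 + k = n by omega]; exact hn.trans (min_le_right _ _))
        simp only [e] at this
        linarith
    rw [hsplit]
    linarith

end Sys

/-! ### Points bordering a gap: one side -/

namespace Sys
variable {f : ℝ → ℝ} {S : Sys f}

lemma abs_sub_le_one {a b : ℝ} (ha : a ∈ Icc (0:ℝ) 1) (hb : b ∈ Icc (0:ℝ) 1) : |a - b| ≤ 1 := by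
  rw [abs_le]; constructor <;> linarith [ha.1, ha.2, hb.1, hb.2]

lemma iter_add (s i : ℕ) (y : ℝ) : f^[i] (f^[s] y) = f^[s + i] y := by
  rw [← Function.iterate_add_apply, add_comm]

/-- Diffeomorphic pullbacks of short intervals are short. -/
lemma short (S : Sys f) {ε : ℝ} (hε : 0 < ε) : ∃ η > 0, ∀ a ∈ Icc (0:ℝ) 1, ∀ b ∈ Icc (0:ℝ) 1,
    ∀ n, S.NH a b n → |f^[n] a - f^[n] b| < η → ∀ i ≤ n, |f^[i] a - f^[i] b| < ε := by
  obtain ⟨η, hη, hT1⟩ := S.T1 hε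
  refine ⟨η, hη, fun a ha b hb n hN hn j hj => ?_⟩
  obtain ⟨k, rfl⟩ := Nat.exists_eq_add_of_le hj
  refine hT1 _ (S.mapsI j ha) _ (S.mapsI j hb) k fun u hu v hv => ?_
  have hs := hN.shift ha hb
  have := abs_sub_le_of_mem_uIcc (hs.mem (S.mapsI j ha) (S.mapsI j hb) hu)
    (hs.mem (S.mapsI j ha) (S.mapsI j hb) hv)
  rw [iter_add, iter_add] at this
  exact this.trans_lt hn

lemma exists_fixed (S : Sys f) : ∃ p ∈ Icc (0:ℝ) 1, f p = p := by
  have h := intermediate_value_Icc (zero_le_one (α := ℝ))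
    ((S.cont.sub continuous_id).continuousOn (s := Icc 0 1))
  have h' := intermediate_value_Icc' (zero_le_one (α := ℝ))
    ((S.cont.sub continuous_id).continuousOn (s := Icc 0 1))
  obtain ⟨p, hp, hfp⟩ := h' (show (0:ℝ) ∈ Icc _ _ from
    ⟨by simp; exact (S.maps 1).2, by simp; exact (S.maps 0).1⟩)
  exact ⟨p, hp, by simpa [sub_eq_zero] using hfp⟩

/-- Preimages of any point of `I` are dense. -/
lemma exists_preimage (S : Sys f) {a b : ℝ} (ha : a ∈ Icc (0:ℝ) 1) (hb : b ∈ Icc (0:ℝ) 1)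
    (hab : a ≠ b) {p : ℝ} (hp : p ∈ Icc (0:ℝ) 1) : ∃ N, ∃ y ∈ uIcc a b, f^[N] y = p := by
  obtain ⟨N, hN⟩ := S.T2 (abs_pos.2 (sub_ne_zero.2 hab))
  exact ⟨N, hN a ha b hb le_rfl N le_rfl p hp⟩

/-- Arbitrarily short nice intervals `[z, β]` inside a gap of the invariant set `Z`: take for `β` the
point closest to `z` on a finite orbit ending at a fixed point. -/
lemma exists_nice (S : Sys f) {Z : Set ℝ} (hinv : ∀ u ∈ Z, f u ∈ Z) {z g : ℝ}
    (hz : z ∈ Icc (0:ℝ) 1) (hg : g ∈ Icc (0:ℝ) 1) (hzg : z ≠ g) (hzZ : z ∈ Z)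
    (hgap : ∀ u ∈ uIcc z g, u ≠ z → u ∉ Z) {ε : ℝ} (hε : 0 < ε) :
    ∃ β ∈ uIcc z g, β ≠ z ∧ |z - β| < ε ∧ Nice f z β := by
  classical
  have hD : 0 < |g - z| := abs_pos.2 (sub_ne_zero.2 hzg.symm)
  obtain ⟨t, ht0, ht1, htε⟩ : ∃ t : ℝ, 0 < t ∧ t ≤ 1 ∧ t * |g - z| < ε := by
    refine ⟨min 1 (ε / 2 / |g - z|), by positivity, min_le_left _ _, ?_⟩
    calc _ ≤ ε / 2 / |g - z| * |g - z| := by gcongr; exact min_le_right _ _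
      _ = ε / 2 := by field_simp
      _ < ε := by linarith
  set g1 := z + t * (g - z) with hg1
  set g2 := z + t / 2 * (g - z) with hg2
  have hmem : ∀ s, 0 ≤ s → s ≤ 1 → z + s * (g - z) ∈ uIcc z g := by
    intro s h0 h1
    rw [mem_uIcc]
    rcases le_total z g with h | h
    · left; constructor <;> nlinarith
    · right; constructor <;> nlinarith
  have h1 := hmem t ht0.le ht1
  have h2 := hmem (t / 2) (by linarith) (by linarith)
  have hI := uIcc_subI hz hg
  have h12 : g1 ≠ g2 := by
    intro h
    have : t * (g - z) = 0 := by rw [hg1, hg2] at h; linarith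
    rcases mul_eq_zero.1 this with h | h
    · linarith
    · exact hzg (by linarith)
  obtain ⟨p, hp, hfp⟩ := S.exists_fixed
  obtain ⟨N, y, hy, hyp⟩ := S.exists_preimage (hI h1) (hI h2) h12 hp
  have hpn : ∀ m, f^[m] p = p := fun m => Function.iterate_fixed hfp m
  let O : Finset ℝ := (Finset.range (N + 1)).image fun i => f^[i] y
  have hO : ∀ u ∈ O, ∀ m, f^[m] u ∈ O := by
    intro u hu m
    obtain ⟨i, hi, rfl⟩ := Finset.mem_image.1 hu
    rw [iter_add]
    by_cases hh : i + m ≤ N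
    · exact Finset.mem_image.2 ⟨i + m, Finset.mem_range.2 (by omega), rfl⟩
    · obtain ⟨l, hl⟩ := Nat.exists_eq_add_of_le (not_le.1 hh).le
      rw [hl, ← iter_add, hyp, hpn]
      exact Finset.mem_image.2 ⟨N, Finset.mem_range.2 (by omega), hyp⟩
  let O' := O.filter fun u => u ∈ uIcc z g1 ∧ u ≠ z
  have hyO : y ∈ O' := by
    refine Finset.mem_filter.2 ⟨Finset.mem_image.2 ⟨0, by simp, rfl⟩, ?_, ?_⟩
    · refine uIcc_subset_uIcc right_mem_uIcc ?_ hy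
      rw [mem_uIcc]
      rcases le_total z g with h | h
      · left; constructor <;> nlinarith
      · right; constructor <;> nlinarith
    · rintro rfl
      rw [mem_uIcc] at hy
      rcases lt_or_gt_of_ne hzg with h | h <;> rcases hy with h' | h' <;> nlinarith
  obtain ⟨β, hβ, hmin⟩ := O'.exists_min_image (fun u => |u - z|) ⟨y, hyO⟩
  obtain ⟨hβO, hβ1, hβz⟩ := Finset.mem_filter.1 hβ
  have hβg : β ∈ uIcc z g := uIcc_subset_uIcc left_mem_uIcc h1 hβ1
  refine ⟨β, hβg, hβz, ?_, ?_⟩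
  · have := abs_sub_le_of_mem_uIcc left_mem_uIcc hβ1
    refine this.trans_lt ?_
    rw [hg1, show z - (z + t * (g - z)) = - (t * (g - z)) by ring, abs_neg, abs_mul, abs_of_pos ht0]
    exact htε
  · have hZ : ∀ m, f^[m] z ∈ Z := by
      intro m
      induction m with
      | zero => exact hzZ
      | succ m ih => rw [Function.iterate_succ_apply']; exact hinv _ ih
    rintro m hm e (rfl | rfl) he
    · left
      by_contra hne
      exact hgap _ (uIcc_subset_uIcc left_mem_uIcc hβg he) hne (hZ m)
    · by_contra hcon
      push Not at hcon
      have hmemO : f^[m] e ∈ O' := Finset.mem_filter.2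
        ⟨hO e hβO m, uIcc_subset_uIcc left_mem_uIcc hβ1 he, hcon.1⟩
      have h3 := hmin _ hmemO
      rw [mem_uIcc] at he
      apply hcon.2
      rcases he with he | he
      · rw [abs_of_nonneg (by linarith), abs_of_nonneg (by linarith)] at h3; linarith
      · rw [abs_of_nonpos (by linarith), abs_of_nonpos (by linarith)] at h3; linarith

/-- Near a point `z` whose orbit avoids `β`, preimages of `z` and `β` of bounded order are
isolated from `z`, and returns of `z` to itself are expanding. -/
lemma near_returns (S : Sys f) {z β : ℝ} (hz : z ∈ Icc (0:ℝ) 1)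
    (hβ : ∀ m, f^[m] z ≠ β) (N : ℕ) : ∃ r > 0, ∃ θ, 1 / 2 ≤ θ ∧ θ < 1 ∧ ∀ m, 1 ≤ m → m ≤ N →
    (∀ u ∈ Icc (0:ℝ) 1, |u - z| < r → u ≠ z → f^[m] u ≠ z ∧ f^[m] u ≠ β) ∧
    (f^[m] z = z → ∀ u ∈ Icc (0:ℝ) 1, ∀ v ∈ Icc (0:ℝ) 1, |u - z| < r → |v - z| < r →
      |u - v| ≤ θ * |f^[m] u - f^[m] v|) := by
  induction N with
  | zero => exact ⟨1, one_pos, 1/2, le_rfl, by norm_num, fun m h1 h2 => by omega⟩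
  | succ N ih =>
    obtain ⟨r, hr, θ, hθ, hθ1, h⟩ := ih
    have hne : ∀ y, f^[N+1] z ≠ y → ∃ r > 0, ∀ u, |u - z| < r → f^[N+1] u ≠ y := by
      intro y hy
      have := ((S.contIter (N + 1)).continuousAt (x := z)).eventually_ne hy
      obtain ⟨r, hr, hh⟩ := Metric.eventually_nhds_iff.1 this
      exact ⟨r, hr, fun u hu => hh (by rwa [Real.dist_eq])⟩
    obtain ⟨r1, hr1, h1⟩ := hne β (hβ _)
    have key : ∃ r2 > 0, ∃ θ', 1 / 2 ≤ θ' ∧ θ' < 1 ∧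
      (∀ u ∈ Icc (0:ℝ) 1, |u - z| < r2 → u ≠ z → f^[N+1] u ≠ z) ∧
      (f^[N+1] z = z → ∀ u ∈ Icc (0:ℝ) 1, ∀ v ∈ Icc (0:ℝ) 1, |u - z| < r2 → |v - z| < r2 →
      |u - v| ≤ θ' * |f^[N+1] u - f^[N+1] v|) := by
      by_cases hzz : f^[N+1] z = z
      · obtain ⟨lam, hlam, r2, hr2, h2⟩ := S.hyp z hz (N + 1) (by omega) hzz
        have hl0 : 0 < lam := by linarith
        refine ⟨r2, hr2, max (1/2) (1 / lam), le_max_left _ _, max_lt (by norm_num)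
          ((div_lt_one hl0).2 hlam), ?_, ?_⟩
        · intro u hu hur huz hcon
          have := h2 u hu z hz hur (by simpa using hr2)
          rw [hcon, hzz, sub_self, abs_zero] at this
          have h3 : 0 < |u - z| := abs_pos.2 (sub_ne_zero.2 huz)
          nlinarith
        · intro _ u hu v hv hur hvr
          have := h2 u hu v hv hur hvr
          have h3 : |u - v| ≤ 1 / lam * |f^[N+1] u - f^[N+1] v| := by
            rw [one_div, inv_mul_eq_div, le_div_iff₀ hl0]; linarith
          refine h3.trans ?_
          gcongr
          exact le_max_right _ _
      · obtain ⟨r2, hr2, h2⟩ := hne z hzz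
        exact ⟨r2, hr2, 1/2, le_rfl, by norm_num, fun u _ hu _ => h2 u hu, fun h => absurd h hzz⟩
    obtain ⟨r2, hr2, θ', hθ', hθ'1, h2, h3⟩ := key
    refine ⟨min r (min r1 r2), by positivity, max θ θ', hθ.trans (le_max_left _ _), max_lt hθ1 hθ'1,
      fun m hm hmN => ?_⟩
    have l1 : min r (min r1 r2) ≤ r := min_le_left _ _
    have l2 : min r (min r1 r2) ≤ r1 := (min_le_right _ _).trans (min_le_left _ _)
    have l3 : min r (min r1 r2) ≤ r2 := (min_le_right _ _).trans (min_le_right _ _)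
    rcases Nat.le_succ_iff.1 hmN with hm' | rfl
    · obtain ⟨k1, k2⟩ := h m hm hm'
      refine ⟨fun u hu hur => k1 u hu (hur.trans_le l1), fun hzz u hu v hv hur hvr => ?_⟩
      refine (k2 hzz u hu v hv (hur.trans_le l1) (hvr.trans_le l1)).trans ?_
      gcongr
      exact le_max_left _ _
    · refine ⟨fun u hu hur huz => ⟨h2 u hu (hur.trans_le l3) huz, h1 u (hur.trans_le l2)⟩,
        fun hzz u hu v hv hur hvr => ?_⟩
      refine (h3 hzz u hu v hv (hur.trans_le l3) (hvr.trans_le l3)).trans ?_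
      gcongr
      exact le_max_right _ _

lemma Nr.near {X : Set ℝ} {δ u v : ℝ} (h : Nr X (δ / 2) u) (hv : |v - u| < δ / 2) : Nr X δ v := by
  obtain ⟨z, hz, h⟩ := h
  exact ⟨z, hz, by have := abs_sub_le v u z; linarith⟩

lemma min_dist_of_mem {z β p q u r : ℝ} (hp : p ∈ uIcc z β) (hq : q ∈ uIcc z β)
    (hu : u ∈ uIcc p q) (h1 : r ≤ |p - z|) (h2 : r ≤ |q - z|) : r ≤ |u - z| := by
  rw [mem_uIcc] at hp hq hu
  grind

/-- Summability of the pullbacks of a short interval `[z, e]` on the gap side of `z`. -/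
lemma oneside {X Y : Set ℝ} (D : S.FD X Y) {Z : Set ℝ} (hinv : ∀ u ∈ Z, f u ∈ Z) {z g : ℝ}
    (hz : z ∈ Icc (0:ℝ) 1) (hg : g ∈ Icc (0:ℝ) 1) (hzg : z ≠ g) (hzZ : z ∈ Z) (hzY : z ∉ Y)
    (hgap : ∀ u ∈ uIcc z g, u ≠ z → u ∉ Z) (hLG : ∀ u ∈ uIcc z g, u ≠ z → S.LocGood X u) :
    ∃ β ∈ uIcc z g, β ≠ z ∧ ∃ η > 0, ∃ B ≥ 0, ∃ δ > 0, ∀ e ∈ uIcc z β, e ≠ z → |z - e| < η →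
      ∀ x ∈ Icc (0:ℝ) 1, ∀ n, ∀ a ∈ Icc (0:ℝ) 1, ∀ b ∈ Icc (0:ℝ) 1, S.NH a b n →
      f^[n] a = z → f^[n] b = e → f^[2] x ∈ uIcc a b → (∀ i ≤ n + 2, Nr X δ (f^[i] x)) →
      ∑ i ∈ Finset.range n, |f^[i] a - f^[i] b| ≤ B := by
  obtain ⟨δ0, hδ0, ⟨g0, hg0, hNU⟩, C2, hC2, hadm⟩ := exists_adm D
  obtain ⟨ρ', hρ', hball⟩ := Metric.isOpen_iff.1 D.hY.isOpen_compl z hzY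
  obtain ⟨η0, hη0, hadm⟩ := hadm (ρ' / 2) (by linarith)
  obtain ⟨β, hβg, hβz, hβl, hnice⟩ := S.exists_nice hinv hz hg hzg hzZ hgap
    (ε := min (min η0 (ρ' / 2)) 1) (by positivity)
  have hβI := uIcc_subI hz hg hβg
  have hβ1 : |z - β| < 1 := hβl.trans_le (min_le_right _ _)
  have hA : S.Adm X δ0 C2 z β := by
    refine hadm z hz β hβI (hβl.trans_le ((min_le_left _ _).trans (min_le_left _ _)))
      fun u hu y hy => ?_
    by_contra hcon
    refine hball (a := y) ?_ hy
    rw [mem_ball, Real.dist_eq]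
    have h1 := abs_sub_le_of_mem_uIcc hu (left_mem_uIcc (a := z) (b := β))
    have h2 := abs_sub_le y u z
    have h3 := hβl.trans_le ((min_le_left _ _).trans (min_le_right _ _))
    linarith
  have hD : 0 < |z - β| := abs_pos.2 (sub_ne_zero.2 hβz.symm)
  have hK := S.Kc_pos C2
  have hZm : ∀ m, f^[m] z ∈ Z := by
    intro m
    induction m with
    | zero => exact hzZ
    | succ m ih => rw [Function.iterate_succ_apply']; exact hinv _ ih
  have hβZ : β ∉ Z := hgap β hβg hβz
  obtain ⟨N, hN⟩ := S.T2 (ε := |z - β| / (2 * S.Kc C2)) (by positivity)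
  obtain ⟨r, hr, θ, hθ, hθ1, hret⟩ := S.near_returns hz (β := β) (fun m h => hβZ (by rw [← h]; exact hZm m)) N
  have hAc : IsCompact (uIcc z β ∩ {u | r ≤ |u - z|}) :=
    isCompact_uIcc.inter_right (isClosed_le continuous_const (by fun_prop))
  obtain ⟨δ1, hδ1, r1, hr1, B1, hB1⟩ := locGood_unif (S := S) (X := X) hAc (fun u hu =>
    hLG u (uIcc_subset_uIcc left_mem_uIcc hβg hu.1) (by
      rintro rfl
      have := hu.2
      simp at this; linarith))
  obtain ⟨η, hη, hshort⟩ := S.short (ε := min r1 (δ1 / 2)) (by positivity)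
  refine ⟨β, hβg, hβz, η, hη, max B1 0 + S.Kc C2 / |z - β| / (1 - θ), ?_, min g0 (δ1 / 2),
    by positivity, ?_⟩
  · have : 0 < 1 - θ := by linarith
    have := le_max_right B1 0
    positivity
  intro e he hez heη x hx n a ha b hb hab hna hnb hxab hNr
  have hzβ : z ∈ uIcc z β := left_mem_uIcc
  have hlen : ∀ i ≤ n, |f^[i] a - f^[i] b| < min r1 (δ1 / 2) :=
    hshort a ha b hb n hab (by rw [hna, hnb]; exact heη)
  have hNUx : ∀ i < n + 2, S.NU X δ0 (f^[i] x) := fun i hi =>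
    hNU _ ((hNr i hi.le).mono (min_le_left _ _))
  have hTC : S.TC a b n := hA.thin a ha b hb n hab (by rw [hna]; exact hzβ) (by rw [hnb]; exact he)
    (f^[2] x) hxab fun i hi => by rw [iter_add]; exact hNUx _ (by omega)
  have hne : a ≠ b := by
    rintro rfl
    exact hez (hnb.symm.trans hna)
  have hxi : ∀ i ≤ n, f^[2 + i] x ∈ uIcc (f^[i] a) (f^[i] b) := by
    intro i hi
    rw [← iter_add]
    exact (hab.mono hi).mem ha hb hxab
  have hnear : ∀ i ≤ n, Nr X δ1 (f^[i] a) ∧ Nr X δ1 (f^[i] b) := by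
    intro i hi
    have h1 := (hNr (2 + i) (by omega)).mono (min_le_right g0 (δ1 / 2))
    have h2 := (hlen i hi).trans_le (min_le_right _ _)
    exact ⟨h1.near ((abs_sub_le_of_mem_uIcc left_mem_uIcc (hxi i hi)).trans_lt h2),
      h1.near ((abs_sub_le_of_mem_uIcc right_mem_uIcc (hxi i hi)).trans_lt h2)⟩
  have hcore := core hA hC2 hβz.symm hnice (S1 := max B1 0) (le_max_right _ _) hθ hθ1 ha hb hx hab
    hne (by rw [hna]; exact hzβ) (by rw [hnb]; exact he) hxab hNUx ?_
  · refine hcore.trans ?_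
    have h1 : |f^[n] a - f^[n] b| ≤ 1 := abs_sub_le_one (S.mapsI n ha) (S.mapsI n hb)
    have : 0 < 1 - θ := by linarith
    have h2 : 0 ≤ S.Kc C2 / |z - β| / (1 - θ) := by positivity
    nlinarith
  intro s m hm hsm hCs hCs' p hp q hq hpq hpz hqβ hsub hpqc
  rw [or_iff_not_imp_left, or_iff_not_imp_left]
  intro hnot1 hnot2
  have hmN : m ≤ N := by
    by_contra hcon
    have hsurj := hN p hp q hq (not_le.1 hnot2).le m (not_le.1 hcon).le
    have himg : ∀ y ∈ Icc (0:ℝ) 1, y ∈ uIcc z β := by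
      intro y hy
      obtain ⟨u, hu, rfl⟩ := hsurj y hy
      have := hpq.mem hp hq hu
      rwa [hpz, hqβ] at this
    have := abs_sub_le_of_mem_uIcc (himg 0 (by simp)) (himg 1 (by simp))
    norm_num at this
    linarith
  obtain ⟨hr1', hr2'⟩ := hret m hm hmN
  by_cases hcl : |f^[s] a - z| < r ∧ |f^[s] b - z| < r
  · have hnes : f^[s] a ≠ f^[s] b := fun h =>
      hne ((hab.mono (by omega)).inj ha hb left_mem_uIcc right_mem_uIcc h)
    obtain ⟨u, hu, hur⟩ : ∃ u ∈ uIcc p q, |u - z| < r := ⟨_, hsub left_mem_uIcc, hcl.1⟩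
    have hqr : r ≤ |q - z| := by
      by_contra hcon
      by_cases hqz : q = z
      · exact hβZ (by rw [← hqβ, hqz]; exact hZm m)
      · exact (hr1' q hq (not_le.1 hcon) hqz).2 hqβ
    have hpz' : p = z := by
      by_contra hpne
      have hpr : r ≤ |p - z| := by
        by_contra hcon
        exact (hr1' p hp (not_le.1 hcon) hpne).1 hpz
      have := min_dist_of_mem (hpqc left_mem_uIcc) (hpqc right_mem_uIcc) hu hpr hqr
      linarith
    rw [hpz'] at hpz
    have := hr2' hpz _ (S.mapsI s ha) _ (S.mapsI s hb) hcl.1 hcl.2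
    rwa [iter_add, iter_add] at this
  · exfalso
    apply hnot1
    refine le_trans ?_ (le_max_left B1 0)
    have hTs : S.TC a b s := hTC.mono (by omega)
    have hls := (hlen s (by omega)).trans_le (min_le_left _ _)
    have hns : ∀ j ≤ s, Nr X δ1 (f^[j] a) ∧ Nr X δ1 (f^[j] b) := fun j hj => hnear j (by omega)
    rcases not_and_or.1 hcl with h | h
    · exact hB1 (f^[s] a) ⟨hCs left_mem_uIcc, not_lt.1 h⟩ a ha b hb s hTs hns (by simpa using hr1)
        (by rwa [abs_sub_comm])
    · exact hB1 (f^[s] b) ⟨hCs right_mem_uIcc, not_lt.1 h⟩ a ha b hb s hTs hns hls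
        (by simpa using hr1)

end Sys

/-! ### Points bordering a gap: both sides -/

namespace Sys
variable {f : ℝ → ℝ} {S : Sys f}

/-- If `z` divides `[z', e]` very unevenly, then so do its pullbacks, as long as the pullbacks of
the larger part have bounded total length. -/
lemma twoside {X : Set ℝ} {δ C2 z' e z : ℝ} (hA : S.Adm X δ C2 z' e) (hC2 : 0 < C2) {S2 : ℝ}
    {A b a x : ℝ} {k : ℕ} (hAI : A ∈ Icc (0:ℝ) 1) (hb : b ∈ Icc (0:ℝ) 1) (hN : S.NH A b k)
    (hkA : f^[k] A = z') (hkb : f^[k] b = e) (ha : a ∈ uIcc A b) (hka : f^[k] a = z)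
    (hx : x ∈ uIcc A b) (hNU : ∀ i < k, S.NU X δ (f^[i] x)) (hze : z' ≠ e)
    (hsum : ∑ i ∈ Finset.range k, |f^[i] a - f^[i] b| ≤ S2)
    (hK : Real.exp (S.C0 * (C2 * (4 + 2 * S2))) * |z' - z| ≤ |z' - e| / 2) :
    ∀ i ≤ k, |f^[i] A - f^[i] b| ≤ 2 * |f^[i] a - f^[i] b| := by
  have hD : 0 < |z' - e| := abs_pos.2 (sub_ne_zero.2 hze)
  have hE : 1 ≤ Real.exp (S.C0 * (C2 * (4 + 2 * S2))) := by
    have : 0 ≤ S2 := le_trans (Finset.sum_nonneg fun i _ => abs_nonneg _) hsum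
    exact Real.one_le_exp (by have := S.C0_pos; positivity)
  have hzI : z ∈ uIcc z' e := by rw [← hkA, ← hkb, ← hka]; exact hN.mem hAI hb ha
  suffices h : ∀ m ≤ k, |f^[k-m] A - f^[k-m] b| ≤ 2 * |f^[k-m] a - f^[k-m] b| by
    intro i hi
    have := h (k - i) (by omega)
    rwa [show k - (k - i) = i by omega] at this
  intro m
  induction m using Nat.strong_induction_on with
  | _ m ih =>
  intro hm
  obtain ⟨i, rfl⟩ := Nat.exists_eq_add_of_le hm
  rw [show m + i - m = i by omega]
  have hN' : S.NH A b (i + m) := by rwa [add_comm]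
  have hAi := S.mapsI i hAI
  have hbi := S.mapsI i hb
  have hs : S.NH (f^[i] A) (f^[i] b) m := hN'.shift hAI hb
  have hmA : f^[m] (f^[i] A) = z' := by rw [iter_add, add_comm, hkA]
  have hmb : f^[m] (f^[i] b) = e := by rw [iter_add, add_comm, hkb]
  have hma : f^[m] (f^[i] a) = z := by rw [iter_add, add_comm, hka]
  have hxi := (hN'.mono (m := i) (by omega)).mem hAI hb hx
  have hai := (hN'.mono (m := i) (by omega)).mem hAI hb ha
  have hNUi : ∀ j < m, S.NU X δ (f^[j] (f^[i] x)) := fun j hj => by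
    rw [iter_add]; exact hNU _ (by omega)
  have hmA' : f^[m] (f^[i] A) ∈ uIcc z' e := by rw [hmA]; exact left_mem_uIcc
  have hmb' : f^[m] (f^[i] b) ∈ uIcc z' e := by rw [hmb]; exact right_mem_uIcc
  have hTC := hA.thin _ hAi _ hbi m hs hmA' hmb' _ hxi hNUi
  have hw := hA.sum _ hAi _ hbi m hs hmA' hmb' _ hxi hNUi
  rcases Nat.eq_zero_or_pos m with rfl | hmp
  · simp only [Function.iterate_zero, id] at hmA hmb hma
    rw [hmA, hmb, hma]
    have h1 := abs_sub_le z' z e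
    nlinarith [abs_nonneg (z' - z), abs_nonneg (z - e)]
  have htot : ∑ j ∈ Finset.range (m + 1), |f^[j] (f^[i] A) - f^[j] (f^[i] b)| ≤ 3 + 2 * S2 := by
    rw [Finset.sum_range_succ]
    obtain ⟨m', rfl⟩ := Nat.exists_eq_succ_of_ne_zero hmp.ne'
    rw [Finset.sum_range_succ']
    have h1 : ∑ j ∈ Finset.range m', |f^[j+1] (f^[i] A) - f^[j+1] (f^[i] b)| ≤ 2 * S2 := by
      have h2 : ∑ j ∈ Finset.range m', |f^[i + 1 + j] a - f^[i + 1 + j] b| ≤ S2 := by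
        refine le_trans ?_ hsum
        have := Finset.sum_range_add (fun j => |f^[j] a - f^[j] b|) (i + 1) m'
        rw [show m' + 1 + i = i + 1 + m' by ring, this]
        have := Finset.sum_nonneg (s := Finset.range (i + 1))
          (f := fun j => |f^[j] a - f^[j] b|) fun j _ => abs_nonneg _
        linarith
      calc _ ≤ ∑ j ∈ Finset.range m', 2 * |f^[i + 1 + j] a - f^[i + 1 + j] b| := by
            refine Finset.sum_le_sum fun j hj => ?_
            have hj := Finset.mem_range.1 hj
            have := ih (m' - j) (by omega) (by omega)
            rw [show m' + 1 + i - (m' - j) = i + 1 + j by omega] at this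
            rwa [iter_add, iter_add, show i + (j + 1) = i + 1 + j by ring]
        _ ≤ _ := by rw [← Finset.mul_sum]; linarith
    have h3 := abs_sub_le_one (S.mapsI 0 hAi) (S.mapsI 0 hbi)
    have h4 := abs_sub_le_one (S.mapsI (m' + 1) hAi) (S.mapsI (m' + 1) hbi)
    linarith
  have hdist := (hTC.dist hAi hbi (a := f^[i] A) (b := f^[i] a) left_mem_uIcc hai
    (W := C2 * (4 + 2 * S2)) (hw.trans (by nlinarith))).2
  rw [hmA, hmb, hma] at hdist
  have h1 : |f^[i] A - f^[i] a| * |z' - e| ≤ |f^[i] A - f^[i] b| / 2 * |z' - e| := by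
    refine hdist.trans ?_
    rw [← mul_assoc]
    calc _ ≤ |z' - e| / 2 * |f^[i] A - f^[i] b| := by gcongr
      _ = _ := by ring
  have h2 := le_of_mul_le_mul_right h1 hD
  have h3 := abs_sub_le (f^[i] A) (f^[i] a) (f^[i] b)
  linarith

lemma sum_le_tail {t : ℕ → ℝ} (h1 : ∀ i, t i ≤ 1) (n : ℕ) :
    ∑ i ∈ Finset.range n, t i ≤ 4 + ∑ i ∈ Finset.range (n - 4), t (4 + i) := by
  rcases le_total 4 n with h | h
  · obtain ⟨k, rfl⟩ := Nat.exists_eq_add_of_le h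
    rw [Finset.sum_range_add, show 4 + k - 4 = k by omega]
    have : ∑ i ∈ Finset.range 4, t i ≤ 4 := by
      calc _ ≤ ∑ i ∈ Finset.range 4, (1:ℝ) := Finset.sum_le_sum fun i _ => h1 i
        _ = 4 := by norm_num
    linarith
  · rw [show n - 4 = 0 by omega]
    calc _ ≤ ∑ i ∈ Finset.range n, (1:ℝ) := Finset.sum_le_sum fun i _ => h1 i
      _ ≤ _ := by simp; exact_mod_cast h

lemma exists_otherside {z e r : ℝ} (hz : z ∈ Icc (0:ℝ) 1) (hr : 0 < r)
    (hre : r ≤ |z - e|) : ∃ z' ∈ Icc (0:ℝ) 1, |z' - z| ≤ r ∧ z ∈ uIcc z' e ∧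
      ∀ u ∈ Icc (0:ℝ) 1, |u - z| < r → u ∈ uIcc z' e := by
  rcases le_total z e with h | h
  · rw [abs_of_nonpos (by linarith)] at hre
    refine ⟨max 0 (z - r), ⟨le_max_left _ _, max_le (by norm_num) (by linarith [hz.2])⟩, ?_, ?_, ?_⟩
    · have := le_max_right 0 (z - r)
      have := max_le hz.1 (show z - r ≤ z by linarith)
      rw [abs_le]; constructor <;> linarith
    · have := max_le hz.1 (show z - r ≤ z by linarith)
      rw [mem_uIcc]; left; exact ⟨this, h⟩
    · intro u hu hur
      rw [abs_lt] at hur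
      rw [mem_uIcc]; left; exact ⟨max_le hu.1 (by linarith), by linarith⟩
  · rw [abs_of_nonneg (by linarith)] at hre
    refine ⟨min 1 (z + r), ⟨le_min (by norm_num) (by linarith [hz.1]), min_le_left _ _⟩, ?_, ?_, ?_⟩
    · have := min_le_right 1 (z + r)
      have := le_min hz.2 (show z ≤ z + r by linarith)
      rw [abs_le]; constructor <;> linarith
    · have := le_min hz.2 (show z ≤ z + r by linarith)
      rw [mem_uIcc]; right; exact ⟨h, this⟩
    · intro u hu hur
      rw [abs_lt] at hur
      rw [mem_uIcc]; right; exact ⟨by linarith, le_min hu.2 (by linarith)⟩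

lemma exists_small {z β ε : ℝ} (h : β ≠ z) (hε : 0 < ε) :
    ∃ e ∈ uIcc z β, e ≠ z ∧ |z - e| < ε := by
  have hD : 0 < |β - z| := abs_pos.2 (sub_ne_zero.2 h)
  set t := min 1 (ε / 2 / |β - z|)
  have ht0 : 0 < t := by positivity
  have ht1 : t ≤ 1 := min_le_left _ _
  refine ⟨z + t * (β - z), ?_, ?_, ?_⟩
  · rw [mem_uIcc]
    rcases le_total z β with h | h
    · left; constructor <;> nlinarith
    · right; constructor <;> nlinarith
  · intro h'
    have : t * (β - z) = 0 := by linarith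
    rcases mul_eq_zero.1 this with h1 | h1
    · linarith
    · exact h (by linarith)
  · rw [show z - (z + t * (β - z)) = - (t * (β - z)) by ring, abs_neg, abs_mul, abs_of_pos ht0]
    calc _ ≤ ε / 2 / |β - z| * |β - z| := by gcongr; exact min_le_right _ _
      _ = ε / 2 := by field_simp
      _ < ε := by linarith

/-- A point of an invariant set `Z` bordering a gap of `Z` in which all points are good
is good. -/
lemma gap_locGood {X Y : Set ℝ} (D : S.FD X Y) {Z : Set ℝ} (hinv : ∀ u ∈ Z, f u ∈ Z) {z g : ℝ}
    (hz : z ∈ Icc (0:ℝ) 1) (hg : g ∈ Icc (0:ℝ) 1) (hzg : z ≠ g) (hzZ : z ∈ Z) (hzY : z ∉ Y)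
    (hgap : ∀ u ∈ uIcc z g, u ≠ z → u ∉ Z) (hLG : ∀ u ∈ uIcc z g, u ≠ z → S.LocGood X u) :
    S.LocGood X z := by
  obtain ⟨β, hβg, hβz, η, hη, B, hB, δ, hδ, hone⟩ :=
    oneside D hinv hz hg hzg hzZ hzY hgap hLG
  have hβI := uIcc_subI hz hg hβg
  obtain ⟨δ0, hδ0, ⟨g0, hg0, hNU⟩, C2, hC2, hadm⟩ := exists_adm D
  obtain ⟨ρ', hρ', hball⟩ := Metric.isOpen_iff.1 D.hY.isOpen_compl z hzY
  obtain ⟨η0, hη0, hadm⟩ := hadm (ρ' / 2) (by linarith)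
  obtain ⟨η1, hη1, hshort⟩ := S.short (ε := δ / 2) (by linarith)
  obtain ⟨e, heβ, hez, hel⟩ := exists_small hβz
    (ε := min (min η (η0 / 2)) (min (ρ' / 4) (η1 / 2))) (by positivity)
  have hel1 : |z - e| < η := hel.trans_le ((min_le_left _ _).trans (min_le_left _ _))
  have hel2 : |z - e| < η0 / 2 := hel.trans_le ((min_le_left _ _).trans (min_le_right _ _))
  have hel3 : |z - e| < ρ' / 4 := hel.trans_le ((min_le_right _ _).trans (min_le_left _ _))
  have hel4 : |z - e| < η1 / 2 := hel.trans_le ((min_le_right _ _).trans (min_le_right _ _))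
  have heI := uIcc_subI hz hβI heβ
  have hD : 0 < |z - e| := abs_pos.2 (sub_ne_zero.2 hez.symm)
  set E := Real.exp (S.C0 * (C2 * (4 + 2 * B))) with hEdef
  have hE : 1 ≤ E := Real.one_le_exp (by have := S.C0_pos; positivity)
  set r := |z - e| / (2 * E) with hr
  have hr0 : 0 < r := by positivity
  have hrE : E * r = |z - e| / 2 := by rw [hr]; field_simp
  have hre : r ≤ |z - e| / 2 := by nlinarith
  obtain ⟨z', hz'I, hz'r, hzz', hz'u⟩ := exists_otherside (e := e) hz hr0 (hre.trans (by linarith))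
  have hz'e : |z' - e| ≤ 2 * |z - e| := by
    have := abs_sub_le z' z e
    linarith
  have hz'e2 : |z - e| ≤ |z' - e| := abs_sub_le_of_mem_uIcc hzz' right_mem_uIcc
  have hz'ne : z' ≠ e := by
    rintro rfl
    rw [sub_self, abs_zero] at hz'e2; linarith
  have hA : S.Adm X δ0 C2 z' e := by
    refine hadm z' hz'I e heI (by linarith) fun u hu y hy => ?_
    by_contra hcon
    refine hball (a := y) ?_ hy
    rw [mem_ball, Real.dist_eq]
    have h1 := abs_sub_le_of_mem_uIcc hu hzz'
    have h2 := abs_sub_le y u z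
    linarith
  refine ⟨min g0 (δ / 2), by positivity, r, hr0, 4 + 2 * B, ?_⟩
  intro x hx y hy n hTC hNr hnx hny
  refine (sum_le_tail (t := fun j => |f^[j] x - f^[j] y|)
    (fun i => abs_sub_le_one (S.mapsI i hx) (S.mapsI i hy)) n).trans ?_
  rcases le_or_gt 4 n with hn4 | hn4
  swap
  · rw [show n - 4 = 0 by omega]; simp; linarith
  obtain ⟨k, rfl⟩ := Nat.exists_eq_add_of_le hn4
  rw [show 4 + k - 4 = k by omega]
  have hNUx : ∀ i < 4 + k, S.NU X δ0 (f^[i] x) := fun i hi =>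
    hNU _ ((hNr i hi.le).1.mono (min_le_left _ _))
  have hnx' := hz'u _ (S.mapsI _ hx) hnx
  have hny' := hz'u _ (S.mapsI _ hy) hny
  obtain ⟨a0, ha0, b0, hb0, hN0, hna0, hnb0, hxa0⟩ := hA.pull z' left_mem_uIcc e right_mem_uIcc x hx
    (4 + k) hNUx hnx' 2 le_rfl (by omega)
  rw [show 4 + k - 2 = 2 + k by omega] at hN0 hna0 hnb0
  have hTC2 : S.TC x y (2 + (2 + k)) := by rwa [show 2 + (2 + k) = 4 + k by ring]
  have hx2 := S.mapsI 2 hx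
  have hy2 := S.mapsI 2 hy
  have hsub : uIcc (f^[2] x) (f^[2] y) ⊆ uIcc a0 b0 := by
    refine NH.subset_of_image (m := 2 + k) (hTC2.shift.NH hx2 hy2) hN0 hx2 hy2 ha0 hb0
      (x := f^[2] x) left_mem_uIcc hxa0 ?_ ?_
    · rw [hna0, hnb0, iter_add, show 2 + (2 + k) = 4 + k by ring]; exact hnx'
    · rw [hna0, hnb0, iter_add, show 2 + (2 + k) = 4 + k by ring]; exact hny'
  obtain ⟨a1, ha1, hna1⟩ : z ∈ f^[2 + k] '' uIcc a0 b0 := by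
    rw [hN0.image ha0 hb0, hna0, hnb0]; exact hzz'
  have ha1I := uIcc_subI ha0 hb0 ha1
  have hlen : ∀ i ≤ 2 + k, |f^[i] a0 - f^[i] b0| < δ / 2 :=
    hshort a0 ha0 b0 hb0 (2 + k) hN0 (by rw [hna0, hnb0]; linarith)
  have hN2 := hN0.mono (m := 2) (by omega)
  have hAI := S.mapsI 2 ha0
  have hbI := S.mapsI 2 hb0
  have haI := S.mapsI 2 ha1I
  have hNs : S.NH (f^[2] a0) (f^[2] b0) k := hN0.shift ha0 hb0
  have h2a1 := hN2.mem ha0 hb0 ha1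
  have hsum : ∑ i ∈ Finset.range k, |f^[i] (f^[2] a1) - f^[i] (f^[2] b0)| ≤ B := by
    refine hone e heβ hez hel1 a1 ha1I k (f^[2] a1) haI (f^[2] b0) hbI
      (hNs.sub h2a1 right_mem_uIcc) (by rw [iter_add, hna1]) (by rw [iter_add, hnb0])
      left_mem_uIcc fun i hi => ?_
    have h1 := (hNr (2 + i) (by omega)).1.mono (min_le_right g0 (δ / 2))
    refine h1.near (lt_of_le_of_lt ?_ (hlen i (by omega)))
    have hNi := hN0.mono (m := i) (by omega)
    rw [← iter_add]
    exact abs_sub_le_of_mem_uIcc (hNi.mem ha0 hb0 ha1) (hNi.mem ha0 hb0 hxa0)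
  have hx4 : f^[4] x ∈ uIcc (f^[2] a0) (f^[2] b0) := by
    have := hN2.mem ha0 hb0 hxa0
    rwa [iter_add] at this
  have hy4 : f^[4] y ∈ uIcc (f^[2] a0) (f^[2] b0) := by
    have := hN2.mem ha0 hb0 (hsub right_mem_uIcc)
    rwa [iter_add] at this
  have htwo := twoside hA hC2 (S2 := B) hAI hbI hNs (by rw [iter_add, hna0])
    (by rw [iter_add, hnb0]) h2a1 (z := z) (by rw [iter_add, hna1]) hx4
    (fun i hi => by rw [iter_add]; exact hNUx _ (by omega)) hz'ne hsum
    (by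
      calc E * |z' - z| ≤ E * r := by gcongr
        _ ≤ _ := by rw [hrE]; linarith)
  have : ∑ i ∈ Finset.range k, |f^[4 + i] x - f^[4 + i] y| ≤ 2 * B := by
    calc _ ≤ ∑ i ∈ Finset.range k, 2 * |f^[i] (f^[2] a1) - f^[i] (f^[2] b0)| := by
          refine Finset.sum_le_sum fun i hi => ?_
          have hi := Finset.mem_range.1 hi
          refine le_trans ?_ (htwo i hi.le)
          have hNi := hNs.mono (m := i) hi.le
          rw [← iter_add, ← iter_add]
          exact abs_sub_le_of_mem_uIcc (hNi.mem hAI hbI hx4) (hNi.mem hAI hbI hy4)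
      _ ≤ _ := by rw [← Finset.mul_sum]; linarith
  linarith

end Sys

/-! ### Repelling periodic points -/

namespace Sys
variable {f : ℝ → ℝ} {S : Sys f}

/-- `f^m` fixes `p` and maps a right neighbourhood of `p` to the right of `p`. -/
def RightFix (f : ℝ → ℝ) (p : ℝ) (m : ℕ) : Prop :=
  1 ≤ m ∧ f^[m] p = p ∧ ∃ ρ > 0, ∀ x ∈ Ioo p (p + ρ), p < f^[m] x

lemma exists_rightFix (S : Sys f) {u v : ℝ} (hu : 0 < u) (huv : u < v) (hv : v < 1) :
    ∃ p, u ≤ p ∧ p < v ∧ ∃ m, RightFix f p m := by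
  set c := (u + v) / 2 with hc
  obtain ⟨N, hN⟩ := S.T2 (ε := (v - u) / 2) (by linarith)
  have huI : u ∈ Icc (0:ℝ) 1 := ⟨by linarith, by linarith⟩
  have hvI : v ∈ Icc (0:ℝ) 1 := ⟨by linarith, by linarith⟩
  have hcI : c ∈ Icc (0:ℝ) 1 := ⟨by linarith, by linarith⟩
  obtain ⟨y0, hy0, h0⟩ := hN u huI c hcI (by rw [abs_of_neg (by linarith)]; linarith) (N + 1)
    (by omega) 0 (by simp)
  obtain ⟨y1, hy1, h1⟩ := hN c hcI v hvI (by rw [abs_of_neg (by linarith)]; linarith) (N + 1)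
    (by omega) 1 (by simp)
  rw [uIcc_of_le (by linarith)] at hy0 hy1
  have hcont := S.contIter (N + 1)
  set A := Icc y0 y1 ∩ {t | f^[N+1] t ≤ t} with hA
  have hAc : IsCompact A := isCompact_Icc.inter_right (isClosed_le hcont continuous_id)
  have hAn : A.Nonempty := ⟨y0, ⟨le_rfl, by linarith [hy0.2, hy1.1]⟩, by
    change f^[N+1] y0 ≤ y0; rw [h0]; linarith [hy0.1]⟩
  obtain ⟨p, ⟨⟨hp1, hp2⟩, hp3⟩, hpmax⟩ := hAc.exists_isMaxOn hAn continuousOn_id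
  have hgt : ∀ t, p < t → t ≤ y1 → t < f^[N+1] t := by
    intro t ht ht1
    by_contra hcon
    have : t ≤ p := hpmax (show t ∈ A from ⟨⟨by linarith, ht1⟩, not_lt.1 hcon⟩)
    linarith
  have hpy : p < y1 := by
    rcases hp2.lt_or_eq with h | h
    · exact h
    · change f^[N+1] p ≤ p at hp3
      rw [h, h1] at hp3; linarith [hy1.2]
  refine ⟨p, by linarith [hy0.1], by linarith [hy1.2], N + 1, by omega, ?_, y1 - p, by linarith,
    fun x hx => hx.1.trans (hgt x hx.1 (by linarith [hx.2]))⟩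
  refine le_antisymm hp3 ?_
  have hlim : Tendsto (fun t => f^[N+1] t - t) (nhdsWithin p (Ioi p)) (nhds (f^[N+1] p - p)) :=
    ((hcont.sub continuous_id).tendsto p).mono_left nhdsWithin_le_nhds
  have : 0 ≤ f^[N+1] p - p := by
    refine ge_of_tendsto hlim ?_
    filter_upwards [Ioc_mem_nhdsGT hpy] with t ht
    have := hgt t ht.1 ht.2
    linarith
  linarith

/-- If `f^i` moves `p`, or fixes it but is not right-preserving there, then it moves a right
neighbourhood of `p` off itself. -/
lemma flip_off (S : Sys f) {p : ℝ} (hp : p ∈ Ico (0:ℝ) 1) {i : ℕ} (hi : 1 ≤ i)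
    (h : ¬ RightFix f p i) : ∃ r > 0, ∀ x ∈ Ico p (p + r), f^[i] x ∉ Ioo p (p + r) := by
  by_cases hfix : f^[i] p = p
  · obtain ⟨lam, hlam, r, hr, hexp⟩ := S.hyp p ⟨hp.1, hp.2.le⟩ i hi hfix
    have hI : ∀ x ∈ Ico p (p + min r (1 - p)), x ∈ Icc (0:ℝ) 1 ∧ |x - p| < r := by
      intro x hx
      have h1 := min_le_left r (1 - p)
      have h2 := min_le_right r (1 - p)
      refine ⟨⟨by linarith [hx.1, hp.1], by linarith [hx.2]⟩, ?_⟩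
      rw [abs_of_nonneg (by linarith [hx.1])]; linarith [hx.2]
    have hr' : 0 < min r (1 - p) := lt_min hr (by linarith [hp.2])
    have hpm : p ∈ Ico p (p + min r (1 - p)) := ⟨le_rfl, by linarith⟩
    have hne : ∀ x ∈ Ioo p (p + min r (1 - p)), f^[i] x ≠ p := by
      intro x hx hcon
      have h1 := hexp x (hI x ⟨hx.1.le, hx.2⟩).1 p (hI p hpm).1 (hI x ⟨hx.1.le, hx.2⟩).2 (hI p hpm).2
      rw [hcon, hfix, sub_self, abs_zero, abs_of_pos (by linarith [hx.1])] at h1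
      nlinarith [hx.1]
    refine ⟨min r (1 - p), hr', fun y hy hcon => h ⟨hi, hfix, min r (1 - p), hr', fun x hx => ?_⟩⟩
    have hyp : p < y := by
      rcases hy.1.lt_or_eq with h | h
      · exact h
      · rw [← h, hfix] at hcon; exact absurd hcon.1 (lt_irrefl _)
    by_contra hx'
    have hsub : uIcc x y ⊆ Ioo p (p + min r (1 - p)) :=
      (ordConnected_Ioo.uIcc_subset hx ⟨hyp, hy.2⟩)
    have := intermediate_value_uIcc ((S.contIter i).continuousOn (s := uIcc x y))
      (show p ∈ uIcc (f^[i] x) (f^[i] y) from mem_uIcc.2 (Or.inl ⟨not_lt.1 hx', hcon.1.le⟩))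
    obtain ⟨z, hz, hzp⟩ := this
    exact hne z (hsub hz) hzp
  · have hD : 0 < |f^[i] p - p| := abs_pos.2 (sub_ne_zero.2 hfix)
    have := Metric.continuous_iff.1 (S.contIter i) p (|f^[i] p - p| / 2) (by linarith)
    obtain ⟨δ, hδ, hc⟩ := this
    refine ⟨min δ (|f^[i] p - p| / 2), by positivity, fun x hx hcon => ?_⟩
    have h1 := min_le_left δ (|f^[i] p - p| / 2)
    have h2 := min_le_right δ (|f^[i] p - p| / 2)
    have h3 := hc x (by rw [Real.dist_eq, abs_of_nonneg (by linarith [hx.1])]; linarith [hx.2])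
    rw [Real.dist_eq, abs_sub_comm] at h3
    have h4 := abs_sub_le (f^[i] p) (f^[i] x) p
    rw [abs_of_pos (show 0 < f^[i] x - p by linarith [hcon.1])] at h4
    linarith [hcon.2]

/-- Local data at a periodic point `p` used to build nice intervals with small returns. -/
structure Seed (S : Sys f) (p r θ d0 : ℝ) (M : ℕ) : Prop where
  hp : 0 ≤ p
  hr : 0 < r
  hpr : p + r ≤ 1
  hM : 1 ≤ M
  hθ : 0 ≤ θ
  hθ1 : θ < 1
  hd0 : 0 < d0
  fix : f^[M] p = p
  right : ∀ x ∈ Ioo p (p + r), p < f^[M] x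
  contr : ∀ i < M, ∀ x ∈ Ico p (p + r), ∀ y ∈ Ico p (p + r),
    |f^[i] x - f^[i] y| ≤ θ * |f^[i] (f^[M] x) - f^[i] (f^[M] y)|
  off : ∀ i < M, 1 ≤ i → ∀ x ∈ Ico p (p + r), f^[i] x ∉ Ioo p (p + r)
  far : ∀ i < M, ∀ x ∈ Ico p (p + r), d0 ≤ S.d (f^[i] x)
  close : ∀ i < M, ∀ x ∈ Ico p (p + r), ∀ y ∈ Ico p (p + r), 2 * |f^[i] x - f^[i] y| ≤ d0

/-- Every open subinterval contains a periodic point with a `Seed`; `M` is its least right-preserving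
period. -/
lemma exists_seed (S : Sys f) {u v : ℝ} (hu : 0 < u) (huv : u < v) (hv : v < 1) :
    ∃ p r θ d0 M, u ≤ p ∧ p + r ≤ v ∧ S.Seed p r θ d0 M := by
  classical
  obtain ⟨p, hup, hpv, hex⟩ := S.exists_rightFix hu huv hv
  set M := Nat.find hex with hMdef
  obtain ⟨hM, hfix, ρ, hρ, hright⟩ : RightFix f p M := Nat.find_spec hex
  have hmin : ∀ i < M, ¬ RightFix f p i := fun i hi => Nat.find_min hex hi
  have hpI : p ∈ Icc (0:ℝ) 1 := ⟨by linarith, by linarith⟩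
  have hK : ∀ i, f^[i] p ∉ S.K := by
    intro i hi
    have h1 := S.N _ hi M hM
    rw [iter_add, add_comm, ← iter_add, hfix, sub_self, abs_zero] at h1
    linarith [S.τ0_pos]
  -- a lower bound for the distance of the orbit to the critical set
  obtain ⟨d1, hd1, hd1'⟩ : ∃ d1 > 0, ∀ i < M, d1 ≤ S.d (f^[i] p) := by
    obtain ⟨i0, -, h⟩ := (Finset.range M).exists_min_image (fun i => S.d (f^[i] p))
      ⟨0, Finset.mem_range.2 (by omega)⟩
    exact ⟨_, d_pos_iff.2 (hK i0), fun i hi => h i (Finset.mem_range.2 hi)⟩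
  have hfix' : ∀ i, f^[M] (f^[i] p) = f^[i] p := fun i => by
    rw [iter_add, add_comm, ← iter_add, hfix]
  have hhyp := fun i => S.hyp (f^[i] p) (S.mapsI i hpI) M hM (hfix' i)
  choose lam hlam rr hrr hexp using hhyp
  obtain ⟨θ, hθ0, hθ1, hθ⟩ : ∃ θ : ℝ, 0 ≤ θ ∧ θ < 1 ∧ ∀ i < M, 1 / lam i ≤ θ := by
    obtain ⟨i0, -, h⟩ := (Finset.range M).exists_max_image (fun i => 1 / lam i)
      ⟨0, Finset.mem_range.2 (by omega)⟩
    have := hlam i0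
    exact ⟨1 / lam i0, by positivity, (div_lt_one (by linarith)).2 this,
      fun i hi => h i (Finset.mem_range.2 hi)⟩
  obtain ⟨η, hη, hηr⟩ : ∃ η > 0, ∀ i < M, η ≤ rr i := by
    obtain ⟨i0, -, h⟩ := (Finset.range M).exists_min_image rr
      ⟨0, Finset.mem_range.2 (by omega)⟩
    exact ⟨_, hrr i0, fun i hi => h i (Finset.mem_range.2 hi)⟩
  obtain ⟨δ, hδ, huc⟩ := S.unifCont M (ε := min η (d1 / 8)) (by positivity)
  obtain ⟨r1, hr1, hoff⟩ : ∃ r1 > 0, ∀ i < M, 1 ≤ i → ∀ x ∈ Ico p (p + r1),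
      f^[i] x ∉ Ioo p (p + r1) := by
    have : ∀ i, ∃ r > 0, i < M → 1 ≤ i → ∀ x ∈ Ico p (p + r), f^[i] x ∉ Ioo p (p + r) := by
      intro i
      by_cases h : i < M ∧ 1 ≤ i
      · obtain ⟨r, hr, h'⟩ := S.flip_off ⟨hpI.1, by linarith⟩ h.2 (hmin i h.1)
        exact ⟨r, hr, fun _ _ => h'⟩
      · exact ⟨1, one_pos, fun h1 h2 => absurd ⟨h1, h2⟩ h⟩
    choose ro hro hoff using this
    obtain ⟨i0, -, h⟩ := (Finset.range M).exists_min_image ro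
      ⟨0, Finset.mem_range.2 (by omega)⟩
    refine ⟨ro i0, hro i0, fun i hi h1 x hx hcon => ?_⟩
    have := h i (Finset.mem_range.2 hi)
    exact hoff i hi h1 x ⟨hx.1, by linarith [hx.2]⟩ ⟨hcon.1, by linarith [hcon.2]⟩
  set r := min (min ρ δ) (min r1 (v - p)) with hrdef
  have hrρ : r ≤ ρ := (min_le_left _ _).trans (min_le_left _ _)
  have hrδ : r ≤ δ := (min_le_left _ _).trans (min_le_right _ _)
  have hrr1 : r ≤ r1 := (min_le_right _ _).trans (min_le_left _ _)
  have hrv : r ≤ v - p := (min_le_right _ _).trans (min_le_right _ _)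
  have hr : 0 < r := lt_min (lt_min hρ hδ) (lt_min hr1 (by linarith))
  have hI : ∀ x ∈ Ico p (p + r), x ∈ Icc (0:ℝ) 1 := fun x hx =>
    ⟨by linarith [hx.1], by linarith [hx.2]⟩
  have hcl : ∀ i < M, ∀ x ∈ Ico p (p + r), |f^[i] x - f^[i] p| < min η (d1 / 8) := fun i hi x hx =>
    huc i hi.le x (hI x hx) p hpI (by rw [abs_of_nonneg (by linarith [hx.1])]; linarith [hx.2])
  refine ⟨p, r, θ, d1 / 2, M, hup, by linarith, hpI.1, hr, by linarith, hM, hθ0, hθ1, by linarith,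
    hfix, ?_, ?_, ?_, ?_, ?_⟩
  · exact fun x hx => hright x ⟨hx.1, by linarith [hx.2]⟩
  · intro i hi x hx y hy
    have h1 := (hcl i hi x hx).trans_le ((min_le_left _ _).trans (hηr i hi))
    have h2 := (hcl i hi y hy).trans_le ((min_le_left _ _).trans (hηr i hi))
    have h3 := hexp i _ (S.mapsI i (hI x hx)) _ (S.mapsI i (hI y hy)) h1 h2
    have hl := hlam i
    rw [iter_add, iter_add, add_comm i M, ← iter_add, ← iter_add] at h3
    calc |f^[i] x - f^[i] y| ≤ 1 / lam i * |f^[i] (f^[M] x) - f^[i] (f^[M] y)| := by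
          rw [one_div, inv_mul_eq_div, le_div_iff₀ (by linarith)]; linarith
      _ ≤ _ := by gcongr; exact hθ i hi
  · exact fun i hi h1 x hx hcon =>
      hoff i hi h1 x ⟨hx.1, by linarith [hx.2]⟩ ⟨hcon.1, by linarith [hcon.2]⟩
  · intro i hi x hx
    have h1 := (hcl i hi x hx).trans_le (min_le_right _ _)
    have h2 := S.d_le_add (f^[i] p) (f^[i] x)
    rw [abs_sub_comm] at h2
    have := hd1' i hi
    linarith
  · intro i hi x hx y hy
    have h1 := (hcl i hi x hx).trans_le (min_le_right _ _)
    have h2 := (hcl i hi y hy).trans_le (min_le_right _ _)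
    have := abs_sub_le (f^[i] x) (f^[i] p) (f^[i] y)
    rw [abs_sub_comm (f^[i] p)] at this
    linarith

end Sys

/-! ### Nice intervals near a periodic point -/

namespace Sys
variable {f : ℝ → ℝ} {S : Sys f}

lemma Seed.step {p r θ d0 : ℝ} {M : ℕ} (D : S.Seed p r θ d0 M) {x : ℝ} (hx : x ∈ Ioo p (p + r)) :
    ∃ x' ∈ Ioo p x, f^[M] x' = x := by
  have h1 := D.contr 0 D.hM x ⟨hx.1.le, hx.2⟩ p ⟨le_rfl, by linarith [D.hr]⟩
  have h2 := D.right x hx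
  simp only [Function.iterate_zero, id] at h1
  rw [D.fix, abs_of_pos (by linarith [hx.1]), abs_of_pos (by linarith)] at h1
  have h3 : x < f^[M] x := by nlinarith [D.hθ1, hx.1]
  obtain ⟨y, hy, hyx⟩ := intermediate_value_Ioo hx.1.le ((S.contIter M).continuousOn)
    (show x ∈ Ioo (f^[M] p) (f^[M] x) from ⟨by rw [D.fix]; exact hx.1, h3⟩)
  exact ⟨y, hy, hyx⟩

/-- A backward orbit of `f^M` converging to `p` from the right. -/
structure BackOrbit (f : ℝ → ℝ) (p r : ℝ) (M : ℕ) (x : ℕ → ℝ) : Prop where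
  mem0 : x 0 ∈ Ioo p (p + r)
  mem : ∀ k, x (k + 1) ∈ Ioo p (x k)
  map : ∀ k, f^[M] (x (k + 1)) = x k

lemma Seed.exists_backOrbit {p r θ d0 : ℝ} {M : ℕ} (D : S.Seed p r θ d0 M) {x0 : ℝ}
    (hx : x0 ∈ Ioo p (p + r)) : ∃ x : ℕ → ℝ, x 0 = x0 ∧ BackOrbit f p r M x := by
  have : ∀ y : Ioo p (p + r), ∃ y' : Ioo p (p + r), (y' : ℝ) ∈ Ioo p y ∧ f^[M] y' = y := by
    intro y
    obtain ⟨y', h1, h2⟩ := D.step y.2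
    exact ⟨⟨y', h1.1, h1.2.trans y.2.2⟩, h1, h2⟩
  choose g hg using this
  refine ⟨fun k => (g^[k] ⟨x0, hx⟩ : Ioo p (p + r)), rfl, hx, fun k => ?_, fun k => ?_⟩
  · simp only [Function.iterate_succ_apply']; exact (hg _).1
  · simp only [Function.iterate_succ_apply']; exact (hg _).2

section
variable {p r θ d0 : ℝ} {M : ℕ} {x : ℕ → ℝ}

lemma BackOrbit.anti (B : BackOrbit f p r M x) : StrictAnti x :=
  strictAnti_nat_of_succ_lt fun k => (B.mem k).2

lemma BackOrbit.mem' (B : BackOrbit f p r M x) (k : ℕ) : x k ∈ Ioo p (p + r) := by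
  cases k with
  | zero => exact B.mem0
  | succ k => exact ⟨(B.mem k).1, ((B.anti (Nat.succ_pos k)).trans B.mem0.2)⟩

lemma Seed.subI (D : S.Seed p r θ d0 M) : ∀ x ∈ Ico p (p + r), x ∈ Icc (0:ℝ) 1 := fun x hx =>
  ⟨D.hp.trans hx.1, hx.2.le.trans D.hpr⟩

lemma BackOrbit.ico (B : BackOrbit f p r M x) (k : ℕ) : x k ∈ Ico p (p + r) :=
  ⟨(B.mem' k).1.le, (B.mem' k).2⟩

lemma Seed.tc (D : S.Seed p r θ d0 M) {u v : ℝ} (hu : u ∈ Ico p (p + r)) (hv : v ∈ Ico p (p + r)) :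
    S.TC u v M := fun j hj =>
  ⟨D.hd0.trans_le (D.far j hj u hu), D.hd0.trans_le (D.far j hj v hv),
    (D.close j hj u hu v hv).trans (D.far j hj u hu), (D.close j hj u hu v hv).trans (D.far j hj v hv)⟩

lemma Seed.dist_le (D : S.Seed p r θ d0 M) (B : BackOrbit f p r M x) {i : ℕ} (hi : i < M) (k : ℕ) :
    |f^[i] (x (k + 1)) - f^[i] (x k)| ≤ θ ^ k := by
  induction k with
  | zero =>
    simpa using abs_sub_le_one (S.mapsI i (D.subI _ (B.ico 1))) (S.mapsI i (D.subI _ (B.ico 0)))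
  | succ k ih =>
    have := D.contr i hi _ (B.ico (k + 2)) _ (B.ico (k + 1))
    rw [B.map, B.map] at this
    refine this.trans ?_
    rw [pow_succ, mul_comm]
    exact mul_le_mul_of_nonneg_right ih D.hθ

lemma Seed.tendsto (D : S.Seed p r θ d0 M) (B : BackOrbit f p r M x) :
    Tendsto x atTop (nhds p) := by
  have h : ∀ k, x k - p ≤ θ ^ k := by
    intro k
    induction k with
    | zero => have := (B.mem' 0).2; have := D.hpr; have := D.hp; simp; linarith
    | succ k ih =>
      have := D.contr 0 D.hM _ (B.ico (k + 1)) p ⟨le_rfl, by linarith [D.hr]⟩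
      simp only [Function.iterate_zero, id] at this
      rw [B.map, D.fix, abs_of_pos (by linarith [(B.mem' (k+1)).1]),
        abs_of_pos (by linarith [(B.mem' k).1])] at this
      refine this.trans ?_
      rw [pow_succ, mul_comm]
      exact mul_le_mul_of_nonneg_right ih D.hθ
  have h0 := tendsto_pow_atTop_nhds_zero_of_lt_one D.hθ D.hθ1
  have : Tendsto (fun k => x k - p) atTop (nhds 0) :=
    squeeze_zero (fun k => by linarith [(B.mem' k).1]) h h0
  simpa using this.add_const p

/-- The fundamental interval `[x (k+1), x k]` is carried to `[x 1, x 0]` with distortion bounded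
independently of `k`. -/
lemma Seed.chain (D : S.Seed p r θ d0 M) (B : BackOrbit f p r M x) (k : ℕ) :
    S.TC (x (k + 1)) (x k) (k * M) ∧
    ∑ t ∈ Finset.range (k * M), S.w (f^[t] (x (k + 1))) (f^[t] (x k)) ≤
      M / d0 * ∑ j ∈ Finset.range (k + 1), θ ^ j := by
  have hd0 := D.hd0
  have hθ := D.hθ
  induction k with
  | zero =>
    refine ⟨fun j hj => by omega, ?_⟩
    simp; positivity
  | succ k ih =>
    have hsh : ∀ t k, f^[M + t] (x (k + 1)) = f^[t] (x k) := fun t k => by rw [← iter_add, B.map]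
    have hT := D.tc (B.ico (k + 2)) (B.ico (k + 1))
    constructor
    · intro j hj
      rcases lt_or_ge j M with h | h
      · exact hT j h
      · obtain ⟨t, rfl⟩ := Nat.exists_eq_add_of_le h
        rw [hsh, hsh]
        exact ih.1 t (by rw [add_mul] at hj; omega)
    · rw [show (k + 1) * M = M + k * M by ring, Finset.sum_range_add]
      simp only [hsh]
      rw [Finset.sum_range_succ _ (k + 1), mul_add, add_comm]
      refine add_le_add ih.2 ?_
      calc ∑ t ∈ Finset.range M, S.w (f^[t] (x (k + 1 + 1))) (f^[t] (x (k + 1)))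
          ≤ ∑ t ∈ Finset.range M, θ ^ (k + 1) / d0 := by
            refine Finset.sum_le_sum fun t ht => ?_
            have ht := Finset.mem_range.1 ht
            unfold w
            refine div_le_div₀ (by positivity) (D.dist_le B ht (k + 1)) hd0 (le_min ?_ ?_)
            · exact D.far t ht _ (B.ico _)
            · exact D.far t ht _ (B.ico _)
        _ = _ := by rw [Finset.sum_const, Finset.card_range, nsmul_eq_mul]; ring

lemma Seed.uIcc_ico (B : BackOrbit f p r M x) (k : ℕ) :
    uIcc (x (k + 1)) (x k) ⊆ Ico p (p + r) :=
  ordConnected_Ico.uIcc_subset (B.ico _) (B.ico _)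

/-- Points of the `k`-th fundamental interval take a long time to come closer to `p`. -/
lemma Seed.late (D : S.Seed p r θ d0 M) (B : BackOrbit f p r M x) (k : ℕ) :
    ∀ u ∈ uIcc (x (k + 1)) (x k), ∀ m, 1 ≤ m → m ≤ k * M → f^[m] u ∉ Ioo p (x k) := by
  induction k with
  | zero => intro u _ m h1 h2; omega
  | succ k ih =>
    intro u hu m h1 h2 hcon
    have hui := Seed.uIcc_ico B (k + 1) hu
    rcases lt_or_ge m M with h | h
    · exact D.off m h h1 u hui ⟨hcon.1, hcon.2.trans (B.mem' _).2⟩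
    have hMu : f^[M] u ∈ uIcc (x (k + 1)) (x k) := by
      have := ((D.tc (B.ico (k + 2)) (B.ico (k + 1))).NH (D.subI _ (B.ico _))
        (D.subI _ (B.ico _))).mem (D.subI _ (B.ico _)) (D.subI _ (B.ico _)) hu
      rwa [B.map, B.map] at this
    obtain ⟨t, rfl⟩ := Nat.exists_eq_add_of_le h
    rcases Nat.eq_zero_or_pos t with rfl | ht
    · rw [uIcc_of_le (B.mem k).2.le] at hMu
      have := hcon.2
      simp only [add_zero] at this
      linarith [hMu.1]
    · rw [← iter_add] at hcon
      exact ih _ hMu t ht (by rw [add_mul] at h2; omega) ⟨hcon.1, hcon.2.trans (B.mem k).2⟩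

/-- The orbit of `x k` meets the right neighbourhood of `p` only along the backward orbit. -/
lemma Seed.orbit (D : S.Seed p r θ d0 M) (B : BackOrbit f p r M x) {κ : ℝ} (hκr : κ ≤ r)
    (hκ : ∀ m, f^[m] (x 0) ∉ Ioo p (p + κ)) (k : ℕ) :
    ∀ m, f^[m] (x k) ∈ Ioo p (p + κ) → ∃ j, f^[m] (x k) = x j := by
  induction k with
  | zero => intro m hm; exact absurd hm (hκ m)
  | succ k ih =>
    intro m hm
    rcases lt_or_ge m M with h | h
    · rcases Nat.eq_zero_or_pos m with rfl | h1
      · exact ⟨k + 1, rfl⟩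
      · exact absurd ⟨hm.1, by linarith [hm.2]⟩ (D.off m h h1 _ (B.ico _))
    · obtain ⟨t, rfl⟩ := Nat.exists_eq_add_of_le h
      rw [← iter_add, B.map] at hm ⊢
      exact ih t hm

lemma Seed.nice (D : S.Seed p r θ d0 M) (B : BackOrbit f p r M x) {κ : ℝ} (hκr : κ ≤ r)
    (hκ : ∀ m, f^[m] (x 0) ∉ Ioo p (p + κ)) (k : ℕ) (hk : x k < p + κ) :
    Nice f (x (k + 1)) (x k) := by
  intro m _ e he hmem
  rw [uIcc_of_le (B.mem k).2.le] at hmem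
  have h1 : f^[m] e ∈ Ioo p (p + κ) :=
    ⟨(B.mem' (k+1)).1.trans_le hmem.1, hmem.2.trans_lt hk⟩
  obtain ⟨j, hj⟩ : ∃ j, f^[m] e = x j := by
    rcases he with rfl | rfl
    · exact D.orbit B hκr hκ _ m h1
    · exact D.orbit B hκr hκ _ m h1
  rw [hj] at hmem ⊢
  have h2 := B.anti.le_iff_ge.1 hmem.1
  have h3 := B.anti.le_iff_ge.1 hmem.2
  rcases (show j = k + 1 ∨ j = k by omega) with rfl | rfl <;> simp

lemma Seed.exists_off (D : S.Seed p r θ d0 M) {x0 : ℝ} {N : ℕ} (hN : f^[N] x0 = p) :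
    ∃ κ > 0, κ ≤ r ∧ ∀ m, f^[m] x0 ∉ Ioo p (p + κ) := by
  classical
  let O : Finset ℝ := (Finset.range (N + M)).image fun i => f^[i] x0
  have hfix : ∀ i q, f^[M * q + i] p = f^[i] p := by
    intro i q
    rw [← iter_add, Function.iterate_mul, Function.iterate_fixed D.fix]
  have hM := D.hM
  have hO : ∀ m, f^[m] x0 ∈ O := by
    intro m
    rcases lt_or_ge m N with h | h
    · exact Finset.mem_image.2 ⟨m, Finset.mem_range.2 (by omega), rfl⟩
    · obtain ⟨t, rfl⟩ := Nat.exists_eq_add_of_le h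
      refine Finset.mem_image.2 ⟨N + t % M, Finset.mem_range.2 ?_, ?_⟩
      · have := Nat.mod_lt t (show 0 < M by omega)
        omega
      · rw [← iter_add, ← iter_add, hN]
        conv_rhs => rw [← Nat.div_add_mod t M, hfix]
  by_cases hne : (O.filter (p < ·)).Nonempty
  · obtain ⟨y, hy, hmin⟩ := (O.filter (p < ·)).exists_min_image id hne
    have hyp := (Finset.mem_filter.1 hy).2
    refine ⟨min r (y - p), lt_min D.hr (by linarith), min_le_left _ _, fun m hcon => ?_⟩
    have h1 := hmin (f^[m] x0) (Finset.mem_filter.2 ⟨hO m, hcon.1⟩)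
    have h2 := min_le_right r (y - p)
    simp only [id] at h1
    linarith [hcon.2]
  · exact ⟨r, D.hr, le_rfl, fun m hcon => hne ⟨_, Finset.mem_filter.2 ⟨hO m, hcon.1⟩⟩⟩

/-- Arbitrarily short nice intervals near `p` all of whose return branches are very short. -/
lemma Seed.exists_interval (D : S.Seed p r θ d0 M) {ε η : ℝ} (hε : 0 < ε) (hη : 0 < η) :
    ∃ α β, p < α ∧ α < β ∧ β < p + r ∧ β - α < η ∧ Nice f α β ∧ ∀ m ≥ 1, ∀ a ∈ Icc (0:ℝ) 1,
      ∀ b ∈ Icc (0:ℝ) 1, S.NH a b m → f^[m] a = α → f^[m] b = β → uIcc a b ⊆ uIcc α β →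
      |a - b| ≤ ε * |α - β| := by
  have hr := D.hr
  have hpI : p ∈ Ico p (p + r) := ⟨le_rfl, by linarith⟩
  have hp2 : p + r / 4 ∈ Ico p (p + r) := ⟨by linarith, by linarith⟩
  have hp3 : p + r / 2 ∈ Ico p (p + r) := ⟨by linarith, by linarith⟩
  obtain ⟨N, x0, hx0, hN⟩ := S.exists_preimage (D.subI _ hp2) (D.subI _ hp3)
    (by intro h; linarith) (D.subI _ hpI)
  rw [uIcc_of_le (by linarith)] at hx0
  obtain ⟨κ, hκ, hκr, hoff⟩ := D.exists_off hN
  obtain ⟨x, rfl, B⟩ := D.exists_backOrbit (x0 := x0) ⟨by linarith [hx0.1], by linarith [hx0.2]⟩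
  set W := M / d0 * (1 - θ)⁻¹ with hW
  have hWk : ∀ k, ∑ t ∈ Finset.range (k * M), S.w (f^[t] (x (k + 1))) (f^[t] (x k)) ≤ W := by
    intro k
    refine (D.chain B k).2.trans ?_
    have := D.hd0
    rw [hW]
    gcongr
    exact (summable_geometric_of_lt_one D.hθ D.hθ1).sum_le_tsum _ (fun i _ => pow_nonneg D.hθ i)
      |>.trans_eq (tsum_geometric_of_lt_one D.hθ D.hθ1)
  have hV0 : 0 < |x 1 - x 0| := abs_pos.2 (sub_ne_zero.2 (B.mem 0).2.ne)
  set E := Real.exp (S.C0 * W) with hE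
  have hEp : 0 < E := Real.exp_pos _
  obtain ⟨η1, hη1, hshort⟩ := S.short (ε := ε * |x 1 - x 0| / E) (by positivity)
  have hlim := D.tendsto B
  obtain ⟨k, hk⟩ := (hlim.eventually (Iio_mem_nhds (show p < p + min κ (min η η1) by
    have : 0 < min κ (min η η1) := by positivity
    linarith))).exists
  change x k < _ at hk
  have l1 : min κ (min η η1) ≤ κ := min_le_left _ _
  have l2 : min κ (min η η1) ≤ η := (min_le_right _ _).trans (min_le_left _ _)
  have l3 : min κ (min η η1) ≤ η1 := (min_le_right _ _).trans (min_le_right _ _)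
  have hm := B.mem k
  have hkI := D.subI _ (B.ico k)
  have hkI' := D.subI _ (B.ico (k + 1))
  refine ⟨x (k + 1), x k, hm.1, hm.2, (B.mem' k).2, by linarith [hm.1],
    D.nice B hκr hoff k (by linarith), ?_⟩
  intro m hm1 a ha b hb hab hma hmb hsub
  have hlate : k * M < m := by
    by_contra hcon
    refine D.late B k a (hsub left_mem_uIcc) m hm1 (not_lt.1 hcon) ?_
    rw [hma]; exact hm
  obtain ⟨t, rfl⟩ := Nat.exists_eq_add_of_le hlate.le
  have hsh := hshort _ (S.mapsI (k * M) ha) _ (S.mapsI (k * M) hb) t (hab.shift ha hb)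
    (by
      rw [iter_add, iter_add, hma, hmb, abs_of_neg (by linarith [hm.2])]
      linarith [hm.1]) 0 (Nat.zero_le _)
  simp only [Function.iterate_zero, id] at hsh
  have hdist := ((D.chain B k).1.dist hkI' hkI (hsub left_mem_uIcc) (hsub right_mem_uIcc) (hWk k)).2
  have hkM : ∀ k, f^[k * M] (x (k + 1)) = x 1 ∧ f^[k * M] (x k) = x 0 := by
    intro k
    induction k with
    | zero => simp
    | succ k ih =>
      rw [show (k + 1) * M = M + k * M by ring, ← iter_add, ← iter_add, B.map, B.map]
      exact ih
  rw [(hkM k).1, (hkM k).2] at hdist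
  have h1 : |a - b| * |x 1 - x 0| ≤ (ε * |x (k+1) - x k|) * |x 1 - x 0| := by
    refine hdist.trans ?_
    calc _ ≤ E * (ε * |x 1 - x 0| / E * |x (k + 1) - x k|) := by gcongr
      _ = _ := by field_simp
  exact le_of_mul_le_mul_right h1 hV0

end

/-- If the critical orbits avoid some interval then some point of `I` is good relative to `I`. -/
lemma seed_locGood {Y : Set ℝ} (D : S.FD (Icc 0 1) Y) {u v : ℝ} (hu : 0 < u) (huv : u < v)
    (hv : v < 1) (hY : ∀ y ∈ Y, y ∉ Icc u v) : ∃ z ∈ Icc (0:ℝ) 1, S.LocGood (Icc 0 1) z := by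
  obtain ⟨δ0, hδ0, ⟨g0, hg0, hNU⟩, C2, hC2, hadm⟩ := exists_adm D
  obtain ⟨ρ, hρ, hthick⟩ := exists_thick (U := (Icc u v)ᶜ) D.hY (D.YX.trans D.subX)
    isClosed_Icc.isOpen_compl (fun y hy => hY y hy)
  obtain ⟨η0, hη0, hadm⟩ := hadm ρ hρ
  obtain ⟨p, r, θ, d0, M, hup, hpv, SD⟩ := S.exists_seed hu huv hv
  have hK := S.Kc_pos C2
  obtain ⟨α, β, hpα, hαβ, hβ, hl, hnice, hret⟩ := SD.exists_interval (ε := 1 / (2 * S.Kc C2))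
    (η := η0) (by positivity) hη0
  have hαI : α ∈ Icc (0:ℝ) 1 := ⟨by linarith, by linarith⟩
  have hβI : β ∈ Icc (0:ℝ) 1 := ⟨by linarith, by linarith⟩
  have habs : |α - β| = β - α := by rw [abs_of_neg (by linarith)]; ring
  have hA : S.Adm (Icc 0 1) δ0 C2 α β := by
    refine hadm α hαI β hβI (by rw [habs]; exact hl) fun t ht y hy => ?_
    by_contra hcon
    rw [uIcc_of_le hαβ.le] at ht
    refine hthick y hy t (by rw [abs_sub_comm]; linarith) ⟨by linarith [ht.1], by linarith [ht.2]⟩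
  have hNUI : ∀ t ∈ Icc (0:ℝ) 1, S.NU (Icc 0 1) δ0 t := fun t ht =>
    hNU t ⟨t, ht, by simpa using hg0⟩
  refine ⟨(α + β) / 2, ⟨by linarith, by linarith⟩, 1, one_pos, (β - α) / 2, by linarith,
    4 + S.Kc C2 / |α - β| / (1 - 1 / 2), ?_⟩
  intro x hx y hy n hTC _ hnx hny
  have hmem : ∀ t, |t - (α + β) / 2| < (β - α) / 2 → t ∈ uIcc α β := by
    intro t ht
    rw [abs_lt] at ht
    rw [uIcc_of_le hαβ.le]
    constructor <;> linarith
  have hc0 : 0 ≤ S.Kc C2 / |α - β| / (1 - 1 / 2) := by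
    have := abs_nonneg (α - β)
    exact div_nonneg (by positivity) (by norm_num)
  rcases lt_or_ge n 2 with hn | hn
  · calc _ ≤ ∑ j ∈ Finset.range n, (1:ℝ) := Finset.sum_le_sum fun i _ =>
          abs_sub_le_one (S.mapsI i hx) (S.mapsI i hy)
      _ ≤ _ := by
        rw [Finset.sum_const, Finset.card_range, nsmul_one]
        have : (n:ℝ) ≤ 2 := by exact_mod_cast hn.le
        linarith
  obtain ⟨k, rfl⟩ := Nat.exists_eq_add_of_le hn
  by_cases hxy : f^[2] x = f^[2] y
  · rw [Finset.sum_range_add]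
    simp only [← iter_add, hxy, sub_self, abs_zero, Finset.sum_const_zero, add_zero]
    calc _ ≤ ∑ j ∈ Finset.range 2, (1:ℝ) := Finset.sum_le_sum fun i _ =>
          abs_sub_le_one (S.mapsI i hx) (S.mapsI i hy)
      _ ≤ _ := by
        rw [Finset.sum_const, Finset.card_range, nsmul_one]
        push_cast
        linarith
  have hx2 := S.mapsI 2 hx
  have hy2 := S.mapsI 2 hy
  have hcore := core hA hC2 hαβ.ne hnice (S1 := 0) le_rfl (θ := 1 / 2) le_rfl (by norm_num) hx2 hy2
    (x := x) hx (n := k) (hTC.shift.NH hx2 hy2) hxy (by rw [iter_add]; exact hmem _ hnx)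
    (by rw [iter_add]; exact hmem _ hny) left_mem_uIcc (fun i _ => hNUI _ (S.mapsI i hx))
    (by
      intro s m hm hsm _ _ a ha b hb hab hma hmb _ hsub
      right; left
      have := hret m hm a ha b hb hab hma hmb hsub
      rwa [one_div, inv_mul_eq_div] at this)
  rw [Finset.sum_range_add]
  simp only [← iter_add]
  have h2 : ∑ j ∈ Finset.range 2, |f^[j] x - f^[j] y| ≤ 4 := by
    calc _ ≤ ∑ j ∈ Finset.range 2, (1:ℝ) := Finset.sum_le_sum fun i _ =>
          abs_sub_le_one (S.mapsI i hx) (S.mapsI i hy)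
      _ ≤ _ := by
        rw [Finset.sum_const, Finset.card_range, nsmul_one]
        norm_num
  have h3 := abs_sub_le_one (S.mapsI k hx2) (S.mapsI k hy2)
  nlinarith

end Sys

/-! ### All closed invariant sets are good -/

namespace Sys
variable {f : ℝ → ℝ} {S : Sys f}

/-- The closure of the strict forward orbits of the critical points in `X`. -/
def postCrit (S : Sys f) (X : Set ℝ) : Set ℝ := {y | ∃ c ∈ S.K, c ∈ X ∧ Rel f c y}

lemma isClosed_postCrit (S : Sys f) (X : Set ℝ) : IsClosed (S.postCrit X) := by
  have : S.postCrit X = ⋃ c ∈ {c | c ∈ S.K ∧ c ∈ X}, closure {y | ∃ m ≥ 1, y = f^[m] c} := by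
    ext y; simp [postCrit, Rel, and_assoc]
  rw [this]
  refine Set.Finite.isClosed_biUnion (S.K.finite_toSet.subset fun c hc => hc.1) fun _ _ =>
    isClosed_closure

lemma orbit_mem {X : Set ℝ} (hinv : ∀ x ∈ X, f x ∈ X) {x : ℝ} (hx : x ∈ X) (m : ℕ) :
    f^[m] x ∈ X := by
  induction m with
  | zero => exact hx
  | succ m ih => rw [Function.iterate_succ_apply']; exact hinv _ ih

lemma postCrit_sub {X : Set ℝ} (hX : IsClosed X) (hinv : ∀ x ∈ X, f x ∈ X) :
    S.postCrit X ⊆ X := by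
  rintro y ⟨c, _, hcX, hr⟩
  refine closure_minimal ?_ hX hr
  rintro _ ⟨m, _, rfl⟩
  exact orbit_mem hinv hcX m

lemma postCrit_inv {X : Set ℝ} : ∀ y ∈ S.postCrit X, f y ∈ S.postCrit X := by
  rintro y ⟨c, hc, hcX, hr⟩
  refine ⟨c, hc, hcX, map_mem_closure S.cont hr ?_⟩
  rintro _ ⟨m, hm, rfl⟩
  exact ⟨m + 1, by omega, by rw [Function.iterate_succ_apply']⟩

lemma mem_postCrit {X : Set ℝ} {c : ℝ} (hc : c ∈ S.K) (hcX : c ∈ X) {m : ℕ} (hm : m ≥ 1) :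
    f^[m] c ∈ S.postCrit X := ⟨c, hc, hcX, subset_closure ⟨m, hm, rfl⟩⟩

/-- An invariant set containing an interval is everything. -/
lemma full_of_interval (S : Sys f) {Z : Set ℝ} (hinv : ∀ x ∈ Z, f x ∈ Z) {a b : ℝ} (ha : 0 ≤ a)
    (hab : a < b) (hb : b ≤ 1) (h : Icc a b ⊆ Z) : Icc (0:ℝ) 1 ⊆ Z := by
  obtain ⟨n, hn⟩ := S.exact a b ha hab hb
  rw [← hn]
  rintro _ ⟨x, hx, rfl⟩
  exact orbit_mem hinv (h hx) n

/-- A proper closed invariant set misses an interval inside every given interval. -/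
lemma exists_free (S : Sys f) {Y : Set ℝ} (hY : IsClosed Y) (hinv : ∀ x ∈ Y, f x ∈ Y)
    (hne : ¬ Icc (0:ℝ) 1 ⊆ Y) {a b : ℝ} (ha : 0 ≤ a) (hab : a < b) (hb : b ≤ 1) :
    ∃ u v, a < u ∧ u < v ∧ v < b ∧ ∀ y ∈ Y, y ∉ Icc u v := by
  have : ¬ Icc (a + (b - a) / 3) (b - (b - a) / 3) ⊆ Y := fun h =>
    hne (S.full_of_interval hinv (by linarith) (by linarith) (by linarith) h)
  obtain ⟨t, ht, htY⟩ := Set.not_subset.1 this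
  obtain ⟨e, he, hball⟩ := Metric.isOpen_iff.1 hY.isOpen_compl t htY
  set e' := min (e / 2) ((b - a) / 6)
  have he' : 0 < e' := lt_min (by linarith) (by linarith)
  have h1 : e' ≤ e / 2 := min_le_left _ _
  have h2 : e' ≤ (b - a) / 6 := min_le_right _ _
  refine ⟨t - e', t + e', by linarith [ht.1], by linarith, by linarith [ht.2], fun y hy hyI => ?_⟩
  refine hball (a := y) ?_ hy
  rw [mem_ball, Real.dist_eq, abs_lt]
  constructor <;> linarith [hyI.1, hyI.2]

/-- The union of `Y` with the bad points is closed and invariant. Either it has a gap, and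
`gap_locGood` applies to a bad point bordering it, or it is all of `I`, which contradicts
`seed_locGood`. -/
lemma locGood_all {X Y : Set ℝ} (D : S.FD X Y) : ∀ z ∈ Icc (0:ℝ) 1, z ∉ Y → S.LocGood X z := by
  by_contra hcon
  push Not at hcon
  obtain ⟨z0, hz0, hz0Y, hbad⟩ := hcon
  set Xb := {z | z ∈ Icc (0:ℝ) 1 ∧ ¬ S.LocGood X z} with hXb
  have hXbc : IsClosed Xb := S.isClosed_bad X
  have hXbX : Xb ⊆ X := fun z hz => by
    by_contra h; exact hz.2 (locGood_of_notMem D.hX h)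
  set Z := Xb ∪ Y with hZ
  have hZc : IsClosed Z := hXbc.union D.hY
  have hYI : Y ⊆ Icc 0 1 := D.YX.trans D.subX
  have hinv : ∀ z ∈ Z, f z ∈ Z := by
    rintro z (hz | hz)
    · by_cases hzK : z ∈ S.K
      · exact Or.inr (D.crit z hzK (hXbX hz) 1 le_rfl)
      · exact Or.inl ⟨S.maps z, fun h => hz.2 (locGood_of_map D.subX D.invX hz.1 hzK h)⟩
    · exact Or.inr (D.invY z hz)
  have hYne : ¬ Icc (0:ℝ) 1 ⊆ Y := fun h => hz0Y (h hz0)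
  by_cases hfull : Icc (0:ℝ) 1 ⊆ Z
  · have hXbI : Icc (0:ℝ) 1 ⊆ Xb := by
      intro t ht
      by_contra htb
      obtain ⟨e, he, hball⟩ := Metric.isOpen_iff.1 hXbc.isOpen_compl t htb
      obtain ⟨a, b, ha, hab, hb, hh⟩ : ∃ a b, 0 ≤ a ∧ a < b ∧ b ≤ 1 ∧ Icc a b ⊆ ball t e := by
        rcases le_or_gt t (1/2) with h | h
        · refine ⟨t, t + min (e / 2) (1 / 2), ht.1, ?_, ?_, ?_⟩
          · have : 0 < min (e / 2) (1 / 2) := lt_min (by linarith) (by norm_num)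
            linarith
          · have := min_le_right (e / 2) (1 / 2 : ℝ); linarith
          · intro s hs
            have := min_le_left (e / 2) (1 / 2 : ℝ)
            rw [mem_ball, Real.dist_eq, abs_lt]; constructor <;> linarith [hs.1, hs.2]
        · refine ⟨t - min (e / 2) (1 / 2), t, ?_, ?_, ht.2, ?_⟩
          · have := min_le_right (e / 2) (1 / 2 : ℝ); linarith
          · have : 0 < min (e / 2) (1 / 2) := lt_min (by linarith) (by norm_num)
            linarith
          · intro s hs
            have := min_le_left (e / 2) (1 / 2 : ℝ)
            rw [mem_ball, Real.dist_eq, abs_lt]; constructor <;> linarith [hs.1, hs.2]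
      refine hYne (S.full_of_interval D.invY ha hab hb fun s hs => ?_)
      rcases hfull (show s ∈ Icc (0:ℝ) 1 from ⟨by linarith [hs.1], by linarith [hs.2]⟩) with h | h
      · exact absurd h (hball (hh hs))
      · exact h
    have hXI : X = Icc 0 1 := Subset.antisymm D.subX (hXbI.trans hXbX)
    obtain ⟨u, v, hu, huv, hv, hf⟩ := S.exists_free D.hY D.invY hYne le_rfl zero_lt_one le_rfl
    subst hXI
    obtain ⟨z, hz, hzg⟩ := seed_locGood D hu huv hv hf
    exact (hXbI hz).2 hzg
  · obtain ⟨ρ, hρ, hball⟩ := Metric.isOpen_iff.1 D.hY.isOpen_compl z0 hz0Y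
    -- a point outside `Z` close to `z0`
    obtain ⟨g, hg, hgZ, hgl⟩ : ∃ g ∈ Icc (0:ℝ) 1, g ∉ Z ∧ |g - z0| < ρ := by
      set e := min (ρ / 2) (1 / 2) with he
      have he0 : 0 < e := lt_min (by linarith) (by norm_num)
      have h1 : e ≤ ρ / 2 := min_le_left _ _
      have h2 : e ≤ 1 / 2 := min_le_right _ _
      rcases le_or_gt z0 (1/2) with h | h
      · obtain ⟨u, v, hu, huv, hv, hf⟩ := S.exists_free hZc hinv hfull (a := z0) (b := z0 + e) hz0.1
          (by linarith) (by linarith)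
        refine ⟨u, ⟨by linarith [hz0.1], by linarith⟩, fun h => hf u h ⟨le_rfl, huv.le⟩, ?_⟩
        rw [abs_lt]; constructor <;> linarith
      · obtain ⟨u, v, hu, huv, hv, hf⟩ := S.exists_free hZc hinv hfull (a := z0 - e) (b := z0)
          (by linarith) (by linarith) hz0.2
        refine ⟨u, ⟨by linarith [hz0.1], by linarith [hz0.2]⟩, fun h => hf u h ⟨le_rfl, huv.le⟩, ?_⟩
        rw [abs_lt]; constructor <;> linarith
    have hcpt : IsCompact (uIcc z0 g ∩ Z) := isCompact_uIcc.inter_right hZc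
    obtain ⟨z, ⟨hz1, hz2⟩, hmin⟩ := hcpt.exists_isMinOn ⟨z0, left_mem_uIcc, Or.inl ⟨hz0, hbad⟩⟩
      (f := fun z => |g - z|) (by fun_prop)
    have hzY : z ∉ Y := by
      refine fun h => hball (a := z) ?_ h
      rw [mem_ball, Real.dist_eq]
      have := abs_sub_le_of_mem_uIcc hz1 left_mem_uIcc
      rw [abs_sub_comm z0 g] at this
      linarith
    have hzI := uIcc_subI hz0 hg hz1
    have hgap : ∀ u ∈ uIcc z g, u ≠ z → u ∉ Z := by
      intro u hu huz huZ
      have h1 : |g - z| ≤ |g - u| := hmin ⟨uIcc_subset_uIcc hz1 right_mem_uIcc hu, huZ⟩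
      apply huz
      rw [mem_uIcc] at hu
      rcases hu with h | h
      · rw [abs_of_nonneg (by linarith), abs_of_nonneg (by linarith)] at h1; linarith
      · rw [abs_of_nonpos (by linarith), abs_of_nonpos (by linarith)] at h1; linarith
    have hLG : ∀ u ∈ uIcc z g, u ≠ z → S.LocGood X u := by
      intro u hu huz
      by_contra hb
      exact hgap u hu huz (Or.inl ⟨uIcc_subI hzI hg hu, hb⟩)
    have := gap_locGood D hinv hzI hg (by rintro rfl; exact hgZ hz2) hz2 hzY hgap hLG
    rcases hz2 with h | h
    · exact h.2 this
    · exact hzY h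

/-- Every closed invariant set is good. -/
theorem good (S : Sys f) : ∀ X : Set ℝ, IsClosed X → X ⊆ Icc 0 1 → (∀ x ∈ X, f x ∈ X) →
    S.GoodSet X := by
  classical
  suffices h : ∀ k, ∀ X : Set ℝ, IsClosed X → X ⊆ Icc 0 1 → (∀ x ∈ X, f x ∈ X) →
      (S.K.filter (· ∈ X)).card = k → S.GoodSet X from fun X h1 h2 h3 => h _ X h1 h2 h3 rfl
  intro k
  induction k using Nat.strong_induction_on with
  | _ k ih =>
  intro X hX hXI hinv hk
  have hYX : S.postCrit X ⊆ X := postCrit_sub hX hinv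
  have hYgood : S.GoodSet (S.postCrit X) := by
    rcases (S.K.filter (· ∈ X)).eq_empty_or_nonempty with he | hne
    · have hY : S.postCrit X = ∅ := by
        rw [Set.eq_empty_iff_forall_notMem]
        rintro y ⟨c, hc, hcX, _⟩
        have : c ∈ S.K.filter (· ∈ X) := Finset.mem_filter.2 ⟨hc, hcX⟩
        rw [he] at this; simp at this
      rw [hY]
      refine ⟨∅, isOpen_empty, le_rfl, 1, one_pos, 0, fun x _ y _ n h _ => ?_⟩
      exact absurd (h 0 (Nat.zero_le _)).1 (by simp)
    · refine ih _ ?_ _ (S.isClosed_postCrit X) (hYX.trans hXI) postCrit_inv rfl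
      rw [← hk]
      apply Finset.card_lt_card
      obtain ⟨c, hc, hmax⟩ := (S.K.filter (· ∈ X)).exists_max_image S.rank hne
      rw [Finset.ssubset_iff_of_subset]
      · refine ⟨c, hc, fun h => ?_⟩
        obtain ⟨c', hc', hc'X, hr⟩ := (Finset.mem_filter.1 h).2
        have h1 := hmax c' (Finset.mem_filter.2 ⟨hc', hc'X⟩)
        have h2 := rank_lt (Finset.mem_filter.1 hc).1 hr
        omega
      · intro t ht
        rw [Finset.mem_filter] at ht ⊢
        exact ⟨ht.1, hYX ht.2⟩
  have D : S.FD X (S.postCrit X) := ⟨hX, hXI, hinv, S.isClosed_postCrit X, hYX, postCrit_inv,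
    fun c hc hcX m hm => mem_postCrit hc hcX hm, hYgood⟩
  exact good_of_locGood D (locGood_all D)

/-- Thin chains ending in a short interval have uniformly bounded total relative length. -/
theorem sum_bound (S : Sys f) : ∃ τ > 0, ∃ B, ∀ x ∈ Icc (0:ℝ) 1, ∀ y ∈ Icc (0:ℝ) 1, ∀ n,
    (∀ j ≤ n, S.Thin (f^[j] x) (f^[j] y)) → |f^[n] x - f^[n] y| ≤ τ →
    ∑ j ∈ Finset.range (n + 1), S.w (f^[j] x) (f^[j] y) ≤ B := by
  obtain ⟨U, -, hU, τ, hτ, B, h⟩ := S.good (Icc 0 1) isClosed_Icc le_rfl fun x _ => S.maps x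
  exact ⟨τ, hτ, B, fun x hx y hy n hT hn => h x hx y hy n
    (fun j hj => ⟨hU (S.mapsI j hx), hU (S.mapsI j hy), hT j hj⟩) hn⟩

end Sys

/-! ### Lap counting -/

namespace Sys
variable {f : ℝ → ℝ} {S : Sys f}

/-- No critical point of `f^[n]` lies strictly between `a` and `b`. -/
def Lap (S : Sys f) (a b : ℝ) (n : ℕ) : Prop :=
  ∀ j < n, ∀ u ∈ uIcc a b, f^[j] u ∈ S.K → u = a ∨ u = b

lemma Lap.mono {a b : ℝ} {n m : ℕ} (h : S.Lap a b n) (hm : m ≤ n) : S.Lap a b m :=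
  fun j hj => h j (by omega)

lemma Lap.symm {a b : ℝ} {n : ℕ} (h : S.Lap a b n) : S.Lap b a n := by
  intro j hj u hu hK
  rw [uIcc_comm] at hu
  exact (h j hj u hu hK).symm

lemma Lap.inj1 {a b : ℝ} (h : S.Lap a b 1) (ha : a ∈ Icc (0:ℝ) 1) (hb : b ∈ Icc (0:ℝ) 1) :
    InjOn f (uIcc a b) := by
  rcases le_total a b with hab | hab
  · rw [uIcc_of_le hab]
    refine S.inj a b ha.1 hb.2 fun c hc hc' => ?_
    rcases h 0 one_pos c (by rw [uIcc_of_le hab]; exact Ioo_subset_Icc_self hc') hc with e | e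
    · exact absurd hc'.1 (by simp [e])
    · exact absurd hc'.2 (by simp [e])
  · rw [uIcc_of_ge hab]
    refine S.inj b a hb.1 ha.2 fun c hc hc' => ?_
    rcases h 0 one_pos c (by rw [uIcc_of_ge hab]; exact Ioo_subset_Icc_self hc') hc with e | e
    · exact absurd hc'.2 (by simp [e])
    · exact absurd hc'.1 (by simp [e])

lemma Lap.next {a b : ℝ} {n : ℕ} (h : S.Lap a b (n + 1))
    (hi : InjOn f^[n] (uIcc a b)) : S.Lap (f^[n] a) (f^[n] b) 1 := by
  intro j hj u hu hK
  obtain rfl : j = 0 := by omega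
  rw [← image_uIcc_of_inj (S.contIter n) hi] at hu
  obtain ⟨t, ht, rfl⟩ := hu
  rcases h n (by omega) t ht hK with rfl | rfl <;> simp

lemma Lap.inj {a b : ℝ} {n : ℕ} (h : S.Lap a b n) (ha : a ∈ Icc (0:ℝ) 1) (hb : b ∈ Icc (0:ℝ) 1) :
    InjOn f^[n] (uIcc a b) := by
  induction n with
  | zero => exact fun x _ y _ h => h
  | succ n ih =>
    have ih := ih (h.mono (by omega))
    rw [Function.iterate_succ']
    refine ((h.next ih).inj1 (S.mapsI n ha) (S.mapsI n hb)).comp ih ?_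
    rw [mapsTo_iff_image_subset, image_uIcc_of_inj (S.contIter n) ih]

/-- The points of `I` which are critical for `f^[n]`. -/
def E (S : Sys f) (n : ℕ) : Set ℝ := {y ∈ Icc (0:ℝ) 1 | ∃ k < n, f^[k] y ∈ S.K}

lemma finite_pre (S : Sys f) {X : Set ℝ} (hX : X.Finite) : {y ∈ Icc (0:ℝ) 1 | f y ∈ X}.Finite := by
  have h1 : ((Iio (S.K.card + 1)) ×ˢ X).Finite := (finite_Iio _).prod hX
  refine Finite.of_injOn (f := fun y => ((S.K.filter (· ≤ y)).card, f y)) ?_ ?_ h1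
  · intro y hy
    exact ⟨Nat.lt_succ_of_le (Finset.card_filter_le _ _), hy.2⟩
  · have key : ∀ y ∈ Icc (0:ℝ) 1, ∀ z ∈ Icc (0:ℝ) 1, y < z →
        (S.K.filter (· ≤ y)).card = (S.K.filter (· ≤ z)).card → f y ≠ f z := by
      intro y hy z hz hyz hc hf
      have hs : S.K.filter (· ≤ y) = S.K.filter (· ≤ z) := by
        refine Finset.eq_of_subset_of_card_le ?_ hc.ge
        intro t ht
        simp only [Finset.mem_filter] at ht ⊢
        exact ⟨ht.1, ht.2.trans hyz.le⟩
      have := S.inj y z hy.1 hz.2 (fun c hcK hc' => by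
        have : c ∈ S.K.filter (· ≤ z) := by simp [hcK, hc'.2.le]
        rw [← hs] at this
        simp only [Finset.mem_filter] at this
        exact absurd hc'.1 (not_lt.2 this.2))
      exact hyz.ne (this ⟨le_rfl, hyz.le⟩ ⟨hyz.le, le_rfl⟩ hf)
    intro y hy z hz h
    simp only [Prod.mk.injEq] at h
    rcases lt_trichotomy y z with h1 | h1 | h1
    · exact absurd h.2 (key y hy.1 z hz.1 h1 h.1)
    · exact h1
    · exact absurd h.2.symm (key z hz.1 y hy.1 h1 h.1.symm)

lemma E_succ (S : Sys f) (n : ℕ) : S.E (n + 1) = (S.K : Set ℝ) ∪ {y ∈ Icc (0:ℝ) 1 | f y ∈ S.E n} := by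
  ext y
  constructor
  · rintro ⟨hy, k, hk, h⟩
    cases k with
    | zero => exact Or.inl h
    | succ k => exact Or.inr ⟨hy, S.maps y, k, by omega, by simpa using h⟩
  · rintro (h | ⟨hy, -, k, hk, h⟩)
    · exact ⟨S.K_sub y h, 0, by omega, h⟩
    · exact ⟨hy, k + 1, by omega, by simpa using h⟩

lemma E_finite (S : Sys f) (n : ℕ) : (S.E n).Finite := by
  induction n with
  | zero => convert finite_empty; ext y; simp [E]
  | succ n ih => rw [E_succ]; exact S.K.finite_toSet.union (S.finite_pre ih)

/-- The number of critical points of `f^[n]` in `(0, x]`. -/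
def e (S : Sys f) (n : ℕ) (x : ℝ) : ℕ := (S.E n ∩ Ioc 0 x).ncard

/-- One more than the number of critical points of `f^[n]`. -/
def l (S : Sys f) (n : ℕ) : ℕ := (S.E n).ncard + 1

lemma e_mono (S : Sys f) (n : ℕ) {x y : ℝ} (h : x ≤ y) : S.e n x ≤ S.e n y :=
  ncard_le_ncard (inter_subset_inter_right _ (Ioc_subset_Ioc_right h))
    ((S.E_finite n).subset inter_subset_left)

lemma e_le (S : Sys f) (n : ℕ) (x : ℝ) : S.e n x ≤ S.l n :=
  (ncard_le_ncard inter_subset_left (S.E_finite n)).trans (Nat.le_succ _)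

lemma e_zero (S : Sys f) (n : ℕ) : S.e n 0 = 0 := by simp [e]

lemma l_le (S : Sys f) (n : ℕ) : S.l n ≤ S.e n 1 + 2 := by
  have : S.E n ⊆ (S.E n ∩ Ioc 0 1) ∪ {0} := by
    intro y hy
    rcases hy.1.1.eq_or_lt with h | h
    · right; exact h.symm
    · left; exact ⟨hy, h, hy.1.2⟩
  have h2 := ncard_le_ncard this (((S.E_finite n).subset inter_subset_left).union (finite_singleton 0))
  have h3 := ncard_union_le (S.E n ∩ Ioc 0 1) {(0:ℝ)}
  rw [ncard_singleton] at h3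
  unfold l e; omega

lemma e_sub (S : Sys f) (n : ℕ) {x y : ℝ} (hx : 0 ≤ x) (h : x ≤ y) :
    S.e n x + (S.E n ∩ Ioc x y).ncard = S.e n y := by
  unfold e
  rw [← ncard_union_eq ?_ ((S.E_finite n).subset inter_subset_left)
    ((S.E_finite n).subset inter_subset_left), ← inter_union_distrib_left, Ioc_union_Ioc_eq_Ioc hx h]
  refine disjoint_left.2 fun t ht ht' => ?_
  exact absurd ht.2.2 (not_le.2 ht'.2.1)

/-- Lap numbers are submultiplicative. -/
lemma l_submul (S : Sys f) (m n : ℕ) : S.l (m + n) ≤ S.l m * S.l n := by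
  have h1 : (S.E (m + n) \ S.E m).ncard ≤ (Iio (S.l m) ×ˢ S.E n).ncard := by
    refine ncard_le_ncard_of_injOn (fun y => ((S.E m ∩ Iic y).ncard, f^[m] y)) ?_ ?_
      ((finite_Iio _).prod (S.E_finite n))
    · rintro y ⟨⟨hy, k, hk, h⟩, h'⟩
      refine ⟨Nat.lt_succ_of_le (ncard_le_ncard inter_subset_left (S.E_finite m)), S.mapsI m hy, ?_⟩
      rcases lt_or_ge k m with hkm | hkm
      · exact absurd ⟨hy, k, hkm, h⟩ h'
      · refine ⟨k - m, by omega, ?_⟩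
        rw [iter_add]
        rwa [show m + (k - m) = k by omega]
    · have key : ∀ y ∈ Icc (0:ℝ) 1, ∀ z ∈ Icc (0:ℝ) 1, y ∉ S.E m → y < z →
        (S.E m ∩ Iic y).ncard = (S.E m ∩ Iic z).ncard → f^[m] y ≠ f^[m] z := by
        intro y hy z hz hyE hyz hc hf
        have hs : S.E m ∩ Iic y = S.E m ∩ Iic z :=
          eq_of_subset_of_ncard_le (inter_subset_inter_right _ (Iic_subset_Iic.2 hyz.le)) hc.ge
            ((S.E_finite m).subset inter_subset_left)
        have hN : S.Lap y z m := by
          intro j hj u hu hK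
          have huI := uIcc_subI hy hz hu
          rw [uIcc_of_le hyz.le] at hu
          have h2 : u ∈ S.E m ∩ Iic z := ⟨⟨huI, j, hj, hK⟩, hu.2⟩
          rw [← hs] at h2
          exact Or.inl (le_antisymm h2.2 hu.1)
        exact hyz.ne (hN.inj hy hz left_mem_uIcc right_mem_uIcc hf)
      intro y hy z hz h
      simp only [Prod.mk.injEq] at h
      rcases lt_trichotomy y z with h1 | h1 | h1
      · exact absurd h.2 (key y hy.1.1 z hz.1.1 hy.2 h1 h.1)
      · exact h1
      · exact absurd h.2.symm (key z hz.1.1 y hy.1.1 hz.2 h1 h.1.symm)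
  rw [ncard_prod, ncard_Iio_nat] at h1
  have h2 := ncard_le_ncard_sdiff_add_ncard (S.E (m + n)) (S.E m) (S.E_finite m)
  have h3 : S.l (m + n) = (S.E (m+n)).ncard + 1 := rfl
  have h4 : S.l m = (S.E m).ncard + 1 := rfl
  have h5 : S.l n = (S.E n).ncard + 1 := rfl
  rw [h3, h5]
  calc (S.E (m+n)).ncard + 1 ≤ S.l m * (S.E n).ncard + S.l m := by omega
    _ = _ := by ring

/-- On a lap of `f`, critical points of `f^[n+1]` correspond to critical points of `f^[n]` in the
image, up to the endpoints. -/
lemma e_step (S : Sys f) {a b : ℝ} (ha : a ∈ Icc (0:ℝ) 1) (hb : b ∈ Icc (0:ℝ) 1) (hab : a < b)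
    (h : S.Lap a b 1) (n : ℕ) :
    abs (((S.e (n+1) b : ℝ) - S.e (n+1) a) - abs ((S.e n (f b) : ℝ) - S.e n (f a))) ≤ 2 := by
  have hi := h.inj1 ha hb
  have him := image_uIcc_of_inj S.cont hi
  rw [uIcc_of_le hab.le] at hi him
  set X := S.E (n+1) ∩ Ioc a b
  have hXf : X.Finite := (S.E_finite _).subset inter_subset_left
  -- points strictly inside `(a, b)`
  set Y := {y ∈ Ioo a b | f y ∈ S.E n}
  have hYX : Y ⊆ X := by
    intro y hy
    refine ⟨?_, Ioo_subset_Ioc_self hy.1⟩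
    rw [E_succ]
    exact Or.inr ⟨⟨ha.1.trans hy.1.1.le, hy.1.2.le.trans hb.2⟩, hy.2⟩
  have hXY : X ⊆ Y ∪ {b} := by
    rintro y ⟨hy, hy'⟩
    rcases hy'.2.eq_or_lt with e | hlt
    · exact Or.inr e
    left
    rw [E_succ] at hy
    rcases hy with hy | hy
    · rcases h 0 one_pos y (by rw [uIcc_of_le hab.le]; exact Ioc_subset_Icc_self hy') hy with e | e
      · exact absurd hy'.1 (by simp [e])
      · exact absurd hlt (by simp [e])
    · exact ⟨⟨hy'.1, hlt⟩, hy.2⟩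
  have c1 := ncard_le_ncard hYX hXf
  have c2 := ncard_le_ncard hXY ((hXf.subset hYX).union (finite_singleton b))
  have c3 := ncard_union_le Y {b}
  rw [ncard_singleton] at c3
  have key : ∀ p q, p ∈ Icc (0:ℝ) 1 → p ≤ q → uIcc (f a) (f b) = Icc p q →
      (f a = p ∧ f b = q ∨ f a = q ∧ f b = p) →
      |((S.e (n+1) b : ℝ) - S.e (n+1) a) - ((S.e n q : ℝ) - S.e n p)| ≤ 2 := by
    intro p q hp hpq hu hor
    set Z := S.E n ∩ Ioc p q
    have hZf : Z.Finite := (S.E_finite _).subset inter_subset_left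
    have hY : Y.ncard = (f '' Y).ncard :=
      (InjOn.ncard_image (hi.mono fun y hy => Ioo_subset_Icc_self hy.1)).symm
    have hYZ : f '' Y ⊆ Z := by
      rintro _ ⟨y, hy, rfl⟩
      refine ⟨hy.2, ?_⟩
      have h1 : f y ∈ Icc p q := by rw [← hu, ← him]; exact ⟨y, Ioo_subset_Icc_self hy.1, rfl⟩
      refine ⟨lt_of_le_of_ne h1.1 fun e => ?_, h1.2⟩
      rcases hor with ⟨e1, e2⟩ | ⟨e1, e2⟩
      · exact hy.1.1.ne (hi ⟨le_rfl, hab.le⟩ (Ioo_subset_Icc_self hy.1) (e1.trans e))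
      · exact hy.1.2.ne' (hi ⟨hab.le, le_rfl⟩ (Ioo_subset_Icc_self hy.1) (e2.trans e))
    have hZY : Z ⊆ f '' Y ∪ {q} := by
      rintro z ⟨hz, hz'⟩
      rcases hz'.2.eq_or_lt with e | hlt
      · exact Or.inr e
      left
      have h1 : z ∈ f '' Icc a b := by rw [him, hu]; exact Ioc_subset_Icc_self hz'
      obtain ⟨y, hy, rfl⟩ := h1
      refine ⟨y, ⟨⟨lt_of_le_of_ne hy.1 ?_, lt_of_le_of_ne hy.2 ?_⟩, hz⟩, rfl⟩
      · rintro rfl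
        rcases hor with ⟨e1, e2⟩ | ⟨e1, e2⟩
        · exact absurd hz'.1 (by simp [e1])
        · exact absurd hlt (by simp [e1])
      · rintro rfl
        rcases hor with ⟨e1, e2⟩ | ⟨e1, e2⟩
        · exact absurd hlt (by simp [e2])
        · exact absurd hz'.1 (by simp [e2])
    have d1 := ncard_le_ncard hYZ hZf
    have d2 := ncard_le_ncard hZY ((hZf.subset hYZ).union (finite_singleton q))
    have d3 := ncard_union_le (f '' Y) {q}
    rw [ncard_singleton] at d3
    have e1 := S.e_sub (n+1) ha.1 hab.le
    have e2 := S.e_sub n hp.1 hpq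
    have a1 : (S.e (n+1) b : ℝ) - S.e (n+1) a = X.ncard := by rw [← e1]; push_cast; ring
    have a2 : (S.e n q : ℝ) - S.e n p = Z.ncard := by rw [← e2]; push_cast; ring
    rw [a1, a2, abs_le]
    have b1 : X.ncard ≤ Z.ncard + 2 := by omega
    have b2 : Z.ncard ≤ X.ncard + 2 := by omega
    have b1' : (X.ncard : ℝ) ≤ Z.ncard + 2 := by exact_mod_cast b1
    have b2' : (Z.ncard : ℝ) ≤ X.ncard + 2 := by exact_mod_cast b2
    constructor <;> linarith
  rcases le_total (f a) (f b) with hl | hl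
  · have m := S.e_mono n hl
    rw [abs_of_nonneg (a := (S.e n (f b) : ℝ) - S.e n (f a)) (by rw [sub_nonneg]; exact_mod_cast m)]
    exact key _ _ (S.maps a) hl (uIcc_of_le hl) (Or.inl ⟨rfl, rfl⟩)
  · have m := S.e_mono n hl
    rw [abs_sub_comm, abs_sub_comm (S.e n (f b) : ℝ),
      abs_of_nonneg (a := (S.e n (f a) : ℝ) - S.e n (f b)) (by rw [sub_nonneg]; exact_mod_cast m),
      abs_sub_comm]
    exact key _ _ (S.maps b) hl (uIcc_of_ge hl) (Or.inr ⟨rfl, rfl⟩)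

end Sys

/-! ### Growth rate and generating functions -/

namespace Sys
variable {f : ℝ → ℝ} {S : Sys f}

lemma l_pos (S : Sys f) (n : ℕ) : (0:ℝ) < S.l n := by unfold l; positivity

lemma subadd (S : Sys f) : Subadditive fun n => Real.log (S.l n) := by
  intro m n
  rw [← Real.log_mul (S.l_pos m).ne' (S.l_pos n).ne']
  refine Real.log_le_log (S.l_pos _) ?_
  exact_mod_cast S.l_submul m n

lemma l_bdd (S : Sys f) : BddBelow (range fun n : ℕ => Real.log (S.l n) / n) := by
  refine ⟨0, ?_⟩
  rintro _ ⟨n, rfl⟩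
  refine div_nonneg (Real.log_nonneg ?_) (by positivity)
  unfold l; push_cast; linarith [Nat.cast_nonneg (α := ℝ) (S.E n).ncard]

/-- Lap numbers grow exponentially: there are two disjoint intervals each covering `I`. -/
lemma growth (S : Sys f) : ∃ N, 1 ≤ N ∧ ∀ k, 2 ^ k ≤ S.l (N * k + 1) := by
  obtain ⟨N, hN⟩ := S.T2 (ε := 1/3) (by norm_num)
  obtain ⟨c, hc⟩ := S.K_ne
  refine ⟨N + 1, by omega, fun k => ?_⟩
  have key : ∀ k, ∀ y ∈ Icc (0:ℝ) 1, ∃ A : Finset ℝ, A.card = 2 ^ k ∧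
      ∀ x ∈ A, x ∈ Icc (0:ℝ) 1 ∧ f^[(N+1) * k] x = y := by
    intro k
    induction k with
    | zero => exact fun y hy => ⟨{y}, by simp, by simpa using hy⟩
    | succ k ih =>
      intro y hy
      obtain ⟨u, hu, hu'⟩ := hN 0 (by simp) (1/3) ⟨by norm_num, by norm_num⟩ (by norm_num) (N+1) (by omega) y hy
      obtain ⟨v, hv, hv'⟩ := hN (2/3) ⟨by norm_num, by norm_num⟩ 1 (by simp) (by norm_num) (N+1) (by omega) y hy
      rw [uIcc_of_le (by norm_num)] at hu hv
      obtain ⟨A, hA, hA'⟩ := ih u ⟨hu.1, by linarith [hu.2]⟩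
      obtain ⟨B, hB, hB'⟩ := ih v ⟨by linarith [hv.1], hv.2⟩
      refine ⟨A ∪ B, ?_, ?_⟩
      · rw [Finset.card_union_of_disjoint, hA, hB]; · ring
        refine Finset.disjoint_left.2 fun x hx hx' => ?_
        have := (hA' x hx).2.symm.trans (hB' x hx').2
        linarith [hu.2, hv.1]
      · intro x hx
        rcases Finset.mem_union.1 hx with hx | hx
        · refine ⟨(hA' x hx).1, ?_⟩
          rw [mul_add, mul_one, ← iter_add, (hA' x hx).2, hu']
        · refine ⟨(hB' x hx).1, ?_⟩
          rw [mul_add, mul_one, ← iter_add, (hB' x hx).2, hv']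
  obtain ⟨A, hA, hA'⟩ := key k c (S.K_sub c hc)
  have : (A : Set ℝ) ⊆ S.E ((N+1) * k + 1) := fun x hx =>
    ⟨(hA' x hx).1, _, Nat.lt_succ_self _, by rw [(hA' x hx).2]; exact hc⟩
  have h2 := ncard_le_ncard this (S.E_finite _)
  rw [ncard_coe_finset, hA] at h2
  unfold l; omega

/-- The growth rate of lap numbers, from Fekete's lemma. -/
lemma exists_rate (S : Sys f) : ∃ s : ℝ, 1 < s ∧ (∀ n, s ^ n ≤ S.l n) ∧
    ∀ t : ℝ, 0 < t → t * s < 1 → Summable fun n => t ^ n * (S.l n : ℝ) := by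
  set L := S.subadd.lim with hL
  have hlim := S.subadd.tendsto_lim S.l_bdd
  have hle : ∀ n, 1 ≤ n → n * L ≤ Real.log (S.l n) := by
    intro n hn
    have := S.subadd.lim_le_div S.l_bdd (n := n) (by omega)
    rwa [le_div_iff₀ (by positivity), mul_comm] at this
  have hLpos : 0 < L := by
    obtain ⟨N, hN1, hN⟩ := S.growth
    have hsub : Tendsto (fun k : ℕ => N * k + 1) atTop atTop :=
      tendsto_atTop_mono (fun k => show k ≤ N * k + 1 by nlinarith) tendsto_id
    have h1 := hlim.comp hsub
    have h2 : Real.log 2 / (N + 1) ≤ L := by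
      refine ge_of_tendsto h1 ?_
      filter_upwards [eventually_ge_atTop 1] with k hk
      have h3 : k * Real.log 2 ≤ Real.log (S.l (N * k + 1)) := by
        rw [← Real.log_pow]
        exact Real.log_le_log (by positivity) (by exact_mod_cast hN k)
      have hk' : (1:ℝ) ≤ k := by exact_mod_cast hk
      simp only [Function.comp_apply]
      rw [div_le_div_iff₀ (by positivity) (by positivity)]
      push_cast
      have hl2 := Real.log_pos (x := 2) (by norm_num)
      have : Real.log 2 * (N * k + 1) ≤ Real.log 2 * (k * (N + 1)) := by gcongr; linarith
      nlinarith [Nat.cast_nonneg (α := ℝ) N]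
    exact lt_of_lt_of_le (div_pos (Real.log_pos (by norm_num)) (by positivity)) h2
  refine ⟨Real.exp L, Real.one_lt_exp_iff.2 hLpos, fun n => ?_, fun t ht hts => ?_⟩
  · rcases Nat.eq_zero_or_pos n with rfl | hn
    · simp [l]
    · rw [← Real.exp_nat_mul]
      calc _ ≤ Real.exp (Real.log (S.l n)) := Real.exp_le_exp.2 (hle n hn)
        _ = _ := Real.exp_log (S.l_pos n)
  · have hlt : Real.log t + L < 0 := by
      have := Real.log_neg (by positivity) hts
      rwa [Real.log_mul ht.ne' (Real.exp_pos _).ne', Real.log_exp] at this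
    set δ := -(Real.log t + L) / 2 with hδ
    have hδ0 : 0 < δ := by rw [hδ]; linarith
    have hev := hlim.eventually_lt_const (show L < L + δ by linarith)
    refine Summable.of_norm_bounded_eventually_nat (g := fun n => (Real.exp (-δ)) ^ n)
      (summable_geometric_of_lt_one (Real.exp_pos _).le (by rw [Real.exp_lt_one_iff]; linarith)) ?_
    filter_upwards [hev, eventually_ge_atTop 1] with n hn hn1
    have hnp : (0:ℝ) < n := by exact_mod_cast hn1
    rw [div_lt_iff₀ hnp] at hn
    rw [Real.norm_of_nonneg (by have := S.l_pos n; positivity), ← Real.exp_nat_mul,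
      ← Real.exp_log (S.l_pos n), ← Real.exp_log ht, ← Real.exp_nat_mul, ← Real.exp_add]
    apply Real.exp_le_exp.2
    have : Real.log t = -2 * δ - L := by rw [hδ]; ring
    rw [this]; nlinarith

/-- The generating function of the counting functions `e`. -/
def A (S : Sys f) (t x : ℝ) : ℝ := ∑' n, t ^ n * (S.e n x : ℝ)

lemma A_summable {t : ℝ} (ht : 0 ≤ t) (hs : Summable fun n => t ^ n * (S.l n : ℝ)) (x : ℝ) :
    Summable fun n => t ^ n * (S.e n x : ℝ) :=
  Summable.of_nonneg_of_le (fun n => by positivity)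
    (fun n => by gcongr; exact_mod_cast S.e_le n x) hs

lemma A_mono {t : ℝ} (ht : 0 ≤ t) (hs : Summable fun n => t ^ n * (S.l n : ℝ)) {x y : ℝ}
    (h : x ≤ y) : S.A t x ≤ S.A t y :=
  (A_summable ht hs x).tsum_le_tsum (fun n => by gcongr; exact_mod_cast S.e_mono n h)
    (A_summable ht hs y)

/-- Up to a bounded error, increments of the generating function over a lap scale by `t`. -/
lemma A_step {t : ℝ} (ht : 0 ≤ t) (ht1 : t < 1) (hs : Summable fun n => t ^ n * (S.l n : ℝ))
    {a b : ℝ} (ha : a ∈ Icc (0:ℝ) 1) (hb : b ∈ Icc (0:ℝ) 1) (hab : a < b) (h : S.Lap a b 1) :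
    abs ((S.A t b - S.A t a) - t * abs (S.A t (f b) - S.A t (f a))) ≤ 2 / (1 - t) := by
  have hsh : ∀ x, HasSum (fun n => t ^ (n+1) * (S.e (n+1) x : ℝ)) (S.A t x) := by
    intro x
    have := (hasSum_nat_add_iff' 1).2 (A_summable ht hs x).hasSum
    have h0 : S.e 0 x = 0 := by simp [e, E]
    simpa [h0, A] using this
  have h1 := (hsh b).sub (hsh a)
  have h2 : HasSum (fun n => t ^ n * abs ((S.e n (f b) : ℝ) - S.e n (f a)))
      (abs (S.A t (f b) - S.A t (f a))) := by
    rcases le_total (f a) (f b) with hl | hl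
    · rw [abs_of_nonneg (sub_nonneg.2 (A_mono ht hs hl))]
      have hE : (fun n => t ^ n * abs ((S.e n (f b) : ℝ) - S.e n (f a))) =
          fun n => t ^ n * (S.e n (f b) : ℝ) - t ^ n * (S.e n (f a) : ℝ) := by
        funext n
        have : (S.e n (f a) : ℝ) ≤ S.e n (f b) := by exact_mod_cast S.e_mono n hl
        rw [abs_of_nonneg (sub_nonneg.2 this)]; ring
      rw [hE]
      exact (A_summable ht hs (f b)).hasSum.sub (A_summable ht hs (f a)).hasSum
    · rw [abs_of_nonpos (sub_nonpos.2 (A_mono ht hs hl)), neg_sub]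
      have hE : (fun n => t ^ n * abs ((S.e n (f b) : ℝ) - S.e n (f a))) =
          fun n => t ^ n * (S.e n (f a) : ℝ) - t ^ n * (S.e n (f b) : ℝ) := by
        funext n
        have : (S.e n (f b) : ℝ) ≤ S.e n (f a) := by exact_mod_cast S.e_mono n hl
        rw [abs_of_nonpos (sub_nonpos.2 this)]; ring
      rw [hE]
      exact (A_summable ht hs (f a)).hasSum.sub (A_summable ht hs (f b)).hasSum
  have h3 := h1.sub (h2.mul_left t)
  have h4 := (hasSum_geometric_of_lt_one ht ht1).mul_left 2
  rw [← h3.tsum_eq, ← Real.norm_eq_abs]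
  refine tsum_of_norm_bounded (by simpa [div_eq_mul_inv] using h4) fun n => ?_
  rw [Real.norm_eq_abs]
  have h5 := S.e_step ha hb hab h n
  rw [show t ^ (n+1) * (S.e (n+1) b : ℝ) - t ^ (n+1) * (S.e (n+1) a : ℝ) -
    t * (t ^ n * abs ((S.e n (f b) : ℝ) - S.e n (f a))) = t ^ (n+1) * (((S.e (n+1) b : ℝ) - S.e (n+1) a) - abs ((S.e n (f b) : ℝ) - S.e n (f a))) by ring,
    abs_mul, abs_of_nonneg (by positivity), pow_succ]
  calc _ ≤ t ^ n * 1 * 2 := by gcongr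
    _ = _ := by ring

end Sys

/-! ### The constant slope coordinate -/

namespace Sys
variable {f : ℝ → ℝ} {S : Sys f}

/-- `h` is an increasing homeomorphism of `I` that conjugates `f` to a map of constant slope `s`:
every lap is stretched by the factor `s` when lengths are measured through `h`. -/
structure CS (S : Sys f) (s : ℝ) (h : ℝ → ℝ) : Prop where
  one_lt : 1 < s
  mono : StrictMonoOn h (Icc 0 1)
  cont : ContinuousOn h (Icc 0 1)
  h0 : h 0 = 0
  h1 : h 1 = 1
  scale : ∀ a ∈ Icc (0:ℝ) 1, ∀ b ∈ Icc (0:ℝ) 1, S.Lap a b 1 → |h (f a) - h (f b)| = s * |h a - h b|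

lemma scale_iter {s : ℝ} {h : ℝ → ℝ}
    (hsc : ∀ a ∈ Icc (0:ℝ) 1, ∀ b ∈ Icc (0:ℝ) 1, S.Lap a b 1 → |h (f a) - h (f b)| = s * |h a - h b|)
    {a b : ℝ} {n : ℕ} (ha : a ∈ Icc (0:ℝ) 1) (hb : b ∈ Icc (0:ℝ) 1) (hl : S.Lap a b n) :
    |h (f^[n] a) - h (f^[n] b)| = s ^ n * |h a - h b| := by
  induction n with
  | zero => simp
  | succ n ih =>
    have h1 := hl.mono (Nat.le_succ n)
    rw [Function.iterate_succ_apply', Function.iterate_succ_apply',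
      hsc _ (S.mapsI n ha) _ (S.mapsI n hb) (hl.next (h1.inj ha hb)), ih h1]
    ring

/-- A weak form of `CS`: monotone, not yet known to be continuous or strictly monotone. -/
lemma exists_weak (S : Sys f) : ∃ s : ℝ, 1 < s ∧ ∃ h : ℝ → ℝ, Monotone h ∧ h 0 = 0 ∧ h 1 = 1 ∧
    (∀ a ∈ Icc (0:ℝ) 1, ∀ b ∈ Icc (0:ℝ) 1, S.Lap a b 1 → |h (f a) - h (f b)| = s * |h a - h b|) := by
  obtain ⟨s, hs1, hsl, hsum⟩ := S.exists_rate
  refine ⟨s, hs1, ?_⟩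
  have hs0 : 0 < s := by linarith
  set t : ℕ → ℝ := fun k => (1 - 1 / ((k:ℝ) + 2)) / s with ht
  have hk2 : ∀ k : ℕ, 1 / ((k:ℝ) + 2) ≤ 1 / 2 := fun k => by
    apply one_div_le_one_div_of_le (by norm_num); linarith [Nat.cast_nonneg (α := ℝ) k]
  have ht0 : ∀ k, 0 < t k := fun k => div_pos (by linarith [hk2 k]) hs0
  have hts : ∀ k, t k * s = 1 - 1 / ((k:ℝ) + 2) := fun k => by simp only [ht]; field_simp
  have hts1 : ∀ k, t k * s < 1 := fun k => by
    rw [hts]; have : 0 < 1 / ((k:ℝ) + 2) := by positivity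
    linarith
  have htle : ∀ k, t k ≤ 1 / s := fun k => by rw [le_div_iff₀ hs0]; exact (hts1 k).le
  have hs1' : 1 / s < 1 := by rw [div_lt_one hs0]; exact hs1
  have htlim : Tendsto t atTop (nhds (1 / s)) := by
    have h1 : Tendsto (fun k : ℕ => (1 - 1 / ((k:ℝ) + 2)) / s) atTop (nhds ((1 - 0) / s)) := by
      refine Tendsto.div_const (tendsto_const_nhds.sub ?_) s
      have := (tendsto_add_atTop_iff_nat 2).2 (tendsto_one_div_atTop_nhds_zero_nat (𝕜 := ℝ))
      simpa using this
    rwa [sub_zero] at h1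
  set F : ℕ → ℝ := fun k => ∑' n, t k ^ n * (S.l n : ℝ) with hF
  have hFS := fun k => hsum (t k) (ht0 k) (hts1 k)
  have hFge : ∀ k : ℕ, (k:ℝ) + 2 ≤ F k := by
    intro k
    have h1 := (hasSum_geometric_of_lt_one (by have := ht0 k; positivity) (hts1 k))
    have h2 : (1 - t k * s)⁻¹ = (k:ℝ) + 2 := by rw [hts]; simp
    rw [h2] at h1
    refine hasSum_le (fun n => ?_) h1 (hFS k).hasSum
    rw [mul_pow]
    have := ht0 k
    exact mul_le_mul_of_nonneg_left (hsl n) (by positivity)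
  have hFpos : ∀ k, 0 < F k := fun k => lt_of_lt_of_le (by positivity) (hFge k)
  have hFinv : ∀ C : ℝ, Tendsto (fun k => C / F k) atTop (nhds 0) := by
    intro C
    refine Tendsto.const_div_atTop (tendsto_atTop_mono hFge ?_) C
    exact tendsto_atTop_add_const_right _ _ tendsto_natCast_atTop_atTop
  set G : ℕ → ℝ → ℝ := fun k x => S.A (t k) x / F k with hG
  have hGmono : ∀ k, Monotone (G k) := fun k x y hxy =>
    div_le_div_of_nonneg_right (A_mono (ht0 k).le (hFS k) hxy) (hFpos k).le
  have hG0 : ∀ k x, 0 ≤ G k x := fun k x =>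
    div_nonneg (tsum_nonneg fun n => by have := ht0 k; positivity) (hFpos k).le
  have hGle : ∀ k x, G k x ≤ 1 := fun k x => by
    rw [hG]; simp only; rw [div_le_one (hFpos k)]
    exact (A_summable (ht0 k).le (hFS k) x).tsum_le_tsum
      (fun n => by have := ht0 k; gcongr; exact_mod_cast S.e_le n x) (hFS k)
  -- pointwise limits along an ultrafilter
  have hlim : ∀ x, ∃ y ∈ Icc (0:ℝ) 1, Tendsto (fun k => G k x) (hyperfilter ℕ : Filter ℕ) (nhds y) := by
    intro x
    obtain ⟨y, hy, h⟩ := isCompact_Icc.ultrafilter_le_nhds ((hyperfilter ℕ).map fun k => G k x)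
      (s := Icc (0:ℝ) 1) (by
        rw [Ultrafilter.coe_map, le_principal_iff, mem_map]
        exact univ_mem' fun k => ⟨hG0 k x, hGle k x⟩)
    exact ⟨y, hy, h⟩
  choose h hhI hh using hlim
  have hle : (hyperfilter ℕ : Filter ℕ) ≤ atTop := Nat.hyperfilter_le_atTop
  refine ⟨h, fun x y hxy => le_of_tendsto_of_tendsto' (hh x) (hh y) fun k => hGmono k hxy, ?_, ?_, ?_⟩
  · refine tendsto_nhds_unique (hh 0) ?_
    have : ∀ k, G k 0 = 0 := fun k => by simp [hG, A, e_zero]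
    simp [this]
  · have h1 : Tendsto (fun k => G k 1) atTop (nhds 1) := by
      have h2 := (tendsto_const_nhds (x := (1:ℝ)) (f := atTop)).sub (hFinv (2 * (1 - 1/s)⁻¹))
      rw [sub_zero] at h2
      refine tendsto_of_tendsto_of_tendsto_of_le_of_le h2 tendsto_const_nhds (fun k => ?_)
        (fun k => hGle k 1)
      simp only [hG]
      rw [sub_le_iff_le_add, ← add_div, le_div_iff₀ (hFpos k), one_mul]
      have tk1 : t k < 1 := (htle k).trans_lt hs1'
      have h3 := (A_summable (ht0 k).le (hFS k) 1).hasSum.add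
        ((hasSum_geometric_of_lt_one (ht0 k).le tk1).mul_left 2)
      have h4 : F k ≤ S.A (t k) 1 + 2 * (1 - t k)⁻¹ := by
        refine hasSum_le (fun n => ?_) (hFS k).hasSum h3
        have h5 : (S.l n : ℝ) ≤ S.e n 1 + 2 := by exact_mod_cast S.l_le n
        have := pow_nonneg (ht0 k).le n
        nlinarith
      have h6 : (1 - t k)⁻¹ ≤ (1 - 1/s)⁻¹ := by
        apply inv_anti₀ (by linarith); linarith [htle k]
      linarith
    exact tendsto_nhds_unique (hh 1) (h1.mono_left hle)
  · have key : ∀ a ∈ Icc (0:ℝ) 1, ∀ b ∈ Icc (0:ℝ) 1, a < b → S.Lap a b 1 →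
        |h (f b) - h (f a)| = s * (h b - h a) := by
      intro a ha b hb hab hl
      have h1 : Tendsto (fun k => (G k b - G k a) - t k * |G k (f b) - G k (f a)|)
          (hyperfilter ℕ : Filter ℕ) (nhds ((h b - h a) - 1 / s * |h (f b) - h (f a)|)) :=
        ((hh b).sub (hh a)).sub ((htlim.mono_left hle).mul ((hh _).sub (hh _)).abs)
      have h2 : Tendsto (fun k => (G k b - G k a) - t k * |G k (f b) - G k (f a)|) atTop (nhds 0) := by
        refine squeeze_zero_norm (fun k => ?_) (hFinv (2 / (1 - 1/s)))
        have tk1 : t k < 1 := (htle k).trans_lt hs1'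
        have h3 := A_step (ht0 k).le tk1 (hFS k) ha hb hab hl
        have e1 : (G k b - G k a) - t k * |G k (f b) - G k (f a)| =
          ((S.A (t k) b - S.A (t k) a) - t k * abs (S.A (t k) (f b) - S.A (t k) (f a))) / F k := by
          simp only [hG]
          rw [← sub_div, ← sub_div, abs_div, abs_of_pos (hFpos k)]; ring
        rw [e1, Real.norm_eq_abs, abs_div, abs_of_pos (hFpos k)]
        refine div_le_div_of_nonneg_right (h3.trans ?_) (hFpos k).le
        apply div_le_div_of_nonneg_left (by norm_num) (by linarith); linarith [htle k]
      have h3 := tendsto_nhds_unique h1 (h2.mono_left hle)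
      have h4 : h b - h a = 1 / s * |h (f b) - h (f a)| := by linarith
      rw [h4]; field_simp
    have hm : Monotone h := fun x y hxy =>
      le_of_tendsto_of_tendsto' (hh x) (hh y) fun k => hGmono k hxy
    intro a ha b hb hl
    rcases lt_trichotomy a b with hab | rfl | hab
    · rw [abs_sub_comm, key a ha b hb hab hl, abs_sub_comm, abs_of_nonneg (sub_nonneg.2 (hm hab.le))]
    · simp
    · rw [key b hb a ha hab hl.symm, abs_of_nonneg (sub_nonneg.2 (hm hab.le))]

/-- The conjugacy stretches every interval by at most `s`. -/
lemma lip_of_scale {s : ℝ} {h : ℝ → ℝ} (hm : MonotoneOn h (Icc 0 1))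
    (hsc : ∀ a ∈ Icc (0:ℝ) 1, ∀ b ∈ Icc (0:ℝ) 1, S.Lap a b 1 → |h (f a) - h (f b)| = s * |h a - h b|) :
    ∀ (n : ℕ) (a b : ℝ), a ∈ Icc (0:ℝ) 1 → b ∈ Icc (0:ℝ) 1 → a ≤ b →
      (S.K.filter fun c => a < c ∧ c < b).card ≤ n → |h (f a) - h (f b)| ≤ s * (h b - h a) := by
  intro n
  induction n with
  | zero =>
    intro a b ha hb hab hc
    rw [hsc a ha b hb ?_, abs_sub_comm, abs_of_nonneg (sub_nonneg.2 (hm ha hb hab))]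
    intro j hj u hu hK
    obtain rfl : j = 0 := by omega
    by_contra hne
    push Not at hne
    rw [uIcc_of_le hab] at hu
    have : u ∈ S.K.filter fun c => a < c ∧ c < b := by
      simp only [Finset.mem_filter]
      exact ⟨hK, lt_of_le_of_ne hu.1 hne.1.symm, lt_of_le_of_ne hu.2 hne.2⟩
    rw [Finset.card_eq_zero.1 (Nat.le_zero.1 hc)] at this
    simp at this
  | succ n ih =>
    intro a b ha hb hab hc
    rcases (S.K.filter fun c => a < c ∧ c < b).eq_empty_or_nonempty with he | ⟨c, hcm⟩
    · exact ih a b ha hb hab (by rw [he]; simp)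
    · have hc' := hcm
      simp only [Finset.mem_filter] at hc'
      obtain ⟨hcK, hac, hcb⟩ := hc'
      have hlt : ∀ p q, a ≤ p → q ≤ b → (c ≤ p ∨ q ≤ c) →
          (S.K.filter fun x => p < x ∧ x < q).card ≤ n := by
        intro p q hp hq hor
        have : (S.K.filter fun x => p < x ∧ x < q) ⊂ (S.K.filter fun x => a < x ∧ x < b) := by
          refine (Finset.ssubset_iff_of_subset ?_).2 ⟨c, hcm, ?_⟩
          · intro x hx
            simp only [Finset.mem_filter] at hx ⊢
            exact ⟨hx.1, hp.trans_lt hx.2.1, hx.2.2.trans_le hq⟩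
          · simp only [Finset.mem_filter, not_and, not_lt]
            rintro - h1
            rcases hor with h2 | h2
            · linarith
            · exact h2
        have := Finset.card_lt_card this
        omega
      have hcI := S.K_sub c hcK
      have h1 := ih a c ha hcI hac.le (hlt a c le_rfl hcb.le (Or.inr le_rfl))
      have h2 := ih c b hcI hb hcb.le (hlt c b hac.le le_rfl (Or.inl le_rfl))
      have h3 := abs_sub_le (h (f a)) (h (f c)) (h (f b))
      linarith

/-- The function of `exists_weak` is continuous, because near `x` the iterate `f^[n]` has no critical
point other than `x`, and it is strictly monotone by exactness. -/
theorem exists_CS (S : Sys f) : ∃ s h, S.CS s h := by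
  obtain ⟨s, hs1, h, hm, h0, h1, hsc⟩ := S.exists_weak
  have hs0 : 0 < s := by linarith
  refine ⟨s, h, hs1, ?_, ?_, h0, h1, hsc⟩
  · -- strict monotonicity from exactness
    intro a ha b hb hab
    refine lt_of_le_of_ne (hm hab.le) fun he => ?_
    have hconst : ∀ n, ∀ u ∈ Icc a b, ∀ v ∈ Icc a b, h (f^[n] u) = h (f^[n] v) := by
      intro n
      induction n with
      | zero =>
        have : ∀ u ∈ Icc a b, h u = h a := fun u hu =>
          le_antisymm (he ▸ hm hu.2) (hm hu.1)
        intro u hu v hv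
        simp [this u hu, this v hv]
      | succ n ih =>
        have key : ∀ u ∈ Icc a b, ∀ v ∈ Icc a b, f^[n] u ≤ f^[n] v →
            h (f^[n+1] u) = h (f^[n+1] v) := by
          intro u hu v hv huv
          have hI : ∀ u ∈ Icc a b, u ∈ Icc (0:ℝ) 1 := fun u hu => ⟨ha.1.trans hu.1, hu.2.trans hb.2⟩
          have := lip_of_scale (hm.monotoneOn _) hsc _ _ _ (S.mapsI n (hI u hu))
            (S.mapsI n (hI v hv)) huv le_rfl
          rw [ih u hu v hv, sub_self, mul_zero] at this
          rw [Function.iterate_succ_apply', Function.iterate_succ_apply']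
          exact sub_eq_zero.1 (abs_nonpos_iff.1 this)
        intro u hu v hv
        rcases le_total (f^[n] u) (f^[n] v) with hl | hl
        · exact key u hu v hv hl
        · exact (key v hv u hu hl).symm
    obtain ⟨n, hn⟩ := S.exact a b ha.1 hab hb.2
    obtain ⟨u, hu, hu'⟩ : (0:ℝ) ∈ f^[n] '' Icc a b := by rw [hn]; simp
    obtain ⟨v, hv, hv'⟩ : (1:ℝ) ∈ f^[n] '' Icc a b := by rw [hn]; simp
    have := hconst n u hu v hv
    rw [hu', hv', h0, h1] at this
    norm_num at this
  · -- continuity: near `x`, `h` varies by at most `s⁻¹ ^ N` on either side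
    intro x hx
    rw [Metric.continuousWithinAt_iff]
    intro ε hε
    obtain ⟨N, hN⟩ := exists_pow_lt_of_lt_one hε (show s⁻¹ < 1 from inv_lt_one_of_one_lt₀ hs1)
    have hfin : (S.E N \ {x}).Finite := (S.E_finite N).subset sdiff_subset
    have hopen : IsOpen (S.E N \ {x})ᶜ := hfin.isClosed.isOpen_compl
    obtain ⟨δ, hδ, hball⟩ := Metric.isOpen_iff.1 hopen x (by simp)
    refine ⟨δ, hδ, fun {y} hy hyx => ?_⟩
    have hl : S.Lap y x N := by
      intro j hj u hu hK
      right
      by_contra hne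
      have hub : u ∈ ball x δ := by
        rw [mem_ball, Real.dist_eq]
        rw [Real.dist_eq] at hyx
        exact (abs_sub_le_of_mem_uIcc hu right_mem_uIcc).trans_lt hyx
      exact hball hub ⟨⟨uIcc_subI hy hx hu, j, hj, hK⟩, hne⟩
    have h2 := scale_iter hsc hy hx hl
    have h3 : |h (f^[N] y) - h (f^[N] x)| ≤ 1 := by
      refine abs_sub_le_one ?_ ?_
      · exact ⟨h0 ▸ hm (S.mapsI N hy).1, h1 ▸ hm (S.mapsI N hy).2⟩
      · exact ⟨h0 ▸ hm (S.mapsI N hx).1, h1 ▸ hm (S.mapsI N hx).2⟩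
    rw [Real.dist_eq]
    have hp : 0 < s ^ N := by positivity
    have h4 : |h y - h x| ≤ (s⁻¹) ^ N := by
      rw [inv_pow, ← one_div, le_div_iff₀ hp, mul_comm, ← h2]; exact h3
    exact h4.trans_lt hN

end Sys

/-! ### Upper bound for the entropy -/

namespace Sys
variable {f : ℝ → ℝ} {S : Sys f}

namespace CS
variable {s : ℝ} {h : ℝ → ℝ}

lemma mem (H : S.CS s h) {x : ℝ} (hx : x ∈ Icc (0:ℝ) 1) : h x ∈ Icc (0:ℝ) 1 := by
  have h0 := H.mono.monotoneOn (left_mem_Icc.2 zero_le_one) hx hx.1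
  have h1 := H.mono.monotoneOn hx (right_mem_Icc.2 zero_le_one) hx.2
  rw [H.h0] at h0; rw [H.h1] at h1
  exact ⟨h0, h1⟩

lemma surj (H : S.CS s h) {y : ℝ} (hy : y ∈ Icc (0:ℝ) 1) : ∃ x ∈ Icc (0:ℝ) 1, h x = y := by
  have := intermediate_value_Icc (zero_le_one (α := ℝ)) H.cont
  rw [H.h0, H.h1] at this
  exact this hy

lemma pos (H : S.CS s h) : 0 < s := by linarith [H.one_lt]

lemma lip (H : S.CS s h) {a b : ℝ} (ha : a ∈ Icc (0:ℝ) 1) (hb : b ∈ Icc (0:ℝ) 1) :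
    |h (f a) - h (f b)| ≤ s * |h a - h b| := by
  rcases le_total a b with hab | hab
  · have := S.lip_of_scale H.mono.monotoneOn H.scale _ a b ha hb hab le_rfl
    rwa [abs_sub_comm (h a), abs_of_nonneg (sub_nonneg.2 (H.mono.monotoneOn ha hb hab))]
  · have := S.lip_of_scale H.mono.monotoneOn H.scale _ b a hb ha hab le_rfl
    rwa [abs_sub_comm (h (f a)), abs_of_nonneg (sub_nonneg.2 (H.mono.monotoneOn hb ha hab))]

lemma lip_iter (H : S.CS s h) {a b : ℝ} (ha : a ∈ Icc (0:ℝ) 1) (hb : b ∈ Icc (0:ℝ) 1) (n : ℕ) :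
    |h (f^[n] a) - h (f^[n] b)| ≤ s ^ n * |h a - h b| := by
  induction n with
  | zero => simp
  | succ n ih =>
    rw [Function.iterate_succ_apply', Function.iterate_succ_apply']
    refine (H.lip (S.mapsI n ha) (S.mapsI n hb)).trans ?_
    rw [pow_succ']
    have := mul_le_mul_of_nonneg_left ih H.pos.le
    linarith

/-- The inverse of `h` is uniformly continuous. -/
lemma unif_inv (H : S.CS s h) {ε : ℝ} (hε : 0 < ε) : ∃ δ > 0, ∀ a ∈ Icc (0:ℝ) 1, ∀ b ∈ Icc (0:ℝ) 1,
    |h a - h b| ≤ δ → |a - b| < ε := by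
  by_contra! hc
  let X : Set (ℝ × ℝ) := (Icc 0 1 ×ˢ Icc 0 1) ∩ {p | ε ≤ |p.1 - p.2|}
  have hX : IsCompact X := (isCompact_Icc.prod isCompact_Icc).inter_right
    (isClosed_le continuous_const (by fun_prop))
  obtain ⟨a0, ha0, b0, hb0, -, h0⟩ := hc 1 one_pos
  have hcont : ContinuousOn (fun p : ℝ × ℝ => |h p.1 - h p.2|) X := by
    apply ContinuousOn.abs
    exact (H.cont.comp continuousOn_fst fun p hp => hp.1.1).sub
      (H.cont.comp continuousOn_snd fun p hp => hp.1.2)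
  obtain ⟨p, hp, hmin⟩ := hX.exists_isMinOn ⟨(a0, b0), ⟨ha0, hb0⟩, h0⟩ hcont
  have hpos : 0 < |h p.1 - h p.2| := by
    rw [abs_pos, sub_ne_zero]
    intro he
    have := H.mono.injOn hp.1.1 hp.1.2 he
    have h2 := hp.2
    simp only [mem_ofPred_eq, this, sub_self, abs_zero] at h2
    linarith
  obtain ⟨a, ha, b, hb, h1, h2⟩ := hc (|h p.1 - h p.2| / 2) (by linarith)
  have := hmin (a := (a, b)) ⟨⟨ha, hb⟩, h2⟩
  simp only [mem_ofPred_eq] at this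
  linarith

end CS

lemma iter_eq (S : Sys f) {T : ℝ → ℝ} (hT : ∀ x ∈ Icc (0:ℝ) 1, T x = f x) {x : ℝ} (hx : x ∈ Icc (0:ℝ) 1)
    (n : ℕ) : T^[n] x = f^[n] x := by
  induction n with
  | zero => rfl
  | succ n ih =>
    rw [Function.iterate_succ_apply', Function.iterate_succ_apply', ih, hT _ (S.mapsI n hx)]

open Dynamics ExpGrowth in
/-- A grid of mesh `s ^ (-n)` in the coordinate `h` is a dynamical cover at time `n`. -/
lemma entropy_le {s : ℝ} {h : ℝ → ℝ} (H : S.CS s h) {T : ℝ → ℝ} (hT : ∀ x ∈ Icc (0:ℝ) 1, T x = f x) :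
    coverEntropy T (Icc (0:ℝ) 1) ≤ (Real.log s : EReal) := by
  rw [coverEntropy_eq_iSup_basis uniformity_basis_dist]
  refine iSup₂_le fun ε hε => ?_
  obtain ⟨δ, hδ, hu⟩ := H.unif_inv hε
  have hs := H.pos
  have hlog : (Real.log s : EReal) = ENNReal.log (ENNReal.ofReal s) := by
    rw [ENNReal.log_ofReal_of_pos hs]
  rw [hlog, ← expGrowthSup_pow]
  refine expGrowthSup_le_of_eventually_le (b := ENNReal.ofReal (1 / δ + 2)) ENNReal.ofReal_ne_top
    (Eventually.of_forall fun n => ?_)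
  have hsn : (1:ℝ) ≤ s ^ n := one_le_pow₀ H.one_lt.le
  set m := ⌈s ^ n / δ⌉₊ with hm
  have hmpos : 0 < m := Nat.ceil_pos.2 (by positivity)
  have hmle : s ^ n / δ ≤ m := Nat.le_ceil _
  have hmlt : (m : ℝ) < s ^ n / δ + 1 := Nat.ceil_lt_add_one (by positivity)
  have hm0 : (0:ℝ) < m := by exact_mod_cast hmpos
  have hex : ∀ i : ℕ, ∃ x, i ≤ m → x ∈ Icc (0:ℝ) 1 ∧ h x = i / m := by
    intro i
    by_cases hi : i ≤ m
    · obtain ⟨x, hx, e⟩ := H.surj (y := i / m) ⟨by positivity, by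
        rw [div_le_one hm0]; exact_mod_cast hi⟩
      exact ⟨x, fun _ => ⟨hx, e⟩⟩
    · exact ⟨0, fun h => absurd h hi⟩
  choose p hp using hex
  have hcov : IsDynCoverOf T (Icc (0:ℝ) 1) {p : ℝ × ℝ | dist p.1 p.2 < ε} n
      ((Finset.range (m + 1)).image p : Finset ℝ) := by
    intro x hx
    have hhx := H.mem hx
    have hmx : 0 ≤ m * h x := by nlinarith [hhx.1]
    have hfl := Nat.floor_le hmx
    have hfl2 := Nat.lt_floor_add_one (m * h x)
    have hle : ⌊m * h x⌋₊ ≤ m := by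
      have : (⌊m * h x⌋₊ : ℝ) ≤ m := hfl.trans (by nlinarith [hhx.2])
      exact_mod_cast this
    obtain ⟨hpi, hpe⟩ := hp _ hle
    refine ⟨p ⌊m * h x⌋₊, by simp only [Finset.coe_image, mem_image, Finset.mem_coe, Finset.mem_range]; exact ⟨_, by omega, rfl⟩, ?_⟩
    rw [mem_dynEntourage]
    intro k hk
    rw [iter_eq S hT hx, iter_eq S hT hpi]
    simp only [mem_ofPred_eq, Real.dist_eq]
    apply hu _ (S.mapsI k hx) _ (S.mapsI k hpi)
    refine (H.lip_iter hx hpi k).trans ?_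
    have h1 : |h x - h (p ⌊m * h x⌋₊)| ≤ 1 / m := by
      rw [hpe, le_div_iff₀ hm0]
      have : |h x - ⌊m * h x⌋₊ / m| * m = |m * h x - ⌊m * h x⌋₊| := by
        rw [← abs_of_pos hm0, ← abs_mul, abs_of_pos hm0]; congr 1; field_simp
      rw [this, abs_of_nonneg (by linarith)]; linarith
    have h2 : s ^ k ≤ s ^ n := pow_le_pow_right₀ H.one_lt.le hk.le
    calc s ^ k * |h x - h (p ⌊m * h x⌋₊)| ≤ s ^ n * (1 / m) := by gcongr
      _ ≤ δ := by
        rw [mul_one_div, div_le_iff₀ hm0]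
        rw [div_le_iff₀ hδ] at hmle; linarith
  have hc := hcov.coverMincard_le_card
  have hc2 : ((Finset.range (m + 1)).image p).card ≤ m + 1 :=
    Finset.card_image_le.trans (by simp)
  have hc3 : (coverMincard T (Icc (0:ℝ) 1) {p : ℝ × ℝ | dist p.1 p.2 < ε} n : ENNReal)
      ≤ ((m + 1 : ℕ) : ENNReal) := by
    have : coverMincard T (Icc (0:ℝ) 1) {p : ℝ × ℝ | dist p.1 p.2 < ε} n ≤ ((m + 1 : ℕ) : ℕ∞) :=
      hc.trans (by exact_mod_cast hc2)
    exact_mod_cast (ENat.toENNReal_le.2 this)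
  refine hc3.trans ?_
  rw [← ENNReal.ofReal_pow hs.le, ← ENNReal.ofReal_mul (by positivity), ← ENNReal.ofReal_natCast]
  apply ENNReal.ofReal_le_ofReal
  push_cast
  have : (1 / δ + 2) * s ^ n = s ^ n / δ + 2 * s ^ n := by ring
  linarith

end Sys

/-! ### Lower bound for the entropy -/

namespace Sys
variable {f : ℝ → ℝ} {S : Sys f}

/-- Points whose orbits stay close at the times `0, M, …, (k-1)M` and which are `s ^ (-kM)`-separated
in the coordinate `h` are few: a short interval meets the critical set of `f^[M]` at most once, so
each step costs at most a factor `2`. -/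
lemma card_close {s : ℝ} {h : ℝ → ℝ} (H : S.CS s h) {M : ℕ} {ε : ℝ}
    (hε : ∀ c ∈ S.E M, ∀ c' ∈ S.E M, |c - c'| < 2 * ε → c = c') (k : ℕ) :
    ∀ B : Finset ℝ, (∀ x ∈ B, x ∈ Icc (0:ℝ) 1) →
      (∀ j < k, ∃ y, ∀ x ∈ B, |f^[j * M] x - y| < ε) →
      (∀ a ∈ B, ∀ b ∈ B, a ≠ b → 1 ≤ s ^ (k * M) * |h a - h b|) → B.card ≤ 2 * 2 ^ k := by
  induction k with
  | zero =>
    intro B hB _ hsep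
    by_contra hcard
    obtain ⟨a, b, c, ha, hb, hc, hab, hac, hbc⟩ := Finset.two_lt_card_iff.1
      (show 2 < B.card by omega)
    have h1 := hsep a ha b hb hab
    have h2 := hsep a ha c hc hac
    have h3 := hsep b hb c hc hbc
    simp only [zero_mul, pow_zero, one_mul] at h1 h2 h3
    have ma := H.mem (hB a ha)
    have mb := H.mem (hB b hb)
    have mc := H.mem (hB c hc)
    rcases le_abs.1 h1 with h1 | h1 <;> rcases le_abs.1 h2 with h2 | h2 <;>
      rcases le_abs.1 h3 with h3 | h3 <;> linarith [ma.1, ma.2, mb.1, mb.2, mc.1, mc.2]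
  | succ k ih =>
    intro B hB hcl hsep
    obtain ⟨y, hy⟩ := hcl 0 (by omega)
    simp only [zero_mul, Function.iterate_zero, id] at hy
    -- a splitting point: to its left and to its right all pairs are laps
    have hex : ∃ c : ℝ, ∀ e ∈ S.E M, |e - y| < ε → e = c := by
      by_cases hc : ∃ c ∈ S.E M, |c - y| < ε
      · obtain ⟨c, hc, hcy⟩ := hc
        refine ⟨c, fun e he hey => hε e he c hc ?_⟩
        have := abs_sub_le e y c
        rw [abs_sub_comm y c] at this; linarith
      · push Not at hc
        exact ⟨0, fun e he hey => absurd hey (not_lt.2 (hc e he))⟩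
    obtain ⟨c, hc⟩ := hex
    have half : ∀ B' ⊆ B, (∀ a ∈ B', ∀ b ∈ B', c ∈ uIcc a b → c = a ∨ c = b) → B'.card ≤ 2 * 2 ^ k := by
      intro B' hB' hspl
      have hlap : ∀ a ∈ B', ∀ b ∈ B', S.Lap a b M := by
        intro a ha b hb j hj u hu hK
        have haI := hB a (hB' ha)
        have hbI := hB b (hB' hb)
        have huI : u ∈ Icc (0:ℝ) 1 := uIcc_subI haI hbI hu
        have huy : |u - y| < ε := by
          have h1 := abs_lt.1 (hy a (hB' ha))
          have h2 := abs_lt.1 (hy b (hB' hb))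
          rw [abs_lt]
          rcases mem_uIcc.1 hu with h | h <;> constructor <;> linarith [h.1, h.2]
        have := hc u ⟨huI, j, hj, hK⟩ huy
        subst this
        exact hspl a ha b hb hu
      have hinj : InjOn f^[M] (B' : Set ℝ) := fun a ha b hb e =>
        (hlap a ha b hb).inj (hB a (hB' ha)) (hB b (hB' hb)) left_mem_uIcc right_mem_uIcc e
      rw [← Finset.card_image_of_injOn hinj]
      apply ih
      · intro x hx
        obtain ⟨a, ha, rfl⟩ := Finset.mem_image.1 hx
        exact S.mapsI M (hB a (hB' ha))
      · intro j hj
        obtain ⟨y', hy'⟩ := hcl (j + 1) (by omega)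
        refine ⟨y', fun x hx => ?_⟩
        obtain ⟨a, ha, rfl⟩ := Finset.mem_image.1 hx
        have := hy' a (hB' ha)
        rwa [add_mul, one_mul, Function.iterate_add_apply] at this
      · intro x hx x' hx' hne
        obtain ⟨a, ha, rfl⟩ := Finset.mem_image.1 hx
        obtain ⟨b, hb, rfl⟩ := Finset.mem_image.1 hx'
        rw [scale_iter H.scale (hB a (hB' ha)) (hB b (hB' hb)) (hlap a ha b hb), ← mul_assoc, ← pow_add]
        have := hsep a (hB' ha) b (hB' hb) (fun e => hne (by rw [e]))
        rwa [add_mul, one_mul] at this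
    classical
    have h1 := half (B.filter (· ≤ c)) (Finset.filter_subset _ _) (by
      intro a ha b hb hm
      have h1 := (Finset.mem_filter.1 ha).2
      have h2 := (Finset.mem_filter.1 hb).2
      rcases mem_uIcc.1 hm with h | h
      · right; linarith [h.2]
      · left; linarith [h.2])
    have h2 := half (B.filter (¬ · ≤ c)) (Finset.filter_subset _ _) (by
      intro a ha b hb hm
      have h1 := not_le.1 (Finset.mem_filter.1 ha).2
      have h2 := not_le.1 (Finset.mem_filter.1 hb).2
      rcases mem_uIcc.1 hm with h | h
      · left; linarith [h.1]
      · right; linarith [h.1])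
    have := Finset.card_filter_add_card_filter_not (s := B) (· ≤ c)
    rw [pow_succ]; omega

lemma finite_gap {X : Set ℝ} (hX : X.Finite) :
    ∃ g > 0, ∀ c ∈ X, ∀ c' ∈ X, |c - c'| < g → c = c' := by
  by_cases hn : X.offDiag.Nonempty
  · obtain ⟨p, hp, hmin⟩ := exists_min_image X.offDiag (fun p => |p.1 - p.2|) hX.offDiag hn
    refine ⟨|p.1 - p.2|, abs_pos.2 (sub_ne_zero.2 hp.2.2), fun c hc c' hc' hlt => ?_⟩
    by_contra hne
    exact absurd (hmin (c, c') ⟨hc, hc', hne⟩) (not_le.2 hlt)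
  · refine ⟨1, one_pos, fun c hc c' hc' _ => ?_⟩
    by_contra hne
    exact hn ⟨(c, c'), hc, hc', hne⟩

open Dynamics in
/-- A dynamical cover at time `kM` has at least `s ^ (kM) / 2 ^ (k+1)` elements. -/
lemma le_card_cover {s : ℝ} {h : ℝ → ℝ} (H : S.CS s h) {T : ℝ → ℝ}
    (hT : ∀ x ∈ Icc (0:ℝ) 1, T x = f x) {M : ℕ} {ε : ℝ} (hM : 1 ≤ M)
    (hε : ∀ c ∈ S.E M, ∀ c' ∈ S.E M, |c - c'| < 2 * ε → c = c') (k : ℕ) {A : Finset ℝ}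
    (hA : IsDynCoverOf T (Icc (0:ℝ) 1) {p : ℝ × ℝ | dist p.1 p.2 < ε} (k * M) A) :
    s ^ (k * M) ≤ 2 * 2 ^ k * A.card := by
  have hs := H.pos
  set r := s ^ (k * M) with hr
  have hr0 : 0 < r := by positivity
  set m := ⌊r⌋₊ with hm
  have hmr : (m : ℝ) ≤ r := Nat.floor_le hr0.le
  have hex : ∀ i : ℕ, ∃ x, i ≤ m → x ∈ Icc (0:ℝ) 1 ∧ h x = i / r := by
    intro i
    by_cases hi : i ≤ m
    · obtain ⟨x, hx, e⟩ := H.surj (y := i / r) ⟨by positivity, by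
        rw [div_le_one hr0]; exact le_trans (by exact_mod_cast hi) hmr⟩
      exact ⟨x, fun _ => ⟨hx, e⟩⟩
    · exact ⟨0, fun h => absurd h hi⟩
  choose p hp using hex
  have hinj : InjOn p (Finset.range (m + 1) : Set ℕ) := by
    intro i hi j hj e
    simp only [Finset.coe_range, mem_Iio] at hi hj
    have h1 := (hp i (by omega)).2
    have h2 := (hp j (by omega)).2
    rw [e, h2] at h1
    have : (j : ℝ) = i := by field_simp at h1; exact h1
    exact_mod_cast this.symm
  let G := (Finset.range (m + 1)).image p
  have hGI : ∀ x ∈ G, x ∈ Icc (0:ℝ) 1 := by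
    intro x hx
    obtain ⟨i, hi, rfl⟩ := Finset.mem_image.1 hx
    exact (hp i (by simpa [Nat.lt_succ_iff] using hi)).1
  have hsh : ∀ x, ∃ y, x ∈ G → y ∈ A ∧ ∀ j < k * M, |f^[j] x - T^[j] y| < ε := by
    intro x
    by_cases hx : x ∈ G
    · obtain ⟨y, hy, hxy⟩ := hA (hGI x hx)
      refine ⟨y, fun _ => ⟨by exact_mod_cast hy, fun j hj => ?_⟩⟩
      rw [mem_dynEntourage] at hxy
      have := hxy j hj
      rwa [iter_eq S hT (hGI x hx)] at this
    · exact ⟨0, fun h => absurd h hx⟩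
  choose Y hY using hsh
  have hcard : G.card ≤ 2 * 2 ^ k * A.card := by
    refine Finset.card_le_mul_card_image_of_maps_to (f := Y) (fun x hx => (hY x hx).1) _ ?_
    intro y _
    apply card_close H hε k
    · intro x hx
      exact hGI x (Finset.mem_filter.1 hx).1
    · intro j hj
      refine ⟨T^[j * M] y, fun x hx => ?_⟩
      obtain ⟨hxG, rfl⟩ := Finset.mem_filter.1 hx
      exact (hY x hxG).2 _ (Nat.mul_lt_mul_of_pos_right hj (by omega))
    · intro a ha b hb hab
      obtain ⟨i, hi, rfl⟩ := Finset.mem_image.1 (Finset.mem_filter.1 ha).1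
      obtain ⟨j, hj, rfl⟩ := Finset.mem_image.1 (Finset.mem_filter.1 hb).1
      rw [Finset.mem_range] at hi hj
      rw [(hp i (by omega)).2, (hp j (by omega)).2, ← hr, ← sub_div, abs_div, abs_of_pos hr0,
        mul_div_cancel₀ _ hr0.ne']
      have hij : (i : ℤ) - j ≠ 0 := fun e => hab (by rw [show i = j by omega])
      have := Int.one_le_abs hij
      exact_mod_cast this
  rw [Finset.card_image_of_injOn hinj, Finset.card_range] at hcard
  have h1 : r < m + 1 := Nat.lt_floor_add_one r
  have h2 : ((m + 1 : ℕ) : ℝ) ≤ ((2 * 2 ^ k * A.card : ℕ) : ℝ) := by exact_mod_cast hcard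
  push_cast at h2
  linarith

open Dynamics ExpGrowth in
lemma le_entropy {s : ℝ} {h : ℝ → ℝ} (H : S.CS s h) {T : ℝ → ℝ} (hT : ∀ x ∈ Icc (0:ℝ) 1, T x = f x)
    {M : ℕ} (hM : 1 ≤ M) :
    ((Real.log s - 2 * Real.log 2 / M : ℝ) : EReal) ≤ coverEntropy T (Icc (0:ℝ) 1) := by
  obtain ⟨g, hg, hgap⟩ := finite_gap (S.E_finite M)
  have hs := H.pos
  have hM0 : (0:ℝ) < M := by exact_mod_cast hM
  refine le_trans ?_ (coverEntropyEntourage_le_coverEntropy T _ (dist_mem_uniformity (half_pos hg)))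
  apply Frequently.le_expGrowthSup
  rw [frequently_atTop]
  intro n0
  refine ⟨(n0 + 1) * M, by nlinarith, ?_⟩
  set k := n0 + 1 with hk
  have e1 : ((Real.log s - 2 * Real.log 2 / M : ℝ) : EReal) * ((k * M : ℕ) : EReal) =
      (((Real.log s - 2 * Real.log 2 / M) * ((k * M : ℕ) : ℝ) : ℝ) : EReal) := by
    rw [EReal.coe_mul]; rfl
  rw [e1, EReal.exp_coe]
  rw [coverMincard, ENat.toENNReal_iInf]
  refine le_iInf fun A => ?_
  rw [ENat.toENNReal_iInf]
  refine le_iInf fun hA => ?_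
  have h1 := le_card_cover H hT hM (ε := g / 2) (by
    intro c hc c' hc' hlt; exact hgap c hc c' hc' (by linarith)) k hA
  have h2 : (2:ℝ) * 2 ^ k ≤ 4 ^ k := by
    have : (4:ℝ) ^ k = 2 ^ k * 2 ^ k := by rw [← mul_pow]; norm_num
    rw [this]
    have : (2:ℝ) ≤ 2 ^ k := by rw [hk, pow_succ]; nlinarith [one_le_pow₀ (M₀ := ℝ) (a := 2) (n := n0) (by norm_num)]
    nlinarith
  have h3 : Real.exp ((Real.log s - 2 * Real.log 2 / M) * ((k * M : ℕ) : ℝ)) = s ^ (k * M) / 4 ^ k := by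
    have : (Real.log s - 2 * Real.log 2 / M) * ((k * M : ℕ) : ℝ) =
        (k * M : ℕ) * Real.log s - k * Real.log 4 := by
      rw [show (4:ℝ) = 2 ^ 2 by norm_num, Real.log_pow]; push_cast; field_simp
    rw [this, Real.exp_sub, Real.exp_nat_mul, Real.exp_nat_mul, Real.exp_log hs,
      Real.exp_log (by norm_num)]
  rw [h3]
  have h4 : s ^ (k * M) / 4 ^ k ≤ A.card := by
    rw [div_le_iff₀ (by positivity)]
    have : (0:ℝ) ≤ A.card := by positivity
    nlinarith
  calc ENNReal.ofReal (s ^ (k * M) / 4 ^ k) ≤ ENNReal.ofReal A.card := ENNReal.ofReal_le_ofReal h4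
    _ = _ := by simp

/-- The topological entropy is the logarithm of the slope. -/
theorem entropy_eq {s : ℝ} {h : ℝ → ℝ} (H : S.CS s h) {T : ℝ → ℝ}
    (hT : ∀ x ∈ Icc (0:ℝ) 1, T x = f x) :
    Dynamics.coverEntropy T (Icc (0:ℝ) 1) = (Real.log s : EReal) := by
  apply le_antisymm (entropy_le H hT)
  refine le_of_tendsto (f := fun M : ℕ => ((Real.log s - 2 * Real.log 2 / M : ℝ) : EReal))
    (x := atTop) ?_ (eventually_atTop.2 ⟨1, fun M hM => le_entropy H hT hM⟩)
  apply (continuous_coe_real_ereal.tendsto _).comp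
  have := (tendsto_const_nhds (x := Real.log s)).sub
    (tendsto_const_div_atTop_nhds_zero_nat (2 * Real.log 2))
  simpa using this

end Sys

/-! ### Growth of intervals -/

namespace Sys
variable {f : ℝ → ℝ} {S : Sys f}

lemma NH.lap {x y : ℝ} {n : ℕ} (h : S.NH x y n) : S.Lap x y n :=
  fun j hj u hu hK => absurd hK (h j hj u hu)

/-- Every nondegenerate interval either becomes large or stops being thin, with bounded distortion
up to that time. -/
lemma run {s : ℝ} {h : ℝ → ℝ} (H : S.CS s h) {τ B τ1 : ℝ} (hτ : τ1 ≤ τ) (hB0 : 0 ≤ B)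
    (hB : ∀ x ∈ Icc (0:ℝ) 1, ∀ y ∈ Icc (0:ℝ) 1, ∀ n, (∀ j ≤ n, S.Thin (f^[j] x) (f^[j] y)) →
      |f^[n] x - f^[n] y| ≤ τ → ∑ j ∈ Finset.range (n + 1), S.w (f^[j] x) (f^[j] y) ≤ B)
    {x y : ℝ} (hx : x ∈ Icc (0:ℝ) 1) (hy : y ∈ Icc (0:ℝ) 1) (hxy : x ≠ y) :
    ∃ n, S.TC x y n ∧ ∑ j ∈ Finset.range n, S.w (f^[j] x) (f^[j] y) ≤ B ∧
      (τ1 < |f^[n] x - f^[n] y| ∨ |f^[n] x - f^[n] y| ≤ τ1 ∧ ¬ S.Thin (f^[n] x) (f^[n] y)) := by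
  have hex : ∃ n, ¬ (|f^[n] x - f^[n] y| ≤ τ1 ∧ S.Thin (f^[n] x) (f^[n] y)) := by
    by_contra! hc
    have htc : ∀ n, S.TC x y n := fun n j _ => (hc j).2
    have hpos : 0 < |h x - h y| := abs_pos.2 (sub_ne_zero.2 fun e => hxy (H.mono.injOn hx hy e))
    obtain ⟨n, hn⟩ := pow_unbounded_of_one_lt (1 / |h x - h y|) H.one_lt
    have h1 := scale_iter H.scale hx hy ((htc n).NH hx hy).lap
    have h2 := H.mem (S.mapsI n hx)
    have h3 := H.mem (S.mapsI n hy)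
    have h4 : |h (f^[n] x) - h (f^[n] y)| ≤ 1 := by
      rw [abs_le]; constructor <;> linarith [h2.1, h2.2, h3.1, h3.2]
    rw [div_lt_iff₀ hpos] at hn
    linarith
  classical
  let n := Nat.find hex
  have hn := Nat.find_spec hex
  have hlt : ∀ j < n, |f^[j] x - f^[j] y| ≤ τ1 ∧ S.Thin (f^[j] x) (f^[j] y) := by
    intro j hj
    have := Nat.find_min hex hj
    push Not at this
    exact this
  refine ⟨n, fun j hj => (hlt j hj).2, ?_, ?_⟩
  · rcases Nat.eq_zero_or_pos n with h0 | h0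
    · rw [h0]; simpa using hB0
    · obtain ⟨m, hm⟩ : ∃ m, n = m + 1 := ⟨n - 1, by omega⟩
      rw [hm]
      exact hB x hx y hy m (fun j hj => (hlt j (by omega)).2) ((hlt m (by omega)).1.trans hτ)
  · rcases lt_or_ge τ1 |f^[n] x - f^[n] y| with h1 | h1
    · exact Or.inl h1
    · exact Or.inr ⟨h1, fun h2 => hn ⟨h1, h2⟩⟩

lemma not_thin {X Y : ℝ} (h : ¬ S.Thin X Y) : ∃ c ∈ S.K, |X - c| ≤ 2 * |X - Y| ∨ |Y - c| ≤ 2 * |X - Y| := by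
  by_contra! hc
  apply h
  obtain ⟨c, hcK, e⟩ := S.exists_d X
  obtain ⟨c', hcK', e'⟩ := S.exists_d Y
  have h1 := (hc c hcK).1
  have h2 := (hc c' hcK').2
  have := abs_nonneg (X - Y)
  exact ⟨by linarith, by linarith, by linarith, by linarith⟩

/-- One step of the growth argument: either the images of `[x, y]` become large, or they come close
to a critical point `c ∉ A` and the image of the hull of the interval with `c` is the next
interval. -/
lemma qs_step {s : ℝ} {h : ℝ → ℝ} (H : S.CS s h) {τ1 B g : ℝ}
    (hrun : ∀ x y, x ∈ Icc (0:ℝ) 1 → y ∈ Icc (0:ℝ) 1 → x ≠ y →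
      ∃ n, S.TC x y n ∧ ∑ j ∈ Finset.range n, S.w (f^[j] x) (f^[j] y) ≤ B ∧
      (τ1 < |f^[n] x - f^[n] y| ∨ |f^[n] x - f^[n] y| ≤ τ1 ∧ ¬ S.Thin (f^[n] x) (f^[n] y)))
    (hg : ∀ c ∈ S.K, ∀ c' ∈ S.K, |c - c'| < g → c = c') (hτg : 3 * τ1 < g) (hτρ : 3 * τ1 ≤ S.ρ0)
    (hττ : 3 * τ1 < S.τ0) {κ : ℝ} (hκ : 0 < κ) {A : Finset ℝ} {x y l m : ℝ}
    (hx : x ∈ Icc (0:ℝ) 1) (hy : y ∈ Icc (0:ℝ) 1) (hxy : x ≠ y) (hl : l ∈ uIcc x y)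
    (hm : m ∈ uIcc x y) (hlm : κ * |x - y| ≤ |l - m|)
    (hA : ∀ c ∈ A, ∃ i, 1 ≤ i ∧ f^[i] c ∈ uIcc x y) :
    (∃ N, s ^ N * |h x - h y| ≤ 1 ∧ κ * Real.exp (-(S.C0 * B)) * τ1 ≤ |f^[N] l - f^[N] m|) ∨
    ∃ c ∈ S.K, c ∉ A ∧ ∃ n p r l' m', p ∈ Icc (0:ℝ) 1 ∧ r ∈ Icc (0:ℝ) 1 ∧ p ≠ r ∧
      l' ∈ uIcc p r ∧ m' ∈ uIcc p r ∧ S.q (κ * Real.exp (-(S.C0 * B)) / 3) * |p - r| ≤ |l' - m'| ∧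
      (∀ c' ∈ insert c A, ∃ i, 1 ≤ i ∧ f^[i] c' ∈ uIcc p r) ∧
      s ^ n * |h x - h y| ≤ 2 * |h p - h r| ∧
      uIcc l' m' ⊆ f^[n] '' uIcc l m := by
  obtain ⟨n, htc, hsum, hn⟩ := hrun x y hx hy hxy
  have hnh := htc.NH hx hy
  have hsc := scale_iter H.scale hx hy hnh.lap
  set X := f^[n] x with hX
  set Y := f^[n] y with hY
  have hXI : X ∈ Icc (0:ℝ) 1 := S.mapsI n hx
  have hYI : Y ∈ Icc (0:ℝ) 1 := S.mapsI n hy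
  have hxy0 : 0 < |x - y| := abs_pos.2 (sub_ne_zero.2 hxy)
  have hlen : κ * Real.exp (-(S.C0 * B)) * |X - Y| ≤ |f^[n] l - f^[n] m| := by
    have h1 := (htc.dist hx hy hl hm hsum).2
    have h2 : κ * |X - Y| ≤ Real.exp (S.C0 * B) * |f^[n] l - f^[n] m| := by
      have h3 := mul_le_mul_of_nonneg_right hlm (abs_nonneg (X - Y))
      refine le_of_mul_le_mul_right ?_ hxy0
      calc κ * |X - Y| * |x - y| = κ * |x - y| * |X - Y| := by ring
        _ ≤ _ := h3.trans (h1.trans (le_of_eq (by ring)))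
    rw [Real.exp_neg]
    have he := Real.exp_pos (S.C0 * B)
    calc κ * (Real.exp (S.C0 * B))⁻¹ * |X - Y| = (κ * |X - Y|) / Real.exp (S.C0 * B) := by
          field_simp
      _ ≤ _ := by rw [div_le_iff₀ he]; linarith
  have hκe : 0 < κ * Real.exp (-(S.C0 * B)) := by positivity
  rcases hn with hn | ⟨hn, hnt⟩
  · left
    refine ⟨n, ?_, (mul_le_mul_of_nonneg_left hn.le hκe.le).trans hlen⟩
    rw [← hsc]
    have h2 := H.mem hXI
    have h3 := H.mem hYI
    rw [abs_le]; constructor <;> linarith [h2.1, h2.2, h3.1, h3.2]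
  right
  obtain ⟨c, hcK, hc⟩ := S.not_thin hnt
  have hcI := S.K_sub c hcK
  set a := min (min X Y) c with ha
  set b := max (max X Y) c with hb
  have haX : a ≤ X := (min_le_left _ _).trans (min_le_left _ _)
  have haY : a ≤ Y := (min_le_left _ _).trans (min_le_right _ _)
  have hac : a ≤ c := min_le_right _ _
  have hXb : X ≤ b := (le_max_left _ _).trans (le_max_left _ _)
  have hYb : Y ≤ b := (le_max_right _ _).trans (le_max_left _ _)
  have hcb : c ≤ b := le_max_right _ _
  have ha0 : 0 ≤ a := le_min (le_min hXI.1 hYI.1) hcI.1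
  have hb1 : b ≤ 1 := max_le (max_le hXI.2 hYI.2) hcI.2
  have hab : b - a ≤ 3 * |X - Y| := by
    rw [ha, hb]
    rcases hc with hc | hc
    all_goals
      have h1 := abs_le.1 hc
      rcases le_total X Y with h2 | h2
      all_goals
        simp only [min_def, max_def]
        rcases abs_cases (X - Y) with h3 | h3
        all_goals split_ifs <;> linarith
  have hsubU : uIcc X Y ⊆ Icc a b := fun t ht => by
    rcases mem_uIcc.1 ht with h | h
    · exact ⟨haX.trans h.1, h.2.trans hYb⟩
    · exact ⟨haY.trans h.1, h.2.trans hXb⟩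
  have haI : a ∈ Icc (0:ℝ) 1 := ⟨ha0, hac.trans hcI.2⟩
  have hbI : b ∈ Icc (0:ℝ) 1 := ⟨hcI.1.trans hcb, hb1⟩
  have hab' : a ≤ b := hac.trans hcb
  have hcA : c ∉ A := by
    intro hcA
    obtain ⟨i, hi, him⟩ := hA c hcA
    have h1 := hsubU (hnh.mem hx hy him)
    rw [← Function.iterate_add_apply] at h1
    have h2 := S.N c hcK (n + i) (by omega)
    have h3 : |f^[n + i] c - c| ≤ b - a := by
      rw [abs_le]; constructor <;> linarith [h1.1, h1.2]
    linarith
  have honly : ∀ c' ∈ S.K, c' ∈ Icc a b → c' = c := fun c' hc' hm => hg c' hc' c hcK (by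
    rw [abs_lt]; constructor <;> linarith [hm.1, hm.2])
  have hlI := hnh.mem hx hy hl
  have hmI := hnh.mem hx hy hm
  have hln := hsubU hlI
  have hmn := hsubU hmI
  obtain ⟨u, hu, v, hv, hq⟩ := S.Q (κ * Real.exp (-(S.C0 * B)) / 3) (by positivity) c hcK a b ha0 hb1
    ⟨hac, hcb⟩ (by linarith) (min (f^[n] l) (f^[n] m)) (max (f^[n] l) (f^[n] m))
    (le_min hln.1 hmn.1) min_le_max (max_le hln.2 hmn.2) (by
      rw [max_sub_min_eq_abs, abs_sub_comm]
      have := mul_le_mul_of_nonneg_left hab hκe.le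
      linarith)
  have him := S.cont.continuousOn.image_Icc hab' (f := f)
  set p := sInf (f '' Icc a b)
  set r := sSup (f '' Icc a b)
  have hfa : f a ∈ Icc p r := him ▸ mem_image_of_mem f (left_mem_Icc.2 hab')
  have hpr : p ≤ r := hfa.1.trans hfa.2
  have hmemI : ∀ t ∈ Icc p r, t ∈ Icc (0:ℝ) 1 := by
    intro t ht
    rw [← him] at ht
    obtain ⟨z, _, rfl⟩ := ht
    exact S.maps z
  have hpI := hmemI p (left_mem_Icc.2 hpr)
  have hrI := hmemI r (right_mem_Icc.2 hpr)
  have hmem : ∀ t ∈ Icc a b, f t ∈ Icc p r := fun t ht => him ▸ mem_image_of_mem f ht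
  have hdiff : ∀ t ∈ Icc p r, ∀ t' ∈ Icc p r, |h t - h t'| ≤ h r - h p := by
    intro t ht t' ht'
    have hm := H.mono.monotoneOn
    have h1 := hm hpI (hmemI t ht) ht.1
    have h2 := hm (hmemI t ht) hrI ht.2
    have h3 := hm hpI (hmemI t' ht') ht'.1
    have h4 := hm (hmemI t' ht') hrI ht'.2
    rw [abs_le]; constructor <;> linarith
  have hhalf : s * |h X - h Y| ≤ 2 * |h p - h r| := by
    have hm := H.mono.monotoneOn
    have l1 : S.Lap a c 1 := by
      intro j hj t ht htK
      obtain rfl : j = 0 := by omega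
      rw [uIcc_of_le hac] at ht
      exact Or.inr (honly t htK ⟨ht.1, ht.2.trans hcb⟩)
    have l2 : S.Lap c b 1 := by
      intro j hj t ht htK
      obtain rfl : j = 0 := by omega
      rw [uIcc_of_le hcb] at ht
      exact Or.inl (honly t htK ⟨hac.trans ht.1, ht.2⟩)
    have e1 := H.scale a haI c hcI l1
    have e2 := H.scale c hcI b hbI l2
    have d1 := hdiff _ (hmem a (left_mem_Icc.2 hab')) _ (hmem c ⟨hac, hcb⟩)
    have d2 := hdiff _ (hmem c ⟨hac, hcb⟩) _ (hmem b (right_mem_Icc.2 hab'))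
    rw [e1, abs_sub_comm, abs_of_nonneg (sub_nonneg.2 (hm haI hcI hac))] at d1
    rw [e2, abs_sub_comm, abs_of_nonneg (sub_nonneg.2 (hm hcI hbI hcb))] at d2
    have h5 : |h X - h Y| ≤ h b - h a := by
      have h1 := hm haI hXI haX
      have h2 := hm haI hYI haY
      have h3 := hm hXI hbI hXb
      have h4 := hm hYI hbI hYb
      rw [abs_le]; constructor <;> linarith
    have h6 : |h p - h r| = h r - h p := by
      rw [abs_sub_comm, abs_of_nonneg (sub_nonneg.2 (hm hpI hrI hpr))]
    rw [h6]
    have := mul_le_mul_of_nonneg_left h5 H.pos.le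
    linarith
  have hXY : 0 < |h X - h Y| := by
    rw [hsc]
    have : 0 < |h x - h y| := abs_pos.2 (sub_ne_zero.2 fun e => hxy (H.mono.injOn hx hy e))
    have := H.pos
    positivity
  have huv : uIcc u v ⊆ uIcc (f^[n] l) (f^[n] m) := uIcc_subset_uIcc hu hv
  have huab : u ∈ Icc a b := ⟨(le_min hln.1 hmn.1).trans hu.1, hu.2.trans (max_le hln.2 hmn.2)⟩
  have hvab : v ∈ Icc a b := ⟨(le_min hln.1 hmn.1).trans hv.1, hv.2.trans (max_le hln.2 hmn.2)⟩
  refine ⟨c, hcK, hcA, n + 1, p, r, f u, f v, hpI, hrI, ?_, ?_, ?_, ?_, ?_, ?_, ?_⟩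
  · intro e
    rw [e] at hhalf
    have := mul_pos H.pos hXY
    simp at hhalf; linarith
  · rw [uIcc_of_le hpr]; exact hmem u huab
  · rw [uIcc_of_le hpr]; exact hmem v hvab
  · have h1 : p ∈ f '' Icc a b := him ▸ left_mem_Icc.2 hpr
    have h2 : r ∈ f '' Icc a b := him ▸ right_mem_Icc.2 hpr
    obtain ⟨t, ht, e⟩ := h1
    obtain ⟨t', ht', e'⟩ := h2
    rw [← e, ← e']
    exact hq t ht t' ht'
  · intro c' hc'
    rw [uIcc_of_le hpr]
    rcases Finset.mem_insert.1 hc' with rfl | hc'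
    · exact ⟨1, le_rfl, hmem _ ⟨hac, hcb⟩⟩
    · obtain ⟨i, hi, hm⟩ := hA c' hc'
      refine ⟨n + i + 1, by omega, ?_⟩
      rw [Function.iterate_succ_apply', Function.iterate_add_apply]
      exact hmem _ (hsubU (hnh.mem hx hy hm))
  · rw [pow_succ', mul_assoc, ← hsc]; exact hhalf
  · intro t ht
    obtain ⟨z, hz, rfl⟩ := intermediate_value_uIcc S.cont.continuousOn ht
    have hz' := huv hz
    have hlI0 := uIcc_subI hx hy hl
    have hmI0 := uIcc_subI hx hy hm
    rw [← (hnh.sub hl hm).image hlI0 hmI0] at hz'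
    obtain ⟨w, hw, rfl⟩ := hz'
    exact ⟨w, hw, by rw [Function.iterate_succ_apply']⟩

/-- Intervals, together with a definite proportion of them, grow to definite size. -/
lemma qs_claim {s : ℝ} {h : ℝ → ℝ} (H : S.CS s h) (k : ℕ) : ∀ κ > 0, ∃ κ' > 0, ∀ A ⊆ S.K,
    (S.K \ A).card ≤ k → ∀ x y l m, x ∈ Icc (0:ℝ) 1 → y ∈ Icc (0:ℝ) 1 → x ≠ y → l ∈ uIcc x y →
    m ∈ uIcc x y → κ * |x - y| ≤ |l - m| → (∀ c ∈ A, ∃ i, 1 ≤ i ∧ f^[i] c ∈ uIcc x y) →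
    ∃ N, s ^ N * |h x - h y| ≤ 2 ^ k ∧ ∃ u ∈ uIcc l m, ∃ v ∈ uIcc l m,
      κ' ≤ |f^[N] u - f^[N] v| := by
  obtain ⟨τ, hτ, B, hB⟩ := S.sum_bound
  obtain ⟨g, hg, hgap⟩ := S.gap
  have hrun := fun x y hx hy hxy => run H (τ1 := min τ (min (g / 4) (min (S.ρ0 / 3) (S.τ0 / 4))))
    (min_le_left _ _) (le_max_right B 0)
    (fun x hx y hy n h1 h2 => (hB x hx y hy n h1 h2).trans (le_max_left B 0)) (x := x) (y := y)
    hx hy hxy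
  have e1 : min τ (min (g / 4) (min (S.ρ0 / 3) (S.τ0 / 4))) ≤ g / 4 :=
    (min_le_right _ _).trans (min_le_left _ _)
  have e2 : min τ (min (g / 4) (min (S.ρ0 / 3) (S.τ0 / 4))) ≤ S.ρ0 / 3 :=
    (min_le_right _ _).trans ((min_le_right _ _).trans (min_le_left _ _))
  have e3 : min τ (min (g / 4) (min (S.ρ0 / 3) (S.τ0 / 4))) ≤ S.τ0 / 4 :=
    (min_le_right _ _).trans ((min_le_right _ _).trans (min_le_right _ _))
  have hρ := S.ρ0_pos
  have hτ0 := S.τ0_pos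
  have e0 : 0 < min τ (min (g / 4) (min (S.ρ0 / 3) (S.τ0 / 4))) := by positivity
  generalize min τ (min (g / 4) (min (S.ρ0 / 3) (S.τ0 / 4))) = τ1 at *
  generalize max B 0 = B1 at *
  clear hB
  have step := fun κ hκ A x y l m hx hy hxy hl hm hlm hA => qs_step H hrun hgap (by linarith)
    (by linarith) (by linarith) (κ := κ) hκ (A := A) (x := x) (y := y) (l := l) (m := m)
    hx hy hxy hl hm hlm hA
  induction k with
  | zero =>
    intro κ hκ
    refine ⟨κ * Real.exp (-(S.C0 * B1)) * τ1, by positivity, ?_⟩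
    intro A hAK hcard x y l m hx hy hxy hl hm hlm hA
    rcases step κ hκ A x y l m hx hy hxy hl hm hlm hA with ⟨N, hN, hN'⟩ | ⟨c, hcK, hcA, -⟩
    · exact ⟨N, by simpa using hN, l, left_mem_uIcc, m, right_mem_uIcc, hN'⟩
    · exfalso
      have : S.K \ A = ∅ := Finset.card_eq_zero.1 (by omega)
      have h1 : c ∈ S.K \ A := Finset.mem_sdiff.2 ⟨hcK, hcA⟩
      rw [this] at h1; simp at h1
  | succ k ih =>
    intro κ hκ
    obtain ⟨κ', hκ', hih⟩ := ih (S.q (κ * Real.exp (-(S.C0 * B1)) / 3)) (S.q_pos _ (by positivity))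
    refine ⟨min κ' (κ * Real.exp (-(S.C0 * B1)) * τ1), by positivity, ?_⟩
    intro A hAK hcard x y l m hx hy hxy hl hm hlm hA
    rcases step κ hκ A x y l m hx hy hxy hl hm hlm hA with ⟨N, hN, hN'⟩ |
      ⟨c, hcK, hcA, n, p, r, l', m', hp, hr, hpr, hl', hm', hlm', hA', hs, hsub⟩
    · exact ⟨N, hN.trans (one_le_pow₀ (by norm_num)), l, left_mem_uIcc, m, right_mem_uIcc,
        (min_le_right _ _).trans hN'⟩
    · have hcard' : (S.K \ insert c A).card ≤ k := by
        have : S.K \ insert c A = (S.K \ A).erase c := by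
          ext t; simp only [Finset.mem_sdiff, Finset.mem_insert, Finset.mem_erase]; tauto
        rw [this, Finset.card_erase_of_mem (Finset.mem_sdiff.2 ⟨hcK, hcA⟩)]; omega
      obtain ⟨N, hN, u, hu, v, hv, huv⟩ := hih (insert c A) (Finset.insert_subset hcK hAK) hcard'
        p r l' m' hp hr hpr hl' hm' hlm' hA'
      obtain ⟨u0, hu0, rfl⟩ := hsub hu
      obtain ⟨v0, hv0, rfl⟩ := hsub hv
      refine ⟨N + n, ?_, u0, hu0, v0, hv0, ?_⟩
      · have hsN := pow_pos H.pos N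
        rw [pow_add, pow_succ, mul_assoc]
        nlinarith [mul_le_mul_of_nonneg_left hs hsN.le]
      · rw [Function.iterate_add_apply, Function.iterate_add_apply]
        exact (min_le_left _ _).trans huv

end Sys

/-! ### Quasi-symmetry and piecewise affinity -/

namespace Sys
variable {f : ℝ → ℝ} {S : Sys f}

/-- A subinterval of at least half the length has a definite proportion of the `h`-length. -/
lemma qs_half {s : ℝ} {h : ℝ → ℝ} (H : S.CS s h) : ∃ K : ℝ, 1 ≤ K ∧ ∀ x y l m, x ∈ Icc (0:ℝ) 1 →
    y ∈ Icc (0:ℝ) 1 → x ≠ y → l ∈ uIcc x y → m ∈ uIcc x y → 1 / 2 * |x - y| ≤ |l - m| →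
    |h x - h y| ≤ K * |h l - h m| := by
  obtain ⟨κ', hκ', hcl⟩ := qs_claim H S.K.card (1 / 2) (by norm_num)
  obtain ⟨δ, hδ, hu⟩ := H.unif_inv hκ'
  refine ⟨max 1 (2 ^ S.K.card / δ), le_max_left _ _, ?_⟩
  intro x y l m hx hy hxy hl hm hlm
  obtain ⟨N, hN, u, hu', v, hv', huv⟩ := hcl ∅ (by simp) (by simp) x y l m hx hy hxy hl hm hlm
    (by simp)
  have hlI := uIcc_subI hx hy hl
  have hmI := uIcc_subI hx hy hm
  have huI := uIcc_subI hlI hmI hu'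
  have hvI := uIcc_subI hlI hmI hv'
  have h1 : δ < |h (f^[N] u) - h (f^[N] v)| := by
    by_contra hc
    exact absurd (hu _ (S.mapsI N huI) _ (S.mapsI N hvI) (not_lt.1 hc)) (not_lt.2 huv)
  have h2 := H.lip_iter huI hvI N
  have h3 : |h u - h v| ≤ |h l - h m| := by
    have hm' := H.mono.monotoneOn.mono (uIcc_subI hlI hmI)
    have key : ∀ t ∈ uIcc l m, h t ∈ uIcc (h l) (h m) := fun t ht => hm'.mapsTo_uIcc ht
    exact abs_sub_le_of_mem_uIcc (key u hu') (key v hv')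
  have hsN := pow_pos H.pos N
  have h4 : s ^ N * |h x - h y| ≤ s ^ N * (2 ^ S.K.card / δ * |h l - h m|) := by
    have : δ ≤ s ^ N * |h l - h m| := by
      nlinarith [mul_le_mul_of_nonneg_left h3 hsN.le]
    calc s ^ N * |h x - h y| ≤ 2 ^ S.K.card := hN
      _ = 2 ^ S.K.card / δ * δ := by field_simp
      _ ≤ 2 ^ S.K.card / δ * (s ^ N * |h l - h m|) := by gcongr
      _ = _ := by ring
  refine (le_of_mul_le_mul_left h4 hsN).trans ?_
  gcongr
  exact le_max_right _ _

lemma qs {s : ℝ} {h : ℝ → ℝ} (H : S.CS s h) : ∃ K : ℝ, 1 ≤ K ∧ ∀ x ∈ Icc (0:ℝ) 1, ∀ ε : ℝ, 0 < ε →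
    x + ε ∈ Icc (0:ℝ) 1 → x - ε ∈ Icc (0:ℝ) 1 →
    |h (x + ε) - h x| ≤ K * |h x - h (x - ε)| ∧
    |h x - h (x - ε)| ≤ K * |h (x + ε) - h x| := by
  obtain ⟨K, hK, hq⟩ := qs_half H
  refine ⟨K, hK, fun x hx ε hε hp hm => ?_⟩
  have m1 : x ∈ uIcc (x - ε) (x + ε) := mem_uIcc.2 (Or.inl ⟨by linarith, by linarith⟩)
  have a1 : |x - ε - (x + ε)| = 2 * ε := by rw [abs_of_neg (by linarith)]; ring
  have a2 : |x - (x - ε)| = ε := by rw [abs_of_pos (by linarith)]; ring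
  have a3 : |x + ε - x| = ε := by rw [abs_of_pos (by linarith)]; ring
  have e1 := hq (x - ε) (x + ε) x (x - ε) hm hp (by linarith) m1 left_mem_uIcc (by rw [a1, a2]; linarith)
  have e2 := hq (x - ε) (x + ε) (x + ε) x hm hp (by linarith) right_mem_uIcc m1 (by rw [a1, a3]; linarith)
  have i1 := H.mono.monotoneOn hm hx (by linarith)
  have i2 := H.mono.monotoneOn hx hp (by linarith)
  rw [abs_sub_comm (h (x - ε)), abs_of_nonneg (by linarith)] at e1 e2
  rw [abs_of_nonneg (show 0 ≤ h x - h (x - ε) by linarith)] at e1 ⊢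
  rw [abs_of_nonneg (show 0 ≤ h (x + ε) - h x by linarith)] at e2 ⊢
  constructor <;> linarith

/-- The conjugate of `f` by `h` is affine between consecutive points of `h (K ∪ {0, 1})`. -/
lemma affine {s : ℝ} {h F : ℝ → ℝ} (H : S.CS s h) (hF : ∀ x ∈ Icc (0:ℝ) 1, F (h x) = h (f x)) :
    ∃ (n : ℕ) (a : Fin (n + 1) → ℝ), a 0 = 0 ∧ a (Fin.last n) = 1 ∧ StrictMono a ∧
    ∀ i : Fin n, ∃ b σ : ℝ, (σ = 1 ∨ σ = -1) ∧
      ∀ x ∈ Set.Icc (a i.castSucc) (a i.succ), F x = σ * s * x + b := by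
  classical
  let P : Finset ℝ := (insert 0 (insert 1 S.K)).image h
  have h0P : (0:ℝ) ∈ P := Finset.mem_image.2 ⟨0, by simp, H.h0⟩
  have h1P : (1:ℝ) ∈ P := Finset.mem_image.2 ⟨1, by simp, H.h1⟩
  have hPI : ∀ y ∈ P, y ∈ Icc (0:ℝ) 1 := by
    intro y hy
    obtain ⟨x, hx, rfl⟩ := Finset.mem_image.1 hy
    apply H.mem
    rcases Finset.mem_insert.1 hx with rfl | hx
    · simp
    rcases Finset.mem_insert.1 hx with rfl | hx
    · simp
    · exact S.K_sub x hx
  have hne : P.Nonempty := ⟨0, h0P⟩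
  obtain ⟨n, hn⟩ : ∃ n, P.card = n + 1 := ⟨P.card - 1, by have := hne.card_pos; omega⟩
  have hz : (0:ℕ) < n + 1 := by omega
  have e0 : P.orderEmbOfFin hn 0 = 0 := by
    have := Finset.orderEmbOfFin_zero hn hz
    rw [show (0 : Fin (n + 1)) = ⟨0, hz⟩ from rfl, this]
    exact le_antisymm (Finset.min'_le _ _ h0P) (hPI _ (Finset.min'_mem _ _)).1
  have e1 : P.orderEmbOfFin hn (Fin.last n) = 1 := by
    have := Finset.orderEmbOfFin_last hn hz
    rw [show Fin.last n = ⟨n + 1 - 1, Nat.sub_lt hz (by omega)⟩ from rfl, this]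
    exact le_antisymm (hPI _ (Finset.max'_mem _ _)).2 (Finset.le_max' _ _ h1P)
  refine ⟨n, P.orderEmbOfFin hn, e0, e1, (P.orderEmbOfFin hn).strictMono, fun i => ?_⟩
  set A := P.orderEmbOfFin hn i.castSucc with hA
  set B := P.orderEmbOfFin hn i.succ with hB
  have hAB : A < B := (P.orderEmbOfFin hn).strictMono (Fin.castSucc_lt_succ)
  have hno : ∀ y ∈ P, y ≤ A ∨ B ≤ y := by
    intro y hy
    have : y ∈ Set.range (P.orderEmbOfFin hn) := by rw [Finset.range_orderEmbOfFin]; exact hy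
    obtain ⟨j, rfl⟩ := this
    rcases le_or_gt j i.castSucc with hj | hj
    · exact Or.inl ((P.orderEmbOfFin hn).monotone hj)
    · exact Or.inr ((P.orderEmbOfFin hn).monotone (Fin.castSucc_lt_iff_succ_le.1 hj))
  obtain ⟨u, hu, hue⟩ := H.surj (hPI A (Finset.orderEmbOfFin_mem _ _ _))
  obtain ⟨v, hv, hve⟩ := H.surj (hPI B (Finset.orderEmbOfFin_mem _ _ _))
  have huv : u < v := by rw [← H.mono.lt_iff_lt hu hv, hue, hve]; exact hAB
  have hK : ∀ c ∈ S.K, c ∉ Ioo u v := by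
    intro c hc hm
    have hcI := S.K_sub c hc
    have hcP : h c ∈ P := Finset.mem_image.2 ⟨c, by simp [hc], rfl⟩
    have q1 := H.mono hu hcI hm.1
    have q2 := H.mono hcI hv hm.2
    rcases hno _ hcP with h | h <;> linarith
  have hlap : ∀ y ∈ Icc u v, S.Lap u y 1 := by
    intro y hy j hj t ht htK
    obtain rfl : j = 0 := by omega
    rw [uIcc_of_le hy.1] at ht
    by_contra! hc
    exact hK t htK ⟨lt_of_le_of_ne ht.1 (Ne.symm hc.1), (lt_of_le_of_ne ht.2 hc.2).trans_le hy.2⟩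
  have hinj := S.inj u v hu.1 hv.2 hK
  have hsub : ∀ y ∈ Icc u v, y ∈ Icc (0:ℝ) 1 := fun y hy => ⟨hu.1.trans hy.1, hy.2.trans hv.2⟩
  have hpre : ∀ x ∈ Icc A B, ∃ y ∈ Icc u v, h y = x := by
    intro x hx
    obtain ⟨y, hy, rfl⟩ := H.surj (y := x)
      ⟨(hPI A (Finset.orderEmbOfFin_mem _ _ _)).1.trans hx.1,
        hx.2.trans (hPI B (Finset.orderEmbOfFin_mem _ _ _)).2⟩
    rw [← hue, ← hve] at hx
    exact ⟨y, ⟨(H.mono.le_iff_le hu hy).1 hx.1, (H.mono.le_iff_le hy hv).1 hx.2⟩, rfl⟩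
  have hul := left_mem_Icc.2 huv.le
  have hm := H.mono.monotoneOn
  rcases S.cont.continuousOn.strictMonoOn_of_injOn_Icc' huv.le hinj with hf | hf
  · refine ⟨h (f u) - s * h u, 1, Or.inl rfl, fun x hx => ?_⟩
    obtain ⟨y, hy, rfl⟩ := hpre x hx
    rw [hF y (hsub y hy)]
    have h1 := H.scale u hu y (hsub y hy) (hlap y hy)
    have h2 := hm (S.maps u) (S.maps y) (hf.monotoneOn hul hy hy.1)
    have h3 := hm hu (hsub y hy) hy.1
    rw [abs_of_nonpos (by linarith), abs_of_nonpos (by linarith)] at h1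
    linarith
  · refine ⟨h (f u) + s * h u, -1, Or.inr rfl, fun x hx => ?_⟩
    obtain ⟨y, hy, rfl⟩ := hpre x hx
    rw [hF y (hsub y hy)]
    have h1 := H.scale u hu y (hsub y hy) (hlap y hy)
    have h2 := hm (S.maps y) (S.maps u) (hf.antitoneOn hul hy hy.1)
    have h3 := hm hu (hsub y hy) hy.1
    rw [abs_of_nonneg (by linarith), abs_of_nonpos (by linarith)] at h1
    linarith

end Sys

/-! ### Derivative estimates -/

namespace Reg

/-- Mean value theorem on subintervals of `I`, with one-sided derivatives at the endpoints of `I`. -/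
lemma mvt {F : ℝ → ℝ} (hF : ContDiffOn ℝ 1 F (Icc 0 1)) {a b : ℝ} (ha : a ∈ Icc (0:ℝ) 1)
    (hb : b ∈ Icc (0:ℝ) 1) : ∃ ξ ∈ uIcc a b, |F a - F b| = |derivWithin F (Icc 0 1) ξ| * |a - b| := by
  wlog hab : a ≤ b generalizing a b
  · obtain ⟨ξ, h1, h2⟩ := this hb ha (le_of_not_ge hab)
    rw [uIcc_comm] at h1
    exact ⟨ξ, h1, by rw [abs_sub_comm, h2, abs_sub_comm b a]⟩
  rcases hab.eq_or_lt with rfl | hab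
  · exact ⟨a, left_mem_uIcc, by simp⟩
  have hd := hF.differentiableOn (by norm_num)
  have hI : ∀ x ∈ Ioo a b, Icc (0:ℝ) 1 ∈ nhds x := fun x hx =>
    Icc_mem_nhds (ha.1.trans_lt hx.1) (hx.2.trans_le hb.2)
  obtain ⟨ξ, hξ, e⟩ := exists_deriv_eq_slope F hab
    (hF.continuousOn.mono (Icc_subset_Icc ha.1 hb.2))
    (fun x hx => ((hd x (mem_of_mem_nhds (hI x hx))).differentiableAt (hI x hx)).differentiableWithinAt)
  refine ⟨ξ, ?_, ?_⟩
  · rw [uIcc_of_le hab.le]; exact Ioo_subset_Icc_self hξ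
  · rw [derivWithin_of_mem_nhds (hI ξ hξ), e, ← abs_mul, abs_sub_comm]
    have : b - a ≠ 0 := by linarith
    rw [← abs_neg ((F b - F a) / (b - a) * (a - b))]
    congr 1; field_simp; ring

lemma bdd_abs {G : ℝ → ℝ} (hG : ContinuousOn G (Icc 0 1)) : ∃ M, 0 < M ∧ ∀ x ∈ Icc (0:ℝ) 1, |G x| ≤ M := by
  obtain ⟨M, hM⟩ := (isCompact_Icc.image_of_continuousOn hG).isBounded.exists_norm_le
  exact ⟨max M 1, by positivity, fun x hx => (hM _ (mem_image_of_mem G hx)).trans (le_max_left _ _)⟩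

lemma bdd_below {G : ℝ → ℝ} (hG : ContinuousOn G (Icc 0 1)) (h0 : ∀ x ∈ Icc (0:ℝ) 1, G x ≠ 0) :
    ∃ m, 0 < m ∧ ∀ x ∈ Icc (0:ℝ) 1, m ≤ |G x| := by
  obtain ⟨x, hx, hmin⟩ := isCompact_Icc.exists_isMinOn (nonempty_Icc.2 (zero_le_one (α := ℝ))) hG.abs
  exact ⟨|G x|, abs_pos.2 (h0 x hx), fun y hy => hmin hy⟩

lemma lip_log_deriv {φ : ℝ → ℝ} (hφ : IsC3Diffeo φ) : ∃ M, 0 < M ∧ ∀ u ∈ Icc (0:ℝ) 1, ∀ v ∈ Icc (0:ℝ) 1,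
    |Real.log (deriv φ u) - Real.log (deriv φ v)| ≤ M * |u - v| := by
  have h2 : ContDiff ℝ 2 (deriv φ) := by
    have := hφ.1
    rw [show (3 : WithTop ℕ∞) = 2 + 1 by norm_num, contDiff_succ_iff_deriv] at this
    exact this.2.2
  have h3 : ContDiff ℝ 1 (fun x => Real.log (deriv φ x)) :=
    (h2.of_le (by norm_num)).log hφ.2.2
  obtain ⟨M, hM, hb⟩ := bdd_abs (h3.contDiffOn.continuousOn_derivWithin (uniqueDiffOn_Icc one_pos) le_rfl)
  refine ⟨M, hM, fun u hu v hv => ?_⟩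
  obtain ⟨ξ, hξ, e⟩ := mvt h3.contDiffOn hu hv
  rw [e]
  have : ξ ∈ Icc (0:ℝ) 1 := (ordConnected_Icc.uIcc_subset hu hv) hξ
  gcongr
  exact hb ξ this

lemma bilip {φ : ℝ → ℝ} (hφ : IsC3Diffeo φ) : ∃ m M, 0 < m ∧ 0 < M ∧
    (∀ u ∈ Icc (0:ℝ) 1, m ≤ |deriv φ u| ∧ |deriv φ u| ≤ M) ∧
    ∀ u ∈ Icc (0:ℝ) 1, ∀ v ∈ Icc (0:ℝ) 1, m * |u - v| ≤ |φ u - φ v| ∧ |φ u - φ v| ≤ M * |u - v| := by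
  have h1 : ContDiff ℝ 1 φ := hφ.1.of_le (by norm_num)
  have hc : Continuous (deriv φ) := h1.continuous_deriv le_rfl
  obtain ⟨M, hM, hb⟩ := bdd_abs hc.continuousOn
  obtain ⟨m, hm, hb'⟩ := bdd_below hc.continuousOn fun x _ => hφ.2.2 x
  refine ⟨m, M, hm, hM, fun u hu => ⟨hb' u hu, hb u hu⟩, fun u hu v hv => ?_⟩
  obtain ⟨ξ, hξ, e⟩ := mvt h1.contDiffOn hu hv
  have hξI : ξ ∈ Icc (0:ℝ) 1 := (ordConnected_Icc.uIcc_subset hu hv) hξ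
  rw [((h1.differentiable (by norm_num)) ξ).derivWithin (uniqueDiffOn_Icc one_pos ξ hξI)] at e
  rw [e]
  constructor
  · gcongr; exact hb' ξ hξI
  · gcongr; exact hb ξ hξI

lemma log_sub_le {p q : ℝ} (hp : p ≠ 0) (hq : q ≠ 0) :
    |Real.log p - Real.log q| ≤ |p - q| / min |p| |q| := by
  wlog hpq : |q| ≤ |p| generalizing p q
  · have := this hq hp (le_of_not_ge hpq)
    rwa [abs_sub_comm, abs_sub_comm q p, min_comm] at this
  rw [min_eq_right hpq, ← Real.log_abs p, ← Real.log_abs q,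
    abs_of_nonneg (sub_nonneg.2 (Real.log_le_log (abs_pos.2 hq) hpq)),
    ← Real.log_div (abs_ne_zero.2 hp) (abs_ne_zero.2 hq)]
  refine (Real.log_le_sub_one_of_pos (by positivity)).trans ?_
  rw [div_sub_one (abs_ne_zero.2 hq)]
  have := abs_sub_abs_le_abs_sub p q
  gcongr

/-- Derivative estimates on the `1 / M`-neighbourhood of a critical point `c`: `|Df x|` is comparable
to `|x - c| ^ (ℓ - 1)` for some `ℓ > 1`, and `log |Df|` has distortion controlled by the relative
distance. The derivative is taken within `I`, so endpoints are included. -/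
def Near (f : ℝ → ℝ) (c M : ℝ) : Prop := ∃ ℓ, 1 < ℓ ∧ ℓ ≤ M ∧
  (∀ x ∈ Icc (0:ℝ) 1, |x - c| ≤ 1 / M →
    |x - c| ^ (ℓ - 1) ≤ M * |derivWithin f (Icc 0 1) x| ∧
    |derivWithin f (Icc 0 1) x| ≤ M * |x - c| ^ (ℓ - 1)) ∧
  ∀ u ∈ Icc (0:ℝ) 1, ∀ v ∈ Icc (0:ℝ) 1, |u - c| ≤ 1 / M → |v - c| ≤ 1 / M → u ≠ c → v ≠ c →
    |Real.log (derivWithin f (Icc 0 1) u) - Real.log (derivWithin f (Icc 0 1) v)| ≤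
      M * (|u - v| / min |u - c| |v - c|)

lemma Near.mono {f : ℝ → ℝ} {c M M' : ℝ} (h : Near f c M) (hM : M ≤ M') : Near f c M' := by
  obtain ⟨ℓ, h1, h2, h3, h4⟩ := h
  have hM0 : 0 < M := by linarith
  have hi : 1 / M' ≤ 1 / M := one_div_le_one_div_of_le hM0 hM
  refine ⟨ℓ, h1, h2.trans hM, fun x hx hxc => ?_, fun u hu v hv huc hvc hu' hv' => ?_⟩
  · obtain ⟨a, b⟩ := h3 x hx (hxc.trans hi)
    constructor
    · refine a.trans ?_; gcongr
    · refine b.trans ?_; gcongr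
  · refine (h4 u hu v hv (huc.trans hi) (hvc.trans hi) hu' hv').trans ?_
    have : 0 ≤ |u - v| / min |u - c| |v - c| := by positivity
    gcongr

lemma exists_unif {f : ℝ → ℝ} (K : Finset ℝ) (h : ∀ c ∈ K, ∃ M, Near f c M) :
    ∃ M, 1 ≤ M ∧ ∀ c ∈ K, Near f c M := by
  classical
  induction K using Finset.induction_on with
  | empty => exact ⟨1, le_rfl, by simp⟩
  | insert c s _ ih =>
    obtain ⟨M, hM, hs⟩ := ih fun c' hc' => h c' (Finset.mem_insert_of_mem hc')
    obtain ⟨M', hM'⟩ := h c (Finset.mem_insert_self _ _)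
    refine ⟨max M M', hM.trans (le_max_left _ _), fun c' hc' => ?_⟩
    rcases Finset.mem_insert.1 hc' with rfl | hc'
    · exact hM'.mono (le_max_right _ _)
    · exact (hs c' hc').mono (le_max_left _ _)

end Reg

/-! ### The derivative near a non-flat critical point -/

namespace Reg

/-- Logarithmic differentiation of the normal form `|ψ ∘ f| = |φ| ^ ℓ`. -/
lemma nonflat_formula {f φ ψ : ℝ → ℝ} {ℓ c r : ℝ} (hf : ContDiffOn ℝ 1 f (Icc 0 1)) (hℓ : 1 < ℓ)
    (hφ : IsC3Diffeo φ) (hψ : IsC3Diffeo ψ) (hφc : φ c = 0)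
    (he : ∀ y ∈ Icc (0:ℝ) 1, |y - c| < r → |ψ (f y)| = |φ y| ^ ℓ) {x : ℝ} (hx : x ∈ Icc (0:ℝ) 1)
    (hxr : |x - c| < r) (hxc : x ≠ c) :
    φ x ≠ 0 ∧ |derivWithin f (Icc 0 1) x| * |deriv ψ (f x)| = ℓ * |φ x| ^ (ℓ - 1) * |deriv φ x| := by
  have hφx : φ x ≠ 0 := fun h => hxc (hφ.2.1.1 (h.trans hφc.symm))
  have hψx : ψ (f x) ≠ 0 := by
    intro h
    have := he x hx hxr
    rw [h, abs_zero] at this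
    have h2 := Real.rpow_pos_of_pos (abs_pos.2 hφx) ℓ
    linarith
  refine ⟨hφx, ?_⟩
  have hfd := (hf.differentiableOn (by norm_num) x hx).hasDerivWithinAt
  have hψd : HasDerivAt ψ (deriv ψ (f x)) (f x) :=
    ((hψ.1.differentiable (by norm_num)) (f x)).hasDerivAt
  have hφd : HasDerivAt φ (deriv φ x) x := ((hφ.1.differentiable (by norm_num)) x).hasDerivAt
  have h1 : HasDerivWithinAt (fun y => Real.log (ψ (f y)))
      (deriv ψ (f x) * derivWithin f (Icc 0 1) x / ψ (f x)) (Icc 0 1) x :=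
    (hψd.comp_hasDerivWithinAt x hfd).log hψx
  have h2 : HasDerivWithinAt (fun y => ℓ * Real.log (φ y)) (ℓ * (deriv φ x / φ x)) (Icc 0 1) x :=
    (hφd.log hφx).hasDerivWithinAt.const_mul ℓ
  have hev : (fun y => ℓ * Real.log (φ y)) =ᶠ[nhdsWithin x (Icc 0 1)] fun y => Real.log (ψ (f y)) := by
    have hb : ball c r ∈ nhds x := isOpen_ball.mem_nhds (by rwa [mem_ball, Real.dist_eq])
    filter_upwards [self_mem_nhdsWithin, mem_nhdsWithin_of_mem_nhds hb] with y hy hyb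
    rw [mem_ball, Real.dist_eq] at hyb
    rw [← Real.log_abs (ψ (f y)), he y hy hyb]
    by_cases h0 : φ y = 0
    · rw [h0, abs_zero, Real.zero_rpow (by linarith)]; simp
    · rw [Real.log_rpow (abs_pos.2 h0), Real.log_abs]
  have h3 := h1.congr_of_eventuallyEq hev (hev.eq_of_nhdsWithin hx)
  have h4 := (uniqueDiffOn_Icc (one_pos (α := ℝ)) x hx).eq_deriv _ h2 h3
  have h5 := congrArg abs h4
  rw [abs_mul, abs_div, abs_div, abs_mul, he x hx hxr, abs_of_pos (by linarith : 0 < ℓ)] at h5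
  have hp : 0 < |φ x| := abs_pos.2 hφx
  have h6 : |φ x| ^ ℓ = |φ x| ^ (ℓ - 1) * |φ x| := by
    rw [← Real.rpow_add_one hp.ne']; congr 1; ring
  have hpp := Real.rpow_pos_of_pos hp (ℓ - 1)
  rw [h6] at h5
  field_simp at h5
  linarith

lemma near_of_nonflat {f : ℝ → ℝ} {ℓ c : ℝ} (hf : ContDiffOn ℝ 1 f (Icc 0 1))
    (hmap : MapsTo f (Icc 0 1) (Icc 0 1)) (hc : c ∈ Icc (0:ℝ) 1) (hN : NonflatAt f ℓ c) :
    ∃ M, Near f c M := by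
  obtain ⟨hℓ, φ, ψ, hφ, hψ, hφc, -, U, hU, he⟩ := hN
  obtain ⟨r, hr, hrU⟩ := Metric.mem_nhdsWithin_iff.1 hU
  have he' : ∀ y ∈ Icc (0:ℝ) 1, |y - c| < r → |ψ (f y)| = |φ y| ^ ℓ := fun y hy hyr =>
    he y (hrU ⟨by rwa [mem_ball, Real.dist_eq], hy⟩)
  obtain ⟨m1, M1, hm1, hM1, hd1, hl1⟩ := bilip hφ
  obtain ⟨m2, M2, hm2, hM2, hd2, -⟩ := bilip hψ
  obtain ⟨L1, hL1, hlog1⟩ := lip_log_deriv hφ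
  obtain ⟨L2, hL2, hlog2⟩ := lip_log_deriv hψ
  set D := derivWithin f (Icc 0 1) with hD
  have hDc : ContinuousOn D (Icc 0 1) := hf.continuousOn_derivWithin (uniqueDiffOn_Icc one_pos) le_rfl
  obtain ⟨M3, hM3, hb3⟩ := bdd_abs hDc
  have hform := fun x hx hxr hxc => nonflat_formula hf hℓ hφ hψ hφc he' (x := x) hx hxr hxc
  have hℓ1 : 0 < ℓ - 1 := by linarith
  have hφb : ∀ x ∈ Icc (0:ℝ) 1, m1 * |x - c| ≤ |φ x| ∧ |φ x| ≤ M1 * |x - c| := by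
    intro x hx
    have := hl1 x hx c hc
    rwa [hφc, sub_zero] at this
  -- the two-sided power bound away from `c`
  set P := max (M2 / (ℓ * m1 ^ (ℓ - 1) * m1)) (ℓ * M1 ^ (ℓ - 1) * M1 / m2) with hP
  have hPpos : 0 < P := by
    have : 0 < ℓ * M1 ^ (ℓ - 1) * M1 / m2 := by
      have := Real.rpow_pos_of_pos hM1 (ℓ - 1); positivity
    exact this.trans_le (le_max_right _ _)
  have hpow : ∀ x ∈ Icc (0:ℝ) 1, |x - c| < r → x ≠ c →
      |x - c| ^ (ℓ - 1) ≤ P * |D x| ∧ |D x| ≤ P * |x - c| ^ (ℓ - 1) := by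
    intro x hx hxr hxc
    obtain ⟨-, e⟩ := hform x hx hxr hxc
    obtain ⟨a1, a2⟩ := hφb x hx
    obtain ⟨b1, b2⟩ := hd1 x hx
    obtain ⟨c1, c2⟩ := hd2 (f x) (hmap hx)
    have hq1 : m1 ^ (ℓ - 1) * |x - c| ^ (ℓ - 1) ≤ |φ x| ^ (ℓ - 1) := by
      rw [← Real.mul_rpow hm1.le (abs_nonneg _)]
      exact Real.rpow_le_rpow (by positivity) a1 hℓ1.le
    have hq2 : |φ x| ^ (ℓ - 1) ≤ M1 ^ (ℓ - 1) * |x - c| ^ (ℓ - 1) := by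
      rw [← Real.mul_rpow hM1.le (abs_nonneg _)]
      exact Real.rpow_le_rpow (by positivity) a2 hℓ1.le
    have hpm := Real.rpow_pos_of_pos hm1 (ℓ - 1)
    have hpM := Real.rpow_pos_of_pos hM1 (ℓ - 1)
    have hx0 : 0 ≤ |x - c| ^ (ℓ - 1) := by positivity
    constructor
    · have : |x - c| ^ (ℓ - 1) ≤ M2 / (ℓ * m1 ^ (ℓ - 1) * m1) * |D x| := by
        rw [div_mul_eq_mul_div, le_div_iff₀ (by positivity)]
        calc |x - c| ^ (ℓ - 1) * (ℓ * m1 ^ (ℓ - 1) * m1)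
            = ℓ * (m1 ^ (ℓ - 1) * |x - c| ^ (ℓ - 1)) * m1 := by ring
          _ ≤ ℓ * |φ x| ^ (ℓ - 1) * |deriv φ x| := by gcongr
          _ = |D x| * |deriv ψ (f x)| := e.symm
          _ ≤ |D x| * M2 := by gcongr
          _ = _ := by ring
      exact this.trans (mul_le_mul_of_nonneg_right (le_max_left _ _) (abs_nonneg _))
    · have : |D x| ≤ ℓ * M1 ^ (ℓ - 1) * M1 / m2 * |x - c| ^ (ℓ - 1) := by
        rw [div_mul_eq_mul_div, le_div_iff₀ hm2]
        calc |D x| * m2 ≤ |D x| * |deriv ψ (f x)| := by gcongr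
          _ = ℓ * |φ x| ^ (ℓ - 1) * |deriv φ x| := e
          _ ≤ ℓ * (M1 ^ (ℓ - 1) * |x - c| ^ (ℓ - 1)) * M1 := by gcongr
          _ = _ := by ring
      exact this.trans (mul_le_mul_of_nonneg_right (le_max_right _ _) hx0)
  -- the derivative vanishes at `c` by continuity
  have hDc0 : D c = 0 := by
    have hacc : (nhdsWithin c (Icc (0:ℝ) 1 \ {c})).NeBot := by
      have := (uniqueDiffWithinAt_iff_accPt.1 (uniqueDiffOn_Icc (one_pos (α := ℝ)) c hc))
      rwa [accPt_principal_iff_nhdsWithin] at this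
    have t1 : Tendsto (fun x => |D x|) (nhdsWithin c (Icc (0:ℝ) 1 \ {c})) (nhds |D c|) :=
      ((hDc c hc).abs).mono_left (nhdsWithin_mono _ sdiff_subset)
    have t2 : Tendsto (fun x => P * |x - c| ^ (ℓ - 1)) (nhdsWithin c (Icc (0:ℝ) 1 \ {c}))
        (nhds 0) := by
      have hc' : Continuous fun x : ℝ => P * |x - c| ^ (ℓ - 1) :=
        continuous_const.mul ((continuous_abs.comp (continuous_id.sub continuous_const)).rpow_const
          fun x => Or.inr hℓ1.le)
      have := hc'.tendsto c
      simp only [sub_self, abs_zero, Real.zero_rpow hℓ1.ne', mul_zero] at this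
      exact this.mono_left nhdsWithin_le_nhds
    have hb : ball c r ∈ nhds c := ball_mem_nhds c hr
    have := le_of_tendsto_of_tendsto t1 t2 (by
      filter_upwards [self_mem_nhdsWithin, mem_nhdsWithin_of_mem_nhds hb] with x hx hxb
      rw [mem_ball, Real.dist_eq] at hxb
      exact (hpow x hx.1 hxb hx.2).2)
    exact abs_eq_zero.1 (le_antisymm this (abs_nonneg _))
  -- the logarithm of the derivative
  set Q := (ℓ - 1) * (M1 / m1) + L1 + L2 * M3 with hQ
  have hQpos : 0 < Q := by positivity
  have hlogD : ∀ x ∈ Icc (0:ℝ) 1, |x - c| < r → x ≠ c →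
      Real.log (D x) = Real.log ℓ + (ℓ - 1) * Real.log (φ x) + Real.log (deriv φ x)
        - Real.log (deriv ψ (f x)) := by
    intro x hx hxr hxc
    obtain ⟨h0, e⟩ := hform x hx hxr hxc
    have hψ0 := hψ.2.2 (f x)
    have hφ0 := hφ.2.2 x
    have hpp := Real.rpow_pos_of_pos (abs_pos.2 h0) (ℓ - 1)
    have hD0 : D x ≠ 0 := by
      intro h
      rw [← hD, h, abs_zero, zero_mul] at e
      have : 0 < ℓ * |φ x| ^ (ℓ - 1) * |deriv φ x| := by
        have := abs_pos.2 hφ0; positivity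
      linarith
    have h7 := congrArg Real.log e
    rw [Real.log_mul (abs_ne_zero.2 hD0) (abs_ne_zero.2 hψ0), Real.log_mul (by positivity)
      (abs_ne_zero.2 hφ0), Real.log_mul (by positivity) hpp.ne', Real.log_rpow (abs_pos.2 h0),
      Real.log_abs, Real.log_abs, Real.log_abs, Real.log_abs] at h7
    linarith
  set M := max (max ℓ (2 / r)) (max P Q) with hM
  have hMℓ : ℓ ≤ M := (le_max_left _ _).trans (le_max_left _ _)
  have hMr : 2 / r ≤ M := (le_max_right _ _).trans (le_max_left _ _)
  have hMP : P ≤ M := (le_max_left _ _).trans (le_max_right _ _)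
  have hMQ : Q ≤ M := (le_max_right _ _).trans (le_max_right _ _)
  have hM0 : 0 < M := by linarith
  have hrad : ∀ t, t ≤ 1 / M → t < r := by
    intro t ht
    have : 1 / M ≤ r / 2 := by
      rw [div_le_iff₀ hr] at hMr
      rw [div_le_div_iff₀ hM0 two_pos]; linarith
    linarith
  refine ⟨M, ℓ, hℓ, hMℓ, fun x hx hxc => ?_, fun u hu v hv huc hvc hu' hv' => ?_⟩
  · rcases eq_or_ne x c with rfl | hne
    · simp only [sub_self, abs_zero, Real.zero_rpow hℓ1.ne', mul_zero]
      rw [← hD, hDc0]; simp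
    · obtain ⟨a, b⟩ := hpow x hx (hrad _ hxc) hne
      exact ⟨a.trans (mul_le_mul_of_nonneg_right hMP (abs_nonneg _)),
        b.trans (mul_le_mul_of_nonneg_right hMP (by positivity))⟩
  · rw [← hD, hlogD u hu (hrad _ huc) hu', hlogD v hv (hrad _ hvc) hv']
    have hu0 : 0 < |u - c| := abs_pos.2 (sub_ne_zero.2 hu')
    have hv0 : 0 < |v - c| := abs_pos.2 (sub_ne_zero.2 hv')
    set μ := min |u - c| |v - c| with hμ
    have hμ0 : 0 < μ := lt_min hu0 hv0
    have hμ1 : μ ≤ 1 := (min_le_left _ _).trans (by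
      rw [abs_le]; constructor <;> linarith [hu.1, hu.2, hc.1, hc.2])
    have k0 : |u - v| ≤ |u - v| / μ := by
      rw [le_div_iff₀ hμ0]; nlinarith [abs_nonneg (u - v)]
    have k1 : |Real.log (φ u) - Real.log (φ v)| ≤ M1 / m1 * (|u - v| / μ) := by
      refine (log_sub_le (hform u hu (hrad _ huc) hu').1 (hform v hv (hrad _ hvc) hv').1).trans ?_
      have hmin : m1 * μ ≤ min |φ u| |φ v| := by
        refine le_min ?_ ?_
        · exact (mul_le_mul_of_nonneg_left (min_le_left _ _) hm1.le).trans (hφb u hu).1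
        · exact (mul_le_mul_of_nonneg_left (min_le_right _ _) hm1.le).trans (hφb v hv).1
      calc |φ u - φ v| / min |φ u| |φ v| ≤ (M1 * |u - v|) / (m1 * μ) := by
            gcongr
            exact (hl1 u hu v hv).2
        _ = _ := by field_simp
    have k2 : |Real.log (deriv φ u) - Real.log (deriv φ v)| ≤ L1 * (|u - v| / μ) :=
      (hlog1 u hu v hv).trans (by gcongr)
    have k3 : |Real.log (deriv ψ (f u)) - Real.log (deriv ψ (f v))| ≤ L2 * M3 * (|u - v| / μ) := by
      refine (hlog2 _ (hmap hu) _ (hmap hv)).trans ?_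
      obtain ⟨ξ, hξ, e⟩ := mvt hf hu hv
      rw [e, mul_assoc]
      have := hb3 ξ (ordConnected_Icc.uIcc_subset hu hv hξ)
      gcongr
    have k4 : |u - v| / μ * Q ≤ M * (|u - v| / μ) := by
      rw [mul_comm]; gcongr
    refine le_trans ?_ k4
    have k5 : |(ℓ - 1) * (Real.log (φ u) - Real.log (φ v))| ≤ (ℓ - 1) * (M1 / m1 * (|u - v| / μ)) := by
      rw [abs_mul, abs_of_pos hℓ1]; gcongr
    rw [abs_le] at k2 k3 k5 ⊢
    constructor
    · rw [hQ]; ring_nf at *; linarith [k2.1, k3.2, k5.1]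
    · rw [hQ]; ring_nf at *; linarith [k2.2, k3.1, k5.2]

end Reg

/-! ### Critical and periodic points of a smooth map -/

namespace Reg

variable {f : ℝ → ℝ}

lemma dw_of_deriv_ne {F : ℝ → ℝ} {x : ℝ} (hx : x ∈ Icc (0:ℝ) 1) (h : deriv F x ≠ 0) :
    derivWithin F (Icc 0 1) x = deriv F x :=
  (differentiableAt_of_deriv_ne_zero h).derivWithin (uniqueDiffOn_Icc one_pos x hx)

lemma Near.zero {c M : ℝ} (h : Near f c M) (hc : c ∈ Icc (0:ℝ) 1) :
    derivWithin f (Icc 0 1) c = 0 := by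
  obtain ⟨ℓ, h1, h2, h3, -⟩ := h
  have := (h3 c hc (by simp; linarith)).2
  rw [sub_self, abs_zero, Real.zero_rpow (by linarith), mul_zero] at this
  exact abs_eq_zero.1 (le_antisymm this (abs_nonneg _))

lemma mem_crit_of {x : ℝ} (hx : x ∈ Icc (0:ℝ) 1) (h : derivWithin f (Icc 0 1) x = 0) : x ∈ Crit f := by
  refine ⟨hx, ?_⟩
  by_contra h'
  exact h' (by rw [← dw_of_deriv_ne hx h', h])

/-- Non-flatness isolates critical points, so a continuous derivative has finitely many zeros. -/
lemma crit_finite (hf : ContDiffOn ℝ 1 f (Icc 0 1)) (hN : ∀ c ∈ Crit f, ∃ M, Near f c M) :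
    (Crit f).Finite := by
  by_contra hinf
  have hinf : (Crit f).Infinite := hinf
  have hc := hf.continuousOn_derivWithin (uniqueDiffOn_Icc one_pos) le_rfl
  obtain ⟨z, hz, hacc⟩ := hinf.exists_accPt_of_subset_isCompact (isCompact_Icc (a := (0:ℝ)) (b := 1))
    (fun x hx => hx.1)
  have hfr := (accPt_iff_frequently).1 hacc
  have hz0 : derivWithin f (Icc 0 1) z = 0 := by
    by_contra hne
    have h1 : ∀ᶠ y in nhdsWithin z (Icc 0 1), derivWithin f (Icc 0 1) y ≠ 0 :=
      (hc z hz).eventually_ne hne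
    rw [eventually_nhdsWithin_iff] at h1
    obtain ⟨y, ⟨-, hy⟩, h2⟩ := (hfr.and_eventually h1).exists
    obtain ⟨M, hM⟩ := hN y hy
    exact h2 hy.1 (hM.zero hy.1)
  obtain ⟨M, hM⟩ := hN z (mem_crit_of hz hz0)
  obtain ⟨ℓ, h1, h2, h3, -⟩ := hM
  have hM0 : 0 < 1 / M := by apply one_div_pos.2; linarith
  obtain ⟨y, ⟨hyz, hy⟩, h5⟩ := (hfr.and_eventually (Metric.ball_mem_nhds z hM0)).exists
  have h6 := (h3 y hy.1 (by have h5 : dist y z < 1 / M := h5; rw [Real.dist_eq] at h5; exact h5.le)).1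
  obtain ⟨M', hM'⟩ := hN y hy
  rw [hM'.zero hy.1, abs_zero, mul_zero] at h6
  have : 0 < |y - z| ^ (ℓ - 1) := Real.rpow_pos_of_pos (abs_pos.2 (sub_ne_zero.2 hyz)) _
  linarith

lemma inj_of_no_crit (hf : ContDiffOn ℝ 1 f (Icc 0 1)) {a b : ℝ} (ha : 0 ≤ a) (hb : b ≤ 1)
    (h : ∀ c ∈ Crit f, c ∉ Ioo a b) : InjOn f (Icc a b) := by
  intro x hx y hy hxy
  wlog hlt : x < y generalizing x y
  · rcases (le_of_not_gt hlt).eq_or_lt with e | e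
    · exact e.symm
    · exact (this hy hx hxy.symm e).symm
  obtain ⟨z, hz, e⟩ := exists_deriv_eq_zero hlt
    (hf.continuousOn.mono (Icc_subset_Icc (ha.trans hx.1) (hy.2.trans hb))) hxy
  exact absurd ⟨hx.1.trans_lt hz.1, hz.2.trans_le hy.2⟩
    (h z ⟨⟨by linarith [hx.1, hz.1], by linarith [hy.2, hz.2]⟩, e⟩)

lemma endpt_crit (hmap : MapsTo f (Icc 0 1) (Icc 0 1)) {p : ℝ} (hp : p ∈ Icc (0:ℝ) 1)
    (h : f p = 0 ∨ f p = 1) : p ∈ Crit f ∨ p = 0 ∨ p = 1 := by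
  by_cases h0 : p = 0
  · exact Or.inr (Or.inl h0)
  by_cases h1 : p = 1
  · exact Or.inr (Or.inr h1)
  left
  refine ⟨hp, ?_⟩
  have hI : Icc (0:ℝ) 1 ∈ nhds p := Icc_mem_nhds (lt_of_le_of_ne hp.1 (Ne.symm h0)) (lt_of_le_of_ne hp.2 h1)
  apply IsLocalExtr.deriv_eq_zero
  rcases h with h | h
  · left
    filter_upwards [hI] with x hx
    rw [h]; exact (hmap hx).1
  · right
    filter_upwards [hI] with x hx
    rw [h]; exact (hmap hx).2

lemma iterate_contDiffOn (hf : ContDiffOn ℝ 1 f (Icc 0 1)) (hmap : MapsTo f (Icc 0 1) (Icc 0 1)) (m : ℕ) :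
    ContDiffOn ℝ 1 f^[m] (Icc 0 1) := by
  induction m with
  | zero => exact contDiffOn_id
  | succ m ih => rw [Function.iterate_succ]; exact ih.comp hf hmap

lemma hyp_of (hf : ContDiffOn ℝ 1 f (Icc 0 1)) (hmap : MapsTo f (Icc 0 1) (Icc 0 1))
    (hrep : AllPeriodicRepelling f) {z : ℝ} (hz : z ∈ Icc (0:ℝ) 1) {m : ℕ} (hm : 1 ≤ m)
    (hper : f^[m] z = z) : ∃ lam > 1, ∃ r > 0,
    ∀ u ∈ Icc (0:ℝ) 1, ∀ v ∈ Icc (0:ℝ) 1, |u - z| < r → |v - z| < r →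
      lam * |u - v| ≤ |f^[m] u - f^[m] v| := by
  have hF := iterate_contDiffOn hf hmap m
  have h1 := hrep z hz m hm hper
  rw [← dw_of_deriv_ne hz (by intro h; rw [h] at h1; simp at h1; linarith)] at h1
  have hc := (hF.continuousOn_derivWithin (uniqueDiffOn_Icc one_pos) le_rfl).abs
  set A := |derivWithin f^[m] (Icc 0 1) z| with hA
  have h2 : ∀ᶠ y in nhdsWithin z (Icc 0 1), (1 + A) / 2 < |derivWithin f^[m] (Icc 0 1) y| :=
    (hc z hz).eventually_const_lt (by linarith)
  rw [eventually_nhdsWithin_iff, Metric.eventually_nhds_iff_ball] at h2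
  obtain ⟨r, hr, h2⟩ := h2
  refine ⟨(1 + A) / 2, by linarith, r, hr, fun u hu v hv hur hvr => ?_⟩
  obtain ⟨ξ, hξ, e⟩ := mvt hF hu hv
  have hξI : ξ ∈ Icc (0:ℝ) 1 := (ordConnected_Icc.uIcc_subset hu hv) hξ
  have hb : ξ ∈ ball z r := by
    have : (ball z r).OrdConnected := by rw [Real.ball_eq_Ioo]; exact ordConnected_Ioo
    exact this.uIcc_subset (by rwa [mem_ball, Real.dist_eq]) (by rwa [mem_ball, Real.dist_eq]) hξ
  rw [e]
  have := h2 ξ hb hξI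
  gcongr

/-- A periodic critical point would be superattracting. -/
lemma not_periodic_crit (hf : ContDiffOn ℝ 1 f (Icc 0 1)) (hmap : MapsTo f (Icc 0 1) (Icc 0 1))
    (hrep : AllPeriodicRepelling f) {c : ℝ} (hc : c ∈ Icc (0:ℝ) 1)
    (h0 : derivWithin f (Icc 0 1) c = 0) {m : ℕ} (hm : 1 ≤ m) : f^[m] c ≠ c := by
  intro hper
  have h1 := hrep c hc m hm hper
  rw [← dw_of_deriv_ne hc (by intro h; rw [h] at h1; simp at h1; linarith)] at h1
  obtain ⟨k, rfl⟩ := Nat.exists_eq_add_of_le' hm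
  have hd := (hf.differentiableOn (by norm_num)) c hc
  have hd' := ((iterate_contDiffOn hf hmap k).differentiableOn (by norm_num)) (f c) (hmap hc)
  have := hd'.hasDerivWithinAt.comp c hd.hasDerivWithinAt hmap
  rw [h0, mul_zero] at this
  have h2 := this.derivWithin (uniqueDiffOn_Icc one_pos c hc)
  rw [← Function.iterate_succ] at h2
  rw [h2] at h1
  simp at h1; linarith

lemma nonrec_unif (K : Finset ℝ) (hnr : ∀ c ∈ K, ¬ RecurrentPt f c)
    (hnp : ∀ c ∈ K, ∀ m, 1 ≤ m → f^[m] c ≠ c) :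
    ∃ τ > 0, ∀ c ∈ K, ∀ m, 1 ≤ m → τ ≤ |f^[m] c - c| := by
  classical
  have fin : ∀ c ∈ K, ∀ n : ℕ, ∃ τ > 0, ∀ m, 1 ≤ m → m < n → τ ≤ |f^[m] c - c| := by
    intro c hc n
    induction n with
    | zero => exact ⟨1, one_pos, fun m _ h => absurd h (by simp)⟩
    | succ n ih =>
      obtain ⟨τ, hτ, h⟩ := ih
      rcases Nat.eq_zero_or_pos n with rfl | hn
      · exact ⟨1, one_pos, fun m h1 h2 => by omega⟩
      refine ⟨min τ |f^[n] c - c|, lt_min hτ (abs_pos.2 (sub_ne_zero.2 (hnp c hc n hn))), fun m h1 h2 => ?_⟩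
      rcases Nat.lt_succ_iff_lt_or_eq.1 h2 with h3 | rfl
      · exact (min_le_left _ _).trans (h m h1 h3)
      · exact min_le_right _ _
  have one : ∀ c ∈ K, ∃ τ > 0, ∀ m, 1 ≤ m → τ ≤ |f^[m] c - c| := by
    intro c hc
    have := hnr c hc
    unfold RecurrentPt at this
    push Not at this
    obtain ⟨ε, hε, N, h⟩ := this
    obtain ⟨τ, hτ, h'⟩ := fin c hc N
    refine ⟨min τ ε, lt_min hτ hε, fun m hm => ?_⟩
    rcases lt_or_ge m N with h3 | h3
    · exact (min_le_left _ _).trans (h' m hm h3)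
    · exact (min_le_right _ _).trans (h m h3)
  clear fin hnr hnp
  induction K using Finset.induction_on with
  | empty => exact ⟨1, one_pos, by simp⟩
  | insert c s _ ih =>
    obtain ⟨τ, hτ, h⟩ := ih fun c hc => one c (Finset.mem_insert_of_mem hc)
    obtain ⟨τ', hτ', h'⟩ := one c (Finset.mem_insert_self _ _)
    refine ⟨min τ τ', lt_min hτ hτ', fun c' hc' m hm => ?_⟩
    rcases Finset.mem_insert.1 hc' with rfl | hc'
    · exact (min_le_right _ _).trans (h' m hm)
    · exact (min_le_left _ _).trans (h c' hc' m hm)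

end Reg

/-! ### Distortion of a smooth map -/

namespace Reg

variable {f : ℝ → ℝ}

/-- Near a critical point the segment `[v, u]`, lying in the half of `[c, u]` away from `c`, does
not lose its proportion under `f`. -/
lemma prop_P (hf : ContDiffOn ℝ 1 f (Icc 0 1)) {M c : ℝ} (hM : 1 ≤ M) (hN : Near f c M)
    (hc : c ∈ Icc (0:ℝ) 1) {u v : ℝ} (hu : u ∈ Icc (0:ℝ) 1) (huc : |u - c| ≤ 1 / M)
    (hv : v ∈ uIcc c u) (h : |u - c| ≤ 2 * |v - c|) :
    |u - v| * |f c - f u| ≤ M ^ 2 * 2 ^ M * (|u - c| * |f u - f v|) := by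
  obtain ⟨ℓ, h1, h2, h3, -⟩ := hN
  have hsub : ∀ t ∈ uIcc c u, t ∈ Icc (0:ℝ) 1 ∧ |t - c| ≤ |u - c| := fun t ht =>
    ⟨(ordConnected_Icc.uIcc_subset hc hu) ht, abs_sub_left_of_mem_uIcc ht⟩
  obtain ⟨ξ, hξ, e1⟩ := mvt hf hc hu
  obtain ⟨η, hη, e2⟩ := mvt hf hu (hsub v hv).1
  have hη' : η ∈ uIcc c u := (uIcc_subset_uIcc right_mem_uIcc hv) hη
  have hηc : |u - c| ≤ 2 * |η - c| := by
    rcases le_total c u with hcu | hcu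
    · rw [uIcc_of_le hcu] at hv
      rw [uIcc_of_ge hv.2] at hη
      rw [abs_of_nonneg (by linarith [hv.1])] at h ⊢
      rw [abs_of_nonneg (by linarith [hv.1])] at h
      rw [abs_of_nonneg (by linarith [hv.1, hη.1])]; linarith [hη.1]
    · rw [uIcc_of_ge hcu] at hv
      rw [uIcc_of_le hv.1] at hη
      rw [abs_of_nonpos (by linarith [hv.1])] at h ⊢
      rw [abs_of_nonpos (by linarith [hv.2])] at h
      rw [abs_of_nonpos (by linarith [hv.2, hη.2])]; linarith [hη.2]
  have b1 := (h3 ξ (hsub ξ hξ).1 ((hsub ξ hξ).2.trans huc)).2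
  have b2 := (h3 η (hsub η hη').1 ((hsub η hη').2.trans huc)).1
  have b3 : |ξ - c| ^ (ℓ - 1) ≤ (2 * |η - c|) ^ (ℓ - 1) :=
    Real.rpow_le_rpow (abs_nonneg _) ((hsub ξ hξ).2.trans hηc) (by linarith)
  rw [Real.mul_rpow (by norm_num) (abs_nonneg _)] at b3
  have b4 : (2:ℝ) ^ (ℓ - 1) ≤ 2 ^ M := Real.rpow_le_rpow_of_exponent_le (by norm_num) (by linarith)
  have b5 : |derivWithin f (Icc 0 1) ξ| ≤ M ^ 2 * 2 ^ M * |derivWithin f (Icc 0 1) η| := by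
    calc _ ≤ M * |ξ - c| ^ (ℓ - 1) := b1
      _ ≤ M * (2 ^ M * (M * |derivWithin f (Icc 0 1) η|)) := by
        gcongr
        exact b3.trans (by gcongr)
      _ = _ := by ring
  rw [e1, e2, abs_sub_comm c u]
  calc _ ≤ |u - v| * ((M ^ 2 * 2 ^ M * |derivWithin f (Icc 0 1) η|) * |u - c|) := by gcongr
    _ = _ := by ring

/-- Near a critical point a subinterval of definite proportion has an image of definite
proportion. -/
lemma prop_Q (hf : ContDiffOn ℝ 1 f (Icc 0 1)) {M c κ a b : ℝ} (hM : 1 ≤ M) (hN : Near f c M)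
    (hκ : 0 < κ) (ha : 0 ≤ a) (hb : b ≤ 1) (hc : c ∈ Icc a b) (hab : b - a ≤ 1 / M) {l₁ l₂ : ℝ}
    (h1 : a ≤ l₁) (h2 : l₁ ≤ l₂) (h3 : l₂ ≤ b) (hL : κ * (b - a) ≤ l₂ - l₁) :
    ∃ u ∈ Icc l₁ l₂, ∃ v ∈ Icc l₁ l₂, ∀ s ∈ Icc a b, ∀ t ∈ Icc a b,
      (κ / 4) ^ M / M ^ 2 * |f s - f t| ≤ |f u - f v| := by
  obtain ⟨ℓ, hℓ, hℓM, hD, -⟩ := hN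
  rcases (hc.1.trans hc.2).eq_or_lt with e | hlt
  · refine ⟨l₁, ⟨le_rfl, h2⟩, l₁, ⟨le_rfl, h2⟩, fun s hs t ht => ?_⟩
    have : s = t := by linarith [hs.1, hs.2, ht.1, ht.2]
    simp [this]
  have hδ : 0 < b - a := by linarith
  have hκ1 : κ ≤ 1 := by
    by_contra hh
    have : 1 * (b - a) < κ * (b - a) := by gcongr; linarith
    linarith
  have hL0 : 0 < l₂ - l₁ := lt_of_lt_of_le (by positivity) hL
  -- a quarter of `[l₁, l₂]` stays at distance a quarter of its length from `c`
  obtain ⟨u, hu, v, hv, huv, hfar⟩ : ∃ u ∈ Icc l₁ l₂, ∃ v ∈ Icc l₁ l₂, |u - v| = (l₂ - l₁) / 4 ∧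
      ∀ η ∈ uIcc u v, (l₂ - l₁) / 4 ≤ |η - c| := by
    rcases le_total ((l₁ + l₂) / 2) c with hm | hm
    · refine ⟨l₁, ⟨le_rfl, h2⟩, l₁ + (l₂ - l₁) / 4, ⟨by linarith, by linarith⟩, ?_, fun η hη => ?_⟩
      · rw [abs_sub_comm, abs_of_nonneg (by linarith)]; ring
      · rw [uIcc_of_le (by linarith)] at hη
        rw [abs_of_nonpos (by linarith [hη.2])]; linarith [hη.2]
    · refine ⟨l₂, ⟨h2, le_rfl⟩, l₂ - (l₂ - l₁) / 4, ⟨by linarith, by linarith⟩, ?_, fun η hη => ?_⟩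
      · rw [abs_of_nonneg (by linarith)]; ring
      · rw [uIcc_of_ge (by linarith)] at hη
        rw [abs_of_nonneg (by linarith [hη.1])]; linarith [hη.1]
  have hin : ∀ t ∈ Icc a b, t ∈ Icc (0:ℝ) 1 ∧ |t - c| ≤ b - a := fun t ht =>
    ⟨⟨ha.trans ht.1, ht.2.trans hb⟩, abs_sub_le_iff.2 ⟨by linarith [ht.2, hc.1], by linarith [ht.1, hc.2]⟩⟩
  have hLab : Icc l₁ l₂ ⊆ Icc a b := Icc_subset_Icc h1 h3
  refine ⟨u, hu, v, hv, fun s hs t ht => ?_⟩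
  obtain ⟨ξ, hξ, e1⟩ := mvt hf (hin s hs).1 (hin t ht).1
  obtain ⟨η, hη, e2⟩ := mvt hf (hin u (hLab hu)).1 (hin v (hLab hv)).1
  have hξ' : ξ ∈ Icc a b := ordConnected_Icc.uIcc_subset hs ht hξ
  have hη' : η ∈ Icc a b := hLab (ordConnected_Icc.uIcc_subset hu hv hη)
  have b1 := (hD ξ (hin ξ hξ').1 ((hin ξ hξ').2.trans hab)).2
  have b2 := (hD η (hin η hη').1 ((hin η hη').2.trans hab)).1
  have b3 : |ξ - c| ^ (ℓ - 1) ≤ (b - a) ^ (ℓ - 1) :=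
    Real.rpow_le_rpow (abs_nonneg _) (hin ξ hξ').2 (by linarith)
  have b4 : (κ / 4 * (b - a)) ^ (ℓ - 1) ≤ |η - c| ^ (ℓ - 1) :=
    Real.rpow_le_rpow (by positivity) (le_trans (by linarith) (hfar η hη)) (by linarith)
  rw [Real.mul_rpow (by positivity) hδ.le] at b4
  have b5 : (κ / 4) ^ M ≤ (κ / 4) ^ (ℓ - 1) * (κ / 4) := by
    rw [← Real.rpow_add_one (by positivity)]
    exact Real.rpow_le_rpow_of_exponent_ge (by positivity) (by linarith) (by linarith)
  have hst : |s - t| ≤ b - a := abs_sub_le_iff.2 ⟨by linarith [hs.2, ht.1], by linarith [hs.1, ht.2]⟩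
  have huv' : κ / 4 * (b - a) ≤ |u - v| := by rw [huv]; linarith
  rw [e1, e2]
  have hX : 0 ≤ (b - a) ^ (ℓ - 1) := Real.rpow_nonneg hδ.le _
  have hM0 : 0 < M := by linarith
  calc (κ / 4) ^ M / M ^ 2 * (|derivWithin f (Icc 0 1) ξ| * |s - t|)
      ≤ ((κ / 4) ^ (ℓ - 1) * (κ / 4)) / M ^ 2 * ((M * (b - a) ^ (ℓ - 1)) * (b - a)) := by
        have := b1.trans (mul_le_mul_of_nonneg_left b3 hM0.le)
        gcongr
    _ = ((κ / 4) ^ (ℓ - 1) * (b - a) ^ (ℓ - 1) / M) * (κ / 4 * (b - a)) := by field_simp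
    _ ≤ |derivWithin f (Icc 0 1) η| * |u - v| := by
        have : (κ / 4) ^ (ℓ - 1) * (b - a) ^ (ℓ - 1) / M ≤ |derivWithin f (Icc 0 1) η| := by
          rw [div_le_iff₀ hM0, mul_comm _ M]; exact b4.trans b2
        gcongr

/-- Away from the critical points `log |Df|` is Lipschitz along segments. -/
lemma log_far (hf3 : ContDiffOn ℝ 3 f (Icc 0 1 \ Crit f)) (hfin : (Crit f).Finite)
    (r : ℝ) (hr : 0 < r) : ∃ B, 0 ≤ B ∧ ∀ a ∈ Icc (0:ℝ) 1, ∀ b ∈ Icc (0:ℝ) 1,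
      (∀ t ∈ uIcc a b, r ≤ infDist t (Crit f)) →
      |Real.log (derivWithin f (Icc 0 1) a) - Real.log (derivWithin f (Icc 0 1) b)| ≤ B * |a - b| := by
  set E := Icc (0:ℝ) 1 \ Crit f with hE
  have hop : IsOpen (Crit f)ᶜ := hfin.isClosed.isOpen_compl
  have hU : UniqueDiffOn ℝ E := by
    rw [hE, sdiff_eq]; exact (uniqueDiffOn_Icc one_pos).inter hop
  have heq : ∀ x ∈ E, derivWithin f E x = derivWithin f (Icc 0 1) x := fun x hx => by
    rw [hE, sdiff_eq]; exact derivWithin_inter (hop.mem_nhds hx.2)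
  have hD : ContDiffOn ℝ 1 (derivWithin f E) E := hf3.derivWithin hU (by norm_num)
  have hG : ContDiffOn ℝ 1 (fun x => Real.log (derivWithin f E x)) E :=
    hD.log fun x hx h => hx.2 (mem_crit_of hx.1 (by rw [← heq x hx, h]))
  have hG' := hG.continuousOn_derivWithin hU le_rfl
  set T := Icc (0:ℝ) 1 ∩ {t | r ≤ infDist t (Crit f)} with hT
  have hTc : IsCompact T := isCompact_Icc.inter_right
    (isClosed_le continuous_const (continuous_infDist_pt _))
  have hTE : T ⊆ E := fun t ht => ⟨ht.1, fun h => by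
    have h0 := ht.2
    have := infDist_zero_of_mem h
    simp only [mem_ofPred_eq] at h0
    linarith⟩
  obtain ⟨B, hB⟩ := (hTc.image_of_continuousOn (hG'.mono hTE)).isBounded.exists_norm_le
  refine ⟨max B 0, le_max_right _ _, fun a ha b hb h => ?_⟩
  have hseg : uIcc a b ⊆ T := fun t ht => ⟨ordConnected_Icc.uIcc_subset ha hb ht, h t ht⟩
  have := (convex_uIcc a b).norm_image_sub_le_of_norm_hasDerivWithin_le
    (f := fun x => Real.log (derivWithin f E x)) (f' := derivWithin (fun x => Real.log (derivWithin f E x)) E)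
    (C := max B 0)
    (fun x hx => ((hG.differentiableOn (by norm_num)) x (hTE (hseg hx))).hasDerivWithinAt.mono
      (hseg.trans hTE))
    (fun x hx => (hB _ (mem_image_of_mem _ (hseg hx))).trans (le_max_left _ _))
    (right_mem_uIcc) (left_mem_uIcc)
  simp only [Real.norm_eq_abs] at this
  rwa [heq a (hTE (hseg left_mem_uIcc)), heq b (hTE (hseg right_mem_uIcc))] at this

/-- Bounded logarithmic distortion on thin segments, in terms of their relative length. -/
lemma log_dist (hf3 : ContDiffOn ℝ 3 f (Icc 0 1 \ Crit f)) (hfin : (Crit f).Finite)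
    (hne : (Crit f).Nonempty) {M : ℝ} (hM : 1 ≤ M) (hN : ∀ c ∈ Crit f, Near f c M) :
    ∃ C > 0, ∀ u ∈ Icc (0:ℝ) 1, ∀ v ∈ Icc (0:ℝ) 1,
      0 < infDist u (Crit f) → 0 < infDist v (Crit f) →
      2 * |u - v| ≤ infDist u (Crit f) → ∀ a ∈ uIcc u v, ∀ b ∈ uIcc u v,
      0 < infDist a (Crit f) ∧
      |Real.log (derivWithin f (Icc 0 1) a) - Real.log (derivWithin f (Icc 0 1) b)| ≤
        C * (|u - v| / min (infDist u (Crit f)) (infDist v (Crit f))) := by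
  have hM0 : 0 < M := by linarith
  obtain ⟨B, hB0, hB⟩ := log_far hf3 hfin (1 / (4 * M)) (by positivity)
  refine ⟨2 * M + B, by positivity, fun u hu v hv pu pv huv a ha b hb => ?_⟩
  have hsub : ∀ t ∈ uIcc u v, t ∈ Icc (0:ℝ) 1 ∧ |t - u| ≤ |u - v| := fun t ht =>
    ⟨ordConnected_Icc.uIcc_subset hu hv ht, by
      rw [abs_sub_comm u v]; exact abs_sub_left_of_mem_uIcc ht⟩
  have hd : ∀ t ∈ uIcc u v, infDist u (Crit f) / 2 ≤ infDist t (Crit f) := fun t ht => by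
    have := infDist_le_infDist_add_dist (s := Crit f) (x := u) (y := t)
    rw [Real.dist_eq, abs_sub_comm] at this
    linarith [(hsub t ht).2]
  refine ⟨by linarith [hd a ha], ?_⟩
  set m := min (infDist u (Crit f)) (infDist v (Crit f)) with hm
  have hm0 : 0 < m := lt_min pu pv
  have hmu : m ≤ infDist u (Crit f) := min_le_left _ _
  have hab : |a - b| ≤ |u - v| := by
    have := abs_sub_le_of_uIcc_subset_uIcc (uIcc_subset_uIcc hb ha)
    rwa [abs_sub_comm v u] at this
  obtain ⟨c, hc, hcu⟩ := hfin.isCompact.exists_infDist_eq_dist hne u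
  rw [Real.dist_eq] at hcu
  have hw : 0 ≤ |u - v| / m := by positivity
  rcases lt_or_ge (infDist u (Crit f)) (1 / (2 * M)) with hlt | hge
  · obtain ⟨ℓ, -, -, -, hlog⟩ := hN c hc
    have key : ∀ t ∈ uIcc u v, |t - c| ≤ 1 / M ∧ m / 2 ≤ |t - c| := fun t ht => by
      have h1 := abs_sub_le t u c
      have h2 := infDist_le_dist_of_mem (x := t) hc
      rw [Real.dist_eq] at h2
      have h3 : 1 / (2 * M) = 1 / M / 2 := by field_simp
      exact ⟨by linarith [(hsub t ht).2, one_div_pos.2 hM0], by linarith [hd t ht]⟩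
    have hne' : ∀ t ∈ uIcc u v, t ≠ c := fun t ht h => by
      have := (key t ht).2; rw [h, sub_self, abs_zero] at this; linarith
    refine (hlog a (hsub a ha).1 b (hsub b hb).1 (key a ha).1 (key b hb).1 (hne' a ha) (hne' b hb)).trans ?_
    have : |a - b| / min |a - c| |b - c| ≤ |u - v| / (m / 2) := by
      gcongr
      exact le_min (key a ha).2 (key b hb).2
    calc _ ≤ M * (|u - v| / (m / 2)) := by gcongr
      _ = 2 * M * (|u - v| / m) := by field_simp
      _ ≤ _ := by gcongr; linarith
  · have h1 := hB a (hsub a ha).1 b (hsub b hb).1 (fun t ht => by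
      have := hd t (uIcc_subset_uIcc ha hb ht)
      have h3 : 1 / (4 * M) = 1 / (2 * M) / 2 := by field_simp; norm_num
      linarith)
    have hm1 : m ≤ 1 := by
      have : |u - c| ≤ 1 := abs_sub_le_iff.2 ⟨by linarith [hu.2, hc.1.1], by linarith [hu.1, hc.1.2]⟩
      linarith
    calc _ ≤ B * |a - b| := h1
      _ ≤ B * (|u - v| / m) := by
        gcongr
        exact hab.trans (le_div_self (abs_nonneg _) hm0 hm1)
      _ ≤ _ := by gcongr; linarith

lemma prop_R (hf : ContDiffOn ℝ 1 f (Icc 0 1)) (hf3 : ContDiffOn ℝ 3 f (Icc 0 1 \ Crit f))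
    (hfin : (Crit f).Finite)
    (hne : (Crit f).Nonempty) {M : ℝ} (hM : 1 ≤ M) (hN : ∀ c ∈ Crit f, Near f c M) :
    ∃ C > 0, ∀ u v, u ∈ Icc (0:ℝ) 1 → v ∈ Icc (0:ℝ) 1 →
      0 < infDist u (Crit f) → 0 < infDist v (Crit f) →
      2 * |u - v| ≤ infDist u (Crit f) → ∀ a ∈ uIcc u v, ∀ b ∈ uIcc u v,
      |f a - f b| * |u - v| ≤
        Real.exp (C * (|u - v| / min (infDist u (Crit f)) (infDist v (Crit f)))) * (|a - b| * |f u - f v|) ∧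
      |a - b| * |f u - f v| ≤
        Real.exp (C * (|u - v| / min (infDist u (Crit f)) (infDist v (Crit f)))) * (|f a - f b| * |u - v|) := by
  obtain ⟨C, hC, h⟩ := log_dist hf3 hfin hne hM hN
  refine ⟨C, hC, fun u v hu hv pu pv huv a ha b hb => ?_⟩
  have hI : uIcc u v ⊆ Icc (0:ℝ) 1 := ordConnected_Icc.uIcc_subset hu hv
  obtain ⟨ξ, hξ, e1⟩ := mvt hf (hI ha) (hI hb)
  obtain ⟨η, hη, e2⟩ := mvt hf hu hv
  have hξ' : ξ ∈ uIcc u v := uIcc_subset_uIcc ha hb hξ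
  set X := Real.exp (C * (|u - v| / min (infDist u (Crit f)) (infDist v (Crit f)))) with hX
  have key : ∀ s ∈ uIcc u v, ∀ t ∈ uIcc u v,
      |derivWithin f (Icc 0 1) s| ≤ X * |derivWithin f (Icc 0 1) t| := fun s hs t ht => by
    have hnz : ∀ y ∈ uIcc u v, 0 < |derivWithin f (Icc 0 1) y| := fun y hy => by
      have h1 := (h u hu v hv pu pv huv y hy y hy).1
      refine abs_pos.2 fun h0 => ?_
      rw [infDist_zero_of_mem (mem_crit_of (hI hy) h0)] at h1
      exact lt_irrefl _ h1
    have := (le_abs_self _).trans (h u hu v hv pu pv huv s hs t ht).2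
    rw [← Real.log_abs, ← Real.log_abs (derivWithin f (Icc 0 1) t),
      ← Real.log_div (hnz s hs).ne' (hnz t ht).ne', Real.log_le_iff_le_exp (div_pos (hnz s hs) (hnz t ht)),
      div_le_iff₀ (hnz t ht)] at this
    exact this
  rw [e1, e2]
  constructor
  · calc _ ≤ (X * |derivWithin f (Icc 0 1) η|) * |a - b| * |u - v| := by
          gcongr; exact key _ hξ' _ hη
      _ = _ := by ring
  · calc _ ≤ |a - b| * ((X * |derivWithin f (Icc 0 1) ξ|) * |u - v|) := by
          gcongr; exact key _ hη _ hξ'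
      _ = _ := by ring

end Reg

/-! ### From a smooth map to the structure `Sys` -/

namespace Reg

variable {f : ℝ → ℝ}

/-- The map `f`, extended from `I` to `ℝ` by constants so as to be globally continuous. -/
def ext (f : ℝ → ℝ) (x : ℝ) : ℝ := f (projIcc 0 1 zero_le_one x)

lemma ext_eq {x : ℝ} (hx : x ∈ Icc (0:ℝ) 1) : ext f x = f x := by
  rw [ext, projIcc_of_mem _ hx]

lemma ext_iter (hmap : MapsTo f (Icc 0 1) (Icc 0 1)) {x : ℝ} (hx : x ∈ Icc (0:ℝ) 1) (n : ℕ) :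
    (ext f)^[n] x = f^[n] x := by
  induction n generalizing x with
  | zero => rfl
  | succ n ih => rw [Function.iterate_succ_apply, Function.iterate_succ_apply, ext_eq hx, ih (hmap hx)]

/-- The hypotheses on `f` yield the metric and combinatorial properties collected in `Sys`. -/
theorem exists_sys (hmm : Multimodal f) (hc3 : C3Nonflat f)
    (hrep : AllPeriodicRepelling f) (hex : TopExact f)
    (hnr : ∀ c ∈ Crit f, ¬ RecurrentPt f c) : Nonempty (Sys (ext f)) := by
  obtain ⟨hcont, hmap, hninj, -⟩ := hmm
  obtain ⟨ℓ, hf, hf3, hnf⟩ := hc3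
  have hcont : ContinuousOn f (Icc 0 1) := hcont
  have hmap : MapsTo f (Icc 0 1) (Icc 0 1) := hmap
  have hf : ContDiffOn ℝ 1 f (Icc 0 1) := hf
  have hf3 : ContDiffOn ℝ 3 f (Icc 0 1 \ Crit f) := hf3
  have hnear : ∀ c ∈ Crit f, ∃ M, Near f c M := fun c hc => near_of_nonflat hf hmap hc.1 (hnf c hc)
  have hfin := crit_finite hf hnear
  have hne : (Crit f).Nonempty := by
    by_contra h
    rw [not_nonempty_iff_eq_empty] at h
    exact hninj (inj_of_no_crit hf le_rfl le_rfl (by simp [h]))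
  set K := hfin.toFinset with hK
  have hKm : ∀ c, c ∈ K ↔ c ∈ Crit f := fun c => hfin.mem_toFinset
  have hKc : (K : Set ℝ) = Crit f := hfin.coe_toFinset
  obtain ⟨M, hM, hN⟩ := exists_unif K fun c hc => hnear c ((hKm c).1 hc)
  have hN' : ∀ c ∈ Crit f, Near f c M := fun c hc => hN c ((hKm c).2 hc)
  obtain ⟨C, hC, hR⟩ := prop_R hf hf3 hfin hne hM hN'
  obtain ⟨τ, hτ, hτ'⟩ := nonrec_unif K (fun c hc => hnr c ((hKm c).1 hc))
    fun c hc m hm => not_periodic_crit hf hmap hrep ((hKm c).1 hc).1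
      ((hN c hc).zero ((hKm c).1 hc).1) hm
  have hM0 : 0 < M := by linarith
  exact ⟨{
    K := K
    K_ne := by rwa [hK, Set.Finite.toFinset_nonempty]
    K_sub := fun c hc => ((hKm c).1 hc).1
    maps := fun x => hmap (projIcc 0 1 zero_le_one x).2
    cont := hcont.comp_continuous (continuous_subtype_val.comp continuous_projIcc) fun x => (projIcc 0 1 zero_le_one x).2
    inj := fun a b ha hb h => by
      have := inj_of_no_crit hf ha hb fun c hc => h c ((hKm c).2 hc)
      exact this.congr fun x hx => (ext_eq ⟨ha.trans hx.1, hx.2.trans hb⟩).symm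
    exact := fun a b ha hab hb => by
      have hsub : Ioo a b ⊆ Icc (0:ℝ) 1 := fun x hx => ⟨by linarith [hx.1], by linarith [hx.2]⟩
      obtain ⟨n, -, hn⟩ := hex (Ioo a b) (nonempty_Ioo.2 hab) hsub
        ⟨Ioo a b, isOpen_Ioo, (inter_eq_left.2 hsub).symm⟩
      refine ⟨n, Subset.antisymm ?_ ?_⟩
      · rintro _ ⟨x, hx, rfl⟩
        have hx' : x ∈ Icc (0:ℝ) 1 := ⟨ha.trans hx.1, hx.2.trans hb⟩
        rw [ext_iter hmap hx']
        exact hmap.iterate n hx'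
      · intro y hy
        have : y ∈ f^[n] '' Ioo a b := by rw [hn]; exact hy
        obtain ⟨x, hx, rfl⟩ := this
        exact ⟨x, Ioo_subset_Icc_self hx, ext_iter hmap (hsub hx) n⟩
    endpt := fun p hp h => by
      rw [ext_eq hp] at h
      rw [hKm]
      exact endpt_crit hmap hp h
    C0 := C
    C0_pos := hC
    R := fun u v hu hv pu pv h1 h2 a ha b hb => by
      have hI : uIcc u v ⊆ Icc (0:ℝ) 1 := ordConnected_Icc.uIcc_subset hu hv
      rw [hKc] at pu pv h1 ⊢
      rw [ext_eq hu, ext_eq hv, ext_eq (hI ha), ext_eq (hI hb)]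
      exact hR u v hu hv pu pv h1 a ha b hb
    CP := M ^ 2 * 2 ^ M
    CP_pos := by positivity
    ρ0 := 1 / M
    ρ0_pos := by positivity
    P := fun c hc u hu huc v hv h => by
      have hcI := ((hKm c).1 hc).1
      have hvI := (ordConnected_Icc.uIcc_subset hcI hu) hv
      rw [ext_eq hcI, ext_eq hu, ext_eq hvI]
      exact prop_P hf hM (hN c hc) hcI hu huc hv h
    q := fun κ => (κ / 4) ^ M / M ^ 2
    q_pos := fun κ hκ => by positivity
    Q := fun κ hκ c hc a b ha hb hcab hab l₁ l₂ h1 h2 h3 hL => by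
      obtain ⟨u, hu, v, hv, h⟩ := prop_Q hf hM (hN c hc) hκ ha hb hcab hab h1 h2 h3 hL
      have hI : ∀ t ∈ Icc a b, t ∈ Icc (0:ℝ) 1 := fun t ht => ⟨ha.trans ht.1, ht.2.trans hb⟩
      have hI' : ∀ t ∈ Icc l₁ l₂, t ∈ Icc (0:ℝ) 1 := fun t ht =>
        hI t ⟨h1.trans ht.1, ht.2.trans h3⟩
      refine ⟨u, hu, v, hv, fun s hs t ht => ?_⟩
      rw [ext_eq (hI s hs), ext_eq (hI t ht), ext_eq (hI' u hu), ext_eq (hI' v hv)]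
      exact h s hs t ht
    hyp := fun z hz m hm hper => by
      rw [ext_iter hmap hz] at hper
      obtain ⟨lam, h1, r, hr, h⟩ := hyp_of hf hmap hrep hz hm hper
      refine ⟨lam, h1, r, hr, fun u hu v hv hur hvr => ?_⟩
      rw [ext_iter hmap hu, ext_iter hmap hv]
      exact h u hu v hv hur hvr
    τ0 := τ
    τ0_pos := hτ
    N := fun c hc m hm => by
      rw [ext_iter hmap ((hKm c).1 hc).1]
      exact hτ' c hc m hm }⟩

end Reg

/-- If `f` has no recurrent critical points, then `f` is quasi-symmetrically conjugate
to a piecewise affine map with slope `± exp (htop f)` everywhere. -/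
theorem no_recurrent_implies_qs (f : ℝ → ℝ)
    (hmm : Multimodal f) (hc3 : C3Nonflat f) (hrep : AllPeriodicRepelling f)
    (hex : TopExact f) (hnr : ∀ c ∈ Crit f, ¬ RecurrentPt f c) :
    QSConjPiecewiseAffine f (Real.exp (htop f)) := by
  obtain ⟨S⟩ := Reg.exists_sys hmm hc3 hrep hex hnr
  obtain ⟨s, h, H⟩ := S.exists_CS
  have hs : Real.exp (htop f) = s := by
    have := Sys.entropy_eq H (T := f) fun x hx => (Reg.ext_eq hx).symm
    rw [htop, unitI, this, EReal.toReal_coe, Real.exp_log H.pos]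
  rw [hs]
  have hmono : InjOn h (Icc 0 1) := H.mono.injOn
  have hbij : BijOn h (Icc 0 1) (Icc 0 1) :=
    ⟨fun x hx => H.mem hx, hmono, fun y hy => H.surj hy⟩
  have hinv : ∀ x ∈ Icc (0:ℝ) 1, Function.invFunOn h (Icc 0 1) (h x) = x := fun x hx =>
    hmono.leftInvOn_invFunOn hx
  refine ⟨h, fun y => h (Reg.ext f (Function.invFunOn h (Icc 0 1) y)), H.cont, hbij, Sys.qs H,
    fun y _ => H.mem (S.maps _), Sys.affine H fun x hx => ?_, fun x hx => ?_⟩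
  · rw [hinv x hx]
  · beta_reduce; rw [hinv x hx, Reg.ext_eq hx]

end
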